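/- Let F be an algebraically closed field and assume condition (CP) holds with r = 2 (so Q_1 = q^{f_1}, Q_2 = q^{f_2}). Then the Ariki–Koike algebra H_{n,2}(q, Q_1, Q_2) is of finite representation type if and only if n < min{ e, 2·f^{+1}(Q_1,Q_2) + 4 }. -/

import Mathlib

/-!
Right modules are tuples of operators satisfying the relations (`AKT.AK`), so finite representation
type becomes a statement `AKT.FT` about such tuples (`finiteRepType_iff`). After interchanging the
parameters one may take `Q_2 = Q_1 q ^ d` with `2 d ≤ e`, so that `f⁺¹ = d`. The main tool is the
Jucys–Murphy elements `X_0, X_1, …`: they commute, hence have joint eigenvectors, whose eigenvalue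
sequences are called weights or words. A weight `x` has an attached rational function
`num / den`, which controls the possible next letters of the word (`exists_quotient`).

*Finite type for `n < min e (2 d + 4)`*, by induction on `n` (`FT.of_lt`). Let `M` be an
indecomposable module for `H_{n+1}`. If the relative trace `D` of some `H_n`-endomorphism of `M`
is bijective, then `M` is a direct summand of a module induced from an indecomposable
`H_n`-module (`relative_trace`); there are finitely many such `M`. Otherwise all these traces are
nilpotent, and then `den ∣ num` for every weight of `M` (`den_dvd_num`). In terms of the
multiplicities of the residues this is a convexity condition, and below the bound its only solution
is that the weight is a rearrangement of the arc `a, a q, …, b` or `b, b q, …, a` of length `n + 1`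
(`trapezoid`, `arc_of_dvd`). On such an arc module the sorted weight spaces form a representation
of the zigzag algebra of a line (`ArcM.zig`); homomorphisms correspond (`arc_lift`, `arc_unique`),
and the indecomposable zigzag representations are determined by finitely many data (`zig_iso`).

*Infinite type from the bound on.* Infinite type passes from `n` to `n + 1` (`FT.mono`), so
it suffices to treat `n = e` (`baseA`, and `baseTwo` for `e = 2`, `d = 1`) and `n = 2 d + 4 < e`
(`baseB`). There the letters `γ` of a word are deformed to `γ (1 + c ε)` over the dual numbers
`F[ε]`. A module over `F[ε]` generated by a joint eigenvector of the deformed weight is built by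
adding one letter at a time, inside the induced module (`exists_eigenmap`, `Dat.step`). For varying
`c` these modules are indecomposable over `F` and pairwise non-isomorphic (`not_FT_of_family`).
-/

open scoped TensorProduct

/-- A module is indecomposable if it is nonzero and is not the direct sum of two
nonzero submodules. -/
def IsIndecomposableModule (A : Type*) (N : Type*) [Ring A] [AddCommGroup N]
    [Module A N] : Prop :=
  Nontrivial N ∧ ∀ P Q : Submodule A N, IsCompl P Q → P = ⊥ ∨ Q = ⊥

/-- A ring `A` is of finite representation type if there are only finitely many
isomorphism classes of finitely generated (equivalently, for a finite dimensional
algebra, finite dimensional) indecomposable right `A`-modules; right `A`-modules are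
realized as left modules over `Aᵐᵒᵖ`. -/
def FiniteRepType (A : Type) [Ring A] : Prop :=
  ∃ (k : ℕ) (M : Fin k → ModuleCat.{0} Aᵐᵒᵖ),
    ∀ (N : Type) [AddCommGroup N] [Module Aᵐᵒᵖ N],
      Module.Finite Aᵐᵒᵖ N → IsIndecomposableModule Aᵐᵒᵖ N →
        ∃ i, Nonempty (N ≃ₗ[Aᵐᵒᵖ] M i)

/-- The defining relations of the Ariki-Koike algebra `H_{n,r}(q, Q_1, ..., Q_r)`,
as a relation on the free algebra on generators `T_0, ..., T_{n-1}`. -/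
inductive AKRel (F : Type) [Field F] (n r : ℕ) (q : F) (Q : Fin r → F) :
    FreeAlgebra F (Fin n) → FreeAlgebra F (Fin n) → Prop
  | cyclotomic (h : 0 < n) :
      AKRel F n r q Q
        (((List.finRange r).map (fun j =>
          FreeAlgebra.ι F (⟨0, h⟩ : Fin n)
            - algebraMap F (FreeAlgebra F (Fin n)) (Q j))).prod) 0
  | braid01 (h : 1 < n) :
      AKRel F n r q Q
        (FreeAlgebra.ι F (⟨0, by omega⟩ : Fin n) * FreeAlgebra.ι F (⟨1, h⟩ : Fin n) *
          FreeAlgebra.ι F (⟨0, by omega⟩ : Fin n) * FreeAlgebra.ι F (⟨1, h⟩ : Fin n))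
        (FreeAlgebra.ι F (⟨1, h⟩ : Fin n) * FreeAlgebra.ι F (⟨0, by omega⟩ : Fin n) *
          FreeAlgebra.ι F (⟨1, h⟩ : Fin n) * FreeAlgebra.ι F (⟨0, by omega⟩ : Fin n))
  | quadratic (i : ℕ) (h1 : 1 ≤ i) (h2 : i < n) :
      AKRel F n r q Q
        ((FreeAlgebra.ι F (⟨i, h2⟩ : Fin n) + 1) *
          (FreeAlgebra.ι F (⟨i, h2⟩ : Fin n) - algebraMap F (FreeAlgebra F (Fin n)) q)) 0
  | braid (i : ℕ) (h1 : 1 ≤ i) (h2 : i + 1 < n) :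
      AKRel F n r q Q
        (FreeAlgebra.ι F (⟨i, by omega⟩ : Fin n) * FreeAlgebra.ι F (⟨i + 1, h2⟩ : Fin n) *
          FreeAlgebra.ι F (⟨i, by omega⟩ : Fin n))
        (FreeAlgebra.ι F (⟨i + 1, h2⟩ : Fin n) * FreeAlgebra.ι F (⟨i, by omega⟩ : Fin n) *
          FreeAlgebra.ι F (⟨i + 1, h2⟩ : Fin n))
  | comm (i j : ℕ) (hij : i + 2 ≤ j) (hj : j < n) :
      AKRel F n r q Q
        (FreeAlgebra.ι F (⟨i, by omega⟩ : Fin n) * FreeAlgebra.ι F (⟨j, hj⟩ : Fin n))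
        (FreeAlgebra.ι F (⟨j, hj⟩ : Fin n) * FreeAlgebra.ι F (⟨i, by omega⟩ : Fin n))

/-- The Ariki-Koike algebra `H_{n,r}(q, Q_1, ..., Q_r)`: the quotient of the free
`F`-algebra on `T_0, ..., T_{n-1}` by the two-sided ideal generated by the defining
relations. -/
abbrev ArikiKoike (F : Type) [Field F] (n r : ℕ) (q : F) (Q : Fin r → F) : Type :=
  RingQuot (AKRel F n r q Q)

/-- The extension of the nondecreasing rearrangement `f'_1 ≤ ... ≤ f'_r` (0-indexed)
by `f'_{r+i} = e + f'_i`. -/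
noncomputable def extSeq (e r : ℕ) (f' : Fin r → ℕ) (i : ℕ) : ℕ :=
  if hr : 0 < r then e * (i / r) + f' ⟨i % r, Nat.mod_lt i hr⟩ else 0

/-- `f^{+1}(Q_1, ..., Q_r) = min { f'_{i+1} - f'_i | 1 ≤ i ≤ r }` (0-indexed here). -/
noncomputable def fPlusOne (e r : ℕ) (f' : Fin r → ℕ) : ℕ :=
  sInf {d | ∃ i < r, d = extSeq e r f' (i + 1) - extSeq e r f' i}

/-- `f^{+2}(Q_1, ..., Q_r) = min { f'_{i+2} - f'_i | 1 ≤ i ≤ r }` (0-indexed here). -/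
noncomputable def fPlusTwo (e r : ℕ) (f' : Fin r → ℕ) : ℕ :=
  sInf {d | ∃ i < r, d = extSeq e r f' (i + 2) - extSeq e r f' i}

/-- `g(Q_1, ..., Q_r) = min { g'_i + g'_j | 1 ≤ i ≠ j ≤ r }` where
`g'_i = f'_{i+1} - f'_i` (0-indexed here). -/
noncomputable def gMin (e r : ℕ) (f' : Fin r → ℕ) : ℕ :=
  sInf {d | ∃ i < r, ∃ j < r, i ≠ j ∧
    d = (extSeq e r f' (i + 1) - extSeq e r f' i)
      + (extSeq e r f' (j + 1) - extSeq e r f' j)}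

namespace AKT

open LinearMap (comp_apply id_apply smulRight_apply pi_apply proj_apply ext ker mem_ker)
open Module (End algebraMap_end_apply)
open Submodule (smul_mem mem_bot mem_top)
open Finset (range mem_range)
open Function (Bijective)
open Module.End (mul_apply one_apply)

/-! ### Relations, Jucys–Murphy elements and the relative trace -/

/-- A numerical side condition, settled by linear arithmetic. -/
notation:max "✓" => (by omega)

/-- The polynomial variable; `X` denotes the Jucys–Murphy elements. -/
notation "𝐗" => Polynomial.X

section
variable {R S V W : Type*} [Ring R] [AddCommGroup V] [Module R V] [AddCommGroup W] [Module R W]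

theorem sub_apply (f g : V →ₗ[R] W) (v : V) : (f - g) v = f v - g v := rfl

theorem add_apply (f g : V →ₗ[R] W) (v : V) : (f + g) v = f v + g v := rfl

theorem smul_apply [Monoid S] [DistribMulAction S W] [SMulCommClass R S W] (a : S)
    (f : V →ₗ[R] W) (v : V) : (a • f) v = a • f v := rfl

theorem app_eq {f g : V →ₗ[R] W} (h : f = g) (v : V) : f v = g v := by rw [h]

theorem _root_.Commute.app {f g : End R V} (h : Commute f g) (v : V) : f (g v) = g (f v) :=
  app_eq h v
end

section
variable {R : Type} [CommRing R]

/-- Parameters `q, a, b` over a commutative ring, together with inverses `qi` of `q` and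
`ci` of `a * b`. -/
structure Par (R : Type) [CommRing R] where
  q : R
  a : R
  b : R
  qi : R
  ci : R
  hq : q * qi = 1
  hc : a * b * ci = 1

/-- The two-parameter Ariki–Koike relations for the first `n` entries of a sequence `t` in an
algebra. The quadratic relations are written in expanded form. -/
structure AK {E : Type} [Ring E] [Algebra R E] (P : Par R) (n : ℕ) (t : ℕ → E) : Prop where
  cyc : 0 < n → t 0 * t 0 = (P.a + P.b) • t 0 - (P.a * P.b) • (1 : E)
  br0 : 1 < n → t 0 * (t 1 * (t 0 * t 1)) = t 1 * (t 0 * (t 1 * t 0))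
  quad : ∀ i, 1 ≤ i → i < n → t i * t i = (P.q - 1) • t i + P.q • (1 : E)
  braid : ∀ i, 1 ≤ i → i + 1 < n → t i * (t (i + 1) * t i) = t (i + 1) * (t i * t (i + 1))
  comm : ∀ i j, i + 2 ≤ j → j < n → t i * t j = t j * t i

variable {E : Type} [Ring E] [Algebra R E] (P : Par R) (t : ℕ → E)

/-- The Jucys–Murphy elements. -/
def X : ℕ → E
  | 0 => t 0
  | k + 1 => P.qi • (t (k + 1) * (X k * t (k + 1)))

/-- `S m` is the sum of the first `m` Jucys–Murphy elements. -/
def S : ℕ → E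
  | 0 => 0
  | k + 1 => S k + X P t k

/-- The relative trace type operator `φ ↦ ∑ T φ T*`, sending elements commuting with
`t 0, …, t (m - 1)` to elements commuting with `t 0, …, t m`. -/
def D : ℕ → E →ₗ[R] E
  | 0 => LinearMap.id - P.ci • (LinearMap.mulLeft R (t 0) ∘ₗ LinearMap.mulRight R (t 0))
  | m + 1 => LinearMap.id
      + P.qi • (D m ∘ₗ LinearMap.mulLeft R (t (m + 1)) ∘ₗ LinearMap.mulRight R (t (m + 1)))
      - P.ci • (LinearMap.mulLeft R (X P t (m + 1)) ∘ₗ LinearMap.mulRight R (X P t (m + 1)))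

variable {P t} {n : ℕ}

theorem D_zero (φ : E) : D P t 0 φ = φ - P.ci • (t 0 * (φ * t 0)) := by
  simp [D]

theorem D_succ (m : ℕ) (φ : E) : D P t (m + 1) φ = φ + P.qi • D P t m (t (m + 1) * (φ * t (m + 1)))
    - P.ci • (X P t (m + 1) * (φ * X P t (m + 1))) := by
  simp [D]

theorem AK.mono (h : AK P n t) {m : ℕ} (hm : m ≤ n) : AK P m t where
  cyc h0 := h.cyc ✓
  br0 h0 := h.br0 ✓
  quad i h1 h2 := h.quad i h1 ✓
  braid i h1 h2 := h.braid i h1 ✓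
  comm i j h1 h2 := h.comm i j h1 ✓

theorem q_X_succ (k : ℕ) : P.q • X P t (k + 1) = t (k + 1) * (X P t k * t (k + 1)) := by
  rw [X, smul_smul, P.hq, one_smul]

theorem commute_t_t (h : AK P n t) {i j : ℕ} (hij : i + 2 ≤ j) (hj : j < n) :
    Commute (t i) (t j) := h.comm i j hij hj

theorem commute_X_high (h : AK P n t) {j : ℕ} (hj : j < n) :
    ∀ k, k + 2 ≤ j → Commute (X P t k) (t j)
  | 0, hk => h.comm 0 j hk hj
  | k + 1, hk => by
    have h1 := commute_X_high h hj k ✓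
    have h2 : Commute (t (k + 1)) (t j) := h.comm (k + 1) j ✓ hj
    rw [X]
    exact (h2.mul_left (h1.mul_left h2)).smul_left _

theorem commute_X_low (h : AK P n t) {j : ℕ} : ∀ k, k < n → j < k → Commute (t j) (X P t k)
  | 0, _, hk => by omega
  | k + 1, hn, hk => by
    rcases lt_or_ge j k with hjk | hjk
    · have h1 := commute_X_low h k ✓ hjk
      have h2 : Commute (t j) (t (k + 1)) := h.comm j (k + 1) ✓ hn
      rw [X]
      exact (h2.mul_right (h1.mul_right h2)).smul_right _
    · obtain rfl : j = k := ✓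
      rcases j with _ | j
      · rw [X, X]
        apply Commute.smul_right
        change _ * _ = _ * _
        have := h.br0 hn
        grind
      · rw [X, X]
        apply Commute.smul_right
        have hb := h.braid (j + 1) ✓ hn
        have hx : Commute (X P t j) (t (j + 1 + 1)) := commute_X_high h hn j ✓
        change _ * _ = _ * _
        simp only [smul_mul_assoc, mul_smul_comm, mul_assoc]
        congr 1
        calc t (j+1) * (t (j+1+1) * (t (j+1) * (X P t j * (t (j+1) * t (j+1+1)))))
            = (t (j+1) * (t (j+1+1) * t (j+1))) * (X P t j * (t (j+1) * t (j+1+1))) := by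
              grind
          _ = t (j+1+1) * (t (j+1) * ((t (j+1+1) * X P t j) * (t (j+1) * t (j+1+1)))) := by
              grind
          _ = t (j+1+1) * (t (j+1) * (X P t j * (t (j+1+1) * (t (j+1) * t (j+1+1))))) := by
              rw [← hx.eq]; simp only [mul_assoc]
          _ = _ := by rw [← hb]

theorem commute_X_of (g : E) : ∀ k, (∀ j ≤ k, Commute g (t j)) → Commute g (X P t k)
  | 0, h => h 0 le_rfl
  | k + 1, h => by
    rw [X]
    exact ((h _ le_rfl).mul_right ((commute_X_of g k fun j hj => h j ✓).mul_right
      (h _ le_rfl))).smul_right _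

theorem commute_XX (h : AK P n t) {j k : ℕ} (hj : j < n) (hk : k < n) :
    Commute (X P t j) (X P t k) := by
  rcases lt_trichotomy j k with hjk | rfl | hjk
  · exact (commute_X_of _ j fun i hi => (commute_X_low h k hk ✓).symm).symm
  · exact Commute.refl _
  · exact commute_X_of _ k fun i hi => (commute_X_low h j hj ✓).symm

theorem commute_S_of (g : E) : ∀ m, (∀ j < m, Commute g (X P t j)) → Commute g (S P t m)
  | 0, _ => Commute.zero_right _
  | m + 1, h => (commute_S_of g m fun j hj => h j ✓).add_right (h m ✓)

/-- `X (k+1) t (k+1) = t (k+1) X k + (q - 1) X (k+1)`. -/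
theorem X_mul_t (h : AK P n t) {k : ℕ} (hk : k + 1 < n) :
    X P t (k + 1) * t (k + 1) = t (k + 1) * X P t k + (P.q - 1) • X P t (k + 1) := by
  have h1 := h.quad (k + 1) ✓ hk
  rw [X]
  simp only [smul_mul_assoc, mul_assoc, h1, mul_add, mul_smul_comm, mul_one, smul_add, smul_smul]
  rw [mul_comm P.qi P.q, P.hq, one_smul, add_comm, mul_comm]

theorem t_mul_X (h : AK P n t) {k : ℕ} (hk : k + 1 < n) :
    t (k + 1) * X P t (k + 1) = X P t k * t (k + 1) + (P.q - 1) • X P t (k + 1) := by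
  have h1 := h.quad (k + 1) ✓ hk
  rw [X]
  simp only [mul_smul_comm, ← mul_assoc, h1, add_mul, smul_mul_assoc, one_mul, smul_add, smul_smul]
  rw [mul_comm P.qi P.q, P.hq, one_smul, add_comm, mul_comm]

theorem D_mul_left (g : E) : ∀ m (_ : ∀ j ≤ m, Commute g (t j)) (φ : E),
    D P t m (g * φ) = g * D P t m φ
  | 0, h, φ => by
    have h0 := (h 0 le_rfl).eq
    simp only [D_zero, mul_sub, mul_smul_comm, ← mul_assoc, h0]
  | m + 1, h, φ => by
    have h0 := (h (m + 1) le_rfl).eq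
    have h1 := (commute_X_of (P := P) g (m + 1) h).eq
    simp only [D_succ]
    rw [show t (m + 1) * (g * φ * t (m + 1)) = g * (t (m + 1) * (φ * t (m + 1))) by
      simp only [← mul_assoc, h0], D_mul_left g m fun j hj => h j ✓]
    simp only [mul_sub, mul_add, mul_smul_comm, ← mul_assoc, h1]

theorem D_mul_right (g : E) : ∀ m (_ : ∀ j ≤ m, Commute g (t j)) (φ : E),
    D P t m (φ * g) = D P t m φ * g
  | 0, h, φ => by
    have h0 := (h 0 le_rfl).eq
    simp only [D_zero, sub_mul, smul_mul_assoc, mul_assoc, h0]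
  | m + 1, h, φ => by
    have h0 := (h (m + 1) le_rfl).eq
    have h1 := (commute_X_of (P := P) g (m + 1) h).eq
    simp only [D_succ]
    rw [show t (m + 1) * (φ * g * t (m + 1)) = (t (m + 1) * (φ * t (m + 1))) * g by
      simp only [mul_assoc, h0], D_mul_right g m fun j hj => h j ✓]
    simp only [sub_mul, add_mul, smul_mul_assoc, mul_assoc, h1]

theorem commute_D (h : AK P n t) : ∀ m, m < n → ∀ φ : E, (∀ j < m, Commute (t j) φ) →
    ∀ j ≤ m, Commute (t j) (D P t m φ)
  | 0, hm, φ, _, j, hj => by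
    obtain rfl : j = 0 := ✓
    have h0 := h.cyc hm
    have h1 : t 0 * (t 0 * (φ * t 0)) = (P.a + P.b) • (t 0 * (φ * t 0)) - (P.a * P.b) • (φ * t 0) := by
      rw [← mul_assoc, h0, sub_mul, smul_mul_assoc, smul_mul_assoc, one_mul]
    have h2 : t 0 * (φ * (t 0 * t 0)) = (P.a + P.b) • (t 0 * (φ * t 0)) - (P.a * P.b) • (t 0 * φ) := by
      rw [h0, mul_sub, mul_sub, mul_smul_comm, mul_smul_comm, mul_smul_comm, mul_smul_comm, mul_one]
    change _ * _ = _ * _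
    rw [D_zero]
    simp only [mul_sub, sub_mul, smul_mul_assoc, mul_smul_comm, mul_assoc, h1, h2]
    linear_combination (norm := module) P.hc • (φ * t 0) - P.hc • (t 0 * φ)
  | m + 1, hm, φ, hφ, j, hj => by
    set T := t (m + 1) with hT
    set Y := X P t (m + 1) with hY
    rcases lt_or_ge j (m + 1) with hj' | hj'
    · rw [D_succ]
      have h1 : Commute (t j) (D P t m (T * (φ * T))) := by
        refine commute_D h m ✓ _ (fun i hi => ?_) j ✓
        have hiT : Commute (t i) T := h.comm i (m + 1) ✓ hm
        exact hiT.mul_right ((hφ i ✓).mul_right hiT)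
      have h2 : Commute (t j) Y := commute_X_low h (m + 1) hm hj'
      have h3 := hφ j hj'
      exact (h3.add_right (h1.smul_right _)).sub_right ((h2.mul_right (h3.mul_right h2)).smul_right _)
    · obtain rfl : j = m + 1 := ✓
      have hq : T * T = (P.q - 1) • T + P.q • (1 : E) := h.quad (m + 1) ✓ hm
      have hXt : Y * T = T * X P t m + (P.q - 1) • Y := X_mul_t h hm
      have htX : T * Y = X P t m * T + (P.q - 1) • Y := t_mul_X h hm
      have hqY : P.q • Y = T * (X P t m * T) := q_X_succ m
      set Z := X P t m with hZ
      have hZφ : Z * φ = φ * Z := (commute_X_of φ m fun i hi => (hφ i ✓).symm).eq.symm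
      -- the part of `D m` other than the identity and the outermost twist
      have key : ∃ B : E, D P t m (T * (φ * T)) = T * (φ * T) + B - P.ci • (Z * (T * (φ * (T * Z))))
          ∧ Commute T B := by
        rcases m with _ | m
        · refine ⟨0, ?_, Commute.zero_right _⟩
          rw [D_zero, add_zero]
          simp only [hZ, X, mul_assoc]
        · refine ⟨P.qi • D P t m (t (m + 1) * ((T * (φ * T)) * t (m + 1))), ?_, ?_⟩
          · rw [D_succ]; simp only [hZ, mul_assoc]
          · refine Commute.smul_right ?_ _
            have hc : ∀ i ≤ m, Commute T (t i) := fun i hi => (h.comm i (m + 2) ✓ hm).symm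
            change _ * _ = _ * _
            rw [← D_mul_left T m hc, ← D_mul_right T m hc]
            congr 1
            have hb : t (m+1) * (T * t (m+1)) = T * (t (m+1) * T) := h.braid (m + 1) ✓ hm
            have hp : t (m+1) * φ = φ * t (m+1) := (hφ (m+1) ✓).eq
            generalize t (m+1) = s at *
            calc T * (s * (T * (φ * T) * s)) = (T * (s * T)) * (φ * (T * s)) := by simp only [mul_assoc]
              _ = s * (T * ((s * φ) * (T * s))) := by rw [← hb]; simp only [mul_assoc]
              _ = s * (T * (φ * (s * (T * s)))) := by rw [hp]; simp only [mul_assoc]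
              _ = _ := by rw [hb]; simp only [mul_assoc]
      obtain ⟨B, hB, hTB⟩ := key
      change _ * _ = _ * _
      rw [D_succ, ← hT, ← hY, hB]
      have hTB := hTB.eq
      have e1 : T * (T * (φ * T)) = (P.q - 1) • (T * (φ * T)) + P.q • (φ * T) := by
        rw [← mul_assoc, hq, add_mul, smul_mul_assoc, smul_mul_assoc, one_mul]
      have e2 : T * (φ * (T * T)) = (P.q - 1) • (T * (φ * T)) + P.q • (T * φ) := by
        rw [hq]; simp only [mul_add, mul_smul_comm, mul_one]
      have e3 : T * (Y * (φ * Y)) = Z * (T * (φ * Y)) + (P.q - 1) • (Y * (φ * Y)) := by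
        rw [← mul_assoc, htX, add_mul, smul_mul_assoc, mul_assoc]
      have e4 : Y * (φ * (Y * T)) = Y * (φ * (T * Z)) + (P.q - 1) • (Y * (φ * Y)) := by
        rw [hXt]; simp only [mul_add, mul_smul_comm]
      have e5 : T * (Z * (T * (φ * (T * Z)))) = P.q • (Y * (φ * (T * Z))) := by
        rw [← smul_mul_assoc, hqY]; simp only [mul_assoc]
      have e6 : Z * (T * (φ * (T * (Z * T)))) = P.q • (Z * (T * (φ * Y))) := by
        rw [← hqY]; simp only [mul_smul_comm]
      have hqq := P.hq
      simp only [mul_sub, sub_mul, mul_add, add_mul, smul_mul_assoc, mul_smul_comm, mul_assoc,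
        smul_add, smul_sub, e1, e2, e3, e4, e5, e6, hTB]
      linear_combination (norm := module) hqq • (φ * T) - hqq • (T * φ)
        - (P.ci * hqq) • (Y * (φ * (T * Z))) + (P.ci * hqq) • (Z * (T * (φ * Y)))
end

variable {F R E V : Type} [Field F] [CommRing R] [Ring E] [Algebra R E] [AddCommGroup V] [Module F V]
variable {P : Par F} {t : ℕ → End F V} {v : V} {ω ω' : ℕ → Bool} {n m k j i e d ℓ p s l N : ℕ}

/-! ### The obstruction element and its value on joint eigenvectors -/

section
variable {P : Par R} {t : ℕ → E}

/-- The cyclotomic polynomial `(u - a)(u - b)`. -/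
def Par.f (P : Par R) (u : R) : R := u * u - (P.a + P.b) * u + P.a * P.b

/-- The constant `(q - 1)² / q`. -/
def Par.th (P : Par R) : R := (P.q - 1) * (P.q - 1) * P.qi

/-- The value of `D m (t (m + 1))`, up to the factor `(q - 1) a b`. -/
theorem D_t (h : AK P n t) : ∀ m, m + 1 < n → ((P.q - 1) * (P.a * P.b)) • D P t m (t (m + 1)) =
      -(P.q • (X P t (m + 1) * X P t (m + 1) - (P.a + P.b) • X P t (m + 1) + (P.a * P.b) • (1 : E)))
      + ((P.q - 1) * (P.q - 1)) • (X P t (m + 1) * S P t (m + 1))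
  | 0, hm => by
    have h0 := h.cyc ✓
    have h1 := h.quad 1 le_rfl hm
    have hb := h.br0 hm
    have hqq := P.hq
    have hcc := P.hc
    rw [D_zero]
    simp only [S, X, zero_add]
    generalize t 0 = x at *
    generalize t 1 = s at *
    have e1 : s * (x * (s * (s * (x * s)))) = (P.q - 1) • (s * (x * (s * (x * s))))
        + P.q • (s * (x * (x * s))) := by
      rw [← mul_assoc s s, h1]; simp only [add_mul, mul_add, smul_mul_assoc, mul_smul_comm, one_mul]
    have e2 : s * (x * (x * s)) = (P.a + P.b) • (s * (x * s)) - (P.a * P.b) • (s * s) := by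
      rw [← mul_assoc x x, h0]
      simp only [sub_mul, mul_sub, smul_mul_assoc, mul_smul_comm, one_mul]
    have e3 : s * (x * (s * (x * s))) = (P.q - 1) • (x * (s * (x * s))) + P.q • (x * (s * x)) := by
      have : s * (x * (s * (x * s))) = (s * (x * (s * x))) * s := by simp only [mul_assoc]
      rw [this, ← hb]
      simp only [mul_assoc, h1, mul_add, mul_smul_comm, mul_one]
    simp only [mul_assoc, smul_mul_assoc, mul_smul_comm]
    rw [e1, e2, e3, h1, ← hb]
    have c2 : P.q * (P.qi * P.qi) = P.qi := by linear_combination P.qi * hqq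
    linear_combination (norm := module) ((P.q - 1) * (P.q - 1) * c2) • (x * (s * (x * s)))
      + ((P.q - 1) * (P.q * c2 + hqq)) • (x * (s * x)) - ((P.q - 1) * hcc) • (x * (s * x))
      + (P.q * (P.a + P.b) * c2) • (s * (x * s)) 
      - (P.a * P.b * (P.q * c2 + hqq)) • ((P.q - 1) • s + P.q • (1 : E))
  | m + 1, hm => by
    have ih := D_t h m ✓
    have hqq := P.hq
    have hcc := P.hc
    have hb : t (m+1) * (t (m+2) * t (m+1)) = t (m+2) * (t (m+1) * t (m+2)) :=
      h.braid (m+1) ✓ hm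
    have hq : t (m+2) * t (m+2) = (P.q - 1) • t (m+2) + P.q • (1 : E) := h.quad (m + 2) ✓ hm
    have hXt : X P t (m+2) * t (m+2) = t (m+2) * X P t (m+1) + (P.q - 1) • X P t (m+2) :=
      X_mul_t h hm
    have hqY : P.q • X P t (m+2) = t (m+2) * (X P t (m+1) * t (m+2)) := q_X_succ (m+1)
    have hc : ∀ i ≤ m, Commute (t (m+2)) (t i) := fun i hi => (h.comm i (m + 2) ✓ hm).symm
    have hS : t (m+2) * S P t (m+1) = S P t (m+1) * t (m+2) :=
      (commute_S_of _ _ fun j hj => (commute_X_high h hm j ✓).symm).eq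
    have hYZ : X P t (m+2) * X P t (m+1) = X P t (m+1) * X P t (m+2) := (commute_XX h hm ✓).eq
    have hYS : X P t (m+1) * S P t (m+1) = S P t (m+1) * X P t (m+1) :=
      (commute_S_of _ _ fun j hj => (commute_XX h ✓ ✓)).eq
    rw [D_succ, hb, D_mul_left _ m hc, D_mul_right _ m hc]
    rw [show S P t (m + 1 + 1) = S P t (m+1) + X P t (m+1) from rfl]
    change _ • (t (m+2) + P.qi • (t (m+2) * (D P t m (t (m+1)) * t (m+2))) - 
      P.ci • (X P t (m+1) * (t (m+2) * X P t (m+1)))) = -(P.q • (X P t (m + 2) * X P t (m + 2) 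
        - (P.a + P.b) • X P t (m + 2) + (P.a * P.b) • (1 : E)))
      + ((P.q - 1) * (P.q - 1)) • (X P t (m + 2) * (S P t (m+1) + X P t (m+1)))
    generalize t (m+2) = s at *
    generalize t (m+1) = s0 at *
    generalize X P t (m+2) = Z at *
    generalize X P t (m+1) = Y at *
    generalize S P t (m+1) = W at *
    generalize D P t m s0 = d at *
    have ih' : ((P.q - 1) * (P.a * P.b)) • (s * (d * s)) = s * ((-(P.q • (Y * Y
        - (P.a + P.b) • Y + (P.a * P.b) • (1 : E))) + ((P.q - 1) * (P.q - 1)) • (Y * W)) * s) := by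
      rw [← ih]; simp only [smul_mul_assoc, mul_smul_comm]
    have e1 : s * (Y * (W * s)) = P.q • (Z * W) := by
      rw [← smul_mul_assoc, hqY, ← hS]; simp only [mul_assoc]
    have e2 : P.q • (Z * Z) = (P.q - 1) • (Y * (s * Y) + (P.q - 1) • (Z * Y)) + s * (Y * (Y * s)) := by
      have e4 : P.q • (P.q • (Z * Z)) = P.q • (P.q - 1) • (Y * (Z * s)) + P.q • (s * (Y * (Y * s))) := by
        have : P.q • (Y * (Z * s)) = s * (Y * (s * (Y * s))) := by
          rw [← mul_assoc Y, ← hYZ, ← smul_mul_assoc, ← smul_mul_assoc, hqY]; simp only [mul_assoc]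
        rw [smul_comm P.q (P.q - 1), this, ← mul_smul_comm, ← smul_mul_assoc, hqY]
        have : s * (Y * s) * (s * (Y * s)) = s * (Y * ((s * s) * (Y * s))) := by simp only [mul_assoc]
        rw [this, hq]
        simp only [add_mul, mul_add, smul_mul_assoc, mul_smul_comm, one_mul]
      have e5 : P.q • (Z * Z) = (P.q - 1) • (Y * (Z * s)) + s * (Y * (Y * s)) := by
        have := congrArg (fun z => P.qi • z) e4
        simp only [smul_smul, smul_add] at this
        linear_combination (norm := module) this - (P.q * hqq) • (Z * Z) 
          + ((P.q - 1) * hqq) • (Y * (Z * s)) + hqq • (s * (Y * (Y * s)))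
      rw [e5, hXt, hYZ, mul_add, mul_smul_comm]
    simp only [mul_sub, sub_mul, mul_add, add_mul, smul_mul_assoc, mul_smul_comm, mul_assoc,
        smul_add, smul_sub, neg_mul, mul_neg, one_mul, mul_one, e1, ← hqY, hq] at ih' ⊢
    linear_combination (norm := module) P.qi • ih' + e2 + ((P.q - 1) * (P.q - 1) * hqq) • (Z * W)
      - ((P.q - 1) * hcc) • (Y * (s * Y)) - hqq • (s * (Y * (Y * s))) 
      + (P.q * (P.a + P.b) * hqq) • Z 
      - (P.a * P.b * hqq) • ((P.q - 1) • s + P.q • (1 : E))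

/-- `D m φ` kills a submodule stable under `t 0, …, t m` as soon as `φ` does. -/
theorem D_kill {V : Type} [AddCommGroup V] [Module R V] (T : ℕ → End R V) (U : Submodule R V) : ∀ m,
    (∀ j ≤ m, ∀ v ∈ U, T j v ∈ U) → ∀ φ : End R V, (∀ v ∈ U, φ v = 0) →
    ∀ v ∈ U, D P T m φ v = 0 := by
  have hX : ∀ k, (∀ j ≤ k, ∀ v ∈ U, T j v ∈ U) → ∀ v ∈ U, X P T k v ∈ U := by
    intro k
    induction k with
    | zero => intro h; exact h 0 le_rfl
    | succ k ih =>
      intro h v hv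
      rw [X]
      exact U.smul_mem _ (h _ le_rfl _ (ih (fun j hj => h j ✓) _ (h _ le_rfl _ hv)))
  intro m
  induction m with
  | zero =>
    intro hU φ hφ v hv
    simp [D_zero, hφ v hv, hφ _ (hU 0 le_rfl v hv)]
  | succ m ih =>
    intro hU φ hφ v hv
    simp only [D_succ, sub_apply, add_apply, smul_apply, mul_apply]
    rw [ih (fun j hj => hU j ✓) _ _ v hv, hφ v hv, hφ _ (hX _ hU v hv)]
    · simp
    · simp_all

theorem D_t_mul (h : AK P n t) (hm : m + 1 < n) (u χ : R) (r δ : E)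
    (hr : u • r - X P t m * r = χ • (1 : E) + δ) :
    u • D P t m (t (m+1) * r) - X P t (m+1) * D P t m (t (m+1) * r)
      = χ • D P t m (t (m+1)) + D P t m (t (m+1) * δ) - (P.q - 1) • (X P t (m+1) * D P t m r) := by
  have hc : ∀ j ≤ m, Commute (X P t (m+1)) (t j) := fun j hj =>
    (commute_X_low h (m+1) hm ✓).symm
  rw [← D_mul_left _ m hc, ← D_mul_left _ m hc, ← map_smul, ← map_smul, ← map_smul,
    ← map_sub, ← map_add, ← map_sub]
  congr 1
  rw [← mul_assoc, X_mul_t h hm, add_mul, smul_mul_assoc, mul_assoc]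
  have := congrArg (fun z => t (m+1) * z) hr
  simp only [mul_sub, mul_add, mul_smul_comm, mul_one] at this
  grind

/-- The key identity: `X (m+1)` times the obstruction `χ (f(u) - θ u S) + θ a b u D m r` is
divisible by `u - X (m+1)`, up to an error term governed by `δ`. -/
theorem G_identity (h : AK P n t) (hm : m + 1 < n) (u χ : R) (r δ : E)
    (hr : u • r - X P t m * r = χ • (1 : E) + δ) (G : E)
    (hG : G = χ • (u • X P t (m+1) - (P.a * P.b) • (1 : E))
      - ((P.q - 1) * (P.a * P.b) * P.qi * u) • D P t m (t (m+1) * r)) :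
    X P t (m+1) * (χ • (P.f u • (1 : E) - (P.th * u) • S P t (m+1))
        + (P.th * (P.a * P.b) * u) • D P t m r)
      = u • G - X P t (m+1) * G + ((P.q - 1) * (P.a * P.b) * P.qi * u) • D P t m (t (m+1) * δ) := by
  have h1 := D_t_mul h hm u χ r δ hr
  have h2 := D_t h m hm
  have hqq := P.hq
  rw [hG, Par.f, Par.th]
  simp only [mul_sub, mul_add, mul_smul_comm, mul_one, smul_sub, smul_add] at h1 h2 ⊢
  linear_combination (norm := module) ((P.q - 1) * (P.a * P.b) * P.qi * u) • h1
    + (χ * u * P.qi) • h2 - (χ * u * hqq) •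
      (X P t (m+1) * X P t (m+1) - (P.a + P.b) • X P t (m+1) + (P.a * P.b) • (1 : E))

/-- The obstruction element for an element `r` playing the role of `(u - X m)⁻¹`. -/
def Ob (P : Par R) (t : ℕ → E) (u : R) (r : ℕ → E) : ℕ → E
  | 0 => P.f u • (1 : E)
  | m + 1 => P.f u • (1 : E) - (P.th * u) • S P t (m+1) + (P.th * (P.a * P.b) * u) • D P t m (r m)

theorem t_r_t (h : AK P n t) (hk : k + 1 < n) (u : R) (r r' : E)
    (hr : u • r - X P t k * r = 1) (hr2 : u • r - r * X P t k = 1)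
    (hr' : u • r' - X P t (k+1) * r' = 1) (hr2' : u • r' - r' * X P t (k+1) = 1) :
    t (k+1) * (r' * t (k+1)) = P.q • r + ((P.q - 1) * u) • (t (k+1) * r * r') := by
  have hq := h.quad (k + 1) ✓ hk
  have hXt := X_mul_t h hk
  have htX := t_mul_X h hk
  have hc : r' * r = r * r' := by
    have hXY : X P t k * X P t (k+1) = X P t (k+1) * X P t k := (commute_XX h ✓ hk).eq
    have c1 : Commute r (X P t (k+1)) := by
      have : (u • (1:E) - X P t k) * r = 1 := by rw [sub_mul, smul_mul_assoc, one_mul, hr]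
      have h2 : r * (u • (1:E) - X P t k) = 1 := by rw [mul_sub, mul_smul_comm, mul_one, hr2]
      let U : Eˣ := ⟨_, r, this, h2⟩
      have : Commute (U : E) (X P t (k+1)) :=
        ((Commute.one_left _).smul_left u).sub_left hXY
      exact this.units_inv_left
    have h3 : (u • (1:E) - X P t (k+1)) * r' = 1 := by rw [sub_mul, smul_mul_assoc, one_mul, hr']
    have h2 : r' * (u • (1:E) - X P t (k+1)) = 1 := by rw [mul_sub, mul_smul_comm, mul_one, hr2']
    let U : Eˣ := ⟨_, r', h3, h2⟩
    have : Commute (U : E) r :=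
        ((Commute.one_left _).smul_left u).sub_left c1.symm
    grind
  generalize t (k+1) = s at *
  generalize X P t (k+1) = Y at *
  generalize X P t k = Z at *
  -- `r' s = s r + (q - 1) r' Y r`
  have e1 : r' * s = s * r + (P.q - 1) • (r' * (Y * r)) := by
    have e : r' * s = r' * (s * (u • r - Z * r)) := by rw [hr, mul_one]
    have e2 : s * r = (u • r' - r' * Y) * (s * r) := by rw [hr2', one_mul]
    have e3 : r' * (Y * (s * r)) = r' * (s * (Z * r)) + (P.q - 1) • (r' * (Y * r)) := by
      rw [← mul_assoc Y, hXt]; simp only [add_mul, mul_add, smul_mul_assoc, mul_smul_comm, mul_assoc]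
    rw [e]; nth_rewrite 1 [e2]
    simp only [mul_sub, sub_mul, mul_smul_comm, smul_mul_assoc, mul_assoc, e3]
    module
  have e4 : Y * r' = r' * Y := by
    grind
  have e5 : s * (r' * (Y * r)) = u • (s * (r * r')) - s * r := by
    have : r' * Y = u • r' - 1 := by linear_combination (norm := module) -hr2'
    rw [← mul_assoc r', this]
    simp only [sub_mul, mul_sub, smul_mul_assoc, mul_smul_comm, one_mul, hc]
  rw [e1, mul_add, mul_smul_comm, e5, ← mul_assoc, hq]
  simp only [add_mul, smul_mul_assoc, one_mul, mul_assoc]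
  module
end

section
variable {V : Type} [AddCommGroup V] [Module R V] {P : Par R} {t : ℕ → End R V}

theorem Ob_eigen (h : AK P n t) (u : R) (r : ℕ → End R V)
    (x i p : ℕ → R) (v : V) (m : ℕ) (hm : m ≤ n)
    (hr : ∀ k < m, u • r k - X P t k * r k = 1)
    (hr2 : ∀ k < m, u • r k - r k * X P t k = 1)
    (hi : ∀ k < m, i k * (u - x k) = 1)
    (hx : ∀ k < m, X P t k v = x k • v)
    (hp0 : p 0 = P.f u)
    (hp : ∀ k < m, p (k+1) = (u - P.q * x k) * (u - P.qi * x k) * (i k * i k) * p k) :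
    ∀ k ≤ m, Ob P t u r k v = p k • v := by
  have hrv : ∀ k < m, r k v = i k • v := by
    intro k hk
    have h1 := congrArg (fun g : End R V => g v) (hr2 k hk)
    simp only [sub_apply, smul_apply, mul_apply, hx k hk, one_apply, map_smul] at h1
    have := congrArg (fun z => i k • z) h1
    linear_combination (norm := module) this - (hi k hk) • r k v
  have hS : ∀ k ≤ m, ∃ σ : R, S P t k v = σ • v := by
    intro k
    induction k with
    | zero => intro _; exact ⟨0, by simp [S]⟩
    | succ k ih =>
      intro hk
      obtain ⟨σ, hσ⟩ := ih ✓
      exact ⟨σ + x k, by simp [S, hσ, hx k ✓, add_smul]⟩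
  have hqq := P.hq
  have hcc := P.hc
  intro k
  induction k with
  | zero => intro _; simp [Ob, hp0]
  | succ k ih =>
    intro hk
    rcases k with _ | k
    · have h0 := congrArg (fun g : End R V => g v) (h.cyc ✓)
      have hx0 : t 0 v = x 0 • v := hx 0 ✓
      have hi0 := hi 0 ✓
      simp only [mul_apply, sub_apply, smul_apply, one_apply, hx0, map_smul] at h0
      rw [hp 0 ✓, hp0, Ob, D_zero]
      simp only [mul_apply, sub_apply, add_apply, smul_apply,
        one_apply, S, zero_add, X, hx0, map_smul, hrv 0 ✓, smul_smul]
      have hth : P.th = P.q - 2 + P.qi := by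
        rw [Par.th]; linear_combination (P.q - 2) * hqq
      have h2 : i 0 * i 0 * ((u - x 0) * (u - x 0)) = 1 := by
        grind
      have hdiff : P.f u - P.th * u * x 0
          + P.th * (P.a * P.b) * u * (i 0 - P.ci * (x 0 * (i 0 * x 0)))
          - (u - P.q * x 0) * (u - P.qi * x 0) * (i 0 * i 0) * P.f u
          = (P.th * u * u * i 0 * i 0) * (x 0 * x 0 - (P.a + P.b) * x 0 + P.a * P.b) := by
        rw [hth, Par.f]
        grind
      linear_combination (norm := module) hdiff • v + (P.th * u * u * i 0 * i 0) • h0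
    · obtain ⟨σ, hσ⟩ := hS (k + 1) ✓
      have ih1 := ih ✓
      have hxv := hx (k + 1) ✓
      have hrv' := hrv (k + 1) ✓
      have hik := hi (k + 1) ✓
      have hkn : k + 1 < n := ✓
      have h1 := t_r_t h hkn u (r k) (r (k+1)) (hr k ✓) (hr2 k ✓) (hr (k+1) ✓) (hr2 (k+1) ✓)
      have hcr : ∀ j ≤ k, Commute (r (k+1)) (t j) := by
        intro j hj
        have h3 : (u • (1:End R V) - X P t (k+1)) * r (k+1) = 1 := by
          rw [sub_mul, smul_mul_assoc, one_mul, hr (k+1) ✓]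
        have h2 : r (k+1) * (u • (1:End R V) - X P t (k+1)) = 1 := by
          rw [mul_sub, mul_smul_comm, mul_one, hr2 (k+1) ✓]
        let U : (End R V)ˣ := ⟨_, r (k+1), h3, h2⟩
        have : Commute (U : End R V) (t j) :=
          ((Commute.one_left _).smul_left u).sub_left (commute_X_low h (k+1) hkn ✓).symm
        exact this.units_inv_left
      have h2 := D_t_mul h hkn u 1 (r k) 0 (by rw [hr k ✓]; simp)
      simp only [mul_zero, map_zero, add_zero, one_smul] at h2
      -- solve for `D k (t (k+1) * r k)` by applying `r (k+1)`
      have h3 : D P t k (t (k+1) * r k) = r (k+1) * (D P t k (t (k+1))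
          - (P.q - 1) • (X P t (k+1) * D P t k (r k))) := by
        rw [← h2, mul_sub, mul_smul_comm, ← mul_assoc, ← smul_mul_assoc, ← sub_mul,
          hr2 (k+1) ✓, one_mul]
      have h4 := D_t h k hkn
      have ih2 : (P.th * (P.a * P.b) * u) • D P t k (r k) v
          = (p (k+1) - P.f u + P.th * u * σ) • v := by
        rw [Ob] at ih1
        simp only [sub_apply, add_apply, smul_apply, one_apply, hσ] at ih1
        linear_combination (norm := module) ih1
      have h5 : (P.th * (P.a * P.b) * u) • D P t k (t (k+1)) v = (u * ((P.q - 1) * P.qi) *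
          (-(P.q * P.f (x (k+1))) + (P.q - 1) * (P.q - 1) * (x (k+1) * σ))) • v := by
        have := congrArg (fun g : End R V => g v) h4
        simp only [sub_apply, add_apply, smul_apply,
          LinearMap.neg_apply, one_apply, mul_apply, hσ, hxv, map_smul] at this
        rw [Par.th, Par.f]
        linear_combination (norm := module) (u * ((P.q - 1) * P.qi)) • this
      set ζ := p (k+1) - P.f u + P.th * u * σ with hζ
      set κ := u * ((P.q - 1) * P.qi) *
          (-(P.q * P.f (x (k+1))) + (P.q - 1) * (P.q - 1) * (x (k+1) * σ)) with hκ
      have h6 : (P.th * (P.a * P.b) * u) • D P t k (t (k+1) * r k) v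
          = (i (k+1) * (κ - (P.q - 1) * ζ * x (k+1))) • v := by
        rw [h3]
        simp only [sub_apply, smul_apply, mul_apply]
        rw [← map_smul, smul_sub, h5, smul_comm _ (P.q - 1), ← map_smul, ih2]
        simp only [map_smul, map_sub, hxv, hrv']
        module
      rw [hp (k+1) ✓, Ob, D_succ, h1]
      rw [map_add, map_smul, map_smul, D_mul_right _ k hcr]
      rw [show S P t (k + 1 + 1) = S P t (k+1) + X P t (k+1) from rfl]
      simp only [sub_apply, add_apply, smul_apply, one_apply, mul_apply, hσ, hxv, hrv', map_smul]
      have hth : P.th = P.q - 2 + P.qi := by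
        rw [Par.th]; linear_combination (P.q - 2) * hqq
      generalize D P t k (t (k+1) * r k) v = w1 at *
      generalize D P t k (r k) v = w at *
      generalize x (k+1) = y at *
      generalize i (k+1) = j at *
      generalize p (k+1) = pp at *
      have hjj : j * j * ((u - y) * (u - y)) = 1 := by
        grind
      have hfin : P.f u - P.th * u * (σ + y) + P.th * (P.a * P.b) * u * j + ζ
          + P.qi * (P.q - 1) * u * j * (j * (κ - (P.q - 1) * ζ * y))
          - P.th * u * y * y * j = (u - P.q * y) * (u - P.qi * y) * (j * j) * pp := by
        have hT : (P.f u - P.th * u * (σ + y) + ζ) * ((u - y) * (u - y))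
            + P.th * u * (P.a * P.b - y * y) * (u - y)
            + (P.qi * (P.q - 1) * u * (κ - (P.q - 1) * ζ * y)
              - (u - P.q * y) * (u - P.qi * y) * pp) = 0 := by
          rw [hκ, hζ, hth, Par.f, Par.f]
          grind
        grind
      linear_combination (norm := module) hfin • v + (P.qi * P.q) • ih2
        + (P.qi * (P.q - 1) * u * j) • h6 + (hqq * ζ) • v - (P.th * u * y * y * j * hcc) • v
end

/-! ### Vector-valued polynomial functions and the rational function of a weight -/

section
open Polynomial Filter

section
variable {V W : Type} [AddCommGroup V] [Module R V] [AddCommGroup W]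
  [Module R W]

/-- The polynomial function `s ↦ ∑ s ^ k • z k` with vector coefficients. -/
def pf (z : ℕ →₀ V) (s : R) : V := z.sum fun k v => s ^ k • v

/-- Functions `R → V` that are polynomial with coefficients in `V`. -/
def IsPF (Z : R → V) : Prop := ∃ z : ℕ →₀ V, ∀ s, Z s = pf z s

theorem pf_add (z w : ℕ →₀ V) (s : R) : pf (z + w) s = pf z s + pf w s :=
  Finsupp.sum_add_index' (by simp) (by simp [smul_add])

theorem pf_single (k : ℕ) (v : V) (s : R) : pf (Finsupp.single k v) s = s ^ k • v := by
  simp [pf]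

theorem pf_map (f : V →ₗ[R] W) (z : ℕ →₀ V) (s : R) :
    pf (z.mapRange f (map_zero f)) s = f (pf z s) := by
  rw [pf, Finsupp.sum_mapRange_index (by simp), pf, map_finsuppSum]
  simp

theorem pf_shift (z : ℕ →₀ V) (s : R) : pf (z.mapDomain Nat.succ) s = s • pf z s := by
  rw [pf, Finsupp.sum_mapDomain_index (by simp) (by simp [smul_add]), pf, Finsupp.smul_sum]
  simp [pow_succ', mul_smul]

theorem IsPF.const (v : V) : IsPF (fun _ : R => v) := ⟨Finsupp.single 0 v, by simp [pf_single]⟩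

theorem IsPF.add {Z Z' : R → V} (h : IsPF Z) (h' : IsPF Z') : IsPF (fun s => Z s + Z' s) := by
  obtain ⟨z, hz⟩ := h
  obtain ⟨z', hz'⟩ := h'
  exact ⟨z + z', fun s => by simp only [pf_add, hz, hz']⟩

theorem IsPF.map {Z : R → V} (h : IsPF Z) (f : V →ₗ[R] W) : IsPF (fun s => f (Z s)) := by
  obtain ⟨z, hz⟩ := h
  exact ⟨z.mapRange f (map_zero f), fun s => by simp only [pf_map, hz]⟩

theorem IsPF.smul {Z : R → V} (h : IsPF Z) (c : R) : IsPF (fun s => c • Z s) :=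
  h.map (LinearMap.lsmul R V c)

theorem IsPF.shift {Z : R → V} (h : IsPF Z) : IsPF (fun s => s • Z s) := by
  obtain ⟨z, hz⟩ := h
  exact ⟨z.mapDomain Nat.succ, fun s => by simp only [pf_shift, hz]⟩

theorem IsPF.sub {Z Z' : R → V} (h : IsPF Z) (h' : IsPF Z') : IsPF (fun s => Z s - Z' s) := by
  have := h.add (h'.smul (-1))
  simpa [sub_eq_add_neg] using this

theorem IsPF.poly (g : R[X]) {Z : R → V} (h : IsPF Z) : IsPF (fun s => g.eval s • Z s) := by
  induction g using Polynomial.induction_on' with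
  | add p q hp hq => simpa [add_smul] using hp.add hq
  | monomial k c =>
    have : ∀ k : ℕ, IsPF (fun s : R => s ^ k • Z s) := by
      intro k
      induction k with
      | zero => simpa using h
      | succ k ih => simpa [pow_succ', mul_smul] using ih.shift
    simpa [mul_smul] using (this k).smul c

/-- Division with remainder by `s - Y`, as a polynomial function of `s` whose values are
polynomials in `Y`. -/
theorem exists_chat_poly (Y : E) (g : R[X]) :
    ∃ C : R → E, IsPF C ∧ (∀ s, s • C s - Y * C s = (g.eval s) • (1 : E) + -(aeval Y g)) ∧
      ∀ s, ∃ p : R[X], C s = aeval Y p := by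
  induction g using Polynomial.induction_on' with
  | add p q hp hq =>
    obtain ⟨C, hC, hC', hCp⟩ := hp
    obtain ⟨C1, hC1, hC1', hC1p⟩ := hq
    refine ⟨_, hC.add hC1, fun s => ?_, fun s => ?_⟩
    · simp only [mul_add, smul_add, eval_add, map_add, add_smul]
      grind
    · obtain ⟨p1, h1⟩ := hCp s
      obtain ⟨p2, h2⟩ := hC1p s
      exact ⟨p1 + p2, by rw [map_add, h1, h2]⟩
  | monomial k c =>
    have : ∀ k : ℕ, ∃ C : R → E, IsPF C ∧
        (∀ s, s • C s - Y * C s = (s ^ k) • (1 : E) + -(Y ^ k)) ∧ ∀ s, ∃ p : R[X], C s = aeval Y p := by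
      intro k
      induction k with
      | zero => exact ⟨_, IsPF.const 0, by simp, fun s => ⟨0, by simp⟩⟩
      | succ k ih =>
        obtain ⟨C, hC, hC', hCp⟩ := ih
        refine ⟨_, (IsPF.const (Y ^ k)).add hC.shift, fun s => ?_, fun s => ?_⟩
        · simp only [mul_add, smul_add, mul_smul_comm, ← pow_succ']
          linear_combination (norm := module) s • hC' s
        · obtain ⟨p, hp⟩ := hCp s
          exact ⟨𝐗 ^ k + s • p, by simp [hp]⟩
    obtain ⟨C, hC, hC', hCp⟩ := this k
    refine ⟨_, hC.smul c, fun s => ?_, fun s => ?_⟩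
    · simp only [mul_smul_comm, eval_monomial, aeval_monomial, ← Algebra.smul_def]
      linear_combination (norm := module) c • hC' s
    · obtain ⟨p, hp⟩ := hCp s
      exact ⟨c • p, by simp [hp]⟩

theorem exists_chat (Y : E) (g : R[X]) :
    ∃ C : R → E, IsPF C ∧ ∀ s, s • C s - Y * C s = (g.eval s) • (1 : E) + -(aeval Y g) :=
  (exists_chat_poly Y g).imp fun _ h => ⟨h.1, h.2.1⟩

variable [Infinite F] [Algebra F R] [Module F V] [IsScalarTower F R V]

theorem pf_eq_zero (z : ℕ →₀ V) (h : ∀ᶠ l : F in cofinite, pf z (algebraMap F R l) = 0) : z = 0 := by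
  ext k
  rw [Finsupp.zero_apply, ← Module.forall_dual_apply_eq_zero_iff F]
  intro φ
  have hp : (z.sum fun k v => monomial k (φ v) : F[X]) = 0 := by
    apply Polynomial.eq_zero_of_infinite_isRoot
    have hi : {l : F | pf z (algebraMap F R l) = 0}.Infinite := frequently_cofinite_iff_infinite.1 h.frequently
    refine hi.mono fun l hl => ?_
    have hl : pf z (algebraMap F R l) = 0 := hl
    have := congrArg φ hl
    rw [pf, map_finsuppSum, map_zero] at this
    change eval l _ = 0
    rw [Finsupp.sum, eval_finsetSum]
    rw [Finsupp.sum] at this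
    rw [← this]
    refine Finset.sum_congr rfl fun k _ => ?_
    rw [eval_monomial, ← map_pow, algebraMap_smul, map_smul, smul_eq_mul, mul_comm]
  have := congrArg (fun p => coeff p k) hp
  simp only [Finsupp.sum, finsetSum_coeff, coeff_monomial, coeff_zero] at this
  rw [Finset.sum_ite_eq'] at this
  grind

variable (F) in
theorem IsPF.eq_zero {Z : R → V} (hZ : IsPF Z)
    (h : ∀ᶠ l : F in cofinite, Z (algebraMap F R l) = 0) (s : R) : Z s = 0 := by
  obtain ⟨z, hz⟩ := hZ
  have : z = 0 := pf_eq_zero (F := F) z (h.mono fun l hl => by rw [← hz, hl])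
  rw [hz, this]; simp [pf]
end

theorem IsPF.remainder {F V : Type} [Field F] [Infinite F] [AddCommGroup V] [Module F V] (Y : End F V)
    {Z : F → V} (hZ : IsPF Z) (w : V) (h : ∀ᶠ s in cofinite, s • Z s - Y (Z s) = w) : w = 0 := by
  obtain ⟨z, hz⟩ := hZ
  have h0 : z.mapDomain Nat.succ + (z.mapRange (-Y) (map_zero _) + Finsupp.single 0 (-w)) = 0 := by
    apply pf_eq_zero (F := F) (R := F)
    refine h.mono fun s hs => ?_
    have := pf_map (-Y) z s
    rw [hz] at hs
    simp only [Algebra.algebraMap_self, RingHom.id_apply]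
    rw [pf_add, pf_add, pf_shift, this, pf_single, pow_zero, one_smul, ← hs]
    simp only [LinearMap.neg_apply]
    abel
  have h1 : ∀ k, z k = Y (z (k + 1)) := by
    intro k
    have := DFunLike.congr_fun h0 (k + 1)
    simp only [Finsupp.add_apply, Finsupp.mapRange_apply, Finsupp.zero_apply] at this
    rw [show k + 1 = Nat.succ k from rfl, Finsupp.mapDomain_apply Nat.succ_injective] at this
    rw [Finsupp.single_eq_of_ne ✓] at this
    simp only [LinearMap.neg_apply, add_zero] at this
    grind
  have h2 : ∀ j k, z k = (Y ^ j) (z (k + j)) := by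
    intro j
    induction j with
    | zero => simp
    | succ j ih => intro k; rw [ih k, h1 (k + j), pow_succ]; rfl
  have h3 : ∀ k, z k = 0 := by
    intro k
    obtain ⟨N, hN⟩ : ∃ N, ∀ j ≥ N, z j = 0 := by
      refine ⟨z.support.sup id + 1, fun j hj => ?_⟩
      by_contra hne
      have := Finset.le_sup (f := id) (Finsupp.mem_support_iff.2 hne)
      simp at this; omega
    rw [h2 N k, hN _ ✓, map_zero]
  have := DFunLike.congr_fun h0 0
  simp only [Finsupp.add_apply, Finsupp.mapRange_apply, Finsupp.zero_apply, h3, map_zero,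
    Finsupp.single_eq_same, zero_add] at this
  rw [Finsupp.mapDomain_of_notMem_range] at this
  · simpa using this
  · simp

section
variable {P : Par R} {t : ℕ → E}

theorem isUnit_t (h : AK P n t) (hj : j < n) : IsUnit (t j) := by
  have hqq := P.hq
  have hcc := P.hc
  rcases Nat.eq_zero_or_pos j with rfl | h1
  · have h0 := h.cyc hj
    refine ⟨⟨t 0, P.ci • ((P.a + P.b) • (1 : E) - t 0), ?_, ?_⟩, rfl⟩
    · simp only [mul_smul_comm, mul_sub, mul_one, h0]
      linear_combination (norm := module) hcc • (1 : E)
    · simp only [smul_mul_assoc, sub_mul, one_mul, h0]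
      linear_combination (norm := module) hcc • (1 : E)
  · have h0 := h.quad j h1 hj
    refine ⟨⟨t j, P.qi • (t j - (P.q - 1) • (1 : E)), ?_, ?_⟩, rfl⟩
    · simp only [mul_smul_comm, mul_sub, mul_one, h0]
      linear_combination (norm := module) hqq • (1 : E)
    · simp only [smul_mul_assoc, sub_mul, one_mul, h0]
      linear_combination (norm := module) hqq • (1 : E)

theorem isUnit_X (h : AK P n t) : ∀ k, k < n → IsUnit (X P t k)
  | 0, hk => isUnit_t (t := t) h hk
  | k + 1, hk => by
    rw [AKT.X]
    have h1 := (isUnit_t h hk).mul ((isUnit_X h k ✓).mul (isUnit_t h hk))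
    have : IsUnit (algebraMap R E P.qi) := (IsUnit.of_mul_eq_one _ ((mul_comm _ _).trans P.hq)).map _
    rw [Algebra.smul_def]
    exact this.mul h1
end

section
variable [Algebra F R]
  {V : Type} [AddCommGroup V] [Module R V] [Module F V] [IsScalarTower F R V]
  {P : Par R} {t : ℕ → End R V}

/-- Numerator of the rational function attached to a sequence of eigenvalues. -/
noncomputable def num (P : Par R) (x : ℕ → R) : ℕ → R[X]
  | 0 => (𝐗 - C P.a) * (𝐗 - C P.b)
  | m + 1 => num P x m * ((𝐗 - C (P.q * x m)) * (𝐗 - C (P.qi * x m)))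

/-- Denominator of the rational function attached to a sequence of eigenvalues. -/
noncomputable def den (x : ℕ → R) : ℕ → R[X]
  | 0 => 1
  | m + 1 => den x m * (𝐗 - C (x m)) ^ 2

variable (F) in
theorem eventually_bijective [FiniteDimensional F V] (Y : End R V) :
    ∀ᶠ l : F in cofinite, Bijective (fun v => algebraMap F R l • v - Y v) := by
  let Y' : End F V := Y.restrictScalars F
  have : {l : F | Y'.HasEigenvalue l}.Finite := End.finite_hasEigenvalue Y'
  have h : ∀ᶠ l : F in cofinite, ¬ Y'.HasEigenvalue l := by
    simp_all
  refine h.mono fun l hl => ?_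
  have hinj : Function.Injective (l • (1 : End F V) - Y') := by
    rw [← LinearMap.ker_eq_bot, LinearMap.ker_eq_bot']
    intro v hv
    by_contra hne
    apply hl
    refine End.hasEigenvalue_of_hasEigenvector (x := v) ⟨?_, hne⟩
    rw [End.mem_eigenspace_iff]
    exact (sub_eq_zero.1 hv).symm
  have hb : Bijective (l • (1 : End F V) - Y') :=
    ⟨hinj, LinearMap.injective_iff_surjective.1 hinj⟩
  convert hb using 1
  ext v
  simp [Y']

/-- An inverse of `l - Y` in the endomorphism ring. -/
theorem exists_inverse (Y : End R V) (l : R) (h : Bijective (fun v => l • v - Y v)) :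
    ∃ r : End R V, l • r - Y * r = 1 ∧ l • r - r * Y = 1 := by
  let f : V →ₗ[R] V := l • (1 : End R V) - Y
  have hf : Bijective f := h
  let g := LinearEquiv.ofBijective f hf
  refine ⟨g.symm, ?_, ?_⟩
  · ext v
    exact g.apply_symm_apply v
  · ext v
    have := g.symm_apply_apply v
    change g.symm (l • v - Y v) = v at this
    simp_all

theorem isUnit_algebraMap_sub (c : R) (hc : ∃ c0 : F, IsNilpotent (c - algebraMap F R c0)) :
    ∀ᶠ l : F in cofinite, IsUnit (algebraMap F R l - c) := by
  obtain ⟨c0, hc0⟩ := hc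
  refine (eventually_cofinite_ne c0).mono fun l hl => ?_
  have h1 : IsUnit (algebraMap F R (l - c0)) := (sub_ne_zero.2 hl).isUnit.map _
  have : algebraMap F R l - c = algebraMap F R (l - c0) - (c - algebraMap F R c0) := by
    rw [map_sub]; ring
  rw [this, sub_eq_add_neg]
  exact IsNilpotent.isUnit_add_left_of_commute hc0.neg h1 (Commute.all _ _)

/-- The obstruction element, scaled by a polynomial `χ`, as a polynomial function. -/
noncomputable def PChi (P : Par R) (t : ℕ → End R V) (m : ℕ) (χ : R[X])
    (C : R → End R V) (s : R) : End R V :=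
  χ.eval s • (P.f s • (1 : End R V) - (P.th * s) • S P t (m+1))
    + (P.th * (P.a * P.b) * s) • D P t m (C s)

theorem IsPF_PChi (m : ℕ) (χ : R[X]) {C : R → End R V} (hC : IsPF C) : IsPF (PChi P t m χ C) := by
  unfold PChi
  have h1 : IsPF (fun s : R => P.f s • (1 : End R V)) := by
    have := IsPF.poly (𝐗 * 𝐗 - Polynomial.C (P.a + P.b) * 𝐗
      + Polynomial.C (P.a * P.b)) (IsPF.const (R := R) (1 : End R V))
    simpa [Par.f] using this
  have h2 : IsPF (fun s : R => (P.th * s) • S P t (m+1)) := by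
    simpa [mul_smul] using (IsPF.const (R := R) (S P t (m+1))).shift.smul P.th
  have h3 : IsPF (fun s : R => (P.th * (P.a * P.b) * s) • D P t m (C s)) := by
    simpa [mul_smul] using (hC.map (D P t m)).shift.smul (P.th * (P.a * P.b))
  exact ((h1.sub h2).poly χ).add h3

variable (F) in
/-- For all but finitely many scalars `l`, the value of the scaled obstruction on a joint
eigenvector. -/
theorem PChi_generic [FiniteDimensional F V] (h : AK P n t) (hm : m < n)
    (N : Submodule R V) (hN : ∀ j ≤ m, ∀ v ∈ N, t j v ∈ N) (χ : R[X])
    (hχ : ∀ v ∈ N, aeval (X P t m) χ v = 0) (C : R → End R V)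
    (hC : ∀ s, s • C s - X P t m * C s = χ.eval s • (1 : End R V) + -(aeval (X P t m) χ))
    (v : V) (hv : v ∈ N) (x : ℕ → R) (hx : ∀ k ≤ m, X P t k v = x k • v)
    (hx0 : ∀ k ≤ m, ∃ c0 : F, IsNilpotent (x k - algebraMap F R c0)) :
    ∀ᶠ l : F in cofinite, ∃ p : R, IsUnit ((den x (m+1)).eval (algebraMap F R l)) ∧
      p * (den x (m+1)).eval (algebraMap F R l) = (num P x (m+1)).eval (algebraMap F R l) ∧
      PChi P t m χ C (algebraMap F R l) v = (χ.eval (algebraMap F R l) * p) • v := by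
  have h1 : ∀ᶠ l : F in cofinite, ∀ k ∈ range (m+1),
      Bijective (fun v => algebraMap F R l • v - X P t k v) := by
    rw [Filter.eventually_all_finset]
    exact fun k _ => eventually_bijective F (X P t k)
  have h2 : ∀ᶠ l : F in cofinite, ∀ k ∈ range (m+1), IsUnit (algebraMap F R l - x k) := by
    rw [Filter.eventually_all_finset]
    exact fun k hk => isUnit_algebraMap_sub (x k) (hx0 k (by simp at hk; omega))
  filter_upwards [h1, h2] with l h1 h2
  set u := algebraMap F R l with hu
  have h1' : ∀ k, ∃ r : End R V, k < m + 1 → (u • r - X P t k * r = 1 ∧ u • r - r * X P t k = 1) := by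
    intro k
    by_cases hk : k < m + 1
    · obtain ⟨r, hr⟩ := exists_inverse _ _ (h1 k (by simpa using hk))
      grind
    · simp_all
  choose r hr using h1'
  have h2' : ∀ k, ∃ i : R, k < m + 1 → i * (u - x k) = 1 := by
    intro k
    by_cases hk : k < m + 1
    · obtain ⟨i, hi⟩ := (h2 k (by simpa using hk)).exists_left_inv
      grind
    · simp_all
  choose i hi using h2'
  let p : ℕ → R := fun k => Nat.rec (P.f u)
    (fun k pk => (u - P.q * x k) * (u - P.qi * x k) * (i k * i k) * pk) k
  have hpd : ∀ k ≤ m + 1, p k * (den x k).eval u = (num P x k).eval u := by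
    intro k
    induction k with
    | zero => intro _; simp [den, num, p, Par.f]; ring
    | succ k ih =>
      intro hk
      have := ih ✓
      have hi := hi k ✓
      simp only [den, num, eval_mul, eval_sub, eval_X, eval_C, eval_pow, ← this]
      grind
  have hden : ∀ k ≤ m + 1, IsUnit ((den x k).eval u) := by
    intro k
    induction k with
    | zero => intro _; simp [den]
    | succ k ih =>
      intro hk
      simp only [den, eval_mul, eval_sub, eval_X, eval_C, eval_pow]
      exact (ih ✓).mul ((h2 k (by simp; omega)).pow 2)
  refine ⟨p (m+1), hden _ le_rfl, hpd _ le_rfl, ?_⟩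
  have hob := Ob_eigen h u r x i p v (m+1) hm (fun k hk => (hr k hk).1) (fun k hk => (hr k hk).2)
    hi (fun k hk => hx k ✓) rfl (fun k _ => rfl) (m+1) le_rfl
  have hCr : C u = χ.eval u • r m - r m * aeval (X P t m) χ := by
    have e1 := hC u
    have e2 := (hr m ✓).2
    calc C u = (u • r m - r m * X P t m) * C u := by rw [e2, one_mul]
      _ = r m * (u • C u - X P t m * C u) := by
        simp only [sub_mul, mul_sub, smul_mul_assoc, mul_smul_comm, mul_assoc]
      _ = _ := by
        rw [e1]; simp only [mul_add, mul_smul_comm, mul_one, mul_neg, sub_eq_add_neg]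
  have hk : D P t m (r m * aeval (X P t m) χ) v = 0 :=
    D_kill t N m hN _ (fun w hw => by simp [hχ w hw]) v hv
  rw [mul_smul, ← hob, Ob, PChi, hCr, map_sub, map_smul]
  simp only [add_apply, sub_apply, smul_apply, hk, one_apply, sub_zero]
  module

variable (F) in
theorem PChi_eval [Infinite F] [FiniteDimensional F V] (h : AK P n t) (hm : m < n)
    (N : Submodule R V) (hN : ∀ j ≤ m, ∀ v ∈ N, t j v ∈ N) (χ : R[X])
    (hχ : ∀ v ∈ N, aeval (X P t m) χ v = 0) (C : R → End R V) (hCpf : IsPF C)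
    (hC : ∀ s, s • C s - X P t m * C s = χ.eval s • (1 : End R V) + -(aeval (X P t m) χ))
    (v : V) (hv : v ∈ N) (x : ℕ → R) (hx : ∀ k ≤ m, X P t k v = x k • v)
    (hx0 : ∀ k ≤ m, ∃ c0 : F, IsNilpotent (x k - algebraMap F R c0))
    (L M : R[X]) (hLM : L * num P x (m+1) = M * den x (m+1)) (s : R) :
    L.eval s • PChi P t m χ C s v = (χ.eval s * M.eval s) • v := by
  have h1 := PChi_generic F h hm N hN χ hχ C hC v hv x hx hx0
  have hpf : IsPF (fun s => L.eval s • PChi P t m χ C s v - (χ.eval s * M.eval s) • v) := by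
    refine IsPF.sub (IsPF.poly L ((IsPF_PChi m χ hCpf).map (LinearMap.applyₗ v))) ?_
    simpa using IsPF.poly (χ * M) (IsPF.const (R := R) v)
  refine sub_eq_zero.1 (hpf.eq_zero F (h1.mono ?_) s)
  rintro l ⟨p, hu, hp, hP⟩
  rw [hP]
  have : L.eval (algebraMap F R l) * p = M.eval (algebraMap F R l) := by
    apply hu.mul_right_cancel
    rw [mul_assoc, hp, ← eval_mul, hLM, eval_mul]
  rw [← this]
  module
end

theorem den_ne_zero (x : ℕ → F) : ∀ m, den x m ≠ 0
  | 0 => one_ne_zero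
  | m + 1 => mul_ne_zero (den_ne_zero x m) (pow_ne_zero _ (X_sub_C_ne_zero _))

/-- If `χ` annihilates `X m` on a stable subspace containing a joint eigenvector, then the
denominator of the rational function of that eigenvector divides `χ` times its numerator. -/
theorem exists_quotient [Infinite F] [FiniteDimensional F V] (h : AK P n t) (hm : m < n)
    (N : Submodule F V) (hN : ∀ j ≤ m, ∀ v ∈ N, t j v ∈ N) (χ : F[X])
    (hχ : ∀ v ∈ N, aeval (X P t m) χ v = 0)
    (v : V) (hv : v ∈ N) (hv0 : v ≠ 0) (x : ℕ → F) (hx : ∀ k ≤ m, X P t k v = x k • v) :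
    ∃ g : F[X], g * den x (m+1) = χ * num P x (m+1) := by
  obtain ⟨C, hCpf, hC⟩ := exists_chat (X P t m) χ
  have h1 := PChi_generic F h hm N hN χ hχ C hC v hv x hx (fun k _ => ⟨x k, by simp⟩)
  obtain ⟨φ, hφ⟩ : ∃ φ : Module.Dual F V, φ v ≠ 0 := by
    by_contra hcon
    push Not at hcon
    exact hv0 ((Module.forall_dual_apply_eq_zero_iff F v).1 hcon)
  obtain ⟨z, hz⟩ := ((IsPF_PChi (P := P) (t := t) m χ hCpf).map (LinearMap.applyₗ v)).map ((φ v)⁻¹ • φ)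
  refine ⟨z.sum fun k c => monomial k c, ?_⟩
  apply Polynomial.eq_of_infinite_eval_eq
  have hi := frequently_cofinite_iff_infinite.1 h1.frequently
  refine hi.mono ?_
  rintro l ⟨p, hu, hp, hP⟩
  have e := hz l
  simp only [Algebra.algebraMap_self, RingHom.id_apply] at hu hp hP
  simp only [LinearMap.applyₗ_apply_apply, hP, map_smul, smul_apply, smul_eq_mul, inv_mul_cancel₀ hφ, mul_one] at e
  have e2 : eval l (z.sum fun k c => monomial k c) = pf z l := by
    rw [Finsupp.sum, eval_finsetSum, pf, Finsupp.sum]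
    exact Finset.sum_congr rfl fun k _ => by rw [eval_monomial, smul_eq_mul, mul_comm]
  change eval l _ = eval l _
  rw [eval_mul, e2, ← e, eval_mul, mul_assoc, hp]

/-- The quotient polynomial annihilates the vector under the next Jucys–Murphy element. -/
theorem aeval_next [Infinite F] [FiniteDimensional F V] (h : AK P n t) (hm : m + 1 < n)
    (N : Submodule F V) (hN : ∀ j ≤ m, ∀ v ∈ N, t j v ∈ N) (χ : F[X])
    (hχ : ∀ v ∈ N, aeval (X P t m) χ v = 0)
    (v : V) (hv : v ∈ N) (x : ℕ → F) (hx : ∀ k ≤ m, X P t k v = x k • v)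
    (g : F[X]) (hg : g * den x (m+1) = χ * num P x (m+1)) :
    aeval (X P t (m+1)) g v = 0 := by
  obtain ⟨C, hCpf, hC⟩ := exists_chat (X P t m) χ
  have h1 := PChi_generic F h ✓ N hN χ hχ C hC v hv x hx (fun k _ => ⟨x k, by simp⟩)
  obtain ⟨C', hC'pf, hC'⟩ := exists_chat (X P t (m+1)) g
  set Y := X P t (m+1) with hY
  let G : F → End F V := fun u => χ.eval u • (u • Y - (P.a * P.b) • (1 : End F V))
      - ((P.q - 1) * (P.a * P.b) * P.qi * u) • D P t m (t (m+1) * C u)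
  have hG : IsPF G := by
    refine IsPF.sub (IsPF.poly χ (IsPF.sub (IsPF.const (R := F) Y).shift (IsPF.const _))) ?_
    have := (((hCpf.map (LinearMap.mulLeft F (t (m+1)))).map (D P t m)).shift).smul
      ((P.q - 1) * (P.a * P.b) * P.qi)
    simpa [mul_smul] using this
  have hZ : IsPF (fun s => G s v - C' s (Y v)) :=
    (hG.map (LinearMap.applyₗ v)).sub (hC'pf.map (LinearMap.applyₗ (Y v)))
  have hw : aeval Y g (Y v) = 0 := by
    refine hZ.remainder Y _ (h1.mono ?_)
    rintro l ⟨p, hu, hp, hP⟩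
    simp only [Algebra.algebraMap_self, RingHom.id_apply] at hu hp hP
    have hpg : χ.eval l * p = g.eval l := by
      apply hu.mul_right_cancel
      rw [mul_assoc, hp, ← eval_mul, ← hg, eval_mul]
    have e1 := congrArg (fun A : End F V => A v)
      (G_identity h hm l (χ.eval l) (C l) _ (hC l) (G l) rfl)
    have e2 := congrArg (fun A : End F V => A (Y v)) (hC' l)
    have hk : D P t m (t (m+1) * -(aeval (X P t m) χ)) v = 0 :=
      D_kill t N m hN _ (fun w hw => by simp [hχ w hw]) v hv
    rw [PChi, hpg] at hP
    simp only [mul_apply, add_apply _ (_ • D P t m (t (m+1) * -(aeval (X P t m) χ))),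
      smul_apply _ (D P t m (t (m+1) * -(aeval (X P t m) χ))), hk, hP,
      smul_zero, add_zero] at e1
    simp only [add_apply, sub_apply, smul_apply, LinearMap.neg_apply,
      mul_apply, one_apply, map_smul] at e1 e2
    rw [← hY] at e1
    simp only [map_sub]
    linear_combination (norm := module) -e1 - e2
  obtain ⟨U, hU⟩ := isUnit_X h (m+1) hm
  have hc : aeval Y g (Y v) = Y (aeval Y g v) := by
    have : aeval Y g * Y = Y * aeval Y g := by
      have := congrArg (aeval Y) (mul_comm g 𝐗)
      simpa using this
    exact congrArg (fun A : End F V => A v) this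
  rw [hc] at hw
  have : (↑U⁻¹ * (U : End F V)) (aeval Y g v) = 0 := by
    simp_all
  simpa using this
end

/-! ### The induced module -/

section
variable {N : Type} [AddCommGroup N] [Module R N]

/-- The underlying module of the module induced from `H_m` to `H_{m+1}`: two copies of `N` for each
`p ≤ m`, the first one standing for `t_{p+1} ⋯ t_m ⊗ N`, the second one for
`t_p ⋯ t_1 t_0 t_1 ⋯ t_m ⊗ N`. -/
abbrev IndM (N : Type) (m : ℕ) : Type := Fin (m + 1) → N × N

/-- Coordinate at `t_{k+1} ⋯ t_m`. -/
def vp (R : Type) [CommRing R] {N : Type} [AddCommGroup N] [Module R N] (m k : ℕ) :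
    IndM N m →ₗ[R] N :=
  if h : k < m + 1 then LinearMap.fst R N N ∘ₗ LinearMap.proj ⟨k, h⟩ else 0

/-- Coordinate at `t_k ⋯ t_1 t_0 t_1 ⋯ t_m`. -/
def vm (R : Type) [CommRing R] {N : Type} [AddCommGroup N] [Module R N] (m k : ℕ) :
    IndM N m →ₗ[R] N :=
  if h : k < m + 1 then LinearMap.snd R N N ∘ₗ LinearMap.proj ⟨k, h⟩ else 0

theorem ind_ext {v w : IndM N m} (h1 : ∀ k ≤ m, vp R m k v = vp R m k w)
    (h2 : ∀ k ≤ m, vm R m k v = vm R m k w) : v = w := by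
  funext p
  have hp := p.2
  have a := h1 p ✓
  have b := h2 p ✓
  simp only [vp, vm, p.2, dif_pos] at a b
  exact Prod.ext a b

/-- The action of the generators on the induced module. -/
def indT (P : Par R) (t : ℕ → End R N) (m j : ℕ) : End R (IndM N m) :=
  LinearMap.pi fun p => LinearMap.prod
    (if j = 0 then (if p.1 = 0 then -(P.a * P.b) • vm R m 0 else t 0 ∘ₗ vp R m p)
     else if p.1 = j then P.q • vp R m (j - 1)
     else if p.1 + 1 = j then (P.q - 1) • vp R m (j - 1) + vp R m j
     else if j < p.1 then t j ∘ₗ vp R m p else t (j - 1) ∘ₗ vp R m p)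
    (if j = 0 then (if p.1 = 0 then vp R m 0 + (P.a + P.b) • vm R m 0 else t 0 ∘ₗ vm R m p)
     else if p.1 = j then (P.q - 1) • vm R m j + vm R m (j - 1)
     else if p.1 + 1 = j then P.q • vm R m j
     else if j < p.1 then t j ∘ₗ vm R m p else t (j - 1) ∘ₗ vm R m p)

variable {P : Par R} {t : ℕ → End R N}

theorem vp_indT (hk : k ≤ m) (j : ℕ) (v : IndM N m) : vp R m k (indT P t m j v) =
    if j = 0 then (if k = 0 then -(P.a * P.b) • vm R m 0 v else t 0 (vp R m k v))
     else if k = j then P.q • vp R m (j - 1) v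
     else if k + 1 = j then (P.q - 1) • vp R m (j - 1) v + vp R m j v
     else if j < k then t j (vp R m k v) else t (j - 1) (vp R m k v) := by
  conv_lhs => rw [vp, dif_pos (show k < m + 1 by omega)]
  simp only [indT, comp_apply, proj_apply, pi_apply, LinearMap.fst_apply, LinearMap.prod_apply]
  split_ifs <;> rfl

theorem vm_indT (hk : k ≤ m) (j : ℕ) (v : IndM N m) : vm R m k (indT P t m j v) =
    if j = 0 then (if k = 0 then vp R m 0 v + (P.a + P.b) • vm R m 0 v else t 0 (vm R m k v))
     else if k = j then (P.q - 1) • vm R m j v + vm R m (j - 1) v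
     else if k + 1 = j then P.q • vm R m j v
     else if j < k then t j (vm R m k v) else t (j - 1) (vm R m k v) := by
  conv_lhs => rw [vm, dif_pos (show k < m + 1 by omega)]
  simp only [indT, comp_apply, proj_apply, pi_apply, LinearMap.snd_apply, LinearMap.prod_apply]
  split_ifs <;> rfl

theorem p0 (v : IndM N m) : vp R m 0 (indT P t m 0 v) = -(P.a * P.b) • vm R m 0 v := by
  rw [vp_indT ✓]; simp
theorem m0 (v : IndM N m) : vm R m 0 (indT P t m 0 v) = vp R m 0 v + (P.a + P.b) • vm R m 0 v := by
  rw [vm_indT ✓]; simp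
theorem p_eq (hj : j + 1 ≤ m) (v : IndM N m) :
    vp R m (j + 1) (indT P t m (j + 1) v) = P.q • vp R m j v := by
  rw [vp_indT hj]; simp
theorem m_eq (hj : j + 1 ≤ m) (v : IndM N m) : vm R m (j + 1) (indT P t m (j + 1) v) =
    (P.q - 1) • vm R m (j + 1) v + vm R m j v := by
  rw [vm_indT hj]; simp
theorem p_prev (hj : j + 1 ≤ m) (v : IndM N m) : vp R m j (indT P t m (j + 1) v) =
    (P.q - 1) • vp R m j v + vp R m (j + 1) v := by
  rw [vp_indT ✓]; simp
theorem m_prev (hj : j + 1 ≤ m) (v : IndM N m) : vm R m j (indT P t m (j + 1) v) =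
    P.q • vm R m (j + 1) v := by
  rw [vm_indT ✓]; simp
theorem p_gt (hk : k ≤ m) (hj : j < k) (v : IndM N m) :
    vp R m k (indT P t m j v) = t j (vp R m k v) := by
  rw [vp_indT ✓]
  grind
theorem m_gt (hk : k ≤ m) (hj : j < k) (v : IndM N m) :
    vm R m k (indT P t m j v) = t j (vm R m k v) := by
  rw [vm_indT ✓]
  grind
theorem p_lt (hj' : j + 1 ≤ m) (hj : k < j) (v : IndM N m) :
    vp R m k (indT P t m (j + 1) v) = t j (vp R m k v) := by
  rw [vp_indT ✓, if_neg ✓, if_neg ✓, if_neg ✓, if_neg ✓, Nat.add_sub_cancel]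
theorem m_lt (hj' : j + 1 ≤ m) (hj : k < j) (v : IndM N m) :
    vm R m k (indT P t m (j + 1) v) = t j (vm R m k v) := by
  rw [vm_indT ✓, if_neg ✓, if_neg ✓, if_neg ✓, if_neg ✓, Nat.add_sub_cancel]

theorem AK.quad' (h : AK P m t) (h1 : 1 ≤ i) (h2 : i < m) (v : N) :
    t i (t i v) = (P.q - 1) • t i v + P.q • v := by
  simpa using app_eq (h.quad i h1 h2) v
theorem AK.cyc' (h : AK P m t) (h2 : 0 < m) (v : N) :
    t 0 (t 0 v) = (P.a + P.b) • t 0 v - (P.a * P.b) • v := by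
  simpa using app_eq (h.cyc h2) v
theorem AK.br0' (h : AK P m t) (h2 : 1 < m) (v : N) :
    t 0 (t 1 (t 0 (t 1 v))) = t 1 (t 0 (t 1 (t 0 v))) := by
  simpa using app_eq (h.br0 h2) v
theorem AK.braid' (h : AK P m t) (h1 : 1 ≤ i) (h2 : i + 1 < m) (v : N) :
    t i (t (i + 1) (t i v)) = t (i + 1) (t i (t (i + 1) v)) := by
  simpa using app_eq (h.braid i h1 h2) v
theorem AK.comm' (h : AK P m t) (h1 : i + 2 ≤ j) (h2 : j < m) (v : N) :
    t i (t j v) = t j (t i v) := by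
  simpa using app_eq (h.comm i j h1 h2) v

/-- The induced module is a module for the larger algebra. -/
theorem AK_ind (h : AK P m t) : AK P (m + 1) (indT P t m) where
  cyc _ := by
    refine ext fun v => ?_
    simp only [mul_apply, sub_apply, smul_apply, one_apply]
    refine ind_ext (R := R) (fun k hk => ?_) fun k hk => ?_
    all_goals
      simp only [map_sub, map_smul]
      rcases Nat.eq_zero_or_pos k with rfl | hk0
    · simp only [p0, m0]; module
    · simp only [p_gt hk hk0]; exact h.cyc' ✓ _
    · simp only [p0, m0]; module
    · simp only [m_gt hk hk0]; exact h.cyc' ✓ _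
  br0 hm := by
    refine ext fun v => ?_
    simp only [mul_apply]
    have hm : 0 + 1 ≤ m := ✓
    have e1 := fun w => p_eq (P := P) (t := t) hm w
    have e2 := fun w => m_eq (P := P) (t := t) hm w
    have e3 := fun w => p_prev (P := P) (t := t) hm w
    have e4 := fun w => m_prev (P := P) (t := t) hm w
    simp only [zero_add] at e1 e2 e3 e4
    have e5 := fun w => p_gt (P := P) (t := t) hm (show 0 < 0 + 1 by omega) w
    have e6 := fun w => m_gt (P := P) (t := t) hm (show 0 < 0 + 1 by omega) w
    simp only [zero_add] at e5 e6
    refine ind_ext (R := R) (fun k hk => ?_) fun k hk => ?_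
    all_goals
      rcases lt_or_ge 1 k with hk0 | hk0
      · simp only [p_gt hk hk0, p_gt hk (show 0 < k by omega), m_gt hk hk0, m_gt hk (show 0 < k by omega)]
        exact h.br0' ✓ _
      · obtain rfl | rfl : k = 0 ∨ k = 1 := ✓
        all_goals
          simp only [e1, e2, e3, e4, e5, e6, p0, m0, h.cyc' (show 0 < m by omega), map_smul, map_add]
          try module
  quad i hi him := by
    obtain ⟨j, rfl⟩ : ∃ j, i = j + 1 := ⟨i - 1, by omega⟩
    refine ext fun v => ?_
    simp only [mul_apply, add_apply, smul_apply, one_apply]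
    refine ind_ext (R := R) (fun k hk => ?_) fun k hk => ?_
    all_goals
      simp only [map_add, map_smul]
      obtain hk1 | rfl | rfl | hk1 : j + 1 < k ∨ k = j + 1 ∨ k = j ∨ k < j := ✓
    · simp only [p_gt hk hk1]; exact h.quad' ✓ ✓ _
    · simp only [p_eq hk, p_prev hk]; try module
    · simp only [p_eq (show k + 1 ≤ m by omega), p_prev (show k + 1 ≤ m by omega)]; try module
    · simp only [p_lt (show j + 1 ≤ m by omega) hk1]; exact h.quad' ✓ ✓ _
    · simp only [m_gt hk hk1]; exact h.quad' ✓ ✓ _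
    · simp only [m_eq hk, m_prev hk]; try module
    · simp only [m_eq (show k + 1 ≤ m by omega), m_prev (show k + 1 ≤ m by omega)]; try module
    · simp only [m_lt (show j + 1 ≤ m by omega) hk1]; exact h.quad' ✓ ✓ _
  braid i hi him := by
    obtain ⟨j, rfl⟩ : ∃ j, i = j + 1 := ⟨i - 1, by omega⟩
    refine ext fun v => ?_
    simp only [mul_apply]
    have hm1 : j + 1 ≤ m := ✓
    have hm2 : j + 1 + 1 ≤ m := ✓
    have lt1 {k : ℕ} : k < k + 1 := k.lt_succ_self
    have hquad := fun w => h.quad' (show 1 ≤ j + 1 by omega) (show j + 1 < m by omega) w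
    refine ind_ext (R := R) (fun k hk => ?_) fun k hk => ?_
    all_goals
      obtain hk1 | rfl | rfl | rfl | hk1 :
        j + 1 + 1 < k ∨ k = j + 1 + 1 ∨ k = j + 1 ∨ k = j ∨ k < j := ✓
    · simp only [p_gt hk hk1, p_gt hk (show j + 1 < k by omega)]; exact h.braid' ✓ ✓ _
    · simp only [p_eq hm1, p_eq hm2, p_gt hk lt1, p_lt hm2 lt1, map_smul]
    · simp only [p_eq hm1, p_prev hm1, p_eq hm2, p_prev hm2, p_gt hm2 lt1, p_lt hm2 lt1, map_smul,
        map_add]; try module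
    · simp only [p_eq hm1, p_prev hm1, p_prev hm2, p_gt hm2 lt1, p_lt hm2 lt1, map_smul, map_add,
        hquad]; try module
    · simp only [p_lt hm1 hk1, p_lt hm2 (show k < j + 1 by omega)]; exact h.braid' ✓ ✓ _
    · simp only [m_gt hk hk1, m_gt hk (show j + 1 < k by omega)]; exact h.braid' ✓ ✓ _
    · simp only [m_eq hm1, m_eq hm2, m_prev hm2, m_gt hk lt1, m_lt hm2 lt1, map_smul, map_add,
        hquad]; try module
    · simp only [m_eq hm1, m_prev hm1, m_eq hm2, m_prev hm2, m_gt hm2 lt1, m_lt hm2 lt1, map_smul,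
        map_add]; try module
    · simp only [m_prev hm1, m_prev hm2, m_gt hm2 lt1, m_lt hm2 lt1, map_smul]
    · simp only [m_lt hm1 hk1, m_lt hm2 (show k < j + 1 by omega)]; exact h.braid' ✓ ✓ _
  comm i j hij hj := by
    obtain ⟨j, rfl⟩ : ∃ j', j = j' + 1 := ⟨j - 1, by omega⟩
    refine ext fun v => ?_
    simp only [mul_apply]
    have hm : j + 1 ≤ m := ✓
    refine ind_ext (R := R) (fun k hk => ?_) fun k hk => ?_
    all_goals
      obtain hk1 | rfl | rfl | hk1 : j + 1 < k ∨ k = j + 1 ∨ k = j ∨ k < j := ✓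
    · simp only [p_gt hk hk1, p_gt hk (show i < k by omega)]; exact h.comm' ✓ ✓ _
    · simp only [p_eq hm, p_gt hk (show i < j + 1 by omega), p_gt (show j ≤ m by omega) (show i < j by omega), map_smul]
    · simp only [p_prev hm, p_gt hk (show i < k by omega), p_gt hm (show i < k + 1 by omega), map_smul, map_add]
    · rcases lt_or_ge i k with hik | hik
      · simp only [p_lt hm hk1, p_gt hk hik]; exact h.comm' ✓ ✓ _
      · rcases i with _ | i
        · obtain rfl : k = 0 := ✓
          simp only [p_lt hm hk1, p0, m_lt hm hk1, map_smul]
        · obtain rfl | rfl | hik : k = i + 1 ∨ k = i ∨ k < i := ✓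
          · simp only [p_lt hm hk1, p_eq hk, p_lt hm (show i < j by omega), map_smul]
          · simp only [p_lt hm hk1, p_prev (show k + 1 ≤ m by omega), p_lt hm (show k + 1 < j by omega), map_smul, map_add]
          · simp only [p_lt hm hk1, p_lt (show i + 1 ≤ m by omega) hik]; exact h.comm' ✓ ✓ _
    · simp only [m_gt hk hk1, m_gt hk (show i < k by omega)]; exact h.comm' ✓ ✓ _
    · simp only [m_eq hm, m_gt hk (show i < j + 1 by omega), m_gt (show j ≤ m by omega) (show i < j by omega), map_smul, map_add]
    · simp only [m_prev hm, m_gt hk (show i < k by omega), m_gt hm (show i < k + 1 by omega), map_smul]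
    · rcases lt_or_ge i k with hik | hik
      · simp only [m_lt hm hk1, m_gt hk hik]; exact h.comm' ✓ ✓ _
      · rcases i with _ | i
        · obtain rfl : k = 0 := ✓
          simp only [p_lt hm hk1, m0, m_lt hm hk1, map_smul, map_add]
        · obtain rfl | rfl | hik : k = i + 1 ∨ k = i ∨ k < i := ✓
          · simp only [m_lt hm hk1, m_eq hk, m_lt hm (show i < j by omega), map_smul, map_add]
          · simp only [m_lt hm hk1, m_prev (show k + 1 ≤ m by omega), m_lt hm (show k + 1 < j by omega), map_smul]
          · simp only [m_lt hm hk1, m_lt (show i + 1 ≤ m by omega) hik]; exact h.comm' ✓ ✓ _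
end

/-! ### Universal property of the induced module; restriction to subspaces -/

section
variable {N : Type} [AddCommGroup N] [Module R N]
variable {Y : Type} [AddCommGroup Y] [Module R Y]

/-- The product `s (p+1) * s (p+2) * ⋯ * s (p+k)`. -/
def wp {E : Type} [Ring E] (s : ℕ → E) : ℕ → ℕ → E
  | _, 0 => 1
  | p, k + 1 => s (p + 1) * wp s (p + 1) k

/-- The coset representative `s (p+1) ⋯ s m`. -/
def Wp {E : Type} [Ring E] (s : ℕ → E) (m p : ℕ) : E := wp s p (m - p)

/-- The coset representative `s p ⋯ s 1 s 0 s 1 ⋯ s m`. -/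
def Wm {E : Type} [Ring E] (s : ℕ → E) (m : ℕ) : ℕ → E
  | 0 => s 0 * Wp s m 0
  | p + 1 => s (p + 1) * Wm s m p

section
variable {P : Par R} {s : ℕ → E}

theorem Wp_self : Wp s m m = 1 := by simp [Wp, wp]

theorem Wp_succ (hp : p < m) : Wp s m p = s (p + 1) * Wp s m (p + 1) := by
  rw [Wp, Wp, show m - p = m - (p + 1) + 1 by omega, wp]

theorem Wp_comm (h : AK P (m + 1) s) (hj : j < p) (hp : p ≤ m) :
    Wp s m p * s j = s j * Wp s m p := by
  obtain ⟨k, hk⟩ : ∃ k, p + k = m := ⟨m - p, by omega⟩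
  induction k generalizing p with
  | zero => obtain rfl : p = m := ✓
            rw [Wp_self, one_mul, mul_one]
  | succ k ih =>
    rw [Wp_succ ✓, mul_assoc, ih ✓ ✓ ✓, ← mul_assoc, ← mul_assoc, h.comm j (p + 1) ✓ ✓]

theorem Wp_shift (h : AK P (m + 1) s) (hj : p < j) (hp : j < m) :
    Wp s m p * s j = s (j + 1) * Wp s m p := by
  obtain ⟨k, hk⟩ : ∃ k, p + 1 + k = j := ⟨j - (p + 1), by omega⟩
  induction k generalizing p with
  | zero =>
    obtain rfl : p + 1 = j := ✓
    rw [Wp_succ ✓, Wp_succ ✓, mul_assoc, mul_assoc, Wp_comm h ✓ ✓]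
    have := h.braid (p + 1) ✓ ✓
    grind
  | succ k ih =>
    rw [Wp_succ ✓, mul_assoc, ih ✓ ✓, ← mul_assoc, ← mul_assoc, h.comm (p + 1) (j + 1) ✓ ✓]

theorem Wm_shift (h : AK P (m + 1) s) (hj : p < j) (hp : j < m) :
    Wm s m p * s j = s (j + 1) * Wm s m p := by
  induction p with
  | zero => rw [Wm, mul_assoc, Wp_shift h hj hp, ← mul_assoc, ← mul_assoc,
      h.comm 0 (j + 1) ✓ ✓]
  | succ p ih => rw [Wm, mul_assoc, ih ✓, ← mul_assoc, ← mul_assoc,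
      h.comm (p + 1) (j + 1) ✓ ✓]

theorem Wm_comm (h : AK P (m + 1) s) (hj : j < p) (hp : p ≤ m) :
    Wm s m p * s j = s j * Wm s m p := by
  induction p with
  | zero => omega
  | succ p ih =>
    rcases lt_or_ge j p with hj' | hj'
    · rw [Wm, mul_assoc, ih hj' ✓, ← mul_assoc, ← mul_assoc, h.comm j (p + 1) ✓ ✓]
    · obtain rfl : j = p := ✓
      rcases j with _ | j
      · rw [Wm, Wm, Wp_succ ✓]
        have := h.br0 ✓
        simp only [mul_assoc, zero_add] at this ⊢
        rw [Wp_comm h ✓ ✓]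
        grind
      · rw [Wm, Wm]
        simp only [mul_assoc]
        rw [Wm_shift h ✓ ✓]
        have := h.braid (j + 1) ✓ ✓
        grind
end

theorem sum_two {Y : Type} [AddCommGroup Y] (f g : ℕ → Y) (m i : ℕ) (hi : i + 1 ≤ m)
    (h1 : ∀ p ≤ m, p ≠ i → p ≠ i + 1 → f p = g p) (h2 : f i + f (i + 1) = g i + g (i + 1)) :
    ∑ p ∈ range (m + 1), f p = ∑ p ∈ range (m + 1), g p := by
  have hsub : ({i, i + 1} : Finset ℕ) ⊆ range (m + 1) := by
    grind
  rw [← Finset.sum_sdiff hsub, ← Finset.sum_sdiff (f := g) hsub]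
  congr 1
  · apply Finset.sum_congr rfl
    grind
  · grind

/-- The extension of a map `Γ : N → Y` to the induced module. -/
def indLift (s : ℕ → End R Y) (m : ℕ) (Γ : N →ₗ[R] Y) : IndM N m →ₗ[R] Y :=
  ∑ p ∈ range (m + 1), (Wp s m p ∘ₗ Γ ∘ₗ vp R m p + Wm s m p ∘ₗ Γ ∘ₗ vm R m p)

variable {P : Par R} {t : ℕ → End R N} {s : ℕ → End R Y}

theorem indLift_apply (Γ : N →ₗ[R] Y) (v : IndM N m) : indLift s m Γ v =
    ∑ p ∈ range (m + 1), (Wp s m p (Γ (vp R m p v)) + Wm s m p (Γ (vm R m p v))) := by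
  simp [indLift, LinearMap.sum_apply]

/-- The universal property of the induced module. -/
theorem indLift_t (h : AK P (m + 1) s) {Γ : N →ₗ[R] Y}
    (hΓ : ∀ j < m, ∀ v, Γ (t j v) = s j (Γ v)) (hj : j ≤ m) (v : IndM N m) :
    indLift s m Γ (indT P t m j v) = s j (indLift s m Γ v) := by
  have c1 : ∀ {j p : ℕ}, j < p → p ≤ m → ∀ y, Wp s m p (s j y) = s j (Wp s m p y) := fun a b y =>
    app_eq (Wp_comm h a b) y
  have c2 : ∀ {j p : ℕ}, j < p → p ≤ m → ∀ y, Wm s m p (s j y) = s j (Wm s m p y) := fun a b y =>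
    app_eq (Wm_comm h a b) y
  have c3 : ∀ {j p : ℕ}, p < j → j < m → ∀ y, Wp s m p (s j y) = s (j + 1) (Wp s m p y) :=
    fun a b y => app_eq (Wp_shift h a b) y
  have c4 : ∀ {j p : ℕ}, p < j → j < m → ∀ y, Wm s m p (s j y) = s (j + 1) (Wm s m p y) :=
    fun a b y => app_eq (Wm_shift h a b) y
  have d1 : ∀ {p : ℕ}, p < m → ∀ y, Wp s m p y = s (p + 1) (Wp s m (p + 1) y) := fun a y =>
    app_eq (Wp_succ a) y
  have d2 : ∀ {p : ℕ}, ∀ y, Wm s m (p + 1) y = s (p + 1) (Wm s m p y) := fun y => rfl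
  have d3 : ∀ y, Wm s m 0 y = s 0 (Wp s m 0 y) := fun y => rfl
  rw [indLift_apply, indLift_apply, map_sum]
  rcases j with _ | i
  · apply Finset.sum_congr rfl
    intro p hp
    rw [mem_range] at hp
    rcases Nat.eq_zero_or_pos p with rfl | hp0
    · simp only [p0, m0, d3, map_add, map_smul, h.cyc' ✓]
      module
    · rw [p_gt ✓ hp0, m_gt ✓ hp0, hΓ _ ✓, hΓ _ ✓, c1 hp0 ✓, c2 hp0 ✓, map_add]
  · apply sum_two _ _ m i hj
    · intro p hp h1 h2
      rcases lt_or_ge p i with h3 | h3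
      · rw [p_lt hj h3, m_lt hj h3, hΓ _ ✓, hΓ _ ✓, c3 h3 ✓, c4 h3 ✓, map_add]
      · have h4 : i + 1 < p := ✓
        rw [p_gt hp h4, m_gt hp h4, hΓ _ ✓, hΓ _ ✓, c1 h4 ✓, c2 h4 ✓, map_add]
    · simp only [p_prev hj, m_prev hj, p_eq hj, m_eq hj, d1 (show i < m by omega), d2, map_add,
        map_smul, h.quad' (show 1 ≤ i + 1 by omega) (show i + 1 < m + 1 by omega)]
      module

/-- The inclusion of `N` in the induced module. -/
def incl (R : Type) [CommRing R] {N : Type} [AddCommGroup N] [Module R N] (m : ℕ) :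
    N →ₗ[R] IndM N m :=
  LinearMap.single R (fun _ : Fin (m + 1) => N × N) ⟨m, by omega⟩ ∘ₗ LinearMap.inl R N N

theorem vp_incl_self (n : N) : vp R m m (incl R m n) = n := by
  simp [vp, incl]
theorem vp_incl (hk : k < m) (n : N) : vp R m k (incl R m n) = 0 := by
  have : (⟨k, by omega⟩ : Fin (m + 1)) ≠ ⟨m, by omega⟩ := by
    grind
  simp [vp, incl, this, hk.le]
theorem vm_incl (k : ℕ) (n : N) : vm R m k (incl R m n) = 0 := by
  by_cases hk : k < m + 1
  · by_cases h : k = m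
    · subst h; simp [vm, incl]
    · have : (⟨k, by omega⟩ : Fin (m + 1)) ≠ ⟨m, by omega⟩ := by
        grind
      simp [vm, incl, this, show k ≤ m by omega]
  · simp [vm, hk]

theorem indLift_incl (Γ : N →ₗ[R] Y) (n : N) : indLift s m Γ (incl R m n) = Γ n := by
  rw [indLift_apply, Finset.sum_eq_single m]
  · simp [vp_incl_self, vm_incl, Wp_self]
  · intro p hp hpm
    rw [mem_range] at hp
    simp [vp_incl (show p < m by omega), vm_incl]
  · simp

theorem incl_t (hj : j < m) (n : N) : incl R m (t j n) = indT P t m j (incl R m n) := by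
  refine ind_ext (R := R) (fun k hk => ?_) fun k hk => ?_
  · obtain rfl | hk' : k = m ∨ k < m := ✓
    · rw [p_gt hk hj, vp_incl_self, vp_incl_self]
    · rw [vp_incl hk', vp_indT hk]
      split_ifs <;> simp [vm_incl, vp_incl hk', vp_incl (show j - 1 < m by omega), vp_incl hj]
  · rw [vm_incl, vm_indT hk]
    split_ifs <;> simp [vm_incl, vp_incl (show 0 < m by omega)]

/-- The coordinate `X_m ⊗ n` of `X_m (1 ⊗ n)`. -/
theorem vm_X_incl (n : N) : vm R m m (X P (indT P t m) m (incl R m n)) = P.qi ^ m • n := by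
  have key : ∀ k, k ≤ m → ∃ w : N → IndM N m, ∀ n,
      (∀ j, j ≤ m → j ≠ k → vp R m j (w n) = 0) ∧ vp R m k (w n) = n ∧
        (∀ j, j ≤ m → vm R m j (w n) = 0) := by
    intro k hk
    refine ⟨fun n => LinearMap.single R (fun _ : Fin (m + 1) => N × N) ⟨k, by omega⟩ (n, 0),
      fun n => ⟨?_, ?_, ?_⟩⟩
    · intro j hj hjk
      have : (⟨j, by omega⟩ : Fin (m + 1)) ≠ ⟨k, by omega⟩ := by
        grind
      simp [vp, show j < m + 1 by omega, this]
    · simp [vp, show k < m + 1 by omega]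
    · intro j hj
      by_cases h : j = k
      · subst h; simp [vm, show j < m + 1 by omega]
      · have : (⟨j, by omega⟩ : Fin (m + 1)) ≠ ⟨k, by omega⟩ := by
          grind
        simp [vm, show j < m + 1 by omega, this]
  choose! w hw using key
  -- `w k n` is the vector `t_{k+1} ⋯ t_m ⊗ n`
  have hinc : ∀ n, incl R m n = w m n := by
    intro n
    refine ind_ext (R := R) (fun k hk => ?_) fun k hk => ?_
    · obtain rfl | hk' : k = m ∨ k < m := ✓
      · rw [vp_incl_self, (hw k le_rfl n).2.1]
      · rw [vp_incl hk', (hw m le_rfl n).1 k hk ✓]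
    · rw [vm_incl, (hw m le_rfl n).2.2 k hk]
  have ht : ∀ k, k + 1 ≤ m → ∀ n, indT P t m (k + 1) (w (k + 1) n) = w k n := by
    intro k hk n
    obtain ⟨a1, a2, a3⟩ := hw (k + 1) hk n
    obtain ⟨b1, b2, b3⟩ := hw k ✓ n
    refine ind_ext (R := R) (fun j hj => ?_) fun j hj => ?_
    · rw [vp_indT hj, if_neg ✓, Nat.add_sub_cancel]
      split_ifs with h1 h2
      · rw [a1 k ✓ ✓, b1 j hj ✓, smul_zero]
      · simp_all
      · grind
      · grind
    · rw [vm_indT hj, if_neg ✓, Nat.add_sub_cancel, a3 _ hj, a3 _ hk, a3 k ✓, b3 _ hj]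
      split_ifs <;> simp
  have main : ∀ k, k ≤ m → ∀ n, vm R m k (X P (indT P t m) k (w k n)) = P.qi ^ k • n ∧
      ∀ j, j ≤ m → k < j → vm R m j (X P (indT P t m) k (w k n)) = 0 := by
    intro k
    induction k with
    | zero =>
      intro hk n
      obtain ⟨b1, b2, b3⟩ := hw 0 hk n
      refine ⟨?_, fun j hj hj' => ?_⟩
      · rw [X, m0, b2, b3 _ hk]; simp
      · rw [X, m_gt hj hj', b3 _ hj, map_zero]
    | succ k ih =>
      intro hk n
      obtain ⟨i1, i2⟩ := ih ✓ n
      have e : X P (indT P t m) (k + 1) (w (k + 1) n)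
          = P.qi • indT P t m (k + 1) (X P (indT P t m) k (w k n)) := by
        rw [X, smul_apply, mul_apply, mul_apply, ht k hk]
      refine ⟨?_, fun j hj hj' => ?_⟩
      · rw [e, map_smul, m_eq hk, i1, i2 _ hk ✓, pow_succ, mul_comm, mul_smul]; simp
      · rw [e, map_smul, m_gt hj hj', i2 j hj ✓]; simp
  grind

theorem X_mem (U : Submodule R Y) : ∀ k, (∀ j ≤ k, ∀ v ∈ U, s j v ∈ U) → ∀ v ∈ U, X P s k v ∈ U
  | 0, h => h 0 le_rfl
  | k + 1, h => fun v hv => by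
    rw [X]
    exact U.smul_mem _ (h _ le_rfl _ (X_mem U k (fun j hj => h j ✓) _ (h _ le_rfl _ hv)))

/-- If `φ` maps one stable submodule to another one, so does its relative trace. -/
theorem D_maps (U B : Submodule R Y) : ∀ m, (∀ j ≤ m, ∀ v ∈ U, s j v ∈ U) →
    (∀ j ≤ m, ∀ v ∈ B, s j v ∈ B) → ∀ φ : End R Y, (∀ v ∈ U, φ v ∈ B) →
    ∀ v ∈ U, D P s m φ v ∈ B
  | 0, hU, hB, φ, hφ, v, hv => by
    simp only [D_zero, sub_apply, smul_apply, mul_apply]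
    exact B.sub_mem (hφ v hv) (B.smul_mem _ (hB 0 le_rfl _ (hφ _ (hU 0 le_rfl v hv))))
  | m + 1, hU, hB, φ, hφ, v, hv => by
    simp only [D_succ, sub_apply, add_apply, smul_apply, mul_apply]
    refine B.sub_mem (B.add_mem (hφ v hv) (B.smul_mem _ ?_)) (B.smul_mem _ ?_)
    · refine D_maps U B m (fun j hj => hU j ✓) (fun j hj => hB j ✓) _ ?_ v hv
      intro w hw
      exact hB _ le_rfl _ (hφ _ (hU _ le_rfl _ hw))
    · exact X_mem B _ hB _ (hφ _ (X_mem U _ hU _ hv))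

theorem wp_mem (U : Submodule R Y) : ∀ k p, (∀ j ≤ p + k, ∀ v ∈ U, s j v ∈ U) → ∀ v ∈ U,
    wp s p k v ∈ U
  | 0, _, _, _, hv => hv
  | k + 1, p, h, v, hv =>
    h _ ✓ _ (wp_mem U k (p + 1) (fun j hj => h j ✓) v hv)

/-- A stable submodule containing the image of `Γ` contains the image of its extension. -/
theorem indLift_mem (U : Submodule R Y) (hU : ∀ j ≤ m, ∀ v ∈ U, s j v ∈ U) {Γ : N →ₗ[R] Y}
    (hΓ : ∀ n, Γ n ∈ U) (v : IndM N m) : indLift s m Γ v ∈ U := by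
  have h1 : ∀ p ≤ m, ∀ v ∈ U, Wp s m p v ∈ U := fun p hp v hv =>
    wp_mem U _ _ (fun j hj => hU j ✓) v hv
  have h2 : ∀ p ≤ m, ∀ v ∈ U, Wm s m p v ∈ U := by
    intro p
    induction p with
    | zero => intro hp v hv; exact hU 0 hp _ (h1 0 hp v hv)
    | succ p ih => intro hp v hv; exact hU _ hp _ (ih ✓ v hv)
  rw [indLift_apply]
  refine U.sum_mem fun p hp => ?_
  rw [mem_range] at hp
  exact U.add_mem (h1 p ✓ _ (hΓ _)) (h2 p ✓ _ (hΓ _))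

/-- Restriction of an action to a stable submodule. -/
def resT (s : ℕ → End R Y) (n : ℕ) (U : Submodule R Y)
    (hU : ∀ j < n, ∀ v ∈ U, s j v ∈ U) (j : ℕ) : End R U :=
  if hj : j < n then (s j).restrict (hU j hj) else 0

theorem resT_coe {U : Submodule R Y} (hU : ∀ j < n, ∀ v ∈ U, s j v ∈ U)
    (hj : j < n) (v : U) : (resT s n U hU j v : Y) = s j v := by
  simp [resT, hj]

theorem AK.res (h : AK P n s) {U : Submodule R Y} (hU : ∀ j < n, ∀ v ∈ U, s j v ∈ U) :
    AK P n (resT s n U hU) where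
  cyc h0 := by
    ext v
    simpa [resT_coe hU h0] using h.cyc' h0 (v : Y)
  br0 h1 := by
    ext v
    simpa [resT_coe hU h1, resT_coe hU (show 0 < n by omega)] using h.br0' h1 (v : Y)
  quad i h1 h2 := by
    ext v
    simpa [resT_coe hU h2] using h.quad' h1 h2 (v : Y)
  braid i h1 h2 := by
    ext v
    simpa [resT_coe hU h2, resT_coe hU (show i < n by omega)] using h.braid' h1 h2 (v : Y)
  comm i j h1 h2 := by
    ext v
    simpa [resT_coe hU h2, resT_coe hU (show i < n by omega)] using h.comm' h1 h2 (v : Y)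

/-- Every vector lies in a finitely generated stable submodule. -/
theorem exists_fg_stable (n : ℕ) (h : AK P n s) (v : Y) : ∃ U : Submodule R Y,
    v ∈ U ∧ Module.Finite R U ∧ ∀ j < n, ∀ w ∈ U, s j w ∈ U := by
  induction n with
  | zero => exact ⟨Submodule.span R {v}, Submodule.mem_span_singleton_self v, inferInstance,
      fun j hj => by omega⟩
  | succ n ih =>
    obtain ⟨U, hv, hfin, hU⟩ := ih (h.mono ✓)
    have hΓ : ∀ j < n, ∀ w : U, U.subtype (resT s n U hU j w) = s j (U.subtype w) :=
      fun j hj w => resT_coe hU hj w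
    refine ⟨LinearMap.range (indLift s n U.subtype), ?_, inferInstance, ?_⟩
    · exact ⟨incl R n ⟨v, hv⟩, indLift_incl _ _⟩
    · rintro j hj _ ⟨w, rfl⟩
      exact ⟨_, indLift_t h hΓ ✓ w⟩
end

/-! ### Representations, decompositions and finite representation type -/

open Polynomial in
/-- Fitting's lemma: an endomorphism of a finite dimensional space has a polynomial which is an
idempotent separating its nilpotent part from its bijective part. -/
theorem fitting {F V : Type} [Field F] [AddCommGroup V] [Module F V] [FiniteDimensional F V]
    (φ : End F V) : ∃ p : F[X], aeval φ p * aeval φ p = aeval φ p ∧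
      (aeval φ p = 0 → IsNilpotent φ) ∧ (aeval φ p = 1 → Bijective φ) := by
  have hinteg : IsIntegral F φ := Algebra.IsIntegral.isIntegral φ
  have hne : minpoly F φ ≠ 0 := minpoly.ne_zero hinteg
  obtain ⟨g, hg, hg0⟩ := Polynomial.exists_eq_pow_rootMultiplicity_mul_and_not_dvd _ hne 0
  set k := (minpoly F φ).rootMultiplicity 0
  simp only [map_zero, sub_zero] at hg hg0
  have hcop : IsCoprime (𝐗 ^ k : F[X]) g :=
    IsCoprime.pow_left (((Polynomial.prime_X (R := F)).irreducible.coprime_iff_not_dvd).2 hg0)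
  obtain ⟨u, v, huv⟩ := hcop
  have h0 : aeval φ (𝐗 ^ k * g) = 0 := by rw [← hg]; exact minpoly.aeval F φ
  have inj : ∀ {ψ : End F V}, ψ * φ = 1 → Bijective φ := by
    intro ψ h
    have : Function.Injective φ := by
      intro x y hxy
      have := congrArg ψ hxy
      rwa [← mul_apply, ← mul_apply, h] at this
    exact ⟨this, LinearMap.injective_iff_surjective.1 this⟩
  refine ⟨u * 𝐗 ^ k, ?_, ?_, ?_⟩
  · rw [← map_mul, ← sub_eq_zero, ← map_sub]
    rw [show u * 𝐗 ^ k * (u * 𝐗 ^ k) - u * 𝐗 ^ k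
      = (-(u * v)) * (𝐗 ^ k * g) by linear_combination (u * 𝐗 ^ k) * huv,
      map_mul, h0, mul_zero]
  · intro h
    refine ⟨k, ?_⟩
    have e : (𝐗 ^ k : F[X]) = 𝐗 ^ k * (u * 𝐗 ^ k)
      + v * (𝐗 ^ k * g) := by linear_combination (-𝐗 ^ k) * huv
    have := congrArg (aeval φ) e
    rw [map_add, map_mul, h, map_mul _ v, h0] at this
    simpa using this
  · intro h
    rcases Nat.eq_zero_or_pos k with hk | hk
    · -- `φ` has nonzero determinant as `X` does not divide its minimal polynomial
      have hg' : aeval φ g = 0 := by simpa [hk] using h0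
      have hc : IsCoprime (𝐗 : F[X]) g :=
        ((Polynomial.prime_X (R := F)).irreducible.coprime_iff_not_dvd).2 hg0
      obtain ⟨u', v', h'⟩ := hc
      have := congrArg (aeval φ) h'
      simp only [map_add, map_mul, hg', mul_zero, add_zero, aeval_X, map_one] at this
      exact inj this
    · obtain ⟨j, hj⟩ : ∃ j, k = j + 1 := ⟨k - 1, by omega⟩
      rw [hj, pow_succ, ← mul_assoc, map_mul, aeval_X] at h
      exact inj h

section
variable {W : Type} [AddCommGroup W] [Module F W]
variable {Z : Type} [AddCommGroup Z] [Module F Z]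

/-- Linear maps commuting with the first `n` generators. -/
def IsHom (n : ℕ) (t : ℕ → End F V) (s : ℕ → End F W) (φ : V →ₗ[F] W) : Prop :=
  ∀ j < n, ∀ v, φ (t j v) = s j (φ v)

/-- Indecomposability, expressed by idempotent endomorphisms. -/
def Indec (n : ℕ) (t : ℕ → End F V) : Prop :=
  Nontrivial V ∧ ∀ π : End F V, IsHom n t t π → π * π = π → π = 0 ∨ π = 1

/-- Isomorphism of representations. -/
def Iso (n : ℕ) (t : ℕ → End F V) (s : ℕ → End F W) : Prop :=
  ∃ e : V ≃ₗ[F] W, IsHom n t s e.toLinearMap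

/-- `V` is a direct summand of `W`. -/
def Summand (n : ℕ) (t : ℕ → End F V) (s : ℕ → End F W) : Prop :=
  ∃ (α : V →ₗ[F] W) (β : W →ₗ[F] V), IsHom n t s α ∧ IsHom n s t β ∧ β ∘ₗ α = LinearMap.id

variable {s : ℕ → End F W} {z : ℕ → End F Z}

theorem IsHom.comp {φ : V →ₗ[F] W} {ψ : W →ₗ[F] Z} (h2 : IsHom n s z ψ) (h1 : IsHom n t s φ) :
    IsHom n t z (ψ ∘ₗ φ) := fun j hj v => by
  rw [comp_apply, comp_apply, h1 j hj, h2 j hj]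

theorem IsHom.id : IsHom n t t LinearMap.id := fun _ _ _ => rfl
theorem IsHom.one : IsHom n t t 1 := fun _ _ _ => rfl
theorem IsHom.add {φ ψ : V →ₗ[F] W} (h1 : IsHom n t s φ) (h2 : IsHom n t s ψ) :
    IsHom n t s (φ + ψ) := fun j hj v => by simp [h1 j hj, h2 j hj]
theorem IsHom.sub {φ ψ : V →ₗ[F] W} (h1 : IsHom n t s φ) (h2 : IsHom n t s ψ) :
    IsHom n t s (φ - ψ) := fun j hj v => by simp [h1 j hj, h2 j hj]
theorem IsHom.mul {φ ψ : End F V} (h1 : IsHom n t t φ) (h2 : IsHom n t t ψ) :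
    IsHom n t t (φ * ψ) := IsHom.comp h1 h2
theorem IsHom.sum {I : Type} (A : Finset I) (φ : I → V →ₗ[F] W) (h : ∀ i ∈ A, IsHom n t s (φ i)) :
    IsHom n t s (∑ i ∈ A, φ i) := fun j hj v => by
  simp only [LinearMap.sum_apply, map_sum]
  exact Finset.sum_congr rfl fun i hi => h i hi j hj v
theorem IsHom.mono (h : m ≤ n) {φ : V →ₗ[F] W} (h1 : IsHom n t s φ) : IsHom m t s φ :=
  fun j hj v => h1 j ✓ v
theorem IsHom.symm {e : V ≃ₗ[F] W} (h : IsHom n t s e.toLinearMap) :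
    IsHom n s t e.symm.toLinearMap := fun j hj v => by
  apply e.injective
  have := h j hj (e.symm v)
  simp only [LinearEquiv.coe_coe, LinearEquiv.apply_symm_apply] at this ⊢
  exact this.symm

theorem IsHom.commute {φ : End F V} (h : IsHom n t t φ) (hj : j < n) :
    Commute (t j) φ := ext fun v => (h j hj v).symm

theorem IsHom.of_commute {φ : End F V} (h : ∀ j < n, Commute (t j) φ) : IsHom n t t φ :=
  fun j hj v => (app_eq (h j hj) v).symm

theorem IsHom.aeval {φ : End F V} (h : IsHom n t t φ) (p : Polynomial F) :
    IsHom n t t (Polynomial.aeval φ p) := IsHom.of_commute fun j hj => by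
  have h1 : Commute (t j) φ := h.commute hj
  induction p using Polynomial.induction_on' with
  | add p q hp hq => rw [map_add]; exact hp.add_right hq
  | monomial k a => rw [Polynomial.aeval_monomial]
                    exact (Algebra.commute_algebraMap_right a _).mul_right (h1.pow_right k)

theorem Iso.symm (h : Iso n t s) : Iso n s t := h.elim fun e he => ⟨e.symm, he.symm⟩
theorem Iso.trans (h : Iso n t s) (h' : Iso n s z) : Iso n t z := by
  obtain ⟨e, he⟩ := h
  obtain ⟨f, hf⟩ := h'
  exact ⟨e.trans f, IsHom.comp hf he⟩

theorem Iso.summand (h : Iso n t s) : Summand n t s := by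
  obtain ⟨e, he⟩ := h
  exact ⟨e.toLinearMap, e.symm.toLinearMap, he, he.symm, by ext; simp⟩

theorem Summand.trans (h : Summand n t s) (h' : Summand n s z) : Summand n t z := by
  obtain ⟨α, β, h1, h2, h3⟩ := h
  obtain ⟨α', β', h1', h2', h3'⟩ := h'
  refine ⟨α' ∘ₗ α, β ∘ₗ β', h1'.comp h1, h2.comp h2', ?_⟩
  ext v
  have e1 := app_eq h3' (α v)
  have e2 := app_eq h3 v
  simp only [comp_apply, id_apply] at e1 e2 ⊢
  rw [e1, e2]

theorem IsHom.inv {φ : End F V} (h : IsHom n t t φ) (hb : Bijective φ) :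
    ∃ ψ : End F V, IsHom n t t ψ ∧ ψ * φ = 1 ∧ φ * ψ = 1 := by
  let e := LinearEquiv.ofBijective φ hb
  have he : IsHom n t t e.toLinearMap := fun j hj v => h j hj v
  refine ⟨e.symm.toLinearMap, he.symm, ?_, ?_⟩
  · ext v; exact e.symm_apply_apply v
  · ext v; exact e.apply_symm_apply v

theorem Indec.nilp_or_bij [FiniteDimensional F V] (h : Indec n t) {φ : End F V}
    (hφ : IsHom n t t φ) : IsNilpotent φ ∨ Bijective φ := by
  obtain ⟨p, h1, h2, h3⟩ := fitting φ
  exact (h.2 _ (hφ.aeval p) h1).imp h2 h3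

theorem Indec.add_bij [FiniteDimensional F V] (h : Indec n t) {φ ψ : End F V}
    (hφ : IsHom n t t φ) (hψ : IsHom n t t ψ) (hb : Bijective (φ + ψ)) :
    Bijective φ ∨ Bijective ψ := by
  obtain ⟨u, hu, hu1, hu2⟩ := (hφ.add hψ).inv hb
  rcases h.nilp_or_bij (hu.mul hφ) with h1 | h1
  · right
    have h2 : u * ψ = 1 - u * φ := by
      rw [eq_sub_iff_add_eq, ← mul_add, add_comm, hu1]
    have h3 : IsUnit (u * ψ) := h2 ▸ h1.isUnit_one_sub
    have h4 : IsUnit ((φ + ψ) * (u * ψ)) :=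
      (IsUnit.of_mul_eq_one u hu2 ).mul h3
    rw [← mul_assoc, hu2, one_mul] at h4
    exact (End.isUnit_iff _).1 h4
  · left
    have h4 : IsUnit ((φ + ψ) * (u * φ)) :=
      (IsUnit.of_mul_eq_one u hu2 ).mul ((End.isUnit_iff _).2 h1)
    rw [← mul_assoc, hu2, one_mul] at h4
    exact (End.isUnit_iff _).1 h4

theorem Indec.sum_bij [FiniteDimensional F V] (h : Indec n t) {I : Type} (A : Finset I)
    (φ : I → End F V) (hφ : ∀ i ∈ A, IsHom n t t (φ i))
    (hb : Bijective (∑ i ∈ A, φ i : End F V)) :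
    ∃ i ∈ A, Bijective (φ i) := by
  classical
  induction A using Finset.induction_on with
  | empty =>
    have := h.1
    obtain ⟨x, hx⟩ := exists_ne (0 : V)
    exact absurd (hb.1 (show _ = (∑ i ∈ (∅ : Finset I), φ i : End F V) 0 by simp)) hx
  | insert a A ha ih =>
    rw [Finset.sum_insert ha] at hb
    have h1 : ∀ i ∈ A, IsHom n t t (φ i) := fun i hi => hφ i (Finset.mem_insert_of_mem hi)
    rcases h.add_bij (hφ a (Finset.mem_insert_self _ _)) (IsHom.sum A φ h1) hb with h2 | h2
    · grind
    · grind

theorem summand_of_bij {α : V →ₗ[F] W} {β : W →ₗ[F] V} (hα : IsHom n t s α) (hβ : IsHom n s t β)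
    (hb : Bijective (β ∘ₗ α)) : Summand n t s := by
  obtain ⟨u, hu, hu1, -⟩ := IsHom.inv (φ := β ∘ₗ α) (hβ.comp hα) hb
  exact ⟨α, u ∘ₗ β, hα, hu.comp hβ, hu1⟩

/-- A summand of an indecomposable representation is everything. -/
theorem Summand.iso [Nontrivial V] (h : Summand n t s) (hs : Indec n s) : Iso n t s := by
  obtain ⟨α, β, h1, h2, h3⟩ := h
  have e : ∀ v, β (α v) = v := fun v => app_eq h3 v
  rcases hs.2 (α ∘ₗ β) (h1.comp h2) (by ext w; simp [e]) with h4 | h4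
  · obtain ⟨x, hx⟩ := exists_ne (0 : V)
    refine absurd ?_ hx
    have := app_eq h4 (α x)
    simp only [comp_apply, e, LinearMap.zero_apply] at this
    grind
  · exact ⟨LinearEquiv.ofLinearMap α β h4 h3, h1⟩

/-- Finite dimensional representations of `H_n`. -/
structure Rep (P : Par F) (n : ℕ) where
  V : Type
  [grp : AddCommGroup V]
  [mod : Module F V]
  [fin : FiniteDimensional F V]
  t : ℕ → End F V
  ak : AK P n t

attribute [instance] Rep.grp Rep.mod Rep.fin

/-- There are finitely many indecomposables up to isomorphism. -/
def FT (P : Par F) (n : ℕ) : Prop :=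
  ∃ (I : Type) (_ : Fintype I) (Y : I → Rep P n), ∀ M : Rep P n, Indec n M.t →
    ∃ i, Iso n M.t (Y i).t

/-- Restriction of a representation to a stable subspace. -/
def Rep.sub (M : Rep P n) (U : Submodule F M.V) (hU : ∀ j < n, ∀ v ∈ U, M.t j v ∈ U) : Rep P n where
  V := U
  t := resT M.t n U hU
  ak := M.ak.res hU

/-- A decomposition into indecomposables. -/
structure Decomp (M : Rep P n) where
  I : Type
  [fin : Fintype I]
  Y : I → Rep P n
  ι : ∀ i, (Y i).V →ₗ[F] M.V
  π : ∀ i, M.V →ₗ[F] (Y i).V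
  hι : ∀ i, IsHom n (Y i).t M.t (ι i)
  hπ : ∀ i, IsHom n M.t (Y i).t (π i)
  indec : ∀ i, Indec n (Y i).t
  one : ∀ i, π i ∘ₗ ι i = LinearMap.id
  sum : ∑ i, ι i ∘ₗ π i = LinearMap.id

attribute [instance] Decomp.fin

theorem finrank_lt_of_idem {M : Rep P n} {π : End F M.V} (h : π * π = π) (h1 : π ≠ 1) :
    Module.finrank F (LinearMap.range π) < Module.finrank F M.V := by
  apply Submodule.finrank_lt
  intro ht
  apply h1
  ext v
  have : v ∈ LinearMap.range π := ht ▸ mem_top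
  obtain ⟨w, rfl⟩ := this
  exact app_eq h w

theorem range_stable {M : Rep P n} {π : End F M.V} (hπ : IsHom n M.t M.t π) :
    ∀ j < n, ∀ v ∈ LinearMap.range π, M.t j v ∈ LinearMap.range π := by
  rintro j hj _ ⟨w, rfl⟩
  exact ⟨M.t j w, hπ j hj w⟩

/-- The image of an idempotent endomorphism is a summand. -/
theorem exists_rep_range {M : Rep P n} {π : End F M.V} (hπ : IsHom n M.t M.t π)
    (hid : π * π = π) : ∃ (M1 : Rep P n) (α : M1.V →ₗ[F] M.V) (β : M.V →ₗ[F] M1.V),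
      IsHom n M1.t M.t α ∧ IsHom n M.t M1.t β ∧ β ∘ₗ α = LinearMap.id ∧ α ∘ₗ β = π ∧
      Module.finrank F M1.V = Module.finrank F (LinearMap.range π) := by
  refine ⟨M.sub _ (range_stable hπ), (LinearMap.range π).subtype, π.rangeRestrict,
    fun j hj v => resT_coe _ hj v, fun j hj v => ?_, ?_, rfl, rfl⟩
  · apply Subtype.ext
    exact (hπ j hj v).trans (resT_coe (range_stable hπ) hj (π.rangeRestrict v)).symm
  · refine ext ?_
    rintro ⟨_, w, rfl⟩
    exact Subtype.ext (app_eq hid w)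

theorem Decomp.combine {M M1 M2 : Rep P n} (D1 : Decomp M1) (D2 : Decomp M2)
    {α1 : M1.V →ₗ[F] M.V} {β1 : M.V →ₗ[F] M1.V} (hα1 : IsHom n M1.t M.t α1)
    (hβ1 : IsHom n M.t M1.t β1) (h1 : β1 ∘ₗ α1 = LinearMap.id)
    {α2 : M2.V →ₗ[F] M.V} {β2 : M.V →ₗ[F] M2.V} (hα2 : IsHom n M2.t M.t α2)
    (hβ2 : IsHom n M.t M2.t β2) (h2 : β2 ∘ₗ α2 = LinearMap.id)
    (hs : α1 ∘ₗ β1 + α2 ∘ₗ β2 = LinearMap.id) : Nonempty (Decomp M) := by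
  refine ⟨⟨D1.I ⊕ D2.I, Sum.elim D1.Y D2.Y, fun i => match i with
      | Sum.inl i => α1 ∘ₗ D1.ι i
      | Sum.inr i => α2 ∘ₗ D2.ι i,
    fun i => match i with
      | Sum.inl i => D1.π i ∘ₗ β1
      | Sum.inr i => D2.π i ∘ₗ β2, ?_, ?_, ?_, ?_, ?_⟩⟩
  · rintro (i | i)
    · exact hα1.comp (D1.hι i)
    · exact hα2.comp (D2.hι i)
  · rintro (i | i)
    · exact (D1.hπ i).comp hβ1
    · exact (D2.hπ i).comp hβ2
  · rintro (i | i)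
    · exact D1.indec i
    · exact D2.indec i
  · rintro (i | i)
    · refine ext fun v => ?_
      exact (congrArg (D1.π i) (app_eq h1 (D1.ι i v))).trans (app_eq (D1.one i) v)
    · refine ext fun v => ?_
      exact (congrArg (D2.π i) (app_eq h2 (D2.ι i v))).trans (app_eq (D2.one i) v)
  · rw [Fintype.sum_sum_type]
    refine ext fun v => ?_
    have e1 := congrArg α1 (app_eq D1.sum (β1 v))
    have e2 := congrArg α2 (app_eq D2.sum (β2 v))
    have e3 := app_eq hs v
    simp only [LinearMap.sum_apply, map_sum, comp_apply, id_apply, add_apply] at e1 e2 e3 ⊢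
    exact (congrArg₂ (· + ·) e1 e2).trans e3

theorem exists_decomp (M : Rep P n) : Nonempty (Decomp M) := by
  induction hd : Module.finrank F M.V using Nat.strong_induction_on generalizing M with
  | _ d ih =>
  subst hd
  by_cases hi : Indec n M.t
  · exact ⟨⟨Unit, fun _ => M, fun _ => LinearMap.id, fun _ => LinearMap.id, fun _ => IsHom.id,
      fun _ => IsHom.id, fun _ => hi, fun _ => rfl, by ext; simp⟩⟩
  rcases subsingleton_or_nontrivial M.V with hV | hV
  · exact ⟨⟨Empty, fun i => i.elim, fun i => i.elim, fun i => i.elim, fun i => i.elim,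
      fun i => i.elim, fun i => i.elim, fun i => i.elim, ext fun v => Subsingleton.elim _ _⟩⟩
  · simp only [Indec, hV, true_and, not_forall, not_or] at hi
    obtain ⟨π, hπ, hid, h0, h1⟩ := hi
    have hid' : (1 - π) * (1 - π) = 1 - π := by
      rw [mul_sub, sub_mul, sub_mul, hid]; simp
    obtain ⟨M1, α1, β1, a1, b1, c1, d1, e1⟩ := exists_rep_range hπ hid
    obtain ⟨M2, α2, β2, a2, b2, c2, d2, e2⟩ := exists_rep_range (IsHom.one.sub hπ) hid'
    obtain ⟨D1⟩ := ih _ (e1 ▸ finrank_lt_of_idem hid h1) M1 rfl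
    obtain ⟨D2⟩ := ih _ (e2 ▸ finrank_lt_of_idem hid' (by simpa using h0)) M2 rfl
    refine D1.combine D2 a1 b1 c1 a2 b2 c2 ?_
    rw [d1, d2, add_sub_cancel]; rfl

/-- An indecomposable summand of `M` is isomorphic to one of the members of a given decomposition
of `M`. -/
theorem Decomp.exists_iso {M : Rep P n} (D : Decomp M) {N : Rep P n} (hN : Indec n N.t)
    (h : Summand n N.t M.t) : ∃ i, Iso n N.t (D.Y i).t := by
  obtain ⟨α, β, h1, h2, h3⟩ := h
  have e : (∑ i, (β ∘ₗ D.ι i) ∘ₗ (D.π i ∘ₗ α) : End F N.V) = 1 := by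
    ext v
    have := app_eq D.sum (α v)
    have h3 := app_eq h3 v
    simp only [LinearMap.sum_apply, comp_apply, id_apply] at *
    rw [← map_sum, this, h3]; rfl
  obtain ⟨i, -, hi⟩ := hN.sum_bij Finset.univ (fun i => (β ∘ₗ D.ι i) ∘ₗ (D.π i ∘ₗ α))
    (fun i _ => (h2.comp (D.hι i)).comp ((D.hπ i).comp h1)) (e ▸ Function.bijective_id)
  have := hN.1
  exact ⟨i, (summand_of_bij ((D.hπ i).comp h1) (h2.comp (D.hι i)) hi).iso (D.indec i)⟩

theorem FT.of_summand {I : Type} [Fintype I] (Y : I → Rep P n)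
    (h : ∀ M : Rep P n, Indec n M.t → ∃ i, Summand n M.t (Y i).t) : FT P n := by
  let D : ∀ i, Decomp (Y i) := fun i => (exists_decomp (Y i)).some
  refine ⟨Σ i, (D i).I, inferInstance, fun p => (D p.1).Y p.2, fun M hM => ?_⟩
  obtain ⟨i, hi⟩ := h M hM
  obtain ⟨k, hk⟩ := (D i).exists_iso hM hi
  exact ⟨⟨i, k⟩, hk⟩

/-- The induced representation. -/
def Rep.ind (M : Rep P n) : Rep P (n + 1) where
  V := IndM M.V n
  t := indT P M.t n
  ak := AK_ind M.ak

/-- The restricted representation. -/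
def Rep.restr (M : Rep P (n + 1)) : Rep P n where
  V := M.V
  t := M.t
  ak := M.ak.mono ✓

/-- A representation is a summand of the restriction of its induced representation. -/
theorem summand_ind (M : Rep P n) : Summand n M.t M.ind.t := by
  refine ⟨incl F n, vp F n n, fun j hj v => incl_t hj v, fun j hj v => p_gt le_rfl hj v, ?_⟩
  ext v; exact vp_incl_self v

/-- Finite type passes to smaller `n`: an indecomposable is a summand of the restriction of an
indecomposable summand of its induced representation. -/
theorem FT.pred (h : FT P (n + 1)) : FT P n := by
  obtain ⟨I, _, Y, hY⟩ := h
  refine FT.of_summand (fun i => (Y i).restr) fun M hM => ?_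
  obtain ⟨D⟩ := exists_decomp M.ind
  obtain ⟨α, β, h1, h2, h3⟩ := summand_ind M
  have e : (∑ i, (β ∘ₗ D.ι i) ∘ₗ (D.π i ∘ₗ α) : End F M.V) = 1 := by
    ext v
    have := app_eq D.sum (α v)
    have h3 := app_eq h3 v
    simp only [LinearMap.sum_apply, comp_apply, id_apply] at *
    rw [← map_sum, this, h3]; rfl
  obtain ⟨i, -, hi⟩ := hM.sum_bij Finset.univ (fun i => (β ∘ₗ D.ι i) ∘ₗ (D.π i ∘ₗ α))
    (fun i _ => (h2.comp ((D.hι i).mono ✓)).comp (((D.hπ i).mono ✓).comp h1))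
    (e ▸ Function.bijective_id)
  obtain ⟨k, ek, hk⟩ := hY (D.Y i) (D.indec i)
  refine ⟨k, (summand_of_bij (((D.hπ i).mono ✓).comp h1)
    (h2.comp ((D.hι i).mono ✓)) hi).trans (Iso.summand ⟨ek, hk.mono ✓⟩)⟩

theorem FT.mono (hm : n ≤ m) (h : FT P m) : FT P n := by
  induction m, hm using Nat.le_induction with
  | base => exact h
  | succ m _ ih => exact ih h.pred
end

/-! ### Relative traces and induced summands -/

section
variable {M : Type} [AddCommGroup M] [Module R M] {Y : Type} [AddCommGroup Y] [Module R Y]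
variable {P : Par R} {t : ℕ → End R M} {s : ℕ → End R Y}

theorem X_hom {α : M →ₗ[R] Y} : ∀ k, (∀ j ≤ k, ∀ v, α (t j v) = s j (α v)) →
    ∀ v, α (X P t k v) = X P s k (α v)
  | 0, h, v => h 0 le_rfl v
  | k + 1, h, v => by
    simp only [X, smul_apply, mul_apply, map_smul]
    rw [h _ le_rfl, X_hom k (fun j hj => h j ✓), h _ le_rfl]

/-- The relative trace is compatible with homomorphisms. -/
theorem D_comp {α : M →ₗ[R] Y} {β : Y →ₗ[R] M} : ∀ m, (∀ j ≤ m, ∀ v, α (t j v) = s j (α v)) →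
    (∀ j ≤ m, ∀ v, β (s j v) = t j (β v)) → ∀ χ : End R M,
    D P s m (α ∘ₗ χ ∘ₗ β) = α ∘ₗ D P t m χ ∘ₗ β
  | 0, hα, hβ, χ => by
    refine ext fun v => ?_
    simp only [D_zero, sub_apply, smul_apply, mul_apply,
      comp_apply, map_sub, map_smul, hα 0 le_rfl, hβ 0 le_rfl]
  | m + 1, hα, hβ, χ => by
    have e : s (m + 1) * ((α ∘ₗ χ ∘ₗ β) * s (m + 1)) = α ∘ₗ (t (m + 1) * (χ * t (m + 1))) ∘ₗ β := by
      refine ext fun v => ?_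
      simp_all
    refine ext fun v => ?_
    simp only [D_succ, e, D_comp m (fun j hj => hα j ✓) (fun j hj => hβ j ✓),
      sub_apply, add_apply, smul_apply, mul_apply,
      comp_apply, map_sub, map_smul, map_add, X_hom _ hα, X_hom _ hβ]

theorem AK.prod (h : AK P n t) (h' : AK P n s) : AK P n (fun j => (t j).prodMap (s j)) where
  cyc h0 := by
    refine ext fun v => Prod.ext ?_ ?_
    · simpa using h.cyc' h0 v.1
    · simpa using h'.cyc' h0 v.2
  br0 h0 := by
    refine ext fun v => Prod.ext ?_ ?_
    · simpa using h.br0' h0 v.1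
    · simpa using h'.br0' h0 v.2
  quad i h1 h2 := by
    refine ext fun v => Prod.ext ?_ ?_
    · simpa using h.quad' h1 h2 v.1
    · simpa using h'.quad' h1 h2 v.2
  braid i h1 h2 := by
    refine ext fun v => Prod.ext ?_ ?_
    · simpa using h.braid' h1 h2 v.1
    · simpa using h'.braid' h1 h2 v.2
  comm i j h1 h2 := by
    refine ext fun v => Prod.ext ?_ ?_
    · simpa using h.comm' h1 h2 v.1
    · simpa using h'.comm' h1 h2 v.2
end

/-- If an `H_m`-linear map `ψ : M → Y` is followed by an `H_{m+1}`-linear map `Φ : Y → M`, then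
the relative trace of `Φ ∘ ψ` factors through `Y`. -/
theorem D_factor {M Y : Type} [AddCommGroup M] [Module F M] [AddCommGroup Y] [Module F Y]
    {t : ℕ → End F M} {s : ℕ → End F Y} (ht : AK P (m + 1) t) (hs : AK P (m + 1) s)
    {ψ : M →ₗ[F] Y} (hψ : IsHom m t s ψ) {Φ : Y →ₗ[F] M} (hΦ : IsHom (m + 1) s t Φ) :
    ∃ γ : M →ₗ[F] Y, IsHom (m + 1) t s γ ∧ D P t m (Φ ∘ₗ ψ) = Φ ∘ₗ γ := by
  set T : ℕ → End F (M × Y) := fun j => (t j).prodMap (s j) with hT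
  have hTak : AK P (m + 1) T := ht.prod hs
  set Ψ : End F (M × Y) := LinearMap.inr F M Y ∘ₗ ψ ∘ₗ LinearMap.fst F M Y with hΨ
  set Φ' : End F (M × Y) := LinearMap.inl F M Y ∘ₗ Φ ∘ₗ LinearMap.snd F M Y with hΦ'
  have c1 : ∀ j < m, Commute (T j) Ψ := fun j hj => by
    refine ext fun v => Prod.ext ?_ ?_
    · simp [hT, hΨ]
    · simp [hT, hΨ, hψ j hj]
  have c2 : ∀ j ≤ m, Commute (T j) Φ' := fun j hj => by
    refine ext fun v => Prod.ext ?_ ?_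
    · simp [hT, hΦ', hΦ j ✓]
    · simp [hT, hΦ']
  have c3 : ∀ j ≤ m, Commute (T j) (D P T m Ψ) := fun j hj =>
    commute_D hTak m ✓ Ψ c1 j hj
  refine ⟨LinearMap.snd F M Y ∘ₗ D P T m Ψ ∘ₗ LinearMap.inl F M Y, fun j hj v => ?_, ?_⟩
  · have := congrArg Prod.snd (app_eq (c3 j ✓) (v, 0))
    simp_all
  · have h1 : Φ' * Ψ = LinearMap.inl F M Y ∘ₗ (Φ ∘ₗ ψ) ∘ₗ LinearMap.fst F M Y := by
      refine ext fun v => ?_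
      simp [hΦ', hΨ]
    have h2 := D_mul_left (P := P) (t := T) Φ' m (fun j hj => (c2 j hj).symm) Ψ
    rw [h1, D_comp (t := t) m (fun j _ v => by simp [hT]) (fun j _ v => by simp [hT])] at h2
    refine ext fun v => ?_
    have := congrArg Prod.fst (app_eq h2 (v, 0))
    simpa [hΦ'] using this

theorem exists_decomp_restr (M : Rep P (m + 1)) :
    ∃ (J : Type) (_ : Fintype J) (Z : J → Rep P m) (ι : ∀ i, (Z i).V →ₗ[F] M.V)
      (π : ∀ i, M.V →ₗ[F] (Z i).V), (∀ i, IsHom m (Z i).t M.t (ι i)) ∧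
      (∀ i, IsHom m M.t (Z i).t (π i)) ∧ (∀ i, Indec m (Z i).t) ∧
      ∑ i, ι i ∘ₗ π i = LinearMap.id := by
  obtain ⟨D0⟩ := exists_decomp M.restr
  exact ⟨D0.I, D0.fin, D0.Y, D0.ι, D0.π, D0.hι, D0.hπ, D0.indec, D0.sum⟩

/-- The indecomposables on which some relative trace is bijective are summands of representations
induced from indecomposables. -/
theorem relative_trace {I : Type} (Y : I → Rep P m)
    (hY : ∀ M : Rep P m, Indec m M.t → ∃ i, Iso m M.t (Y i).t)
    (M : Rep P (m + 1)) (hM : Indec (m + 1) M.t) {φ : End F M.V} (hφ : IsHom m M.t M.t φ)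
    (hb : Bijective (D P M.t m φ)) : ∃ i, Summand (m + 1) M.t (Y i).ind.t := by
  obtain ⟨J, _, Z, ι, π, hι, hπ, hind, hs⟩ := exists_decomp_restr M
  choose k e he using fun i => hY (Z i) (hind i)
  have hι' : ∀ i, IsHom m (Y (k i)).t M.t (ι i ∘ₗ (e i).symm.toLinearMap) := fun i =>
    (hι i).comp (he i).symm
  have hπ' : ∀ i, IsHom m M.t (Y (k i)).t ((e i).toLinearMap ∘ₗ π i) := fun i =>
    (he i).comp (hπ i)
  have hΦ : ∀ i, IsHom (m + 1) (Y (k i)).ind.t M.t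
      (indLift M.t m (ι i ∘ₗ (e i).symm.toLinearMap)) := fun i j hj v =>
    indLift_t M.ak (hι' i) ✓ v
  have hfac : ∀ i, ∃ γ : M.V →ₗ[F] (Y (k i)).ind.V, IsHom (m + 1) M.t (Y (k i)).ind.t γ ∧
      D P M.t m ((ι i ∘ₗ π i) ∘ₗ φ) = indLift M.t m (ι i ∘ₗ (e i).symm.toLinearMap) ∘ₗ γ := by
    intro i
    have hψ : IsHom m M.t (Y (k i)).ind.t (incl F m ∘ₗ ((e i).toLinearMap ∘ₗ π i) ∘ₗ φ) := by
      refine IsHom.comp (fun j hj v => incl_t hj v) ((hπ' i).comp hφ)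
    obtain ⟨γ, h1, h2⟩ := D_factor M.ak (Y (k i)).ind.ak hψ (hΦ i)
    refine ⟨γ, h1, Eq.trans (congrArg (D P M.t m) (ext fun v => ?_)) h2⟩
    refine Eq.trans ?_ (indLift_incl (R := F) (s := M.t) (m := m)
      (ι i ∘ₗ (e i).symm.toLinearMap) (e i (π i (φ v)))).symm
    simp_all
  choose γ hγ1 hγ2 using hfac
  have hsum : (∑ i, indLift M.t m (ι i ∘ₗ (e i).symm.toLinearMap) ∘ₗ γ i : End F M.V)
      = D P M.t m φ := by
    simp only [← hγ2]
    rw [← map_sum]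
    congr 1
    refine ext fun v => ?_
    have := app_eq hs (φ v)
    rw [LinearMap.sum_apply] at this ⊢
    exact this
  obtain ⟨i, -, hi⟩ := hM.sum_bij Finset.univ
    (fun i => indLift M.t m (ι i ∘ₗ (e i).symm.toLinearMap) ∘ₗ γ i)
    (fun i _ => (hΦ i).comp (hγ1 i)) (by rw [hsum]; exact hb)
  exact ⟨k i, summand_of_bij (hγ1 i) (hΦ i) hi⟩

open Polynomial Filter in
/-- If all relative traces are nilpotent, the eigenvalues of a joint eigenvector of the
Jucys–Murphy elements are strongly constrained. -/
theorem den_dvd_num [Infinite F] [FiniteDimensional F V] (h : AK P (m + 1) t) (hq1 : P.q ≠ 1)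
    (hnil : ∀ φ : End F V, IsHom m t t φ → IsNilpotent (D P t m φ))
    (v : V) (hv0 : v ≠ 0) (x : ℕ → F) (hx : ∀ k ≤ m, AKT.X P t k v = x k • v) :
    den x (m + 1) ∣ num P x (m + 1) := by
  set Y := AKT.X P t m with hY
  set χ := minpoly F Y with hχdef
  have hχ0 : χ ≠ 0 := minpoly.ne_zero (Algebra.IsIntegral.isIntegral Y)
  have hχ : aeval Y χ = 0 := minpoly.aeval F Y
  obtain ⟨C, hCpf, hC⟩ := exists_chat Y χ
  have hev := PChi_eval F h (Nat.lt_succ_self m) ⊤ (fun _ _ _ _ => mem_top) χ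
    (fun w _ => by rw [← hY, hχ]; rfl) C hCpf hC v mem_top x hx
    (fun k _ => ⟨x k, by simp⟩) (den x (m + 1)) (num P x (m + 1)) (mul_comm _ _)
  have hS : ∀ k ≤ m + 1, S P t k v = (∑ j ∈ range k, x j) • v := by
    intro k hk
    induction k with
    | zero => simp [S]
    | succ k ih => rw [S, add_apply, ih ✓, hx k ✓,
        Finset.sum_range_succ, add_smul]
  set σ := ∑ j ∈ range (m + 1), x j with hσ
  have hq0 : P.q ≠ 0 := left_ne_zero_of_mul_eq_one P.hq
  have hab : P.a * P.b ≠ 0 := left_ne_zero_of_mul_eq_one P.hc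
  have hth : P.th ≠ 0 := by
    rw [Par.th]
    exact mul_ne_zero (mul_ne_zero (sub_ne_zero.2 hq1) (sub_ne_zero.2 hq1))
      (right_ne_zero_of_mul_eq_one P.hq)
  have hcomm : ∀ j < m, Commute (t j) Y := fun j hj => commute_X_low h m (Nat.lt_succ_self m) hj
  have hgen : ∀ᶠ l : F in cofinite, (den x (m + 1) * (Polynomial.C 1 * (𝐗 - Polynomial.C P.a)
      * (𝐗 - Polynomial.C P.b) - Polynomial.C (P.th * σ) * 𝐗)
        - num P x (m + 1)).eval l = 0 := by
    have e2 : ∀ᶠ l : F in cofinite, (den x (m + 1) * χ).eval l ≠ 0 := by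
      have hne : den x (m + 1) * χ ≠ 0 := mul_ne_zero (den_ne_zero x _) hχ0
      refine Filter.eventually_cofinite.2 ?_
      simp only [not_not]
      exact Polynomial.finite_setOfPred_isRoot hne
    filter_upwards [eventually_bijective F Y, e2, eventually_cofinite_ne (0 : F)] with l hl1 hl2 hl3
    rw [Polynomial.eval_mul] at hl2
    have hd := left_ne_zero_of_mul hl2
    have hchi := right_ne_zero_of_mul hl2
    have hCl := hC l
    rw [hχ, neg_zero, add_zero] at hCl
    have hCc : IsHom m t t (C l) := by
      intro j hj w
      apply hl1.1
      have a1 := app_eq hCl (t j w)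
      have a2 := app_eq hCl w
      have a3 := app_eq (hcomm j hj) (C l w)
      simp only [sub_apply, smul_apply, mul_apply, one_apply] at a1 a2 a3
      simp only [Algebra.algebraMap_self, RingHom.id_apply]
      rw [a1, ← map_smul, ← a2, map_sub, map_smul, a3]
    obtain ⟨N, hN⟩ := hnil _ hCc
    have hevl := hev l
    rw [PChi] at hevl
    simp only [add_apply, smul_apply, sub_apply, one_apply, hS _ le_rfl] at hevl
    have hk : P.th * (P.a * P.b) * l ≠ 0 := mul_ne_zero (mul_ne_zero hth hab) hl3
    have hk2 := mul_ne_zero hd hk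
    -- `D (C l)` is nilpotent and multiplies `v` by a scalar
    have hD : ∃ μ : F, D P t m (C l) v = μ • v := by
      refine ⟨((den x (m + 1)).eval l * (P.th * (P.a * P.b) * l))⁻¹ *
        (χ.eval l * (num P x (m+1)).eval l - (den x (m + 1)).eval l * χ.eval l * (P.f l - P.th * l * σ)), ?_⟩
      rw [mul_smul, eq_inv_smul_iff₀ hk2]
      linear_combination (norm := module) hevl
    obtain ⟨μ, hμ⟩ := hD
    have hpow : ∀ N : ℕ, ((D P t m (C l)) ^ N) v = μ ^ N • v := by
      intro N
      induction N with
      | zero => simp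
      | succ N ih => rw [pow_succ, mul_apply, hμ, map_smul, ih, smul_smul, pow_succ, mul_comm]
    have hμ0 : μ = 0 := by
      have := hpow N
      rw [hN, LinearMap.zero_apply] at this
      exact eq_zero_of_pow_eq_zero ((smul_eq_zero.1 this.symm).resolve_right hv0)
    rw [hμ, hμ0, zero_smul, smul_zero, add_zero] at hevl
    have h3 : ((den x (m + 1)).eval l * (χ.eval l * (P.f l - P.th * l * σ))
        - χ.eval l * (num P x (m+1)).eval l) • v = 0 := by
      linear_combination (norm := module) hevl
    have h4 := (smul_eq_zero.1 h3).resolve_right hv0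
    have h5 : χ.eval l * ((den x (m + 1)).eval l * (P.f l - P.th * l * σ)
        - (num P x (m+1)).eval l) = 0 := by linear_combination h4
    have h6 := (mul_eq_zero.1 h5).resolve_left hchi
    simp only [Polynomial.eval_sub, Polynomial.eval_mul, Polynomial.eval_C, Polynomial.eval_X]
    rw [← h6, Par.f]
    ring
  have hz := Polynomial.eq_zero_of_infinite_isRoot _
    (frequently_cofinite_iff_infinite.1 hgen.frequently)
  exact ⟨_, (sub_eq_zero.1 hz).symm⟩

/-! ### Almost convex sequences -/

/-- A non-negative integer sequence on `[0, E]` vanishing at both ends which is convex except for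
unit defects at `p₁ ≤ p₂` is zero, or a trapezoid of height at least two, or the indicator
function of `[p₁, p₂]`. -/
theorem trapezoid (h : ℕ → ℕ) (E p1 p2 : ℕ) (h0 : h 0 = 0) (hE : h E = 0) (h12 : p1 ≤ p2)
    (h2E : p2 < E)
    (hc : ∀ i, i + 1 < E → 2 * h (i + 1) ≤ h i + h (i + 2) + (if i + 1 = p1 then 1 else 0)
      + (if i + 1 = p2 then 1 else 0)) :
    (∀ i ≤ E, h i = 0) ∨ (0 < p1 ∧ 2 * (p2 - p1) + 4 ≤ ∑ i ∈ range E, h i) ∨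
      (0 < p1 ∧ ∀ i ≤ E, h i = if p1 ≤ i ∧ i ≤ p2 then 1 else 0) := by
  -- `A` is the slope corrected by the number of marks already passed; it is nondecreasing
  set A : ℕ → ℤ := fun i => (h (i + 1) : ℤ) - h i + (if p1 ≤ i then 1 else 0)
    + (if p2 ≤ i then 1 else 0) with hA
  have hstep : ∀ i, i + 1 < E → A i ≤ A (i + 1) := by
    intro i hi
    have := hc i hi
    have e2 : i + 1 + 1 = i + 2 := rfl
    simp only [hA, e2]
    split_ifs at this ⊢ <;> push_cast at * <;> omega
  have hmono : ∀ j i, i ≤ j → j < E → A i ≤ A j := by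
    intro j
    induction j with
    | zero => intro i hi _; rw [Nat.le_zero.1 hi]
    | succ j ih =>
      intro i hi hj
      rcases lt_or_ge i (j + 1) with h' | h'
      · exact (ih i ✓ ✓).trans (hstep j hj)
      · rw [show i = j + 1 by omega]
  have hA0 : ∀ i < E, 0 ≤ A i := fun i hi => by
    refine le_trans ?_ (hmono i 0 (Nat.zero_le _) hi)
    simp only [hA, h0]; split_ifs <;> omega
  have hA2 : ∀ i < E, A i ≤ 2 := fun i hi => by
    refine (hmono (E - 1) i ✓ ✓).trans ?_
    have : E - 1 + 1 = E := ✓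
    simp only [hA, this, hE]; split_ifs <;> omega
  -- a strict increase between two points produces a positive slope, and dually
  have hup : ∀ j i, i ≤ j → h i < h j → ∃ k, i ≤ k ∧ k < j ∧ h k < h (k + 1) := by
    intro j
    induction j with
    | zero => intro i hi hlt; rw [Nat.le_zero.1 hi] at hlt; omega
    | succ j ih =>
      intro i hi hlt
      rcases lt_or_ge (h j) (h (j + 1)) with h' | h'
      · refine ⟨j, ?_, by omega, h'⟩
        by_contra hcon
        rw [show i = j + 1 by omega] at hlt; omega
      · have hij : i ≤ j := by
          by_contra hcon
          rw [show i = j + 1 by omega] at hlt; omega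
        obtain ⟨k, a1, a2, a3⟩ := ih i hij ✓
        exact ⟨k, a1, by omega, a3⟩
  have hdown : ∀ j i, i ≤ j → h j < h i → ∃ k, i ≤ k ∧ k < j ∧ h (k + 1) < h k := by
    intro j
    induction j with
    | zero => intro i hi hlt; rw [Nat.le_zero.1 hi] at hlt; omega
    | succ j ih =>
      intro i hi hlt
      rcases lt_or_ge (h (j + 1)) (h j) with h' | h'
      · refine ⟨j, ?_, by omega, h'⟩
        by_contra hcon
        rw [show i = j + 1 by omega] at hlt; omega
      · have hij : i ≤ j := by
          by_contra hcon
          rw [show i = j + 1 by omega] at hlt; omega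
        obtain ⟨k, a1, a2, a3⟩ := ih i hij ✓
        exact ⟨k, a1, by omega, a3⟩
  have hleft : ∀ i j, i ≤ j → j ≤ p1 → h i ≤ h j := by
    intro i j hij hj
    by_contra hcon
    obtain ⟨k, a1, a2, a3⟩ := hdown j i hij ✓
    have := hA0 k ✓
    simp only [hA] at this
    split_ifs at this <;> omega
  have hright : ∀ i j, i ≤ j → p2 ≤ i → j ≤ E → h j ≤ h i := by
    intro i j hij hi hj
    by_contra hcon
    obtain ⟨k, a1, a2, a3⟩ := hup j i hij ✓
    have := hA2 k ✓
    simp only [hA] at this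
    split_ifs at this <;> omega
  have hge : 0 < h p1 → 0 < p1 ∧ 1 ≤ A (p1 - 1) := by
    intro hp
    obtain ⟨k, a1, a2, a3⟩ := hup p1 0 (Nat.zero_le _) ✓
    refine ⟨by omega, le_trans ?_ (hmono (p1 - 1) k ✓ ✓)⟩
    simp only [hA]; split_ifs <;> omega
  have hle : 0 < h p2 → A p2 ≤ 1 := by
    intro hp
    obtain ⟨k, a1, a2, a3⟩ := hdown E p2 ✓ ✓
    refine (hmono k p2 ✓ ✓).trans ?_
    simp only [hA]; split_ifs <;> omega
  rcases Nat.eq_zero_or_pos (h p1) with hz1 | hz1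
  · left
    have hz2 : h p2 = 0 := by
      by_contra hcon
      obtain ⟨k, a1, a2, a3⟩ := hup p2 p1 h12 ✓
      have := (hmono p2 k ✓ ✓).trans (hle ✓)
      simp only [hA] at this
      split_ifs at this <;> omega
    intro i hi
    rcases lt_or_ge i p1 with c1 | c1
    · have := hleft i p1 c1.le le_rfl; omega
    rcases lt_or_ge p2 i with c2 | c2
    · have := hright p2 i c2.le le_rfl hi; omega
    by_contra hcon
    obtain ⟨k, a1, a2, a3⟩ := hup i p1 c1 ✓
    obtain ⟨k', b1, b2, b3⟩ := hdown p2 i c2 ✓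
    have := hmono k' k ✓ ✓
    simp only [hA] at this
    split_ifs at this <;> omega
  · right
    obtain ⟨hp1, hAp⟩ := hge hz1
    have hmid : ∀ k, p1 ≤ k → k < p2 → h k ≤ h (k + 1) := by
      intro k a b
      have := hAp.trans (hmono k (p1 - 1) ✓ ✓)
      simp only [hA] at this
      split_ifs at this <;> omega
    have hz2 : 0 < h p2 := by
      by_contra hcon
      obtain ⟨k, a1, a2, a3⟩ := hdown p2 p1 h12 ✓
      have := hmid k a1 a2; omega
    have hAe : ∀ k, p1 - 1 ≤ k → k ≤ p2 → A k = 1 := fun k a b =>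
      le_antisymm ((hmono p2 k b h2E).trans (hle hz2)) (hAp.trans (hmono k (p1 - 1) a ✓))
    have hconst : ∀ k, p1 ≤ k → k ≤ p2 → h k = h p1 := by
      intro k a
      induction k, a using Nat.le_induction with
      | base => intro _; rfl
      | succ k hk ih =>
        intro hb
        have e := hAe k ✓ ✓
        have := ih ✓
        simp only [hA] at e
        split_ifs at e <;> omega
    have hl : h (p1 - 1) + 1 = h p1 := by
      have e := hAe (p1 - 1) le_rfl ✓
      simp only [hA, Nat.sub_add_cancel hp1] at e
      split_ifs at e <;> omega
    have hr : h (p2 + 1) + 1 = h p1 := by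
      have e := hAe p2 ✓ le_rfl
      have := hconst p2 h12 le_rfl
      simp only [hA] at e
      split_ifs at e <;> omega
    rcases lt_or_ge 1 (h p1) with hbig | hsmall
    · left
      refine ⟨hp1, ?_⟩
      have hE2 : p2 + 1 < E := by
        rcases lt_or_ge (p2 + 1) E with h' | h'
        · exact h'
        · rw [show p2 + 1 = E by omega] at hr; omega
      have hsub : Finset.Icc (p1 - 1) (p2 + 1) ⊆ range E := by
        intro i hi; simp only [Finset.mem_Icc, mem_range] at *; omega
      have hlow : ∑ i ∈ Finset.Icc (p1 - 1) (p2 + 1), (if p1 ≤ i ∧ i ≤ p2 then 2 else 1)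
          ≤ ∑ i ∈ range E, h i := by
        refine le_trans (Finset.sum_le_sum fun i hi => ?_) (Finset.sum_le_sum_of_subset hsub)
        simp only [Finset.mem_Icc] at hi
        split_ifs with hh
        · rw [hconst i hh.1 hh.2]; exact hbig
        · rcases lt_or_ge i p1 with c | c
          · rw [show i = p1 - 1 by omega]; omega
          · rw [show i = p2 + 1 by omega]; omega
      refine le_trans (le_of_eq ?_) hlow
      rw [show Finset.Icc (p1 - 1) (p2 + 1) = insert (p1 - 1) (insert (p2 + 1) (Finset.Icc p1 p2)) by
        ext i; simp only [Finset.mem_Icc, Finset.mem_insert]; omega]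
      rw [Finset.sum_insert (by simp; omega), Finset.sum_insert (by simp),
        Finset.sum_congr rfl (g := fun _ => 2) (fun i hi => by
          rw [if_pos (Finset.mem_Icc.1 hi)])]
      rw [if_neg ✓, if_neg ✓]
      simp only [Finset.sum_const, Nat.card_Icc, smul_eq_mul]
      omega
    · right
      refine ⟨hp1, fun i hi => ?_⟩
      split_ifs with hh
      · rw [hconst i hh.1 hh.2]; omega
      · rcases lt_or_ge i p1 with c | c
        · have := hleft i (p1 - 1) ✓ ✓; omega
        · have := hright (p2 + 1) i ✓ ✓ hi; omega

/-! ### Multiplicities of residues and arcs -/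

section

open Classical in
/-- The multiplicity of `c` among the first `n` entries of `x`. -/
noncomputable def mult {F : Type} (x : ℕ → F) : ℕ → F → ℕ
  | 0, _ => 0
  | n + 1, c => mult x n c + if x n = c then 1 else 0

variable {F : Type}

theorem mult_self_pos (x : ℕ → F) : ∀ n j, j < n → 0 < mult x n (x j)
  | 0, _, h => by omega
  | n + 1, j, h => by
    rw [mult]
    rcases lt_or_ge j n with h' | h'
    · have := mult_self_pos x n j h'; omega
    · rw [show j = n by omega, if_pos rfl]; omega

theorem exists_of_mult_pos (x : ℕ → F) : ∀ n c, 0 < mult x n c → ∃ j < n, x j = c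
  | 0, _, h => by simp [mult] at h
  | n + 1, c, h => by
    rw [mult] at h
    split_ifs at h with hc
    · exact ⟨n, by omega, hc⟩
    · obtain ⟨j, hj, hj'⟩ := exists_of_mult_pos x n c ✓
      exact ⟨j, by omega, hj'⟩

theorem mult_congr {x y : ℕ → F} : ∀ n, (∀ j < n, x j = y j) → ∀ c, mult x n c = mult y n c
  | 0, _, _ => rfl
  | n + 1, h, c => by
    rw [mult, mult, mult_congr n (fun j hj => h j ✓), h n ✓]

theorem sum_mult_le (x : ℕ → F) (T : Finset F) : ∀ n, ∑ c ∈ T, mult x n c ≤ n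
  | 0 => by simp [mult]
  | n + 1 => by
    classical
    simp only [mult, Finset.sum_add_distrib]
    have := sum_mult_le x T n
    rw [Finset.sum_ite_eq]
    split_ifs <;> omega

theorem sum_mult_eq (x : ℕ → F) (T : Finset F) : ∀ n, (∀ j < n, x j ∈ T) → ∑ c ∈ T, mult x n c = n
  | 0, _ => by simp [mult]
  | n + 1, h => by
    classical
    simp only [mult, Finset.sum_add_distrib]
    rw [sum_mult_eq x T n (fun j hj => h j ✓), Finset.sum_ite_eq, if_pos (h n ✓)]

variable [Field F] {P : Par F}

theorem Par.q_ne (P : Par F) : P.q ≠ 0 := left_ne_zero_of_mul_eq_one P.hq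
theorem Par.qi_ne (P : Par F) : P.qi ≠ 0 := right_ne_zero_of_mul_eq_one P.hq
theorem Par.a_ne (P : Par F) : P.a ≠ 0 := left_ne_zero_of_mul (left_ne_zero_of_mul_eq_one P.hc)
theorem Par.b_ne (P : Par F) : P.b ≠ 0 := right_ne_zero_of_mul (left_ne_zero_of_mul_eq_one P.hc)

theorem num_ne_zero (x : ℕ → F) : ∀ n, num P x n ≠ 0
  | 0 => mul_ne_zero (Polynomial.X_sub_C_ne_zero _) (Polynomial.X_sub_C_ne_zero _)
  | n + 1 => mul_ne_zero (num_ne_zero x n)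
      (mul_ne_zero (Polynomial.X_sub_C_ne_zero _) (Polynomial.X_sub_C_ne_zero _))

theorem rootMultiplicity_den (x : ℕ → F) (c : F) : ∀ n,
    (den x n).rootMultiplicity c = 2 * mult x n c
  | 0 => by simp [den, mult]
  | n + 1 => by
    classical
    have h1 := Polynomial.X_sub_C_ne_zero (x n)
    rw [den, mult, pow_two, Polynomial.rootMultiplicity_mul
      (mul_ne_zero (den_ne_zero x n) (mul_ne_zero h1 h1)), rootMultiplicity_den x c n,
      Polynomial.rootMultiplicity_mul (mul_ne_zero h1 h1), Polynomial.rootMultiplicity_X_sub_C]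
    simp only [eq_comm (a := c)]
    split_ifs <;> omega

open Classical in
theorem rootMultiplicity_num (x : ℕ → F) (c : F) : ∀ n,
    (num P x n).rootMultiplicity c = (if c = P.a then 1 else 0) + (if c = P.b then 1 else 0)
      + mult x n (c * P.qi) + mult x n (c * P.q)
  | 0 => by
    rw [num, Polynomial.rootMultiplicity_mul
      (mul_ne_zero (Polynomial.X_sub_C_ne_zero _) (Polynomial.X_sub_C_ne_zero _)),
      Polynomial.rootMultiplicity_X_sub_C, Polynomial.rootMultiplicity_X_sub_C]
    simp [mult]
  | n + 1 => by
    have h1 := Polynomial.X_sub_C_ne_zero (P.q * x n)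
    have h2 := Polynomial.X_sub_C_ne_zero (P.qi * x n)
    have hq := P.hq
    have e1 : c = P.q * x n ↔ x n = c * P.qi := by
      constructor
      · rintro rfl; linear_combination (- x n) * hq
      · intro h; rw [h]; linear_combination (-c) * hq
    have e2 : c = P.qi * x n ↔ x n = c * P.q := by
      constructor
      · rintro rfl; linear_combination (- x n) * hq
      · intro h; rw [h]; linear_combination (-c) * hq
    rw [num, mult, mult, Polynomial.rootMultiplicity_mul
      (mul_ne_zero (num_ne_zero x n) (mul_ne_zero h1 h2)), rootMultiplicity_num x c n,
      Polynomial.rootMultiplicity_mul (mul_ne_zero h1 h2), Polynomial.rootMultiplicity_X_sub_C,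
      Polynomial.rootMultiplicity_X_sub_C]
    simp only [e1, e2]
    omega

open Classical in
theorem mult_le_of_dvd {x : ℕ → F} (h : den x n ∣ num P x n) (c : F) :
    2 * mult x n c ≤ (if c = P.a then 1 else 0) + (if c = P.b then 1 else 0)
      + mult x n (c * P.qi) + mult x n (c * P.q) := by
  rw [← rootMultiplicity_den, ← rootMultiplicity_num]
  exact Polynomial.rootMultiplicity_le_rootMultiplicity_of_dvd (num_ne_zero x n) h c

open Classical in
theorem arc_core {q qi a b : F} (hqi : q * qi = 1) (hq : IsPrimitiveRoot q e) (x : ℕ → F)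
    (hn : 1 ≤ n) (hx0 : ∀ j < n, x j ≠ 0) (hne : n < e)
    (hrel : ∀ c, 2 * mult x n c ≤ (if c = a then 1 else 0) + (if c = b then 1 else 0)
      + mult x n (c * qi) + mult x n (c * q))
    {w : F} (hw0 : w ≠ 0) (hw : mult x n w = 0) {pa pb : ℕ} (ha : a = w * q ^ pa)
    (hb : b = w * q ^ pb) (hab : pa ≤ pb) (hbe : pb < e) (hn2 : n < 2 * (pb - pa) + 4) :
    n = (pb - pa) + 1 ∧ b = a * q ^ (pb - pa) ∧
      ∀ c, mult x n c = if ∃ i ≤ pb - pa, c = a * q ^ i then 1 else 0 := by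
  have hinj : ∀ i < e, ∀ j < e, w * q ^ i = w * q ^ j → i = j := fun i hi j hj h =>
    hq.pow_inj hi hj (mul_left_cancel₀ hw0 h)
  have hsum : ∀ c : F, c ≠ 0 → ∑ i ∈ range e, mult x n (c * q ^ i)
      = ∑ y ∈ (range e).image (fun i => c * q ^ i), mult x n y := by
    intro c hc
    rw [Finset.sum_image]
    intro i hi j hj h
    exact hq.pow_inj (Finset.mem_range.1 hi) (Finset.mem_range.1 hj) (mul_left_cancel₀ hc h)
  have hs1 : ∀ (c : F) i, c * q ^ (i + 1) * qi = c * q ^ i := fun c i => by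
    rw [pow_succ]; linear_combination (c * q ^ i) * hqi
  have hs2 : ∀ (c : F) i, c * q ^ (i + 1) * q = c * q ^ (i + 2) := fun c i => by ring
  -- outside the orbit of `w` there is nothing
  have hout : ∀ c, c ≠ 0 → (∀ i, c * q ^ i ≠ a) → (∀ i, c * q ^ i ≠ b) → mult x n c = 0 := by
    intro c hc h1 h2
    obtain ⟨z, hz, hz0⟩ : ∃ z < e, mult x n (c * q ^ z) = 0 := by
      by_contra hcon
      push Not at hcon
      have : ∑ i ∈ range e, 1 ≤ ∑ i ∈ range e, mult x n (c * q ^ i) :=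
        Finset.sum_le_sum fun i hi => Nat.one_le_iff_ne_zero.2 (hcon i (Finset.mem_range.1 hi))
      rw [hsum c hc] at this
      have := this.trans (sum_mult_le x _ n)
      simp at this; omega
    have key := trapezoid (fun i => mult x n (c * q ^ z * q ^ i)) e 0 0 (by simpa using hz0)
      (by simpa [hq.pow_eq_one] using hz0) le_rfl ✓ (fun i hi => by
        have := hrel (c * q ^ z * q ^ (i + 1))
        rw [hs1, hs2, if_neg (by rw [mul_assoc, ← pow_add]; exact h1 _),
          if_neg (by rw [mul_assoc, ← pow_add]; exact h2 _)] at this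
        simp only [Nat.add_one_ne_zero, if_false]
        omega)
    rcases key with h | h | h
    · have := h (e - z) (Nat.sub_le _ _)
      simp only [mul_assoc, ← pow_add, Nat.add_sub_cancel' hz.le, hq.pow_eq_one, mul_one] at this
      exact this
    · exact absurd h.1 (lt_irrefl _)
    · exact absurd h.1 (lt_irrefl _)
  have hmem : ∀ j < n, x j ∈ (range e).image (fun i => w * q ^ i) := by
    intro j hj
    by_contra hcon
    have hcon' : ∀ i, w * q ^ i ≠ x j := by
      intro i hi
      apply hcon
      refine Finset.mem_image.2 ⟨i % e, Finset.mem_range.2 (Nat.mod_lt _ ✓), ?_⟩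
      rw [← hi, ← Nat.mod_add_div i e, pow_add, pow_mul, hq.pow_eq_one, one_pow]
      simp
    have hcon2 : ∀ p i, x j * q ^ i ≠ w * q ^ p := by
      intro p i hi
      apply hcon' (p + (e - i % e))
      have hie : i % e < e := Nat.mod_lt _ ✓
      have h1 : q ^ i * q ^ (e - i % e) = 1 := by
        rw [← pow_add]
        have : i + (e - i % e) = e * (i / e + 1) := by
          have := Nat.mod_add_div i e; rw [mul_add]; omega
        rw [this, pow_mul, hq.pow_eq_one, one_pow]
      rw [pow_add, ← mul_assoc, ← hi]; linear_combination (x j) * h1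
    have := hout (x j) (hx0 j hj) (fun i => by rw [ha]; exact hcon2 pa i)
      (fun i => by rw [hb]; exact hcon2 pb i)
    have := mult_self_pos x n j hj
    omega
  have htot : ∑ i ∈ range e, mult x n (w * q ^ i) = n := by
    rw [hsum w hw0, sum_mult_eq x _ n hmem]
  have key := trapezoid (fun i => mult x n (w * q ^ i)) e pa pb (by simpa using hw)
    (by simpa [hq.pow_eq_one] using hw) hab hbe (fun i hi => by
      have := hrel (w * q ^ (i + 1))
      have e1 : w * q ^ (i + 1) = a ↔ i + 1 = pa := by
        rw [ha]; exact ⟨hinj _ hi _ ✓, fun h => by rw [h]⟩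
      have e2 : w * q ^ (i + 1) = b ↔ i + 1 = pb := by
        rw [hb]; exact ⟨hinj _ hi _ ✓, fun h => by rw [h]⟩
      rw [hs1, hs2] at this
      simp only [e1, e2] at this
      omega)
  rcases key with h | h | h
  · exfalso
    rw [Finset.sum_eq_zero (fun i hi => h i (Finset.mem_range.1 hi).le)] at htot
    omega
  · rw [htot] at h; omega
  · have hform : ∀ i ≤ e, mult x n (w * q ^ i) = if pa ≤ i ∧ i ≤ pb then 1 else 0 := h.2
    refine ⟨?_, by rw [hb, ha, mul_assoc, ← pow_add, Nat.add_sub_cancel' hab], fun c => ?_⟩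
    · rw [Finset.sum_congr rfl (fun i hi => hform i (Finset.mem_range.1 hi).le),
        ← Finset.sum_filter, Finset.sum_const, smul_eq_mul, mul_one,
        show (range e).filter (fun i => pa ≤ i ∧ i ≤ pb) = Finset.Icc pa pb by
          ext i; simp; omega, Nat.card_Icc] at htot
      omega
    · split_ifs with hc
      · obtain ⟨i, hi, rfl⟩ := hc
        rw [ha, mul_assoc, ← pow_add, hform _ ✓, if_pos ✓]
      · by_contra hcon
        obtain ⟨j, hj, hjc⟩ := exists_of_mult_pos x n c ✓
        obtain ⟨i, hi, hi'⟩ := Finset.mem_image.1 (hmem j hj)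
        rw [← hjc, ← hi', hform i (Finset.mem_range.1 hi).le] at hcon
        by_cases hcc : pa ≤ i ∧ i ≤ pb
        · apply hc
          refine ⟨i - pa, by omega, ?_⟩
          rw [← hjc, ← hi', ha, mul_assoc, ← pow_add, Nat.add_sub_cancel' hcc.1]
        · rw [if_neg hcc] at hcon; exact hcon rfl

/-- The eigenvalue tuple is an arc from `a` to `b`. -/
def IsArc (q a b : F) (ℓ : ℕ) (x : ℕ → F) : Prop :=
  b = a * q ^ ℓ ∧ (∀ i ≤ ℓ, mult x (ℓ + 1) (a * q ^ i) = 1) ∧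
    ∀ c, (∀ i ≤ ℓ, c ≠ a * q ^ i) → mult x (ℓ + 1) c = 0

theorem arc_of_dvd (hq : IsPrimitiveRoot P.q e) (hn : n + 1 < e)
    {δ : ℕ} (hδ : δ < e) (hb : P.b = P.a * P.q ^ δ) (hn2 : n + 1 < 2 * min δ (e - δ) + 4)
    (x : ℕ → F) (hx0 : ∀ j < n + 1, x j ≠ 0) (hd : den x (n + 1) ∣ num P x (n + 1)) :
    IsArc P.q P.a P.b n x ∨ IsArc P.q P.b P.a n x := by
  classical
  have fin : ∀ {a b : F} {m : ℕ}, (n + 1 = m + 1 ∧ b = a * P.q ^ m ∧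
      ∀ c, mult x (n + 1) c = if ∃ i ≤ m, c = a * P.q ^ i then 1 else 0) → IsArc P.q a b n x := by
    rintro a b m ⟨h1, h2, h3⟩
    obtain rfl : n = m := ✓
    refine ⟨h2, fun i hi => by rw [h3, if_pos ⟨i, hi, rfl⟩], fun c hc => ?_⟩
    rw [h3, if_neg]
    rintro ⟨i, hi, h⟩
    exact hc i hi h
  obtain ⟨z, hz, hz0⟩ : ∃ z < e, mult x (n + 1) (P.a * P.q ^ z) = 0 := by
    by_contra hcon
    push Not at hcon
    have h1 : ∑ i ∈ range e, 1 ≤ ∑ i ∈ range e, mult x (n + 1) (P.a * P.q ^ i) :=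
      Finset.sum_le_sum fun i hi => Nat.one_le_iff_ne_zero.2 (hcon i (Finset.mem_range.1 hi))
    have h2 : ∑ i ∈ range e, mult x (n + 1) (P.a * P.q ^ i)
        = ∑ y ∈ (range e).image (fun i => P.a * P.q ^ i), mult x (n + 1) y := by
      rw [Finset.sum_image]
      intro i hi j hj h
      exact hq.pow_inj (Finset.mem_range.1 hi) (Finset.mem_range.1 hj) (mul_left_cancel₀ P.a_ne h)
    have := (h1.trans_eq h2).trans (sum_mult_le x _ _)
    simp at this; omega
  have hw0 : P.a * P.q ^ z ≠ 0 := mul_ne_zero P.a_ne (pow_ne_zero _ P.q_ne)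
  have hpow : ∀ i, P.q ^ i = P.q ^ (i % e) := fun i => by
    conv_lhs => rw [← Nat.mod_add_div i e, pow_add, pow_mul, hq.pow_eq_one, one_pow, mul_one]
  have he0 : 0 < e := ✓
  have hA : P.a = P.a * P.q ^ z * P.q ^ ((e - z) % e) := by
    rw [← hpow, mul_assoc, ← pow_add, Nat.add_sub_cancel' hz.le, hq.pow_eq_one, mul_one]
  have hB : P.b = P.a * P.q ^ z * P.q ^ ((e - z + δ) % e) := by
    rw [← hpow, mul_assoc, ← pow_add, ← add_assoc, Nat.add_sub_cancel' hz.le, pow_add,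
      hq.pow_eq_one, one_mul, hb]
  have hla := Nat.mod_lt (e - z) he0
  have hlb := Nat.mod_lt (e - z + δ) he0
  have hm : (e - z + δ) % e = (e - z) % e + δ ∨ (e - z + δ) % e + e = (e - z) % e + δ := by
    rw [Nat.add_mod, Nat.mod_eq_of_lt hδ]
    rcases lt_or_ge ((e - z) % e + δ) e with h | h
    · left; rw [Nat.mod_eq_of_lt h]
    · right; rw [Nat.mod_eq_sub_mod h, Nat.mod_eq_of_lt ✓]; omega
  rcases le_total ((e - z) % e) ((e - z + δ) % e) with h | h
  · left
    exact fin (arc_core P.hq hq x ✓ hx0 hn (mult_le_of_dvd hd) hw0 hz0 hA hB h hlb ✓)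
  · right
    exact fin (arc_core P.hq hq x ✓ hx0 hn (fun c => by
      have := mult_le_of_dvd hd c; omega) hw0 hz0 hB hA h hla ✓)
end

/-! ### Representations of the zigzag quiver -/

section
open Module

section

/-- A representation of the zigzag algebra of a line with vertices `0, …, ℓ`, realised by
subspaces `V s` of an ambient space and by operators of that space. Relations are only imposed
on the relevant subspaces. -/
structure Zig (F : Type) [Field F] (M : Type) [AddCommGroup M] [Module F M]
    (ℓ : ℕ) (u w : ℕ → F) where
  V : ℕ → Submodule F M
  a : ℕ → End F M
  b : ℕ → End F M
  y : ℕ → End F M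
  top : ∀ s, ℓ < s → V s = ⊥
  ha : ∀ s, ∀ v ∈ V s, a s v ∈ V (s + 1)
  hb : ∀ s, ∀ v ∈ V (s + 1), b s v ∈ V s
  hy : ∀ s, ∀ v ∈ V s, y s v ∈ V s
  aa : ∀ s, ∀ v ∈ V s, a (s + 1) (a s v) = 0
  bb : ∀ s, ∀ v ∈ V (s + 2), b s (b (s + 1) v) = 0
  ba : ∀ s < ℓ, ∀ v ∈ V s, b s (a s v) = u s • y s v
  ab : ∀ s < ℓ, ∀ v ∈ V (s + 1), a s (b s v) = w s • y (s + 1) v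
  yy : ∀ s, ∀ v ∈ V s, y s (y s v) = 0
  ay : ∀ s, ∀ v ∈ V s, a s (y s v) = 0
  bY : ∀ s, ∀ v ∈ V (s + 1), b s (y (s + 1) v) = 0
  hu : ∀ s < ℓ, u s ≠ 0
  hw : ∀ s < ℓ, w s ≠ 0

variable {M M' : Type} [AddCommGroup M] [Module F M] [AddCommGroup M'] [Module F M']
  {u w : ℕ → F}

/-- Homomorphisms of zigzag representations. -/
structure ZHom (Z : Zig F M ℓ u w) (Z' : Zig F M' ℓ u w) (h : ℕ → M →ₗ[F] M') : Prop where
  mem : ∀ s, ∀ v ∈ Z.V s, h s v ∈ Z'.V s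
  ca : ∀ s, ∀ v ∈ Z.V s, h (s + 1) (Z.a s v) = Z'.a s (h s v)
  cb : ∀ s, ∀ v ∈ Z.V (s + 1), h s (Z.b s v) = Z'.b s (h (s + 1) v)
  cy : ∀ s, ∀ v ∈ Z.V s, h s (Z.y s v) = Z'.y s (h s v)

/-- Absence of nontrivial idempotents. -/
def ZIndec (Z : Zig F M ℓ u w) : Prop :=
  ∀ e : ℕ → End F M, ZHom Z Z e → (∀ s, ∀ v ∈ Z.V s, e s (e s v) = e s v) →
    (∀ s, ∀ v ∈ Z.V s, e s v = 0) ∨ (∀ s, ∀ v ∈ Z.V s, e s v = v)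

/-- Isomorphism of zigzag representations. -/
def ZIso (Z : Zig F M ℓ u w) (Z' : Zig F M' ℓ u w) : Prop :=
  ∃ (h : ℕ → M →ₗ[F] M') (k : ℕ → M' →ₗ[F] M), ZHom Z Z' h ∧ ZHom Z' Z k ∧
    (∀ s, ∀ v ∈ Z.V s, k s (h s v) = v) ∧ (∀ s, ∀ v ∈ Z'.V s, h s (k s v) = v)

theorem exists_functional {A : Type} [AddCommGroup A] [Module F A] (ψ : A →ₗ[F] M)
    (η : A →ₗ[F] F) (h : ∀ x, ψ x = 0 → η x = 0) : ∃ ξ : M →ₗ[F] F, ∀ x, ξ (ψ x) = η x := by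
  have : η ∈ LinearMap.range ψ.dualMap := by
    rw [LinearMap.range_dualMap_eq_dualAnnihilator_ker, Submodule.mem_dualAnnihilator]
    exact fun x hx => h x hx
  obtain ⟨ξ, hξ⟩ := this
  exact ⟨ξ, fun x => by rw [← hξ]; rfl⟩

theorem exists_functional_one (K : Submodule F M) {x : M} (hx : x ∉ K) :
    ∃ ξ : M →ₗ[F] F, ξ x = 1 ∧ ∀ k ∈ K, ξ k = 0 := by
  obtain ⟨ξ, hξ⟩ := exists_functional (LinearMap.coprod (LinearMap.toSpanSingleton F M x) K.subtype)
    (LinearMap.fst F F K) (by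
      rintro ⟨c, k⟩ h
      simp only [LinearMap.coprod_apply, LinearMap.toSpanSingleton_apply,
        Submodule.subtype_apply] at h
      by_contra hc
      simp only [LinearMap.fst_apply] at hc
      apply hx
      have : x = -(c⁻¹ • (k : M)) := by
        rw [← smul_neg, eq_inv_smul_iff₀ hc]
        exact eq_neg_of_add_eq_zero_left h
      rw [this]
      exact K.neg_mem (K.smul_mem _ k.2))
  refine ⟨ξ, ?_, fun k hk => ?_⟩
  · simpa using hξ (1, 0)
  · simpa using hξ (0, ⟨k, hk⟩)

/-- The rank one operators forming a thin summand supported on the vertices `≥ s`. -/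
structure Tail (Z : Zig F M ℓ u w) (s : ℕ) (x : M) (ξ : M →ₗ[F] F) (e : ℕ → End F M) :
    Prop where
  start : e s = ξ.smulRight x
  rank : ∀ r, s ≤ r → ∃ x ∈ Z.V r, ∃ ξ : M →ₗ[F] F, e r = ξ.smulRight x ∧ e r x = x
  ca : ∀ r, s ≤ r → ∀ v ∈ Z.V r, e (r + 1) (Z.a r v) = Z.a r (e r v)
  cb : ∀ r, s ≤ r → ∀ v ∈ Z.V (r + 1), e r (Z.b r v) = Z.b r (e (r + 1) v)

/-- Prepending one vertex to a thin summand. -/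
theorem Tail.cons {Z : Zig F M ℓ u w} {x' : M} {ξ' : M →ₗ[F] F}
    {e : ℕ → End F M} (T : Tail Z (s + 1) x' ξ' e) {x : M} {ξ : M →ₗ[F] F} (hx : x ∈ Z.V s)
    (h1 : ξ x = 1) (ha : ∀ v ∈ Z.V s, ξ' (Z.a s v) • x' = ξ v • Z.a s x)
    (hb : ∀ v ∈ Z.V (s + 1), ξ (Z.b s v) • x = ξ' v • Z.b s x') :
    ∃ e, Tail Z s x ξ e := by
  refine ⟨fun r => if r = s then ξ.smulRight x else e r, by simp, ?_, ?_, ?_⟩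
  · intro r hr
    by_cases h : r = s
    · subst h
      exact ⟨x, hx, ξ, by simp, by simp [h1]⟩
    · simp only [h, if_false]
      exact T.rank r ✓
  · intro r hr v hv
    by_cases h : r = s
    · subst h
      simp [T.start, ha v hv]
    · simp only [h, if_false, show r + 1 ≠ s by omega]
      exact T.ca r ✓ v hv
  · intro r hr v hv
    by_cases h : r = s
    · subst h
      simp [T.start, hb v hv]
    · simp only [h, if_false, show r + 1 ≠ s by omega]
      exact T.cb r ✓ v hv

/-- A thin summand supported at the vertex `s` only. -/
theorem Tail.nil {Z : Zig F M ℓ u w} {x : M} {ξ : M →ₗ[F] F} (hx : x ∈ Z.V s)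
    (h1 : ξ x = 1) (ha : Z.a s x = 0) (hb : ∀ v ∈ Z.V (s + 1), ξ (Z.b s v) = 0) :
    ∃ e, Tail Z s x ξ e := by
  have T : Tail Z (s + 1) 0 0 (0 : ℕ → End F M) :=
    ⟨by ext; simp, fun r _ => ⟨0, zero_mem _, 0, by ext; simp, by simp⟩, fun r _ v _ => by simp,
      fun r _ v _ => by simp⟩
  exact T.cons hx h1 (fun v _ => by simp [ha]) (fun v hv => by simp [hb v hv])

/-- The induction behind the thinness of indecomposable representations of a quiver of type `A`:
a proper subquotient `W / K` at the vertex `s` contains a line which splits off to the right. -/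
theorem exists_tail (Z : Zig F M ℓ u w)
    (hor : ∀ s, (∀ v ∈ Z.V s, Z.a s v = 0) ∨ (∀ v ∈ Z.V (s + 1), Z.b s v = 0)) :
    ∀ d s, s + d = ℓ + 1 → ∀ K W : Submodule F M, K ≤ W → W ≤ Z.V s → ¬ W ≤ K →
      ∃ x ∈ W, ∃ ξ : M →ₗ[F] F, ξ x = 1 ∧ (∀ k ∈ K, ξ k = 0) ∧ ∃ e, Tail Z s x ξ e := by
  intro d
  induction d with
  | zero =>
    intro s hs K W _ hW hn
    exact absurd (hW.trans ((Z.top s ✓).le.trans bot_le)) hn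
  | succ d ih =>
    intro s hs K W hKW hW hn
    rcases hor s with h0 | h0
    · by_cases hc : W ⊓ (Z.V (s + 1)).map (Z.b s) ≤ K
      · obtain ⟨x, hxW, hxK⟩ := SetLike.not_le_iff_exists.1 hn
        have hx : x ∉ K ⊔ (Z.V (s + 1)).map (Z.b s) := by
          intro h
          obtain ⟨k, hk, g, hg, rfl⟩ := Submodule.mem_sup.1 h
          exact hxK (K.add_mem hk (hc ⟨by simpa using W.sub_mem hxW (hKW hk), hg⟩))
        obtain ⟨ξ, h1, h2⟩ := exists_functional_one _ hx
        exact ⟨x, hxW, ξ, h1, fun k hk => h2 k (Submodule.mem_sup_left hk),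
          Tail.nil (hW hxW) h1 (h0 x (hW hxW)) fun v hv =>
            h2 _ (Submodule.mem_sup_right ⟨v, hv, rfl⟩)⟩
      · obtain ⟨_, ⟨h1, v, hv, rfl⟩, h2⟩ := SetLike.not_le_iff_exists.1 hc
        obtain ⟨x', hx', ξ', g1, g2, e, T⟩ := ih (s + 1) ✓
          (K.comap (Z.b s) ⊓ Z.V (s + 1)) (W.comap (Z.b s) ⊓ Z.V (s + 1))
          (inf_le_inf_right _ (Submodule.comap_mono hKW)) inf_le_right
          (fun h => h2 (h ⟨h1, hv⟩).1)
        obtain ⟨ξ, hξ⟩ := exists_functional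
          (LinearMap.coprod (Z.b s ∘ₗ (Z.V (s + 1)).subtype) K.subtype)
          (ξ' ∘ₗ (Z.V (s + 1)).subtype ∘ₗ LinearMap.fst F (Z.V (s + 1)) K) (by
            rintro ⟨v, k⟩ h
            simp only [LinearMap.coprod_apply, comp_apply, Submodule.subtype_apply,
              LinearMap.fst_apply] at h ⊢
            refine g2 _ ⟨?_, v.2⟩
            rw [SetLike.mem_coe, Submodule.mem_comap, eq_neg_of_add_eq_zero_left h]
            exact K.neg_mem k.2)
        have e1 : ∀ v ∈ Z.V (s + 1), ξ (Z.b s v) = ξ' v := fun v hv => by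
          simpa using hξ (⟨v, hv⟩, 0)
        have e2 : ∀ k ∈ K, ξ k = 0 := fun k hk => by simpa using hξ (0, ⟨k, hk⟩)
        refine ⟨Z.b s x', hx'.1, ξ, by rw [e1 _ hx'.2, g1], e2, T.cons (Z.hb s _ hx'.2)
          (by rw [e1 _ hx'.2, g1]) (fun v hv => ?_) fun v hv => by rw [e1 v hv]⟩
        rw [h0 v hv, h0 _ (Z.hb s _ hx'.2)]
        simp
    · by_cases hc : W ⊓ ker (Z.a s) ≤ K
      · obtain ⟨v, hvW, hvK⟩ := SetLike.not_le_iff_exists.1 hn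
        obtain ⟨_, ⟨x, hx, rfl⟩, ξ', g1, g2, e, T⟩ := ih (s + 1) ✓
          (K.map (Z.a s)) (W.map (Z.a s)) (Submodule.map_mono hKW)
          (by rintro _ ⟨v, hv, rfl⟩; exact Z.ha s v (hW hv)) (fun h => by
            obtain ⟨k, hk, hk2⟩ := h ⟨v, hvW, rfl⟩
            have : v - k ∈ K := hc ⟨W.sub_mem hvW (hKW hk), by simp [hk2]⟩
            exact hvK (by simpa using K.add_mem this hk))
        refine ⟨x, hx, ξ' ∘ₗ Z.a s, g1, fun k hk => g2 _ ⟨k, hk, rfl⟩, T.cons (hW hx) g1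
          (fun v hv => rfl) fun v hv => ?_⟩
        rw [h0 v hv, h0 _ (Z.ha s _ (hW hx))]
        simp
      · obtain ⟨x, ⟨hx, hxk⟩, hxK⟩ := SetLike.not_le_iff_exists.1 hc
        obtain ⟨ξ, h1, h2⟩ := exists_functional_one _ hxK
        exact ⟨x, hx, ξ, h1, h2, Tail.nil (hW hx) h1 hxk fun v hv => by rw [h0 v hv, map_zero]⟩

theorem thin_of_orientation {Z : Zig F M ℓ u w} (hZ : ZIndec Z) (hy : ∀ s, ∀ v ∈ Z.V s, Z.y s v = 0)
    (hor : ∀ s, (∀ v ∈ Z.V s, Z.a s v = 0) ∨ (∀ v ∈ Z.V (s + 1), Z.b s v = 0)) (s : ℕ) :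
    ∃ x ∈ Z.V s, ∀ v ∈ Z.V s, ∃ c : F, v = c • x := by
  classical
  by_cases hall : ∀ s, Z.V s = ⊥
  · exact ⟨0, zero_mem _, fun v hv => ⟨0, by rw [hall s] at hv; simpa using hv⟩⟩
  push Not at hall
  have hmin : ∀ r < Nat.find hall, Z.V r = ⊥ := fun r hr => by
    simpa using Nat.find_min hall hr
  obtain ⟨s0, hs0⟩ : ∃ s0, s0 = Nat.find hall := ⟨_, rfl⟩
  have hs1 : Z.V s0 ≠ ⊥ := hs0 ▸ Nat.find_spec hall
  rw [← hs0] at hmin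
  have hle : s0 ≤ ℓ := by
    by_contra h
    exact hs1 (Z.top s0 ✓)
  obtain ⟨x0, hx0, ξ0, h1, -, e, T⟩ := exists_tail Z hor (ℓ + 1 - s0) s0 ✓ ⊥ (Z.V s0)
    bot_le le_rfl (fun h => hs1 (le_bot_iff.1 h))
  have hrank : ∀ r v, v ∈ Z.V r → e r v ∈ Z.V r ∧ e r (e r v) = e r v := by
    intro r v hv
    by_cases hr : s0 ≤ r
    · obtain ⟨x, hx, ξ, h2, h3⟩ := T.rank r hr
      have h4 : e r v = ξ v • x := by rw [h2]; rfl
      rw [h4, map_smul, h3]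
      exact ⟨smul_mem _ _ hx, rfl⟩
    · rw [hmin r ✓] at hv ⊢
      rw [(mem_bot F).1 hv]
      simp
  have hh : ZHom Z Z e := by
    refine ⟨fun r v hv => (hrank r v hv).1, fun r v hv => ?_, fun r v hv => ?_, fun r v hv => ?_⟩
    · by_cases hr : s0 ≤ r
      · exact T.ca r hr v hv
      · rw [hmin r ✓] at hv
        rw [(mem_bot F).1 hv]
        simp
    · by_cases hr : s0 ≤ r
      · exact T.cb r hr v hv
      · have h1 := Z.hb r v hv
        have h2 := Z.hb r _ (hrank _ _ hv).1
        rw [hmin r ✓, mem_bot] at h1 h2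
        rw [h1, h2, map_zero]
    · rw [hy r v hv, hy r _ (hrank r v hv).1, map_zero]
  rcases hZ e hh (fun r v hv => (hrank r v hv).2) with h0 | h0
  · exfalso
    have := h0 s0 x0 hx0
    rw [T.start] at this
    simp only [smulRight_apply, h1, one_smul] at this
    rw [this] at h1
    simp at h1
  · by_cases hr : s0 ≤ s
    · obtain ⟨x, hx, ξ, h2, h3⟩ := T.rank s hr
      exact ⟨x, hx, fun v hv => ⟨ξ v, (h0 s v hv).symm.trans (by rw [h2]; rfl)⟩⟩
    · refine ⟨0, zero_mem _, fun v hv => ⟨0, ?_⟩⟩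
      rw [hmin s ✓] at hv
      simpa using hv
end
end

/-! ### Classification of zigzag representations -/

section
open Module

section
variable {M M' : Type} [AddCommGroup M] [Module F M] [AddCommGroup M']
  [Module F M'] {u w : ℕ → F}

theorem Zig.eq_zero (Z : Zig F M ℓ u w) (hs : ℓ < s) {v : M} (hv : v ∈ Z.V s) : v = 0 := by
  rwa [Z.top s hs, mem_bot] at hv

theorem Zig.ya (Z : Zig F M ℓ u w) {v : M} (hv : v ∈ Z.V s) : Z.y (s + 1) (Z.a s v) = 0 := by
  by_cases hs : s < ℓ
  · have h1 := Z.ab s hs _ (Z.ha s v hv)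
    rw [Z.ba s hs v hv, map_smul, Z.ay s v hv, smul_zero] at h1
    exact (smul_eq_zero.1 h1.symm).resolve_left (Z.hw s hs)
  · rw [Z.eq_zero ✓ (Z.ha s v hv), map_zero]

theorem Zig.yb (Z : Zig F M ℓ u w) {v : M} (hv : v ∈ Z.V (s + 1)) : Z.y s (Z.b s v) = 0 := by
  by_cases hs : s < ℓ
  · have h1 := Z.ba s hs _ (Z.hb s v hv)
    rw [Z.ab s hs v hv, map_smul, Z.bY s v hv, smul_zero] at h1
    exact (smul_eq_zero.1 h1.symm).resolve_left (Z.hu s hs)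
  · rw [Z.eq_zero ✓ hv, map_zero, map_zero]

/-- The subspace of `V s` spanned by the images of the arrows ending at `s`. -/
def Zig.I (Z : Zig F M ℓ u w) : ℕ → Submodule F M
  | 0 => (Z.V 1).map (Z.b 0)
  | s + 1 => (Z.V s).map (Z.a s) ⊔ (Z.V (s + 2)).map (Z.b (s + 1))

theorem Zig.b_mem_I (Z : Zig F M ℓ u w) (s : ℕ) {v : M} (hv : v ∈ Z.V (s + 1)) :
    Z.b s v ∈ Z.I s := by
  cases s with
  | zero => exact ⟨v, hv, rfl⟩
  | succ s => exact Submodule.mem_sup_right ⟨v, hv, rfl⟩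

theorem Zig.a_mem_I (Z : Zig F M ℓ u w) (s : ℕ) {v : M} (hv : v ∈ Z.V s) :
    Z.a s v ∈ Z.I (s + 1) := Submodule.mem_sup_left ⟨v, hv, rfl⟩

theorem Zig.I_le (Z : Zig F M ℓ u w) (s : ℕ) : Z.I s ≤ Z.V s := by
  cases s with
  | zero => rintro _ ⟨v, hv, rfl⟩; exact Z.hb 0 v hv
  | succ s =>
    refine sup_le ?_ ?_
    · rintro _ ⟨v, hv, rfl⟩; exact Z.ha s v hv
    · rintro _ ⟨v, hv, rfl⟩; exact Z.hb (s + 1) v hv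

theorem Zig.a_I (Z : Zig F M ℓ u w) (hy : ∀ s, ∀ v ∈ Z.V s, Z.y s v = 0) (s : ℕ) {v : M}
    (hv : v ∈ Z.I s) : Z.a s v = 0 := by
  have hb : ∀ v ∈ Z.V (s + 1), Z.a s (Z.b s v) = 0 := fun v hv => by
    by_cases hs : s < ℓ
    · rw [Z.ab s hs v hv, hy _ v hv, smul_zero]
    · rw [Z.eq_zero ✓ hv, map_zero, map_zero]
  cases s with
  | zero => obtain ⟨v, hv, rfl⟩ := hv; exact hb v hv
  | succ s =>
    obtain ⟨_, ⟨x, hx, rfl⟩, _, ⟨z, hz, rfl⟩, rfl⟩ := Submodule.mem_sup.1 hv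
    rw [map_add, hb z hz, Z.aa s x hx, add_zero]

theorem Zig.b_I (Z : Zig F M ℓ u w) (hy : ∀ s, ∀ v ∈ Z.V s, Z.y s v = 0) (s : ℕ) {v : M}
    (hv : v ∈ Z.I (s + 1)) : Z.b s v = 0 := by
  obtain ⟨_, ⟨x, hx, rfl⟩, _, ⟨z, hz, rfl⟩, rfl⟩ := Submodule.mem_sup.1 hv
  rw [map_add, Z.bb s z hz, add_zero]
  by_cases hs : s < ℓ
  · rw [Z.ba s hs x hx, hy _ x hx, smul_zero]
  · rw [Z.eq_zero ✓ (Z.ha s x hx), map_zero]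

/-- An indecomposable representation on which `y` vanishes lives on one of the two alternating
lines of the separated quiver. -/
theorem orientation {Z : Zig F M ℓ u w} (hZ : ZIndec Z)
    (hy : ∀ s, ∀ v ∈ Z.V s, Z.y s v = 0) (s : ℕ) :
    (∀ v ∈ Z.V s, Z.a s v = 0) ∨ (∀ v ∈ Z.V (s + 1), Z.b s v = 0) := by
  have hp : ∀ s, ∃ p : End F M, (∀ v, p v ∈ Z.I s) ∧ ∀ v ∈ Z.I s, p v = v := fun s => by
    obtain ⟨g, hg⟩ := LinearMap.exists_leftInverse_of_injective (Z.I s).subtype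
      (Submodule.ker_subtype _)
    exact ⟨(Z.I s).subtype ∘ₗ g, fun v => (g v).2, fun v hv => by
      have := app_eq hg ⟨v, hv⟩
      simp only [comp_apply, Submodule.subtype_apply, id_apply] at this
      simp [this]⟩
  choose p hp1 hp2 using hp
  obtain ⟨e, he⟩ : ∃ e : ℕ → End F M, e = fun s => if Even s then 1 - p s else p s := ⟨_, rfl⟩
  have he0 : ∀ s, Even s → ∀ v, e s v = v - p s v := fun s hs v => by simp [he, hs]
  have he1 : ∀ s, ¬ Even s → ∀ v, e s v = p s v := fun s hs v => by simp [he, hs]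
  have hev : ∀ s : ℕ, Even (s + 1) ↔ ¬ Even s := fun s => Nat.even_add_one
  have hpV : ∀ s v, p s v ∈ Z.V s := fun s v => Z.I_le s (hp1 s v)
  have hh : ZHom Z Z e := by
    refine ⟨fun s v hv => ?_, fun s v hv => ?_, fun s v hv => ?_, fun s v hv => ?_⟩
    · by_cases h : Even s
      · rw [he0 s h]; exact Submodule.sub_mem _ hv (hpV _ _)
      · rw [he1 s h]; exact hpV _ _
    · by_cases h : Even s
      · rw [he0 s h, he1 (s + 1) (by rw [hev]; simpa), map_sub, Z.a_I hy s (hp1 _ _), sub_zero,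
          hp2 _ _ (Z.a_mem_I s hv)]
      · rw [he1 s h, he0 (s + 1) ((hev s).2 h), Z.a_I hy s (hp1 _ _),
          hp2 _ _ (Z.a_mem_I s hv), sub_self]
    · by_cases h : Even s
      · rw [he0 s h, he1 (s + 1) (by rw [hev]; simpa), Z.b_I hy s (hp1 _ _),
          hp2 _ _ (Z.b_mem_I s hv), sub_self]
      · rw [he1 s h, he0 (s + 1) ((hev s).2 h), map_sub, Z.b_I hy s (hp1 _ _), sub_zero,
          hp2 _ _ (Z.b_mem_I s hv)]
    · have : e s v ∈ Z.V s := by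
        by_cases h : Even s
        · rw [he0 s h]; exact Submodule.sub_mem _ hv (hpV _ _)
        · rw [he1 s h]; exact hpV _ _
      rw [hy s v hv, hy s _ this, map_zero]
  have hid : ∀ s, ∀ v ∈ Z.V s, e s (e s v) = e s v := fun s v hv => by
    by_cases h : Even s
    · simp only [he0 s h, map_sub, hp2 s _ (hp1 s v)]; abel
    · simp only [he1 s h, hp2 s _ (hp1 s v)]
  rcases hZ e hh hid with h0 | h0
  · by_cases h : Even s
    · left
      intro v hv
      have := h0 s v hv
      rw [he0 s h, sub_eq_zero] at this
      exact Z.a_I hy s (this ▸ hp1 s v)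
    · right
      intro v hv
      have := h0 s _ (Z.hb s v hv)
      rwa [he1 s h, hp2 s _ (Z.b_mem_I s hv)] at this
  · by_cases h : Even s
    · right
      intro v hv
      have := h0 s _ (Z.hb s v hv)
      rwa [he0 s h, hp2 s _ (Z.b_mem_I s hv), sub_self, eq_comm] at this
    · left
      intro v hv
      have := h0 s v hv
      rw [he1 s h] at this
      exact Z.a_I hy s (this ▸ hp1 s v)

theorem exists_scaling (α α' β β' : ℕ → F) (ha : ∀ s, α s = 0 ↔ α' s = 0)
    (hb : ∀ s, β s = 0 ↔ β' s = 0) (hab : ∀ s, α s = 0 ∨ β s = 0) :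
    ∃ l : ℕ → F, (∀ s, l s ≠ 0) ∧ (∀ s, l (s + 1) * α s = l s * α' s) ∧
      ∀ s, l s * β s = l (s + 1) * β' s := by
  classical
  let l : ℕ → F := fun n => Nat.rec 1 (fun s x => if α s = 0 then
    (if β s = 0 then 1 else x * β s / β' s) else x * α' s / α s) n
  have hl : ∀ s, l (s + 1) = if α s = 0 then
    (if β s = 0 then 1 else l s * β s / β' s) else l s * α' s / α s := fun s => rfl
  have h0 : ∀ s, l s ≠ 0 := fun s => by
    induction s with
    | zero => exact one_ne_zero
    | succ s ih =>
      have := ha s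
      have := hb s
      rw [hl]
      split_ifs with h1 h2
      · exact one_ne_zero
      · exact div_ne_zero (mul_ne_zero ih h2) (by tauto)
      · exact div_ne_zero (mul_ne_zero ih (by tauto)) h1
  refine ⟨l, h0, fun s => ?_, fun s => ?_⟩
  · rw [hl]
    split_ifs with h1 h2
    · simp [h1, (ha s).1 h1]
    · simp [h1, (ha s).1 h1]
    · field_simp
  · rw [hl]
    split_ifs with h1 h2
    · simp [h2, (hb s).1 h2]
    · have : β' s ≠ 0 := fun h => h2 ((hb s).2 h)
      field_simp
    · have h2 := (hab s).resolve_left h1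
      simp [h2, (hb s).1 h2]

theorem thin_data {Z : Zig F M ℓ u w}
    (ht : ∀ s, ∃ x ∈ Z.V s, ∀ v ∈ Z.V s, ∃ c : F, v = c • x) (s : ℕ) :
    ∃ x ∈ Z.V s, ∃ ξ : M →ₗ[F] F, ∀ v ∈ Z.V s, ξ v • x = v := by
  obtain ⟨x, hx, h⟩ := ht s
  by_cases h0 : x = 0
  · exact ⟨x, hx, 0, fun v hv => by obtain ⟨c, rfl⟩ := h v hv; simp [h0]⟩
  · obtain ⟨ξ, h1, -⟩ := exists_functional_one (⊥ : Submodule F M) (x := x) (by simpa using h0)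
    exact ⟨x, hx, ξ, fun v hv => by obtain ⟨c, rfl⟩ := h v hv; simp [h1]⟩

/-- Two representations carry the same discrete invariants: support and nonvanishing arrows. -/
structure SameInv (Z : Zig F M ℓ u w) (Z' : Zig F M' ℓ u w) : Prop where
  sup : ∀ s, (∀ v ∈ Z.V s, v = 0) ↔ (∀ v ∈ Z'.V s, v = 0)
  a : ∀ s, (∀ v ∈ Z.V s, Z.a s v = 0) ↔ (∀ v ∈ Z'.V s, Z'.a s v = 0)
  b : ∀ s, (∀ v ∈ Z.V (s + 1), Z.b s v = 0) ↔ (∀ v ∈ Z'.V (s + 1), Z'.b s v = 0)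
  y : ∀ s, (∀ v ∈ Z.V s, Z.y s v = 0) ↔ (∀ v ∈ Z'.V s, Z'.y s v = 0)

theorem thin_hom {Z : Zig F M ℓ u w} {Z' : Zig F M' ℓ u w}
    (hy : ∀ s, ∀ v ∈ Z.V s, Z.y s v = 0) (hy' : ∀ s, ∀ v ∈ Z'.V s, Z'.y s v = 0)
    {x : ℕ → M} {ξ : ℕ → M →ₗ[F] F} (hξ : ∀ s, ∀ v ∈ Z.V s, ξ s v • x s = v)
    {x' : ℕ → M'} (hx' : ∀ s, x' s ∈ Z'.V s) {ξ' : ℕ → M' →ₗ[F] F}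
    (hξ' : ∀ s, ∀ v ∈ Z'.V s, ξ' s v • x' s = v) {l : ℕ → F}
    (h1 : ∀ s, l (s + 1) * ξ (s + 1) (Z.a s (x s)) = l s * ξ' (s + 1) (Z'.a s (x' s)))
    (h2 : ∀ s, l s * ξ s (Z.b s (x (s + 1))) = l (s + 1) * ξ' s (Z'.b s (x' (s + 1)))) :
    ZHom Z Z' (fun s => l s • (ξ s).smulRight (x' s)) := by
  have hm : ∀ s (v : M), (l s • (ξ s).smulRight (x' s)) v ∈ Z'.V s := fun s v =>
    smul_mem _ _ (smul_mem _ _ (hx' s))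
  refine ⟨fun s v _ => hm s v, fun s v hv => ?_, fun s v hv => ?_, fun s v hv => ?_⟩
  · have e1 : ξ (s + 1) (Z.a s v) = ξ s v * ξ (s + 1) (Z.a s (x s)) := by
      conv_lhs => rw [← hξ s v hv]
      simp
    simp only [smul_apply, smulRight_apply, map_smul]
    rw [← hξ' _ _ (Z'.ha s _ (hx' s)), e1]
    simp only [smul_smul]
    congr 1
    linear_combination (ξ s v) * h1 s
  · have e1 : ξ s (Z.b s v) = ξ (s + 1) v * ξ s (Z.b s (x (s + 1))) := by
      conv_lhs => rw [← hξ (s + 1) v hv]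
      simp
    simp only [smul_apply, smulRight_apply, map_smul]
    rw [← hξ' _ _ (Z'.hb s _ (hx' (s + 1))), e1]
    simp only [smul_smul]
    congr 1
    linear_combination (ξ (s + 1) v) * h2 s
  · rw [hy s v hv, hy' s _ (hm s v), map_zero]

theorem thin_iso {Z : Zig F M ℓ u w} {Z' : Zig F M' ℓ u w} (hZ : ZIndec Z) (hZ' : ZIndec Z')
    (hs : SameInv Z Z') (hy : ∀ s, ∀ v ∈ Z.V s, Z.y s v = 0) : ZIso Z Z' := by
  have hy' : ∀ s, ∀ v ∈ Z'.V s, Z'.y s v = 0 := fun s => (hs.y s).1 (hy s)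
  have hor := orientation hZ hy
  have hor' := orientation hZ' hy'
  choose x hx ξ hξ using thin_data (thin_of_orientation hZ hy hor)
  choose x' hx' ξ' hξ' using thin_data (thin_of_orientation hZ' hy' hor')
  have ka : ∀ s, ξ (s + 1) (Z.a s (x s)) = 0 ↔ ∀ v ∈ Z.V s, Z.a s v = 0 := fun s =>
    ⟨fun h v hv => by
      have h3 := hξ _ _ (Z.ha s _ (hx s))
      rw [h, zero_smul] at h3
      rw [← hξ s v hv, map_smul, ← h3, smul_zero], fun h => by rw [h _ (hx s), map_zero]⟩
  have ka' : ∀ s, ξ' (s + 1) (Z'.a s (x' s)) = 0 ↔ ∀ v ∈ Z'.V s, Z'.a s v = 0 := fun s =>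
    ⟨fun h v hv => by
      have h3 := hξ' _ _ (Z'.ha s _ (hx' s))
      rw [h, zero_smul] at h3
      rw [← hξ' s v hv, map_smul, ← h3, smul_zero], fun h => by rw [h _ (hx' s), map_zero]⟩
  have kb : ∀ s, ξ s (Z.b s (x (s + 1))) = 0 ↔ ∀ v ∈ Z.V (s + 1), Z.b s v = 0 := fun s =>
    ⟨fun h v hv => by
      have h3 := hξ _ _ (Z.hb s _ (hx (s + 1)))
      rw [h, zero_smul] at h3
      rw [← hξ (s + 1) v hv, map_smul, ← h3, smul_zero], fun h => by rw [h _ (hx _), map_zero]⟩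
  have kb' : ∀ s, ξ' s (Z'.b s (x' (s + 1))) = 0 ↔ ∀ v ∈ Z'.V (s + 1), Z'.b s v = 0 := fun s =>
    ⟨fun h v hv => by
      have h3 := hξ' _ _ (Z'.hb s _ (hx' (s + 1)))
      rw [h, zero_smul] at h3
      rw [← hξ' (s + 1) v hv, map_smul, ← h3, smul_zero], fun h => by rw [h _ (hx' _), map_zero]⟩
  obtain ⟨l, l0, l1, l2⟩ := exists_scaling (fun s => ξ (s + 1) (Z.a s (x s)))
    (fun s => ξ' (s + 1) (Z'.a s (x' s))) (fun s => ξ s (Z.b s (x (s + 1))))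
    (fun s => ξ' s (Z'.b s (x' (s + 1))))
    (fun s => by rw [ka, ka', hs.a]) (fun s => by rw [kb, kb', hs.b])
    (fun s => by rw [ka, kb]; exact hor s)
  have hone : ∀ s, ∀ v ∈ Z.V s, ξ' s (x' s) • v = v := fun s v hv => by
    by_cases h0 : x' s = 0
    · have : ∀ v ∈ Z'.V s, v = 0 := fun v hv => by rw [← hξ' s v hv, h0, smul_zero]
      rw [(hs.sup s).2 this v hv, smul_zero]
    · have h1 := hξ' s _ (hx' s)
      have : (ξ' s (x' s) - 1) • x' s = 0 := by rw [sub_smul, h1, one_smul, sub_self]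
      rw [sub_eq_zero.1 ((smul_eq_zero.1 this).resolve_right h0), one_smul]
  have hone' : ∀ s, ∀ v ∈ Z'.V s, ξ s (x s) • v = v := fun s v hv => by
    by_cases h0 : x s = 0
    · have : ∀ v ∈ Z.V s, v = 0 := fun v hv => by rw [← hξ s v hv, h0, smul_zero]
      rw [(hs.sup s).1 this v hv, smul_zero]
    · have h1 := hξ s _ (hx s)
      have : (ξ s (x s) - 1) • x s = 0 := by rw [sub_smul, h1, one_smul, sub_self]
      rw [sub_eq_zero.1 ((smul_eq_zero.1 this).resolve_right h0), one_smul]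
  refine ⟨_, _, thin_hom hy hy' hξ hx' hξ' l1 l2,
    thin_hom hy' hy hξ' hx hξ (l := fun s => (l s)⁻¹) (fun s => ?_) (fun s => ?_),
    fun s v hv => ?_, fun s v hv => ?_⟩
  · have := l1 s; have := l0 s; have := l0 (s + 1)
    field_simp
    linear_combination -(l1 s)
  · have := l0 s; have := l0 (s + 1)
    field_simp
    linear_combination -(l2 s)
  · have := l0 s
    simp only [smul_apply, smulRight_apply, map_smul]
    rw [hone s _ (hx s), smul_comm (ξ s v), hξ s v hv, smul_inv_smul₀ this]
  · have := l0 s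
    simp only [smul_apply, smulRight_apply, map_smul]
    rw [hone' s _ (hx' s), smul_comm (ξ' s v), hξ' s v hv, inv_smul_smul₀ this]

/-- The homomorphism from a representation with a chosen functional `ξ` at the vertex `s` which
sends a generator of the projective cover of `s` to `v'`. -/
def transfer (Z : Zig F M ℓ u w) (Z' : Zig F M' ℓ u w) (s : ℕ) (ξ : M →ₗ[F] F) (v' : M') (r : ℕ) :
    M →ₗ[F] M' :=
  if r = s then (ξ ∘ₗ Z.y s).smulRight v' + ξ.smulRight (Z'.y s v')
  else if r = s + 1 then (u s)⁻¹ • (ξ ∘ₗ Z.b s).smulRight (Z'.a s v')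
  else if r + 1 = s then (w r)⁻¹ • (ξ ∘ₗ Z.a r).smulRight (Z'.b r v')
  else 0

theorem transfer_hom (Z : Zig F M ℓ u w) (Z' : Zig F M' ℓ u w) (hs : s ≤ ℓ)
    (ξ : M →ₗ[F] F) {v' : M'} (hv' : v' ∈ Z'.V s) : ZHom Z Z' (transfer Z Z' s ξ v') := by
  have T0 : ∀ v, transfer Z Z' s ξ v' s v = ξ (Z.y s v) • v' + ξ v • Z'.y s v' := fun v => by
    simp [transfer]
  have T1 : ∀ v, transfer Z Z' s ξ v' (s + 1) v = (u s)⁻¹ • ξ (Z.b s v) • Z'.a s v' := fun v => by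
    simp [transfer]
  have T2 : ∀ r, r + 1 = s → ∀ v, transfer Z Z' s ξ v' r v = (w r)⁻¹ • ξ (Z.a r v) • Z'.b r v' :=
    fun r hr v => by
      simp [transfer, hr, show r ≠ s by omega, show r ≠ s + 1 by omega]
  have T3 : ∀ r, r ≠ s → r ≠ s + 1 → r + 1 ≠ s → transfer Z Z' s ξ v' r = 0 :=
    fun r h1 h2 h3 => by simp [transfer, h1, h2, h3]
  refine ⟨fun r v hv => ?_, fun r v hv => ?_, fun r v hv => ?_, fun r v hv => ?_⟩
  · by_cases h1 : r = s
    · subst h1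
      rw [T0]
      exact Submodule.add_mem _ (smul_mem _ _ hv') (smul_mem _ _ (Z'.hy _ _ hv'))
    by_cases h2 : r = s + 1
    · subst h2
      rw [T1]
      exact smul_mem _ _ (smul_mem _ _ (Z'.ha _ _ hv'))
    by_cases h3 : r + 1 = s
    · rw [T2 r h3]
      subst h3
      exact smul_mem _ _ (smul_mem _ _ (Z'.hb _ _ hv'))
    · rw [T3 r h1 h2 h3]
      exact zero_mem _
  · by_cases h1 : r = s
    · subst h1
      rw [T0, T1, map_add, map_smul, map_smul, Z'.ay r v' hv', smul_zero, add_zero]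
      by_cases hl : r < ℓ
      · rw [Z.ba r hl v hv, map_smul, smul_eq_mul, mul_smul, inv_smul_smul₀ (Z.hu r hl)]
      · rw [Z'.eq_zero ✓ (Z'.ha r _ hv')]
        simp
    by_cases h2 : r = s + 1
    · subst h2
      rw [T3 _ ✓ ✓ ✓, T1, map_smul, map_smul, Z'.aa s v' hv']
      simp
    by_cases h3 : r + 1 = s
    · rw [T2 r h3]
      subst h3
      rw [T0, Z.ya hv, map_smul, map_smul, Z'.ab r ✓ v' hv', map_zero, zero_smul,
        zero_add, smul_comm _ (w r), inv_smul_smul₀ (Z.hw r ✓)]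
    · rw [T3 r h1 h2 h3]
      by_cases h4 : r + 1 + 1 = s
      · rw [T2 _ h4, Z.aa r v hv]
        simp
      · rw [T3 _ ✓ ✓ ✓]
        simp
  · by_cases h1 : r = s
    · subst h1
      rw [T0, T1, Z.yb hv]
      by_cases hl : r < ℓ
      · rw [map_smul, map_smul, Z'.ba r hl v' hv', smul_comm _ (u r),
          inv_smul_smul₀ (Z.hu r hl), map_zero, zero_smul, zero_add]
      · rw [Z.eq_zero ✓ hv]
        simp
    by_cases h2 : r = s + 1
    · subst h2
      rw [T3 (s + 1 + 1) ✓ ✓ ✓, T1, Z.bb s v hv]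
      simp
    by_cases h3 : r + 1 = s
    · rw [T2 r h3]
      subst h3
      rw [T0, Z.ab r ✓ v hv, map_add, map_smul, map_smul (Z'.b r), map_smul (Z'.b r),
        Z'.bY r v' hv', smul_eq_mul, mul_smul, inv_smul_smul₀ (Z.hw r ✓), smul_zero, add_zero]
    · rw [T3 r h1 h2 h3]
      by_cases h4 : r + 1 + 1 = s
      · rw [T2 _ h4, map_smul, map_smul]
        subst h4
        rw [Z'.bb r v' hv']
        simp
      · rw [T3 _ ✓ ✓ ✓]
        simp
  · by_cases h1 : r = s
    · subst h1
      rw [T0, T0, Z.yy r v hv, map_add, map_smul, map_smul (Z'.y r), Z'.yy r v' hv']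
      simp
    by_cases h2 : r = s + 1
    · subst h2
      rw [T1, T1, Z.bY s v hv, map_smul, map_smul, Z'.ya hv']
      simp
    by_cases h3 : r + 1 = s
    · rw [T2 r h3, T2 r h3, Z.ay r v hv]
      subst h3
      rw [map_smul, map_smul, Z'.yb hv']
      simp
    · rw [T3 r h1 h2 h3]
      simp

theorem transfer_comp (Z : Zig F M ℓ u w) (Z' : Zig F M' ℓ u w)
    {ξ : M →ₗ[F] F} {v : M} {v' : M'} (hv' : v' ∈ Z'.V s) {k : ℕ → M' →ₗ[F] M} (hk : ZHom Z' Z k)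
    (hkv : k s v' = v) (r : ℕ) (x : M) :
    k r (transfer Z Z' s ξ v' r x) = transfer Z Z s ξ v r x := by
  by_cases h1 : r = s
  · subst h1
    simp [transfer, hk.cy r v' hv', hkv]
  by_cases h2 : r = s + 1
  · subst h2
    simp [transfer, hk.ca s v' hv', hkv]
  by_cases h3 : r + 1 = s
  · have := hk.cb r v' (by rw [h3]; exact hv')
    simp [transfer, h1, h2, h3, this, hkv]
  · simp [transfer, h1, h2, h3]

theorem peak_data (Z : Zig F M ℓ u w) {v : M} (hv : v ∈ Z.V s) (h : Z.y s v ≠ 0) :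
    ∃ ξ : M →ₗ[F] F, ξ (Z.y s v) = 1 ∧ ξ v = 0 := by
  obtain ⟨ξ, h1, h2⟩ := exists_functional_one (F ∙ v) (x := Z.y s v) (fun h0 => by
    obtain ⟨c, hc⟩ := Submodule.mem_span_singleton.1 h0
    have h3 := Z.yy s v hv
    rw [← hc, map_smul] at h3
    rcases smul_eq_zero.1 h3 with h4 | h4
    · rw [h4, zero_smul] at hc
      exact h hc.symm
    · exact h h4)
  exact ⟨ξ, h1, h2 v (Submodule.mem_span_singleton_self v)⟩

theorem transfer_self_eq {Z : Zig F M ℓ u w} (hZ : ZIndec Z) {v : M} (hv : v ∈ Z.V s)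
    {ξ : M →ₗ[F] F} (h1 : ξ (Z.y s v) = 1) (h2 : ξ v = 0) (r : ℕ) {x : M} (hx : x ∈ Z.V r) :
    transfer Z Z s ξ v r x = x := by
  have hy : Z.y s v ≠ 0 := fun h => by simp [h] at h1
  have hs : s ≤ ℓ := by
    by_contra h
    exact hy (by rw [Z.eq_zero ✓ hv, map_zero])
  have hh := transfer_hom Z Z hs ξ hv
  have hvv : transfer Z Z s ξ v s v = v := by simp [transfer, h1, h2]
  rcases hZ _ hh (fun r x _ => transfer_comp Z Z hv hh hvv r x) with h | h
  · have := h s v hv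
    rw [hvv] at this
    exact absurd (by rw [this, map_zero]) hy
  · exact h r x hx

theorem peak_iso {Z : Zig F M ℓ u w} {Z' : Zig F M' ℓ u w} (hZ : ZIndec Z) (hZ' : ZIndec Z')
    {v : M} (hv : v ∈ Z.V s) (h : Z.y s v ≠ 0) {v' : M'} (hv' : v' ∈ Z'.V s)
    (h' : Z'.y s v' ≠ 0) : ZIso Z Z' := by
  have hs : s ≤ ℓ := by
    by_contra h0
    exact h (by rw [Z.eq_zero ✓ hv, map_zero])
  obtain ⟨ξ, h1, h2⟩ := peak_data Z hv h
  obtain ⟨ξ', h1', h2'⟩ := peak_data Z' hv' h'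
  have k1 := transfer_hom Z Z' hs ξ hv'
  have k2 := transfer_hom Z' Z hs ξ' hv
  refine ⟨_, _, k1, k2, fun r x hx => ?_, fun r x hx => ?_⟩
  · rw [transfer_comp Z Z' hv' k2 (v := v) (by simp [transfer, h1', h2'])]
    exact transfer_self_eq hZ hv h1 h2 r hx
  · rw [transfer_comp Z' Z hv k1 (v := v') (by simp [transfer, h1, h2])]
    exact transfer_self_eq hZ' hv' h1' h2' r hx

/-- Indecomposable zigzag representations are determined by finitely many discrete invariants. -/
theorem zig_iso {Z : Zig F M ℓ u w} {Z' : Zig F M' ℓ u w} (hZ : ZIndec Z) (hZ' : ZIndec Z')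
    (hs : SameInv Z Z') : ZIso Z Z' := by
  by_cases hy : ∀ s, ∀ v ∈ Z.V s, Z.y s v = 0
  · exact thin_iso hZ hZ' hs hy
  · push Not at hy
    obtain ⟨s, v, hv, hne⟩ := hy
    have : ¬ ∀ v ∈ Z'.V s, Z'.y s v = 0 := fun h => hne ((hs.y s).2 h v hv)
    push Not at this
    obtain ⟨v', hv', hne'⟩ := this
    exact peak_iso hZ hZ' hv hne hv' hne'
end
end

/-! ### Intertwiners and words -/

section
variable {P : Par R} {t : ℕ → E}

/-- The intertwiner exchanging the Jucys–Murphy elements `X k` and `X (k + 1)`. -/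
def ph (P : Par R) (t : ℕ → E) (k : ℕ) : E := X P t k * t (k + 1) - t (k + 1) * X P t k

theorem commute_prod (h : AK P n t) (hk : k + 1 < n) :
    Commute (t (k + 1)) (X P t k * X P t (k + 1)) := by
  have h1 := X_mul_t h hk
  have h2 := t_mul_X h hk
  have h3 : X P t k * X P t (k + 1) = X P t (k + 1) * X P t k :=
    (commute_XX h ✓ hk).eq
  show t (k + 1) * (X P t k * X P t (k + 1)) = X P t k * X P t (k + 1) * t (k + 1)
  rw [mul_assoc, h1, h3, ← mul_assoc, h2, mul_add, add_mul, mul_smul_comm, smul_mul_assoc, h3,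
    mul_assoc]

theorem commute_sum (h : AK P n t) (hk : k + 1 < n) :
    Commute (t (k + 1)) (X P t k + X P t (k + 1)) := by
  have h1 := X_mul_t h hk
  have h2 := t_mul_X h hk
  show t (k + 1) * (X P t k + X P t (k + 1)) = (X P t k + X P t (k + 1)) * t (k + 1)
  rw [mul_add, add_mul, h1, h2]
  abel

theorem ph_eq' (h : AK P n t) (hk : k + 1 < n) :
    ph P t k = t (k + 1) * X P t (k + 1) - X P t (k + 1) * t (k + 1) := by
  rw [ph, X_mul_t h hk, t_mul_X h hk]
  abel

theorem ph_eq (h : AK P n t) (hk : k + 1 < n) :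
    t (k + 1) * (X P t (k + 1) - X P t k) = ph P t k + (P.q - 1) • X P t (k + 1) := by
  rw [ph, mul_sub, t_mul_X h hk]
  abel

theorem X_succ_ph (h : AK P n t) (hk : k + 1 < n) :
    X P t (k + 1) * ph P t k = ph P t k * X P t k := by
  have h1 := (commute_prod h hk).eq
  have h3 := (commute_XX h (show k < n by omega) hk).eq
  rw [show ph P t k * X P t k = (t (k + 1) * X P t (k + 1) - X P t (k + 1) * t (k + 1)) * X P t k
    by rw [ph_eq' h hk], ph, mul_sub, sub_mul, ← mul_assoc, ← h3, ← h1, h3]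
  simp only [mul_assoc]

theorem X_ph (h : AK P n t) (hk : k + 1 < n) : X P t k * ph P t k = ph P t k * X P t (k + 1) := by
  have h1 := (commute_prod h hk).eq
  rw [show X P t k * ph P t k = X P t k * (t (k + 1) * X P t (k + 1) - X P t (k + 1) * t (k + 1))
    by rw [ph_eq' h hk], ph, mul_sub, sub_mul, ← mul_assoc, ← mul_assoc, ← h1]
  simp only [mul_assoc]

theorem ph_sq (h : AK P n t) (hk : k + 1 < n) :
    ph P t k * ph P t k = (P.q • X P t k - X P t (k + 1)) * (P.q • X P t (k + 1) - X P t k) := by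
  have h1 := X_mul_t h hk
  have h3 := (commute_XX h (show k < n by omega) hk).eq
  have h4 := h.quad (k + 1) ✓ hk
  have h5 := q_X_succ (P := P) (t := t) k
  have h6 : ph P t k * t (k + 1) = (P.q - 1) • (X P t k * t (k + 1)) + P.q • X P t k
      - P.q • X P t (k + 1) := by
    rw [ph, sub_mul, mul_assoc, h4, mul_assoc, ← h5, mul_add, mul_smul_comm, mul_smul_comm, mul_one]
  have h7 := X_succ_ph h hk
  have h8 : ph P t k * ph P t k = X P t (k + 1) * (ph P t k * t (k + 1))
      - ph P t k * t (k + 1) * X P t k := by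
    conv_lhs => rw [show ph P t k * ph P t k = ph P t k * (X P t k * t (k + 1)
      - t (k + 1) * X P t k) from rfl, mul_sub, ← mul_assoc, ← h7]
    simp only [mul_assoc]
  rw [h8, h6]
  have h9 : X P t (k + 1) * (X P t k * t (k + 1)) = X P t k * (t (k + 1) * X P t k)
      + (P.q - 1) • (X P t k * X P t (k + 1)) := by
    rw [← mul_assoc, ← h3, mul_assoc, h1, mul_add, mul_smul_comm]
  simp only [mul_add, mul_sub, add_mul, sub_mul, smul_mul_assoc, mul_smul_comm, mul_assoc, h9, ← h3]
  module

theorem commute_X_ph (h : AK P n t) (hk : k + 1 < n) (hj : j < n) (h1 : j ≠ k)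
    (h2 : j ≠ k + 1) : Commute (X P t j) (ph P t k) := by
  have hXX : Commute (X P t j) (X P t k) := commute_XX h hj ✓
  have hXt : Commute (X P t j) (t (k + 1)) := by
    rcases lt_or_ge j k with hlt | hge
    · exact commute_X_high h hk j ✓
    · exact (commute_X_low h j hj ✓).symm
  exact (hXX.mul_right hXt).sub_right (hXt.mul_right hXX)

theorem commute_ph_ph (h : AK P n t) (hk : k + 1 < n) (hj : j + 2 ≤ k) :
    Commute (ph P t j) (ph P t k) := by
  have hXX : Commute (ph P t j) (X P t k) :=
    (commute_X_ph h ✓ ✓ ✓ ✓).symm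
  have h1 : Commute (X P t j) (t (k + 1)) := commute_X_high h hk j ✓
  have h2 : Commute (t (j + 1)) (t (k + 1)) := commute_t_t h ✓ hk
  have hXt : Commute (ph P t j) (t (k + 1)) := (h1.mul_left h2).sub_left (h2.mul_left h1)
  exact (hXX.mul_right hXt).sub_right (hXt.mul_right hXX)
end

/-- If `t (k + 1)` acts on a joint eigenvector by a scalar, the braid product of the two
neighbouring intertwiners kills it. -/
theorem ph_braid_zero (h : AK P n t) (hk : k + 2 < n) {κ c c' : F}
    (ht : t (k + 1) v = κ • v) (hX : X P t k v = c • v) (hY : X P t (k + 1) v = c' • v) :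
    ph P t (k + 1) (ph P t k (ph P t (k + 1) v)) = 0 := by
  have hc : ∀ {A B : End F V}, Commute A B → ∀ x, A (B x) = B (A x) := fun h x =>
    app_eq h.eq x
  have cXs : ∀ x, X P t k (t (k + 2) x) = t (k + 2) (X P t k x) :=
    hc (commute_X_high h hk k ✓)
  have cXZ : ∀ x, X P t k (X P t (k + 2) x) = X P t (k + 2) (X P t k x) :=
    hc (commute_XX h ✓ hk)
  have cYZ : ∀ x, X P t (k + 1) (X P t (k + 2) x) = X P t (k + 2) (X P t (k + 1) x) :=
    hc (commute_XX h ✓ hk)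
  have ctZ : ∀ x, t (k + 1) (X P t (k + 2) x) = X P t (k + 2) (t (k + 1) x) :=
    hc (commute_X_low h (k + 2) hk ✓)
  have hbr : ∀ x, t (k + 1) (t (k + 2) (t (k + 1) x)) = t (k + 2) (t (k + 1) (t (k + 2) x)) :=
    fun x => app_eq (h.braid (k + 1) ✓ hk) x
  obtain ⟨v', hv'⟩ : ∃ v', v' = X P t (k + 2) v - c' • v := ⟨_, rfl⟩
  obtain ⟨z, hz⟩ : ∃ z, z = X P t (k + 2) v := ⟨_, rfl⟩
  have tz : t (k + 1) z = κ • z := by rw [hz, ctZ, ht, map_smul]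
  have tv' : t (k + 1) v' = κ • v' := by
    rw [hv', map_sub, map_smul, ctZ, ht, map_smul, smul_sub, smul_comm κ c']
  have Xz : X P t k z = c • z := by rw [hz, cXZ, hX, map_smul]
  have Xv' : X P t k v' = c • v' := by
    rw [hv', map_sub, map_smul, cXZ, hX, map_smul, smul_sub, smul_comm c c']
  obtain ⟨w, hw⟩ : ∃ w, w = ph P t (k + 1) v := ⟨_, rfl⟩
  have hw1 : w = t (k + 2) v' - (P.q - 1) • z := by
    have h1 := app_eq (t_mul_X h hk) v
    simp only [mul_apply, add_apply, smul_apply] at h1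
    rw [hw, ph, sub_apply, mul_apply, mul_apply, hY, hv', map_sub, h1, hz]
    abel
  have Xw : X P t k w = c • w := by
    rw [hw1, map_sub, map_smul, cXs, Xz, Xv', map_smul, smul_sub, smul_comm c]
  have h2 : ph P t k w = X P t k (t (k + 1) w) - c • t (k + 1) w := by
    rw [ph, sub_apply, mul_apply, mul_apply, Xw, map_smul]
  have h3 : X P t (k + 1) (ph P t k w) = c • ph P t k w := by
    have := app_eq (X_succ_ph h (show k + 1 < n by omega)) w
    simp only [mul_apply] at this
    rw [this, Xw, map_smul]
  have hst : t (k + 2) (t (k + 1) w) = κ • t (k + 1) (t (k + 2) v')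
      - ((P.q - 1) * κ) • t (k + 2) z := by
    rw [hw1, map_sub, map_sub, ← hbr, tv', map_smul, map_smul, map_smul, map_smul, tz, map_smul,
      smul_smul]
  -- `(X (k+1) - c) (X k - c)` commutes with `t (k + 1)` and kills the image of `t (k + 2)` here
  have kill : ∀ x, X P t k x = c • x → X P t (k + 1) (X P t k (t (k + 2) x) - c • t (k + 2) x)
        - c • (X P t k (t (k + 2) x) - c • t (k + 2) x) = 0 := fun x hx => by
    rw [cXs, hx, map_smul, sub_self, map_zero, smul_zero, sub_zero]
  have hsym : ∀ x, X P t (k + 1) (X P t k (t (k + 1) x) - c • t (k + 1) x)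
        - c • (X P t k (t (k + 1) x) - c • t (k + 1) x)
      = t (k + 1) (X P t (k + 1) (X P t k x - c • x) - c • (X P t k x - c • x)) := fun x => by
    have e1 := hc (commute_prod h (show k + 1 < n by omega)) x
    have e2 := hc (commute_sum h (show k + 1 < n by omega)) x
    have e3 := hc (commute_XX h (show k < n by omega) (show k + 1 < n by omega))
    simp only [mul_apply, add_apply, map_add] at e1 e2
    simp only [map_sub, map_smul, smul_sub]
    rw [← e3, ← e1, ← e3]
    linear_combination (norm := module) c • e2
  rw [← hw]
  have h4 : ph P t (k + 1) (ph P t k w) = X P t (k + 1) (t (k + 2) (ph P t k w))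
      - c • t (k + 2) (ph P t k w) := by
    rw [ph, sub_apply, mul_apply, mul_apply, h3, map_smul]
  rw [h4, h2, map_sub, map_smul, ← cXs, hst]
  have k1 := kill _ Xv'
  have k2 := kill _ Xz
  have k3 := hsym (t (k + 2) v')
  rw [k1, map_zero] at k3
  simp only [map_sub, map_smul, smul_sub] at k2 k3 ⊢
  linear_combination (norm := module) κ • k3 - ((P.q - 1) * κ) • k2

/-- Number of letters `true` among the first `k` letters of a word. -/
def cnt (ω : ℕ → Bool) : ℕ → ℕ
  | 0 => 0
  | k + 1 => cnt ω k + if ω k then 1 else 0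

theorem cnt_le (ω : ℕ → Bool) : ∀ k, cnt ω k ≤ k
  | 0 => le_rfl
  | k + 1 => by
    have := cnt_le ω k
    rw [cnt]
    split_ifs <;> omega

theorem cnt_congr : ∀ k, (∀ j < k, ω j = ω' j) → cnt ω k = cnt ω' k
  | 0, _ => rfl
  | k + 1, h => by rw [cnt, cnt, cnt_congr k fun j hj => h j ✓, h k ✓]

/-- Exchange of the letters in positions `k` and `k + 1`. -/
def sw (ω : ℕ → Bool) (k j : ℕ) : Bool :=
  if j = k then ω (k + 1) else if j = k + 1 then ω k else ω j

theorem sw_of_ne (ω : ℕ → Bool) (h1 : j ≠ k) (h2 : j ≠ k + 1) : sw ω k j = ω j := by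
  simp [sw, h1, h2]
theorem sw_left (ω : ℕ → Bool) (k : ℕ) : sw ω k k = ω (k + 1) := by simp [sw]
theorem sw_right (ω : ℕ → Bool) (k : ℕ) : sw ω k (k + 1) = ω k := by simp [sw]

theorem cnt_sw_le (ω : ℕ → Bool) (h : j ≤ k) : cnt (sw ω k) j = cnt ω j :=
  cnt_congr j fun i hi => sw_of_ne ω ✓ ✓

theorem cnt_sw_ge (ω : ℕ → Bool) (k : ℕ) : ∀ j, k + 2 ≤ j → cnt (sw ω k) j = cnt ω j := by
  intro j hj
  induction j, hj using Nat.le_induction with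
  | base => simp only [cnt, sw_left, sw_right, cnt_sw_le ω le_rfl]; omega
  | succ j hj ih => rw [cnt, cnt, ih, sw_of_ne ω ✓ ✓]

/-- The residue `a q ^ (i - 1)`. -/
def Par.g (P : Par F) (i : ℕ) : F := P.a * P.qi * P.q ^ i

/-- The eigenvalue of `X j` attached to the `j`-th letter of a word: the arc from `a` to
`b = a q ^ ℓ` is consumed from the left by `true` and from the right by `false`. -/
def xw (P : Par F) (ℓ : ℕ) (ω : ℕ → Bool) (j : ℕ) : F :=
  if ω j then P.g (cnt ω j + 1) else P.g (ℓ + 1 + cnt ω j - j)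

/-- The eigenvalue for the opposite letter. -/
def xo (P : Par F) (ℓ : ℕ) (ω : ℕ → Bool) (j : ℕ) : F :=
  if ω j then P.g (ℓ + 1 + cnt ω j - j) else P.g (cnt ω j + 1)

theorem xw_congr (h : ∀ j ≤ k, ω j = ω' j) : xw P ℓ ω k = xw P ℓ ω' k := by
  rw [xw, xw, cnt_congr k fun j hj => h j ✓, h k le_rfl]

theorem xw_sw_of_lt (ω : ℕ → Bool) (h : j < k) : xw P ℓ (sw ω k) j = xw P ℓ ω j := by
  rw [xw, xw, sw_of_ne ω ✓ ✓, cnt_sw_le ω h.le]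

theorem xw_sw_of_gt (ω : ℕ → Bool) (h : k + 2 ≤ j) : xw P ℓ (sw ω k) j = xw P ℓ ω j := by
  rw [xw, xw, sw_of_ne ω ✓ ✓, cnt_sw_ge ω k j h]

theorem xw_sw_left (h : ω k ≠ ω (k + 1)) : xw P ℓ (sw ω k) k = xw P ℓ ω (k + 1) := by
  rw [xw, xw, sw_left, cnt_sw_le ω le_rfl, cnt]
  cases h1 : ω k <;> cases h2 : ω (k + 1) <;> simp_all
  congr 1; omega

theorem xw_sw_right (h : ω k ≠ ω (k + 1)) : xw P ℓ (sw ω k) (k + 1) = xw P ℓ ω k := by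
  rw [xw, xw, sw_right, cnt, sw_left, cnt_sw_le ω le_rfl]
  cases h1 : ω k <;> cases h2 : ω (k + 1) <;> simp_all
  congr 1; omega

/-! ### Weight space decomposition of arc modules -/

section
open Polynomial

/-- Modules over the algebra of rank `ℓ + 1` with parameters `a` and `b = a q ^ ℓ` on which the
Jucys–Murphy elements do not take the two values adjacent to the arc from `a` to `b`. -/
structure ArcM (P : Par F) (ℓ e : ℕ) (t : ℕ → End F V) : Prop where
  ak : AK P (ℓ + 1) t
  hb : P.b = P.a * P.q ^ ℓ
  prim : IsPrimitiveRoot P.q e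
  he : ℓ + 2 ≤ e
  lo : ∀ k ≤ ℓ, ∀ v, X P t k v = P.g 0 • v → v = 0
  hi : ∀ k ≤ ℓ, ∀ v, X P t k v = P.g (ℓ + 2) • v → v = 0

/-- The joint eigenspace of `X 0, …, X (k - 1)` attached to the first `k` letters of a word. -/
def Wt (P : Par F) (ℓ : ℕ) (t : ℕ → End F V) (k : ℕ) (ω : ℕ → Bool) : Submodule F V where
  carrier := {v | ∀ j < k, X P t j v = xw P ℓ ω j • v}
  add_mem' {v w} hv hw j hj := by rw [map_add, hv j hj, hw j hj, smul_add]
  zero_mem' j _ := by simp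
  smul_mem' c v hv j hj := by rw [map_smul, hv j hj, smul_comm]

theorem mem_Wt : v ∈ Wt P ℓ t k ω ↔ ∀ j < k, X P t j v = xw P ℓ ω j • v := Iff.rfl

theorem Wt_congr (h : ∀ j < k, ω j = ω' j) : Wt P ℓ t k ω = Wt P ℓ t k ω' := by
  ext v
  simp only [mem_Wt]
  refine forall₂_congr fun j hj => ?_
  rw [xw_congr (fun i hi => h i ✓)]

theorem Par.g_succ (P : Par F) (i : ℕ) : P.g (i + 1) = P.q * P.g i := by
  rw [Par.g, Par.g]; ring

theorem Par.qi_g (P : Par F) (i : ℕ) : P.qi * P.g (i + 1) = P.g i := by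
  rw [P.g_succ, ← mul_assoc, mul_comm P.qi, P.hq, one_mul]

theorem Par.g_one (P : Par F) : P.g 1 = P.a := by
  rw [Par.g, pow_one, mul_assoc, mul_comm P.qi, P.hq, mul_one]

theorem Par.g_ne (P : Par F) (i : ℕ) : P.g i ≠ 0 :=
  mul_ne_zero (mul_ne_zero P.a_ne P.qi_ne) (pow_ne_zero _ P.q_ne)

theorem ArcM.g_top (h : ArcM P ℓ e t) : P.g (ℓ + 1) = P.b := by
  rw [h.hb, Par.g, pow_succ]
  linear_combination P.a * P.q ^ ℓ * P.hq

theorem ArcM.g_inj (h : ArcM P ℓ e t) (hi : i ≤ ℓ + 1) (hj : j ≤ ℓ + 1)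
    (hij : i ≠ j) : P.g i ≠ P.g j := by
  intro hg
  have h1 := mul_left_cancel₀ (mul_ne_zero P.a_ne P.qi_ne) hg
  exact hij (h.prim.pow_inj (by have := h.he; omega) (by have := h.he; omega) h1)

theorem ArcM.q_ne_one (h : ArcM P ℓ e t) : P.q ≠ 1 :=
  h.prim.ne_one (by have := h.he; omega)

/-- The quadratic relation of `X k` on a weight space for the first `k` letters. -/
def Quad (P : Par F) (ℓ : ℕ) (t : ℕ → End F V) (k : ℕ) : Prop :=
  ∀ ω, ∀ v ∈ Wt P ℓ t k ω, (X P t k - algebraMap F _ (P.g (cnt ω k + 1)))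
      ((X P t k - algebraMap F _ (P.g (ℓ + 1 + cnt ω k - k))) v) = 0

theorem ph_mem (h : AK P (ℓ + 1) t) (hk : k ≤ ℓ + 1) (hj : j + 1 < k)
    (hω : ω j ≠ ω (j + 1)) (hv : v ∈ Wt P ℓ t k ω) : ph P t j v ∈ Wt P ℓ t k (sw ω j) := by
  intro i hi
  by_cases h1 : i = j
  · subst h1
    rw [xw_sw_left hω, ← mul_apply, X_ph h ✓, mul_apply, hv _ hj, map_smul]
  by_cases h2 : i = j + 1
  · subst h2
    rw [xw_sw_right hω, ← mul_apply, X_succ_ph h ✓, mul_apply, hv _ ✓, map_smul]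
  have h3 : xw P ℓ (sw ω j) i = xw P ℓ ω i := by
    rcases lt_or_gt_of_ne h1 with h3 | h3
    · exact xw_sw_of_lt ω h3
    · exact xw_sw_of_gt ω ✓
  rw [h3, ← mul_apply, (commute_X_ph h ✓ ✓ h1 h2).eq, mul_apply, hv _ hi, map_smul]

theorem mem_Wt_ph (h : AK P (ℓ + 1) t) (hj : j < ℓ) (hkj : k ≤ j)
    (hv : v ∈ Wt P ℓ t k ω) : ph P t j v ∈ Wt P ℓ t k ω := by
  intro i hi
  rw [← mul_apply, (commute_X_ph h ✓ ✓ ✓ ✓).eq, mul_apply, hv _ hi, map_smul]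

theorem Wt_mono {k' : ℕ} (hk : k ≤ k') : Wt P ℓ t k' ω ≤ Wt P ℓ t k ω :=
  fun _ hv j hj => hv j ✓

theorem quad_eigen (hQ : Quad P ℓ t k) (hv : v ∈ Wt P ℓ t k ω)
    {c : F} (hc : X P t k v = c • v) (h1 : c ≠ P.g (cnt ω k + 1))
    (h2 : c ≠ P.g (ℓ + 1 + cnt ω k - k)) : v = 0 := by
  have h3 := hQ ω v hv
  simp only [sub_apply, algebraMap_end_apply, hc, ← sub_smul, map_smul, smul_smul] at h3
  exact (smul_eq_zero.1 h3).resolve_left (mul_ne_zero (sub_ne_zero.2 h2) (sub_ne_zero.2 h1))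

/-- Adjacent equal letters: the intertwiner vanishes. -/
theorem ArcM.ph_zero (h : ArcM P ℓ e t) (hj : j + 1 < ℓ) (hQ : Quad P ℓ t j)
    (hω : ω j = ω (j + 1)) (hv : v ∈ Wt P ℓ t (j + 2) ω) :
    ph P t j v = 0 := by
  have hc := cnt_le ω j
  refine quad_eigen hQ (ω := ω) (c := xw P ℓ ω (j + 1))
    (mem_Wt_ph h.ak ✓ le_rfl (Wt_mono ✓ hv)) ?_ ?_ ?_
  · rw [← mul_apply, X_ph h.ak ✓, mul_apply, hv _ ✓, map_smul]
  · rw [xw, cnt, ← hω]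
    split_ifs with h1
    · exact h.g_inj ✓ ✓ ✓
    · exact h.g_inj ✓ ✓ ✓
  · rw [xw, cnt, ← hω]
    split_ifs with h1
    · exact h.g_inj ✓ ✓ ✓
    · exact h.g_inj ✓ ✓ ✓

theorem t_apply (h : AK P (ℓ + 1) t) (hj : j < ℓ) {c c' : F}
    (h1 : X P t j v = c • v) (h2 : X P t (j + 1) v = c' • v) :
    (c' - c) • t (j + 1) v = ph P t j v + ((P.q - 1) * c') • v := by
  have := app_eq (ph_eq h (k := j) ✓) v
  simp only [mul_apply, sub_apply, add_apply, smul_apply,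
    h1, h2, ← sub_smul, map_smul, smul_smul] at this
  exact this

theorem ArcM.t_LL (h : ArcM P ℓ e t) (hj : j + 1 < ℓ) (hQ : Quad P ℓ t j)
    (h1 : ω j = true) (h2 : ω (j + 1) = true)
    (hv : v ∈ Wt P ℓ t (j + 2) ω) : t (j + 1) v = P.q • v := by
  have := t_apply h.ak ✓ (hv j ✓) (hv (j + 1) ✓)
  rw [h.ph_zero hj hQ (h1.trans h2.symm) hv, zero_add, xw, xw, cnt, h1, h2] at this
  simp only [if_true] at this
  rw [P.g_succ (cnt ω j + 1)] at this
  have h3 : (P.q - 1) * P.g (cnt ω j + 1) ≠ 0 :=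
    mul_ne_zero (sub_ne_zero.2 h.q_ne_one) (P.g_ne _)
  refine smul_right_injective V h3 ?_
  simp only [smul_smul]
  convert this using 2 <;> ring

theorem ArcM.t_RR (h : ArcM P ℓ e t) (hj : j + 1 < ℓ) (hQ : Quad P ℓ t j)
    (h1 : ω j = false) (h2 : ω (j + 1) = false)
    (hv : v ∈ Wt P ℓ t (j + 2) ω) : t (j + 1) v = (-1 : F) • v := by
  have := t_apply h.ak ✓ (hv j ✓) (hv (j + 1) ✓)
  rw [h.ph_zero hj hQ (h1.trans h2.symm) hv, zero_add, xw, xw, cnt, h1, h2] at this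
  simp only [Bool.false_eq_true, if_false, add_zero] at this
  have h4 : ℓ + 1 + cnt ω j - j = (ℓ + 1 + cnt ω j - (j + 1)) + 1 := ✓
  rw [h4, P.g_succ] at this
  have h3 : (1 - P.q) * P.g (ℓ + 1 + cnt ω j - (j + 1)) ≠ 0 :=
    mul_ne_zero (sub_ne_zero.2 h.q_ne_one.symm) (P.g_ne _)
  refine smul_right_injective V h3 ?_
  simp only [smul_smul]
  convert this using 2 <;> ring

theorem ArcM.xw_ne (h : ArcM P ℓ e t) (hj : j < ℓ)
    (hω : ω j ≠ ω (j + 1)) : xw P ℓ ω (j + 1) - xw P ℓ ω j ≠ 0 := by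
  have hc := cnt_le ω j
  rw [sub_ne_zero, xw, xw, cnt]
  cases h1 : ω j <;> cases h2 : ω (j + 1)
  · simp_all
  · exact h.g_inj (by simp; omega) ✓ (by simp; omega)
  · exact h.g_inj (by simp; omega) ✓ (by simp; omega)
  · simp_all

/-- Span of the weight spaces with `i` letters `true`. -/
def WtN (P : Par F) (ℓ : ℕ) (t : ℕ → End F V) (k i : ℕ) : Submodule F V :=
  ⨆ ω : {ω : ℕ → Bool // cnt ω k = i}, Wt P ℓ t k ω.1

theorem ArcM.WtN_stable (h : ArcM P ℓ e t) (hk : k ≤ ℓ)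
    (hQ : ∀ j < k, Quad P ℓ t j) : ∀ j < k, ∀ v ∈ WtN P ℓ t k i, t j v ∈ WtN P ℓ t k i := by
  intro j hj v hv
  have hle : WtN P ℓ t k i ≤ (WtN P ℓ t k i).comap (t j) := by
    refine iSup_le ?_
    rintro ⟨ω, hω⟩ v hv
    have hm : Wt P ℓ t k ω ≤ WtN P ℓ t k i :=
      le_iSup (fun ω : {ω : ℕ → Bool // cnt ω k = i} => Wt P ℓ t k ω.1) ⟨ω, hω⟩
    rw [Submodule.mem_comap]
    rcases j with _ | j
    · have := hv 0 ✓
      rw [AKT.X] at this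
      rw [this]
      exact smul_mem _ _ (hm hv)
    · by_cases hωj : ω j = ω (j + 1)
      · have hv2 : v ∈ Wt P ℓ t (j + 2) ω := Wt_mono ✓ hv
        cases h1 : ω j
        · rw [h.t_RR ✓ (hQ j ✓) h1 (hωj ▸ h1) hv2]
          exact smul_mem _ _ (hm hv)
        · rw [h.t_LL ✓ (hQ j ✓) h1 (hωj ▸ h1) hv2]
          exact smul_mem _ _ (hm hv)
      · have h2 := t_apply h.ak ✓ (hv j ✓) (hv (j + 1) hj)
        have h3 := h.xw_ne ✓ hωj
        have h4 : ph P t j v ∈ WtN P ℓ t k i :=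
          (le_iSup (fun ω : {ω : ℕ → Bool // cnt ω k = i} => Wt P ℓ t k ω.1)
            ⟨sw ω j, (cnt_sw_ge ω j k ✓).trans hω⟩)
            (ph_mem h.ak ✓ hj hωj hv)
        rw [← inv_smul_smul₀ h3 (t (j + 1) v), h2]
        exact smul_mem _ _ (Submodule.add_mem _ h4 (smul_mem _ _ (hm hv)))
  exact hle hv

theorem ArcM.num_den (h : ArcM P ℓ e t) (ω : ℕ → Bool) : ∀ k ≤ ℓ,
    ((𝐗 - C (P.g (cnt ω k + 1))) * (𝐗 - C (P.g 0)) *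
      ((𝐗 - C (P.g (ℓ + 1 + cnt ω k - k))) * (𝐗 - C (P.g (ℓ + 2))))) *
      den (xw P ℓ ω) k =
    ((𝐗 - C (P.g (cnt ω k))) * (𝐗 - C (P.g (ℓ + 2 + cnt ω k - k)))) *
      num P (xw P ℓ ω) k
  | 0, _ => by
    simp only [cnt, num, den, Nat.sub_zero, add_zero, zero_add, h.g_top, P.g_one]
    ring
  | k + 1, hk => by
    have ih := h.num_den ω k ✓
    have hc := cnt_le ω k
    obtain ⟨r, hr⟩ : ∃ r, ℓ + 1 + cnt ω k - k = r + 1 := ⟨ℓ + cnt ω k - k, by omega⟩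
    have hr2 : ℓ + 2 + cnt ω k - k = r + 2 := ✓
    rw [hr, hr2] at ih
    rw [num, den, xw, cnt, hr]
    by_cases hω : ω k
    · simp only [hω, if_true, P.qi_g, ← P.g_succ]
      rw [show ℓ + 1 + (cnt ω k + 1) - (k + 1) = r + 1 by omega,
        show ℓ + 2 + (cnt ω k + 1) - (k + 1) = r + 2 by omega]
      linear_combination ((𝐗 - C (P.g (cnt ω k + 1 + 1))) *
        (𝐗 - C (P.g (cnt ω k + 1)))) * ih
    · simp only [hω, if_false, P.qi_g, ← P.g_succ, add_zero, Bool.false_eq_true]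
      rw [show ℓ + 1 + cnt ω k - (k + 1) = r by omega,
        show ℓ + 2 + cnt ω k - (k + 1) = r + 1 by omega]
      linear_combination ((𝐗 - C (P.g r)) * (𝐗 - C (P.g (r + 1)))) * ih

theorem ArcM.quad [Infinite F] [FiniteDimensional F V] (h : ArcM P ℓ e t) :
    ∀ k ≤ ℓ, Quad P ℓ t k := by
  intro k
  induction k using Nat.strong_induction_on with
  | _ k ih =>
  intro hk ω v hv
  rcases k with _ | k
  · have hc := h.ak.cyc ✓
    have hc' := app_eq hc v
    simp only [mul_apply, sub_apply, smul_apply, one_apply] at hc'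
    simp only [cnt, zero_add, Nat.sub_zero, add_zero, h.g_top, P.g_one, X, sub_apply,
      algebraMap_end_apply, map_sub, map_smul, hc']
    module
  · have hst := h.WtN_stable (i := cnt ω (k + 1)) hk fun j hj => ih j hj ✓
    have hm : v ∈ WtN P ℓ t (k + 1) (cnt ω (k + 1)) :=
      (le_iSup (fun ω' : {ω' : ℕ → Bool // cnt ω' (k + 1) = cnt ω (k + 1)} =>
        Wt P ℓ t (k + 1) ω'.1) ⟨ω, rfl⟩) hv
    have hcle := cnt_le ω (k + 1)
    have hχ : ∀ v ∈ WtN P ℓ t (k + 1) (cnt ω (k + 1)),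
        aeval (AKT.X P t k) ((𝐗 - C (P.g (cnt ω (k + 1)))) *
          (𝐗 - C (P.g (ℓ + 2 + cnt ω (k + 1) - (k + 1))))) v = 0 := by
      intro v hv
      have hle : WtN P ℓ t (k + 1) (cnt ω (k + 1)) ≤
          ker (aeval (AKT.X P t k) ((𝐗 - C (P.g (cnt ω (k + 1)))) *
          (𝐗 - C (P.g (ℓ + 2 + cnt ω (k + 1) - (k + 1)))))) := by
        refine iSup_le ?_
        rintro ⟨ω', hω'⟩ v hv
        have h1 := hv k ✓
        have h2 := cnt_le ω' k
        rw [mem_ker]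
        simp only [map_mul, map_sub, aeval_X, aeval_C, mul_apply, sub_apply,
          algebraMap_end_apply, h1, map_smul, ← sub_smul, smul_smul]
        rw [show (_ * _ : F) = 0 from ?_, zero_smul]
        rw [mul_eq_zero, sub_eq_zero, sub_eq_zero, xw]
        rw [cnt] at hω'
        by_cases h3 : ω' k
        · right; rw [if_pos h3] at hω' ⊢; rw [hω']
        · left; rw [if_neg h3] at hω' ⊢; congr 1; omega
      exact hle hv
    have hg := h.num_den ω (k + 1) hk
    have := aeval_next h.ak (m := k) ✓ (WtN P ℓ t (k + 1) (cnt ω (k + 1)))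
      (fun j hj => hst j ✓) _ hχ v hm (xw P ℓ ω) (fun j hj => hv j ✓) _ hg
    set Y := AKT.X P t (k + 1)
    rw [mul_mul_mul_comm, mul_comm] at this
    simp only [map_mul, map_sub, aeval_X, aeval_C, mul_apply] at this
    refine h.hi (k + 1) hk _ ?_
    rw [← sub_eq_zero]
    refine h.lo (k + 1) hk _ ?_
    rw [← sub_eq_zero]
    exact this

theorem ArcM.split [Infinite F] [FiniteDimensional F V] (h : ArcM P ℓ e t) (hk : k < ℓ)
    (hv : v ∈ Wt P ℓ t k ω) :
    v ∈ ⨆ ω, Wt P ℓ t (k + 1) ω := by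
  have hQ := h.quad k hk.le ω v hv
  have hc := cnt_le ω k
  have hne : P.g (cnt ω k + 1) - P.g (ℓ + 1 + cnt ω k - k) ≠ 0 :=
    sub_ne_zero.2 (h.g_inj ✓ ✓ ✓)
  set A := P.g (cnt ω k + 1) with hA
  set B := P.g (ℓ + 1 + cnt ω k - k) with hB
  set Y := X P t k with hY
  have hmem : ∀ c : F, ∀ b : Bool, ∀ d : F, (if b then A else B) = d →
      Y ((Y - algebraMap F _ c) v) = d • (Y - algebraMap F _ c) v →
      (Y - algebraMap F _ c) v ∈ Wt P ℓ t (k + 1) (Function.update ω k b) := by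
    intro c b d hd h1 j hj
    rcases Nat.lt_succ_iff_lt_or_eq.1 hj with hj | rfl
    · rw [xw_congr (ω' := ω) fun i hi => by rw [Function.update_of_ne ✓]]
      have hcm : Commute (X P t j) (Y - algebraMap F _ c) :=
        (commute_XX h.ak ✓ ✓).sub_right (Algebra.commutes c _).symm
      rw [← mul_apply, hcm.eq, mul_apply, hv j hj, map_smul]
    · rw [h1, xw, Function.update_self, ← hd,
        cnt_congr (ω' := ω) j fun i hi => by rw [Function.update_of_ne ✓]]
  have h1 := hmem B true A (by simp) (by
    rw [← sub_eq_zero, ← hQ]; rfl)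
  have h2 := hmem A false B (by simp) (by
    rw [← sub_eq_zero, ← hQ]
    simp only [sub_apply, algebraMap_end_apply, map_sub, map_smul])
  have h3 : v = (A - B)⁻¹ • ((Y - algebraMap F _ B) v - (Y - algebraMap F _ A) v) := by
    rw [eq_inv_smul_iff₀ hne]
    simp only [sub_apply, algebraMap_end_apply]
    module
  rw [h3]
  exact smul_mem _ _ (Submodule.sub_mem _
    (le_iSup (fun ω => Wt P ℓ t (k + 1) ω) _ h1) (le_iSup (fun ω => Wt P ℓ t (k + 1) ω) _ h2))

theorem ArcM.iSup_Wt [Infinite F] [FiniteDimensional F V] (h : ArcM P ℓ e t) :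
    ∀ k ≤ ℓ, ⨆ ω, Wt P ℓ t k ω = ⊤
  | 0, _ => by
    rw [eq_top_iff]
    refine le_trans ?_ (le_iSup _ fun _ => true)
    intro v _ j hj
    exact absurd hj (Nat.not_lt_zero j)
  | k + 1, hk => by
    rw [eq_top_iff, ← h.iSup_Wt k ✓]
    exact iSup_le fun ω v hv => h.split ✓ hv
end

/-! ### The zigzag representation of an arc module -/

section
set_option linter.unusedSectionVars false

section

/-- `ph s * ph (s + 1) * ⋯ * ph (k - 1)`, which moves a letter from position `k` to `s`. -/
def asc (P : Par R) (t : ℕ → E) (s : ℕ) : ℕ → E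
  | 0 => 1
  | k + 1 => if s ≤ k then asc P t s k * ph P t k else 1

/-- `ph (k - 1) * ⋯ * ph s`, which moves a letter from position `s` to `k`. -/
def desc (P : Par R) (t : ℕ → E) (s : ℕ) : ℕ → E
  | 0 => 1
  | k + 1 => if s ≤ k then ph P t k * desc P t s k else 1

variable {P : Par R} {t : ℕ → E}

theorem asc_self : asc P t s s = 1 := by
  cases s with
  | zero => rfl
  | succ s => rw [asc, if_neg ✓]
theorem desc_self : desc P t s s = 1 := by
  cases s with
  | zero => rfl
  | succ s => rw [desc, if_neg ✓]
theorem asc_succ (h : s ≤ k) : asc P t s (k + 1) = asc P t s k * ph P t k := by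
  rw [asc, if_pos h]
theorem desc_succ (h : s ≤ k) : desc P t s (k + 1) = ph P t k * desc P t s k := by
  rw [desc, if_pos h]

theorem commute_asc {g : E} : ∀ k, (∀ j < k, Commute g (ph P t j)) → Commute g (asc P t s k)
  | 0, _ => Commute.one_right g
  | k + 1, h => by
    rw [asc]
    split_ifs
    · exact (commute_asc k fun j hj => h j ✓).mul_right (h k ✓)
    · exact Commute.one_right g

theorem commute_desc {g : E} : ∀ k, (∀ j < k, Commute g (ph P t j)) → Commute g (desc P t s k)
  | 0, _ => Commute.one_right g
  | k + 1, h => by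
    rw [desc]
    split_ifs
    · exact (h k ✓).mul_right (commute_desc k fun j hj => h j ✓)
    · exact Commute.one_right g
end

section

theorem Par.g_add (P : Par F) (i j : ℕ) : P.g (i + j) = P.q ^ j * P.g i := by
  rw [Par.g, Par.g, pow_add]; ring

theorem ArcM.g_ne_add (h : ArcM P ℓ e t) (i : ℕ) (h0 : 0 < d) (hd : d ≤ ℓ + 1) :
    P.g (i + d) ≠ P.g i := by
  rw [P.g_add]
  intro hg
  have h1 : P.q ^ d = 1 := by
    apply mul_right_cancel₀ (P.g_ne i)
    rw [hg, one_mul]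
  exact h.prim.pow_ne_one_of_pos_of_lt ✓ (by have := h.he; omega) h1

/-- The scalar by which the square of `ph k` acts on a weight space. -/
def rh (P : Par F) (ℓ : ℕ) (ω : ℕ → Bool) (k : ℕ) : F :=
  (P.q * xw P ℓ ω k - xw P ℓ ω (k + 1)) * (P.q * xw P ℓ ω (k + 1) - xw P ℓ ω k)

theorem ph_ph (h : AK P (ℓ + 1) t) (hj : j < ℓ) (hk : j + 2 ≤ k)
    (hv : v ∈ Wt P ℓ t k ω) : ph P t j (ph P t j v) = rh P ℓ ω j • v := by
  rw [← mul_apply, ph_sq h ✓]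
  simp only [mul_apply, sub_apply, smul_apply, hv j ✓,
    hv (j + 1) ✓, ← sub_smul, smul_smul, map_smul]
  rw [rh]
  congr 1; ring

theorem ArcM.rh_ne (h : ArcM P ℓ e t) (hk : k + 1 < ℓ)
    (hω : ω k ≠ ω (k + 1)) : rh P ℓ ω k ≠ 0 := by
  have hc := cnt_le ω k
  rw [rh, xw, xw, cnt]
  have e1 := h.g_ne_add (cnt ω k + 1) (d := ℓ + 1 - k) ✓ ✓
  have e2 := h.g_ne_add (cnt ω k + 2) (d := ℓ - 1 - k) ✓ ✓
  rw [show cnt ω k + 1 + (ℓ + 1 - k) = ℓ + 1 + cnt ω k - k + 1 by omega, P.g_succ] at e1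
  rw [show cnt ω k + 2 + (ℓ - 1 - k) = ℓ + 1 + cnt ω k - k by omega, P.g_succ] at e2
  cases h1 : ω k <;> cases h2 : ω (k + 1)
  · simp_all
  · simp only [if_true, add_zero, Bool.false_eq_true, if_false]
    exact mul_ne_zero (sub_ne_zero.2 e1) (sub_ne_zero.2 e2.symm)
  · simp only [if_true, Bool.false_eq_true, if_false]
    rw [show ℓ + 1 + (cnt ω k + 1) - (k + 1) = ℓ + 1 + cnt ω k - k by omega]
    exact mul_ne_zero (sub_ne_zero.2 e2.symm) (sub_ne_zero.2 e1)
  · simp_all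

/-- `ω'` arises from `ω` by moving a letter `true` from position `k` down to position `s` past
letters `false`. -/
structure Mv (ℓ s k : ℕ) (ω ω' : ℕ → Bool) : Prop where
  src : ω k = true
  mid : ∀ j, s ≤ j → j < k → ω j = false
  tgt : ω' s = true
  mid' : ∀ j, s < j → j ≤ k → ω' j = false
  out : ∀ j < ℓ, j < s ∨ k < j → ω j = ω' j

theorem Mv.sw (h : Mv ℓ s (k + 1) ω ω') (hs : s ≤ k) :
    Mv ℓ s k (sw ω k) ω' where
  src := by rw [sw_left]; exact h.src
  mid j h1 h2 := by rw [sw_of_ne ω ✓ ✓]; exact h.mid j h1 ✓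
  tgt := h.tgt
  mid' j h1 h2 := h.mid' j h1 ✓
  out j h1 h2 := by
    by_cases h3 : j = k + 1
    · subst h3
      rw [sw_right, h.mid k hs ✓, h.mid' (k + 1) ✓ le_rfl]
    · rw [sw_of_ne ω ✓ h3]
      exact h.out j h1 ✓

/-- The scalar of `desc * asc` on a weight space. -/
def rhs (P : Par F) (ℓ : ℕ) (s : ℕ) : ℕ → (ℕ → Bool) → F
  | 0, _ => 1
  | k + 1, ω => if s ≤ k then rhs P ℓ s k (sw ω k) * rh P ℓ ω k else 1

theorem rhs_self (ω : ℕ → Bool) : rhs P ℓ s s ω = 1 := by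
  cases s with
  | zero => rfl
  | succ s => rw [rhs, if_neg ✓]

theorem sw_sw (ω : ℕ → Bool) (k : ℕ) : sw (sw ω k) k = ω := by
  funext j
  by_cases h1 : j = k
  · rw [h1, sw_left, sw_right]
  by_cases h2 : j = k + 1
  · rw [h2, sw_right, sw_left]
  rw [sw_of_ne _ h1 h2, sw_of_ne _ h1 h2]

theorem ArcM.asc_desc (h : ArcM P ℓ e t) : ∀ k, s ≤ k → k < ℓ → ∀ ω ω', Mv ℓ s k ω ω' →
    rhs P ℓ s k ω ≠ 0 ∧ (∀ v ∈ Wt P ℓ t ℓ ω, asc P t s k v ∈ Wt P ℓ t ℓ ω' ∧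
      desc P t s k (asc P t s k v) = rhs P ℓ s k ω • v) ∧
    ∀ v ∈ Wt P ℓ t ℓ ω', desc P t s k v ∈ Wt P ℓ t ℓ ω ∧
      asc P t s k (desc P t s k v) = rhs P ℓ s k ω • v := by
  intro k hs
  induction k, hs using Nat.le_induction with
  | base =>
    intro _ ω ω' hm
    have hw : Wt P ℓ t ℓ ω = Wt P ℓ t ℓ ω' := by
      refine Wt_congr fun j hj => ?_
      by_cases h1 : j = s
      · subst h1; rw [hm.src, hm.tgt]
      · exact hm.out j hj ✓
    rw [asc_self, desc_self, rhs_self, hw]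
    simp
  | succ k hs ih =>
    intro hk ω ω' hm
    have hne : ω k ≠ ω (k + 1) := by rw [hm.src, hm.mid k hs ✓]; simp
    have hne' : sw ω k k ≠ sw ω k (k + 1) := by rw [sw_left, sw_right]; exact hne.symm
    obtain ⟨i1, i2, i3⟩ := ih ✓ _ _ (hm.sw hs)
    have hr : rh P ℓ (sw ω k) k = rh P ℓ ω k := by
      rw [rh, rh, xw_sw_left hne, xw_sw_right hne]; ring
    rw [asc_succ hs, desc_succ hs, rhs, if_pos hs]
    refine ⟨mul_ne_zero i1 (h.rh_ne hk hne), fun v hv => ?_, fun v hv => ?_⟩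
    · have h1 := i2 _ (ph_mem h.ak ✓ hk hne hv)
      refine ⟨h1.1, ?_⟩
      simp only [mul_apply]
      rw [h1.2, map_smul, ph_ph h.ak ✓ ✓ hv, smul_smul]
    · have h1 := i3 v hv
      have h2 := ph_mem h.ak ✓ hk hne' h1.1
      rw [sw_sw] at h2
      refine ⟨h2, ?_⟩
      simp only [mul_apply]
      rw [ph_ph h.ak ✓ ✓ h1.1, map_smul, h1.2, smul_smul, hr, mul_comm]

/-- The nilpotent part of the last Jucys–Murphy element on the weight spaces with `s` letters
`true`. -/
def yop (P : Par F) (ℓ : ℕ) (t : ℕ → End F V) (s : ℕ) : End F V :=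
  X P t ℓ - algebraMap F _ (P.g (s + 1))

theorem ArcM.yop_mem (h : ArcM P ℓ e t) (s : ℕ) (hv : v ∈ Wt P ℓ t ℓ ω) :
    yop P ℓ t s v ∈ Wt P ℓ t ℓ ω := by
  intro j hj
  have hcm : Commute (X P t j) (yop P ℓ t s) :=
    (commute_XX h.ak ✓ ✓).sub_right (Algebra.commutes _ _).symm
  rw [← mul_apply, hcm.eq, mul_apply, hv j hj, map_smul]

theorem ArcM.commute_yop (h : ArcM P ℓ e t) (s : ℕ) (hj : j + 1 < ℓ) :
    Commute (yop P ℓ t s) (ph P t j) :=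
  (commute_X_ph h.ak ✓ ✓ ✓ ✓).sub_left
    (Algebra.commutes _ _)

theorem X_eq_yop (s : ℕ) (v : V) : X P t ℓ v = P.g (s + 1) • v + yop P ℓ t s v := by
  simp [yop]

/-- Flipping the letter in position `k`. -/
def fl (ω : ℕ → Bool) (k : ℕ) : ℕ → Bool := Function.update ω k (!ω k)

theorem fl_of_ne (h : j ≠ k) : fl ω k j = ω j :=
  Function.update_of_ne h _ _
theorem fl_self : fl ω k k = !ω k := Function.update_self _ _ _
theorem cnt_fl : cnt (fl ω k) k = cnt ω k :=
  cnt_congr k fun j hj => fl_of_ne ✓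

variable [Infinite F] [FiniteDimensional F V]

theorem ArcM.yop_yop (h : ArcM P ℓ e t) (hv : v ∈ Wt P ℓ t ℓ ω) :
    yop P ℓ t (cnt ω ℓ) (yop P ℓ t (cnt ω ℓ) v) = 0 := by
  have := h.quad ℓ le_rfl ω v hv
  rwa [show ℓ + 1 + cnt ω ℓ - ℓ = cnt ω ℓ + 1 by omega] at this

theorem ArcM.ph_yop (h : ArcM P (m + 1) e t)
    (hv : v ∈ Wt P (m + 1) t (m + 1) ω) :
    ph P t m (yop P (m + 1) t (cnt ω (m + 1)) v) = 0 ∧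
      ph P t m v ∈ Wt P (m + 1) t (m + 1) (fl ω m) := by
  set s := cnt ω (m + 1) with hs
  have hcle := cnt_le ω m
  have hw : ph P t m v ∈ Wt P (m + 1) t m ω :=
    mem_Wt_ph h.ak ✓ le_rfl (Wt_mono ✓ hv)
  have hw' : ph P t m (yop P (m + 1) t s v) ∈ Wt P (m + 1) t m ω :=
    mem_Wt_ph h.ak ✓ le_rfl (Wt_mono ✓ (h.yop_mem s hv))
  have hX : ∀ v, X P t m (ph P t m v) = ph P t m (X P t (m + 1) v) := fun v => by
    rw [← mul_apply, X_ph h.ak ✓, mul_apply]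
  have h1 : X P t m (ph P t m v) =
      P.g (s + 1) • ph P t m v + ph P t m (yop P (m + 1) t s v) := by
    rw [hX, X_eq_yop s v, map_add, map_smul]
  have h2 : X P t m (ph P t m (yop P (m + 1) t s v)) =
      P.g (s + 1) • ph P t m (yop P (m + 1) t s v) := by
    rw [hX, X_eq_yop s (yop P (m + 1) t s v), h.yop_yop hv, add_zero, map_smul]
  have hQ := h.quad m ✓ ω _ hw
  have hi : m + 1 + 1 + cnt ω m - m = cnt ω m + 1 + 1 := ✓
  rw [hi] at hQ
  have hne : P.g (cnt ω m + 1 + 1) ≠ P.g (cnt ω m + 1) :=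
    h.g_ne_add (cnt ω m + 1) (d := 1) ✓ ✓
  have hz : ph P t m (yop P (m + 1) t s v) = 0 := by
    simp only [sub_apply, algebraMap_end_apply, map_sub, map_smul, map_add, h1,
      h2] at hQ
    rw [hs, cnt] at hQ ⊢
    cases h3 : ω m
    · simp only [h3, Bool.false_eq_true, if_false, add_zero] at hQ ⊢
      have : (P.g (cnt ω m + 1) - P.g (cnt ω m + 1 + 1)) •
          ph P t m (yop P (m + 1) t (cnt ω m) v) = 0 := by
        rw [← hQ]; module
      exact (smul_eq_zero.1 this).resolve_left (sub_ne_zero.2 hne.symm)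
    · simp only [h3, if_true] at hQ ⊢
      have : (P.g (cnt ω m + 1 + 1) - P.g (cnt ω m + 1)) •
          ph P t m (yop P (m + 1) t (cnt ω m + 1) v) = 0 := by
        rw [← hQ]; module
      exact (smul_eq_zero.1 this).resolve_left (sub_ne_zero.2 hne)
  refine ⟨hz, fun j hj => ?_⟩
  rcases Nat.lt_succ_iff_lt_or_eq.1 hj with hj | rfl
  · rw [hw j hj, xw_congr fun i hi => fl_of_ne ✓]
  · rw [h1, hz, add_zero, xw, fl_self, cnt_fl, hi, hs, cnt]
    cases ω j <;> simp

theorem ArcM.ph_ph_last (h : ArcM P (m + 1) e t)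
    (hv : v ∈ Wt P (m + 1) t (m + 1) ω) :
    ph P t m (ph P t m v) = (if ω m then -((P.q ^ 2 - 1) * P.g (cnt ω m + 1))
      else P.q * (P.q ^ 2 - 1) * P.g (cnt ω m + 1)) • yop P (m + 1) t (cnt ω (m + 1)) v := by
  set s := cnt ω (m + 1) with hs
  have hyy : yop P (m + 1) t s (yop P (m + 1) t s v) = 0 := h.yop_yop hv
  have hYv := hv m ✓
  have hYy := h.yop_mem s hv m ✓
  rw [← mul_apply, ph_sq h.ak ✓]
  simp only [mul_apply, sub_apply, smul_apply, map_sub, map_smul,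
    hYv, hYy, X_eq_yop s, map_add, hyy, smul_add]
  have hcle := cnt_le ω m
  rw [hs, xw, cnt, show m + 1 + 1 + cnt ω m - m = cnt ω m + 1 + 1 by omega]
  cases h3 : ω m
  · simp only [Bool.false_eq_true, if_false, add_zero, P.g_succ (cnt ω m + 1)]
    module
  · simp only [if_true, P.g_succ (cnt ω m + 1)]
    module

/-- The sorted word with `s` letters `true`. -/
def st (s j : ℕ) : Bool := decide (j < s)

theorem cnt_st (s : ℕ) : ∀ k, cnt (st s) k = min s k
  | 0 => by simp [cnt]
  | k + 1 => by
    rw [cnt, cnt_st s k, st]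
    by_cases h : k < s <;> simp [h] <;> omega

/-- The word `true ^ s false ^ (m - s) true`. -/
def stm (s m j : ℕ) : Bool := decide (j < s ∨ m ≤ j)

theorem Mv_stm : Mv (m + 1) s m (stm s m) (st (s + 1)) where
  src := by simp [stm]
  mid j h1 h2 := by simp [stm]; omega
  tgt := by simp [st]
  mid' j h1 h2 := by simp [st]; omega
  out j h1 h2 := decide_eq_decide.2 ✓

theorem Wt_stm (hs : s ≤ m) :
    Wt P (m + 1) t (m + 1) (fl (st s) m) = Wt P (m + 1) t (m + 1) (stm s m) := by
  refine Wt_congr fun j hj => ?_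
  by_cases h : j = m
  · subst h; simp [fl_self, st, stm]; omega
  · rw [fl_of_ne h]; exact decide_eq_decide.2 ✓

theorem Wt_stm' (hs : s ≤ m) :
    Wt P (m + 1) t (m + 1) (fl (stm s m) m) = Wt P (m + 1) t (m + 1) (st s) := by
  refine Wt_congr fun j hj => ?_
  by_cases h : j = m
  · subst h; simp [fl_self, st, stm]; omega
  · rw [fl_of_ne h]; exact decide_eq_decide.2 ✓

theorem cnt_stm (hs : s ≤ m) : cnt (stm s m) m = s := by
  rw [cnt_congr (ω := stm s m) (ω' := st s) m fun j hj => decide_eq_decide.2 ✓, cnt_st]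
  omega

theorem cnt_stm' (hs : s ≤ m) : cnt (stm s m) (m + 1) = s + 1 := by
  rw [cnt, cnt_stm hs]; simp [stm]

/-- The scalars of the zigzag relations. -/
def zu (P : Par F) : ℕ → ℕ → F
  | 0, _ => 1
  | m + 1, s => rhs P (m + 1) s m (stm s m) * (P.q * (P.q ^ 2 - 1) * P.g (s + 1))

def zw (P : Par F) : ℕ → ℕ → F
  | 0, _ => 1
  | m + 1, s => rhs P (m + 1) s m (stm s m) * -((P.q ^ 2 - 1) * P.g (s + 1))

/-- The components of the zigzag representation: the weight spaces of the sorted words. -/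
def zV (P : Par F) (ℓ : ℕ) (t : ℕ → End F V) (s : ℕ) : Submodule F V :=
  if s ≤ ℓ then Wt P ℓ t ℓ (st s) else ⊥

theorem zV_of_le (h : s ≤ ℓ) : zV P ℓ t s = Wt P ℓ t ℓ (st s) := if_pos h
theorem zV_of_gt (h : ℓ < s) : zV P ℓ t s = ⊥ := if_neg ✓

theorem ArcM.q_sq (h : ArcM P (m + 1) e t) : P.q ^ 2 - 1 ≠ 0 :=
  sub_ne_zero.2 (h.prim.pow_ne_one_of_pos_of_lt ✓ (by have := h.he; omega))

theorem ArcM.za (h : ArcM P (m + 1) e t) (hs : s ≤ m)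
    (hv : v ∈ Wt P (m + 1) t (m + 1) (st s)) :
    asc P t s (m + 1) v ∈ Wt P (m + 1) t (m + 1) (st (s + 1)) ∧
      desc P t s (m + 1) (asc P t s (m + 1) v) = zu P (m + 1) s • yop P (m + 1) t s v ∧
      asc P t s (m + 1) (yop P (m + 1) t s v) = 0 := by
  have h1 := h.ph_yop hv
  rw [Wt_stm hs, show cnt (st s) (m + 1) = s by rw [cnt_st]; omega] at h1
  have h2 := (h.asc_desc m hs ✓ _ _ (Mv_stm)).2.1 _ h1.2
  have h3 := h.ph_ph_last hv
  rw [show cnt (st s) (m + 1) = s by rw [cnt_st]; omega,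
    show cnt (st s) m = s by rw [cnt_st]; omega, if_neg (by simp [st]; omega)] at h3
  rw [asc_succ hs, desc_succ hs]
  simp only [mul_apply]
  refine ⟨h2.1, ?_, ?_⟩
  · rw [h2.2, map_smul, h3, zu, smul_smul]
  · rw [h1.1, map_zero]

theorem ArcM.zb (h : ArcM P (m + 1) e t) (hs : s ≤ m)
    (hv : v ∈ Wt P (m + 1) t (m + 1) (st (s + 1))) :
    desc P t s (m + 1) v ∈ Wt P (m + 1) t (m + 1) (st s) ∧
      asc P t s (m + 1) (desc P t s (m + 1) v) = zw P (m + 1) s • yop P (m + 1) t (s + 1) v ∧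
      desc P t s (m + 1) (yop P (m + 1) t (s + 1) v) = 0 := by
  have h1 := (h.asc_desc m hs ✓ _ _ (Mv_stm)).2.2 _ hv
  have h2 := h.ph_yop h1.1
  rw [Wt_stm' hs, cnt_stm' hs] at h2
  have h3 := h.ph_ph_last h1.1
  rw [cnt_stm hs, cnt_stm' hs, if_pos (by simp [stm])] at h3
  have hc1 : Commute (yop P (m + 1) t (s + 1)) (asc P t s m) :=
    commute_asc m fun j hj => h.commute_yop (s + 1) ✓
  have hc2 : Commute (yop P (m + 1) t (s + 1)) (desc P t s m) :=
    commute_desc m fun j hj => h.commute_yop (s + 1) ✓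
  have hc1' : ∀ w, asc P t s m (yop P (m + 1) t (s + 1) w) =
      yop P (m + 1) t (s + 1) (asc P t s m w) := fun w => (hc1.app w).symm
  have hc2' : ∀ w, desc P t s m (yop P (m + 1) t (s + 1) w) =
      yop P (m + 1) t (s + 1) (desc P t s m w) := fun w => (hc2.app w).symm
  rw [asc_succ hs, desc_succ hs]
  simp only [mul_apply]
  refine ⟨h2.2, ?_, ?_⟩
  · rw [h3, map_smul, hc1', h1.2, map_smul, zw, smul_smul, mul_comm]
  · rw [hc2', h2.1]

theorem ArcM.zaa (h : ArcM P (m + 2) e t) (hs : s ≤ m)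
    (hv : v ∈ Wt P (m + 2) t (m + 2) (st s)) :
    asc P t (s + 1) (m + 2) (asc P t s (m + 2) v) = 0 := by
  have hc : Commute (ph P t (m + 1)) (asc P t s m) :=
    commute_asc m fun j hj => (commute_ph_ph h.ak ✓ ✓).symm
  have ht : t (m + 1) v = (-1 : F) • v :=
    h.t_RR ✓ (h.quad m ✓) (by simp [st]; omega) (by simp [st]; omega) hv
  have hb := ph_braid_zero h.ak (k := m) ✓ ht (hv m ✓) (hv (m + 1) ✓)
  rw [asc_succ (k := m + 1) ✓, asc_succ (k := m + 1) ✓, asc_succ hs]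
  simp only [mul_apply]
  have := hc.app (ph P t m (ph P t (m + 1) v))
  rw [this, hb, map_zero, map_zero]

theorem ArcM.zbb (h : ArcM P (m + 2) e t) (hs : s ≤ m)
    (hv : v ∈ Wt P (m + 2) t (m + 2) (st (s + 2))) :
    desc P t s (m + 2) (desc P t (s + 1) (m + 2) v) = 0 := by
  have hc : Commute (ph P t (m + 1)) (desc P t s m) :=
    commute_desc m fun j hj => (commute_ph_ph h.ak ✓ ✓).symm
  have h1 := ((h.asc_desc (m + 1) (s := s + 1) ✓ ✓ _ _
    (Mv_stm)).2.2 _ hv).1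
  have hm : Mv (m + 2) s m (fun j => decide (j < s ∨ m ≤ j)) (stm (s + 1) (m + 1)) :=
    { src := by simp
      mid := fun j h1 h2 => by simp; omega
      tgt := by simp [stm]
      mid' := fun j h1 h2 => by simp [stm]; omega
      out := fun j h1 h2 => decide_eq_decide.2 ✓ }
  have h2 := ((h.asc_desc m hs ✓ _ _ hm).2.2 _ h1).1
  set w := desc P t s m (desc P t (s + 1) (m + 1) v)
  have ht : t (m + 1) w = P.q • w :=
    h.t_LL ✓ (h.quad m ✓) (by simp) (by simp) h2
  have hb := ph_braid_zero h.ak (k := m) ✓ ht (h2 m ✓) (h2 (m + 1) ✓)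
  rw [desc_succ (k := m + 1) ✓, desc_succ (k := m + 1) ✓, desc_succ hs]
  simp only [mul_apply]
  have := hc.app (desc P t (s + 1) (m + 1) v)
  rw [← this, hb]

/-- The zigzag representation on the sorted weight spaces of an arc module. -/
noncomputable def ArcM.zig (h : ArcM P ℓ e t) : Zig F V ℓ (zu P ℓ) (zw P ℓ) where
  V := zV P ℓ t
  a s := if s < ℓ then asc P t s ℓ else 0
  b s := if s < ℓ then desc P t s ℓ else 0
  y s := yop P ℓ t s
  top s hs := zV_of_gt hs
  ha s v hv := by
    split_ifs with h1
    · obtain ⟨m, rfl⟩ : ∃ m, ℓ = m + 1 := ⟨ℓ - 1, by omega⟩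
      rw [zV_of_le ✓] at hv ⊢
      exact (h.za ✓ hv).1
    · exact Submodule.zero_mem _
  hb s v hv := by
    split_ifs with h1
    · obtain ⟨m, rfl⟩ : ∃ m, ℓ = m + 1 := ⟨ℓ - 1, by omega⟩
      rw [zV_of_le ✓] at hv ⊢
      exact (h.zb ✓ hv).1
    · exact Submodule.zero_mem _
  hy s v hv := by
    rw [zV] at hv ⊢
    split_ifs at hv ⊢
    · exact h.yop_mem _ hv
    · rw [(mem_bot F).1 hv, map_zero]; exact Submodule.zero_mem _
  aa s v hv := by
    by_cases h1 : s + 1 < ℓ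
    · obtain ⟨m, rfl⟩ : ∃ m, ℓ = m + 2 := ⟨ℓ - 2, by omega⟩
      rw [if_pos h1, if_pos ✓]
      rw [zV_of_le ✓] at hv
      exact h.zaa ✓ hv
    · rw [if_neg h1]; rfl
  bb s v hv := by
    by_cases h1 : s + 1 < ℓ
    · obtain ⟨m, rfl⟩ : ∃ m, ℓ = m + 2 := ⟨ℓ - 2, by omega⟩
      rw [if_pos h1, if_pos ✓]
      rw [zV_of_le ✓] at hv
      exact h.zbb ✓ hv
    · rw [if_neg h1, LinearMap.zero_apply, map_zero]
  ba s hs v hv := by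
    obtain ⟨m, rfl⟩ : ∃ m, ℓ = m + 1 := ⟨ℓ - 1, by omega⟩
    rw [if_pos hs, if_pos hs]
    rw [zV_of_le ✓] at hv
    exact (h.za ✓ hv).2.1
  ab s hs v hv := by
    obtain ⟨m, rfl⟩ : ∃ m, ℓ = m + 1 := ⟨ℓ - 1, by omega⟩
    rw [if_pos hs, if_pos hs]
    rw [zV_of_le ✓] at hv
    exact (h.zb ✓ hv).2.1
  yy s v hv := by
    rw [zV] at hv
    split_ifs at hv with h1
    · have := h.yop_yop hv
      rwa [cnt_st, min_eq_left h1] at this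
    · rw [(mem_bot F).1 hv, map_zero, map_zero]
  ay s v hv := by
    split_ifs with h1
    · obtain ⟨m, rfl⟩ : ∃ m, ℓ = m + 1 := ⟨ℓ - 1, by omega⟩
      rw [zV_of_le ✓] at hv
      exact (h.za ✓ hv).2.2
    · rfl
  bY s v hv := by
    split_ifs with h1
    · obtain ⟨m, rfl⟩ : ∃ m, ℓ = m + 1 := ⟨ℓ - 1, by omega⟩
      rw [zV_of_le ✓] at hv
      exact (h.zb ✓ hv).2.2
    · rfl
  hu s hs := by
    obtain ⟨m, rfl⟩ : ∃ m, ℓ = m + 1 := ⟨ℓ - 1, by omega⟩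
    exact mul_ne_zero (h.asc_desc m ✓ ✓ _ _ (Mv_stm)).1
      (mul_ne_zero (mul_ne_zero P.q_ne h.q_sq) (P.g_ne _))
  hw s hs := by
    obtain ⟨m, rfl⟩ : ∃ m, ℓ = m + 1 := ⟨ℓ - 1, by omega⟩
    exact mul_ne_zero (h.asc_desc m ✓ ✓ _ _ (Mv_stm)).1
      (neg_ne_zero.2 (mul_ne_zero h.q_sq (P.g_ne _)))
end
end

/-! ### Homomorphisms of arc modules -/

section
set_option linter.unusedSectionVars false

section
variable {P : Par R} {t : ℕ → E}

/-- The product of intertwiners which sorts the first `k` letters of a word. -/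
def sg (P : Par R) (t : ℕ → E) (ω : ℕ → Bool) : ℕ → E
  | 0 => 1
  | k + 1 => if ω k then asc P t (cnt ω k) k * sg P t ω k else sg P t ω k

theorem sg_true (h : ω k = true) :
    sg P t ω (k + 1) = asc P t (cnt ω k) k * sg P t ω k := by rw [sg, if_pos h]
theorem sg_false (h : ω k = false) : sg P t ω (k + 1) = sg P t ω k := by
  rw [sg, if_neg (by simp [h])]

theorem sg_congr : ∀ k, (∀ j < k, ω j = ω' j) → sg P t ω k = sg P t ω' k
  | 0, _ => rfl
  | k + 1, h => by
    rw [sg, sg, sg_congr k fun j hj => h j ✓, h k ✓, cnt_congr k fun j hj => h j ✓]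

theorem commute_sg {g : E} : ∀ k, (∀ j, j + 1 < k → Commute g (ph P t j)) → Commute g (sg P t ω k)
  | 0, _ => Commute.one_right g
  | k + 1, h => by
    rw [sg]
    split_ifs
    · exact (commute_asc k fun j hj => h j ✓).mul_right (commute_sg k fun j hj => h j ✓)
    · exact commute_sg k fun j hj => h j ✓

theorem sg_sw (h : AK P n t) (hj : j + 1 < n) (h1 : ω j = false)
    (h2 : ω (j + 1) = true) (hk : j + 2 ≤ k) :
    sg P t (sw ω j) k * ph P t j = sg P t ω k := by
  induction k, hk using Nat.le_induction with
  | base =>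
    have hc : Commute (ph P t j) (sg P t ω j) :=
      commute_sg j fun i hi => (commute_ph_ph h hj ✓).symm
    rw [sg_true h2, sg_false h1, cnt, if_neg (by simp [h1]), add_zero,
      asc_succ (cnt_le ω j), sg_false (by rw [sw_right, h1]), sg_true (by rw [sw_left, h2]),
      cnt_sw_le ω le_rfl, sg_congr (ω' := ω) j fun i hi => sw_of_ne ω ✓ ✓,
      mul_assoc, ← hc.eq, mul_assoc]
  | succ k hk ih =>
    rw [sg, sg, sw_of_ne ω ✓ ✓, cnt_sw_ge ω j k hk]
    split_ifs
    · rw [mul_assoc, ih]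
    · exact ih

theorem sg_st (s : ℕ) : ∀ k, sg P t (st s) k = 1
  | 0 => rfl
  | k + 1 => by
    by_cases h : k < s
    · rw [sg_true (by simp [st, h]), sg_st s k, cnt_st, min_eq_right h.le, asc_self, mul_one]
    · rw [sg_false (by simp [st]; omega), sg_st s k]
end

/-- The word obtained by sorting the first `k` letters. -/
def srt (ω : ℕ → Bool) (k j : ℕ) : Bool := if j < k then decide (j < cnt ω k) else ω j

section

theorem srt_false (h : ω k = false) : srt ω (k + 1) = srt ω k := by
  have hc := cnt_le ω k
  funext j
  simp only [srt, cnt, h, Bool.false_eq_true, if_false, add_zero]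
  by_cases h1 : j < k
  · rw [if_pos ✓, if_pos h1]
  · by_cases h2 : j = k
    · subst h2
      rw [if_pos ✓, if_neg ✓, h]
      simpa using hc
    · rw [if_neg ✓, if_neg h1]

theorem Mv_srt (h : ω k = true) : Mv ℓ (cnt ω k) k (srt ω k) (srt ω (k + 1)) := by
  have hc := cnt_le ω k
  have h0 : cnt ω (k + 1) = cnt ω k + 1 := by rw [cnt, if_pos h]
  refine ⟨?_, fun j h1 h2 => ?_, ?_, fun j h1 h2 => ?_, fun j hj h1 => ?_⟩
  · rw [srt, if_neg ✓, h]
  · rw [srt, if_pos h2]; simpa using h1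
  · rw [srt, if_pos ✓, h0]; simp
  · rw [srt, if_pos ✓, h0]; simp; omega
  · rw [srt, srt, h0]
    by_cases h2 : j < k
    · rw [if_pos h2, if_pos ✓]; exact decide_eq_decide.2 ✓
    · rw [if_neg h2, if_neg ✓]

theorem ArcM.sg_bij (h : ArcM P ℓ e t) (ω : ℕ → Bool) : ∀ k ≤ ℓ, ∃ τ : End F V,
    (∀ v ∈ Wt P ℓ t ℓ ω, sg P t ω k v ∈ Wt P ℓ t ℓ (srt ω k) ∧ τ (sg P t ω k v) = v) ∧
    ∀ u ∈ Wt P ℓ t ℓ (srt ω k), τ u ∈ Wt P ℓ t ℓ ω ∧ sg P t ω k (τ u) = u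
  | 0, _ => by
    have h1 : srt ω 0 = ω := by funext j; simp [srt]
    exact ⟨1, by simp [sg, h1], by simp [sg, h1]⟩
  | k + 1, hk => by
    obtain ⟨τ, h1, h2⟩ := h.sg_bij ω k ✓
    cases hω : ω k
    · rw [sg_false hω, srt_false hω]
      exact ⟨τ, h1, h2⟩
    · obtain ⟨a1, a2, a3⟩ := h.asc_desc k (cnt_le ω k) ✓ _ _ (Mv_srt hω)
      rw [sg_true hω]
      set ρ := rhs P ℓ (cnt ω k) k (srt ω k)
      refine ⟨ρ⁻¹ • (τ * desc P t (cnt ω k) k), fun v hv => ?_, fun u hu => ?_⟩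
      · have b1 := h1 v hv
        have b2 := a2 _ b1.1
        refine ⟨b2.1, ?_⟩
        simp only [smul_apply, mul_apply]
        rw [b2.2, map_smul, b1.2, inv_smul_smul₀ a1]
      · have b2 := a3 u hu
        have b1 := h2 _ b2.1
        refine ⟨smul_mem _ _ b1.1, ?_⟩
        simp only [smul_apply, mul_apply, map_smul]
        rw [b1.2, b2.2, inv_smul_smul₀ a1]

theorem Wt_srt (ω : ℕ → Bool) : Wt P ℓ t ℓ (srt ω ℓ) = Wt P ℓ t ℓ (st (cnt ω ℓ)) :=
  Wt_congr fun j hj => by rw [srt, if_pos hj, st]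

theorem ArcM.xw_ne_xo (h : ArcM P ℓ e t) (ω : ℕ → Bool) (hk : k < ℓ) :
    xw P ℓ ω k - xo P ℓ ω k ≠ 0 := by
  have hc := cnt_le ω k
  rw [sub_ne_zero, xw, xo]
  split_ifs
  · exact h.g_inj ✓ ✓ ✓
  · exact h.g_inj ✓ ✓ ✓

theorem ArcM.proj (h : ArcM P ℓ e t) (ω : ℕ → Bool) : ∀ k ≤ ℓ, ∃ p : End F V,
    (∀ v ∈ Wt P ℓ t ℓ ω, p v = v) ∧
    ∀ ω', (∃ j < k, ω' j ≠ ω j) → ∀ v ∈ Wt P ℓ t ℓ ω', p v = 0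
  | 0, _ => ⟨1, fun _ _ => rfl, fun _ ⟨_, hj, _⟩ => absurd hj (Nat.not_lt_zero _)⟩
  | k + 1, hk => by
    obtain ⟨p, h1, h2⟩ := h.proj ω k ✓
    have hne := h.xw_ne_xo ω (k := k) ✓
    refine ⟨(xw P ℓ ω k - xo P ℓ ω k)⁻¹ • (p * (X P t k - algebraMap F _ (xo P ℓ ω k))),
      fun v hv => ?_, fun ω' hω' v hv => ?_⟩
    · simp only [smul_apply, mul_apply, sub_apply,
        algebraMap_end_apply, hv k ✓, ← sub_smul, map_smul, h1 v hv]
      rw [inv_smul_smul₀ hne]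
    · simp only [smul_apply, mul_apply, sub_apply,
        algebraMap_end_apply, hv k ✓, ← sub_smul, map_smul]
      by_cases hk' : ∃ j < k, ω' j ≠ ω j
      · rw [h2 ω' hk' v hv, smul_zero, smul_zero]
      · push Not at hk'
        obtain ⟨j, hj, hne'⟩ := hω'
        have hjk : j = k := by
          by_contra hh
          exact hne' (hk' j ✓)
        subst hjk
        have : xw P ℓ ω' j = xo P ℓ ω j := by
          rw [xw, xo, cnt_congr j hk']
          cases h3 : ω' j <;> cases h4 : ω j <;> simp_all
        rw [this, sub_self, zero_smul, smul_zero]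

/-- Extension of a finite word. -/
def wext (ℓ : ℕ) (w : Fin ℓ → Bool) (j : ℕ) : Bool := if h : j < ℓ then w ⟨j, h⟩ else false

variable {V' : Type} [AddCommGroup V'] [Module F V'] {t' : ℕ → End F V'}

theorem exists_lift (h : ArcM P ℓ e t) (h' : ArcM P ℓ e t') (f : ℕ → V →ₗ[F] V')
    (hf : ∀ s ≤ ℓ, ∀ v ∈ Wt P ℓ t ℓ (st s), f s v ∈ Wt P ℓ t' ℓ (st s)) :
    ∃ Φ : V →ₗ[F] V', ∀ ω, ∀ v ∈ Wt P ℓ t ℓ ω, Φ v ∈ Wt P ℓ t' ℓ ω ∧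
      sg P t' ω ℓ (Φ v) = f (cnt ω ℓ) (sg P t ω ℓ v) := by
  classical
  choose τ hτ using fun ω => h'.sg_bij ω ℓ le_rfl
  choose p hp using fun ω => h.proj ω ℓ le_rfl
  refine ⟨∑ w : Fin ℓ → Bool, τ (wext ℓ w) ∘ₗ f (cnt (wext ℓ w) ℓ) ∘ₗ sg P t (wext ℓ w) ℓ ∘ₗ
    p (wext ℓ w), fun ω v hv => ?_⟩
  set w₀ : Fin ℓ → Bool := fun i => ω i with hw₀
  have he : ∀ j < ℓ, wext ℓ w₀ j = ω j := fun j hj => by simp [wext, hj, hw₀]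
  rw [LinearMap.sum_apply, Finset.sum_eq_single w₀]
  · have hv0 : v ∈ Wt P ℓ t ℓ (wext ℓ w₀) := by rwa [Wt_congr he]
    obtain ⟨σ, hσ, _⟩ := h.sg_bij (wext ℓ w₀) ℓ le_rfl
    have h1 := (hσ v hv0).1
    rw [Wt_srt] at h1
    have h2 := hf _ (cnt_le _ _) _ h1
    rw [← Wt_srt] at h2
    have h3 := (hτ (wext ℓ w₀)).2 _ h2
    simp only [comp_apply]
    rw [(hp _).1 v hv0]
    rw [Wt_congr he] at h3
    refine ⟨h3.1, ?_⟩
    rw [← sg_congr (t := t') ℓ he, h3.2, cnt_congr ℓ he, sg_congr ℓ he]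
  · intro w _ hw
    have : ∃ j < ℓ, ω j ≠ wext ℓ w j := by
      by_contra hc
      push Not at hc
      apply hw
      funext i
      rw [hw₀]
      simp [hc i i.2, wext]
    simp only [comp_apply]
    rw [(hp (wext ℓ w)).2 ω this v hv, map_zero, map_zero, map_zero]
  · simp

theorem ArcM.sg_inj (h : ArcM P ℓ e t) {w : V} (hv : v ∈ Wt P ℓ t ℓ ω)
    (hw : w ∈ Wt P ℓ t ℓ ω) (hvw : sg P t ω ℓ v = sg P t ω ℓ w) : v = w := by
  obtain ⟨τ, h1, _⟩ := h.sg_bij ω ℓ le_rfl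
  rw [← (h1 v hv).2, hvw, (h1 w hw).2]

theorem ArcM.sg_mem (h : ArcM P ℓ e t) (hv : v ∈ Wt P ℓ t ℓ ω) :
    sg P t ω ℓ v ∈ Wt P ℓ t ℓ (st (cnt ω ℓ)) := by
  obtain ⟨τ, h1, _⟩ := h.sg_bij ω ℓ le_rfl
  rw [← Wt_srt]
  exact (h1 v hv).1

theorem lift_ph (h : ArcM P ℓ e t) (h' : ArcM P ℓ e t') {f : ℕ → V →ₗ[F] V'} {Φ : V →ₗ[F] V'}
    (hΦ : ∀ ω, ∀ v ∈ Wt P ℓ t ℓ ω, Φ v ∈ Wt P ℓ t' ℓ ω ∧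
      sg P t' ω ℓ (Φ v) = f (cnt ω ℓ) (sg P t ω ℓ v)) (hj : j + 1 < ℓ)
    (hω : ω j ≠ ω (j + 1)) (hv : v ∈ Wt P ℓ t ℓ ω) :
    Φ (ph P t j v) = ph P t' j (Φ v) := by
  have h1 := ph_mem h.ak ✓ hj hω hv
  have h2 := hΦ _ _ h1
  have h3 := hΦ _ _ hv
  have h4 := ph_mem h'.ak ✓ hj hω h3.1
  refine h'.sg_inj h2.1 h4 ?_
  rw [h2.2, cnt_sw_ge ω j ℓ ✓]
  cases h5 : ω j
  · have h6 : ω (j + 1) = true := by cases h6 : ω (j + 1) <;> simp_all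
    have e1 := sg_sw h.ak ✓ h5 h6 (k := ℓ) ✓
    have e2 := sg_sw h'.ak ✓ h5 h6 (k := ℓ) ✓
    rw [← mul_apply, ← mul_apply, e1, e2, h3.2]
  · have h6 : ω (j + 1) = false := by cases h6 : ω (j + 1) <;> simp_all
    have e1 := sg_sw h.ak (ω := sw ω j) (j := j) ✓ (by rw [sw_left, h6])
      (by rw [sw_right, h5]) (k := ℓ) ✓
    have e2 := sg_sw h'.ak (ω := sw ω j) (j := j) ✓ (by rw [sw_left, h6])
      (by rw [sw_right, h5]) (k := ℓ) ✓
    rw [sw_sw] at e1 e2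
    rw [← e1, ← e2]
    simp only [mul_apply]
    rw [ph_ph h.ak ✓ ✓ hv, ph_ph h'.ak ✓ ✓ h3.1, map_smul, map_smul, map_smul, h3.2]

variable [Infinite F] [FiniteDimensional F V] [FiniteDimensional F V']

theorem lift_yop (h : ArcM P ℓ e t) (h' : ArcM P ℓ e t') {f : ℕ → V →ₗ[F] V'} {Φ : V →ₗ[F] V'}
    (hf : ZHom h.zig h'.zig f)
    (hΦ : ∀ ω, ∀ v ∈ Wt P ℓ t ℓ ω, Φ v ∈ Wt P ℓ t' ℓ ω ∧
      sg P t' ω ℓ (Φ v) = f (cnt ω ℓ) (sg P t ω ℓ v))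
    (hv : v ∈ Wt P ℓ t ℓ ω) :
    Φ (yop P ℓ t (cnt ω ℓ) v) = yop P ℓ t' (cnt ω ℓ) (Φ v) := by
  have h2 := hΦ _ _ (h.yop_mem (cnt ω ℓ) hv)
  have h3 := hΦ _ _ hv
  refine h'.sg_inj h2.1 (h'.yop_mem _ h3.1) ?_
  have c1 : Commute (yop P ℓ t (cnt ω ℓ)) (sg P t ω ℓ) :=
    commute_sg ℓ fun j hj => h.commute_yop _ hj
  have c2 : Commute (yop P ℓ t' (cnt ω ℓ)) (sg P t' ω ℓ) :=
    commute_sg ℓ fun j hj => h'.commute_yop _ hj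
  rw [h2.2, ← c1.app, ← c2.app, h3.2]
  refine hf.cy _ _ ?_
  show _ ∈ zV P ℓ t _
  rw [zV_of_le (cnt_le _ _)]
  exact h.sg_mem hv

theorem sg_last (h : ArcM P (m + 1) e t) (h1 : ω m = false) :
    sg P t (fl ω m) (m + 1) * ph P t m = asc P t (cnt ω m) (m + 1) * sg P t ω (m + 1) := by
  have hc : Commute (ph P t m) (sg P t ω m) :=
    commute_sg m fun i hi => (commute_ph_ph h.ak ✓ ✓).symm
  rw [sg_true (by rw [fl_self, h1]; rfl), sg_false h1, asc_succ (cnt_le ω m), cnt_fl,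
    sg_congr (ω' := ω) m fun i hi => fl_of_ne ✓, mul_assoc, ← hc.eq, mul_assoc]

theorem sg_last' (h : ArcM P (m + 1) e t) (h1 : ω m = true) (hv : v ∈ Wt P (m + 1) t (m + 1) ω) :
    desc P t (cnt ω m) (m + 1) (sg P t ω (m + 1) v) =
      rhs P (m + 1) (cnt ω m) m (srt ω m) • sg P t (fl ω m) (m + 1) (ph P t m v) := by
  have hc : Commute (ph P t m) (sg P t ω m) :=
    commute_sg m fun i hi => (commute_ph_ph h.ak ✓ ✓).symm
  obtain ⟨τ, b1, _⟩ := h.sg_bij ω m ✓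
  have a := ((h.asc_desc m (cnt_le ω m) ✓ _ _ (Mv_srt h1)).2.1 _ (b1 v hv).1).2
  have hc' := congrArg (· v) hc.eq
  simp only [mul_apply] at hc'
  rw [sg_true h1, desc_succ (cnt_le ω m), sg_false (by rw [fl_self, h1]; rfl),
    sg_congr (ω' := ω) m fun i hi => fl_of_ne ✓]
  simp only [mul_apply]
  rw [a, map_smul, hc']

theorem lift_last (h : ArcM P (m + 1) e t) (h' : ArcM P (m + 1) e t')
    {f : ℕ → V →ₗ[F] V'} {Φ : V →ₗ[F] V'} (hf : ZHom h.zig h'.zig f)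
    (hΦ : ∀ ω, ∀ v ∈ Wt P (m + 1) t (m + 1) ω, Φ v ∈ Wt P (m + 1) t' (m + 1) ω ∧
      sg P t' ω (m + 1) (Φ v) = f (cnt ω (m + 1)) (sg P t ω (m + 1) v))
    (hv : v ∈ Wt P (m + 1) t (m + 1) ω) :
    Φ (ph P t m v) = ph P t' m (Φ v) := by
  have h1 := (h.ph_yop hv).2
  have h2 := hΦ _ _ h1
  have h3 := hΦ _ _ hv
  have h4 := (h'.ph_yop h3.1).2
  have hcle := cnt_le ω m
  have hsm := h.sg_mem hv
  refine h'.sg_inj h2.1 h4 ?_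
  rw [h2.2, cnt, cnt_fl, fl_self]
  cases h5 : ω m
  · have e1 := app_eq (sg_last h h5) v
    have e2 := app_eq (sg_last h' h5) (Φ v)
    simp only [mul_apply] at e1 e2
    rw [e1, e2, h3.2, cnt, h5]
    simp only [Bool.not_false, if_true, Bool.false_eq_true, if_false, add_zero]
    have hsm' : sg P t ω (m + 1) v ∈ zV P (m + 1) t (cnt ω m) := by
      rw [zV_of_le ✓]
      rwa [cnt, h5, if_neg (by simp)] at hsm
    have := hf.ca (cnt ω m) _ hsm'
    have ea : h.zig.a (cnt ω m) = asc P t (cnt ω m) (m + 1) := if_pos ✓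
    have ea' : h'.zig.a (cnt ω m) = asc P t' (cnt ω m) (m + 1) := if_pos ✓
    rw [ea, ea'] at this
    exact this
  · have e1 := sg_last' h h5 hv
    have e2 := sg_last' h' h5 h3.1
    have hρ := (h.asc_desc m hcle ✓ _ _ (Mv_srt h5)).1
    refine smul_right_injective V' hρ ?_
    simp only [Bool.not_true, Bool.false_eq_true, if_false, add_zero]
    rw [← map_smul, ← e1, ← e2, h3.2, cnt, h5, if_pos rfl]
    have hsm' : sg P t ω (m + 1) v ∈ zV P (m + 1) t (cnt ω m + 1) := by
      rw [zV_of_le ✓]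
      rwa [cnt, h5, if_pos rfl] at hsm
    have := hf.cb (cnt ω m) _ hsm'
    have ea : h.zig.b (cnt ω m) = desc P t (cnt ω m) (m + 1) := if_pos ✓
    have ea' : h'.zig.b (cnt ω m) = desc P t' (cnt ω m) (m + 1) := if_pos ✓
    rw [ea, ea'] at this
    exact this

theorem ArcM.t_last (h : ArcM P (m + 1) e t)
    (hv : v ∈ Wt P (m + 1) t (m + 1) ω) : ∃ w ∈ Wt P (m + 1) t (m + 1) ω,
      v = X P t (m + 1) w - X P t m w := by
  set s := cnt ω (m + 1) with hs
  have hyy : yop P (m + 1) t s (yop P (m + 1) t s v) = 0 := h.yop_yop hv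
  have hYv := hv m ✓
  have hYy := h.yop_mem s hv m ✓
  have hcle := cnt_le ω m
  have hδ : P.g (s + 1) - xw P (m + 1) ω m ≠ 0 := by
    rw [sub_ne_zero, xw, hs, cnt]
    split_ifs
    · exact h.g_inj ✓ ✓ ✓
    · exact h.g_inj ✓ ✓ ✓
  generalize xw P (m + 1) ω m = x at hδ hYv hYy
  obtain ⟨δ, hδ'⟩ : ∃ δ, δ = P.g (s + 1) - x := ⟨_, rfl⟩
  rw [← hδ'] at hδ
  have hg : P.g (s + 1) = δ + x := by rw [hδ']; ring
  refine ⟨δ⁻¹ • v - (δ⁻¹ * δ⁻¹) • yop P (m + 1) t s v, ?_, ?_⟩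
  · exact Submodule.sub_mem _ (smul_mem _ _ hv) (smul_mem _ _ (h.yop_mem s hv))
  · simp only [X_eq_yop (ℓ := m + 1) s, map_sub, map_smul, hyy, hYv, hYy, hg]
    have h1 : δ * δ⁻¹ = 1 := mul_inv_cancel₀ hδ
    have h2 : v = (δ * δ⁻¹) • v := by rw [h1, one_smul]
    have h3 : δ⁻¹ = δ * δ⁻¹ * δ⁻¹ := by rw [h1, one_mul]
    have h4 : δ⁻¹ • yop P (m + 1) t s v = (δ * δ⁻¹ * δ⁻¹) • yop P (m + 1) t s v := by rw [← h3]
    linear_combination (norm := module) h2 + -h4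

/-- Every homomorphism of zigzag representations lifts to the arc modules. -/
theorem arc_lift (h : ArcM P ℓ e t) (h' : ArcM P ℓ e t') {f : ℕ → V →ₗ[F] V'}
    (hf : ZHom h.zig h'.zig f) : ∃ Φ : V →ₗ[F] V', IsHom (ℓ + 1) t t' Φ ∧
      ∀ s ≤ ℓ, ∀ v ∈ Wt P ℓ t ℓ (st s), Φ v = f s v := by
  obtain ⟨Φ, hΦ⟩ := exists_lift h h' f fun s hs v hv => by
    have := hf.mem s v (show v ∈ zV P ℓ t s by rwa [zV_of_le hs])
    have h2 : f s v ∈ zV P ℓ t' s := this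
    rwa [zV_of_le hs] at h2
  refine ⟨Φ, fun j hj v => ?_, fun s hs v hv => ?_⟩
  · have hle : ⨆ ω, Wt P ℓ t ℓ ω ≤ ker (Φ ∘ₗ t j - t' j ∘ₗ Φ) := by
      refine iSup_le fun ω v hv => ?_
      rw [mem_ker, sub_apply, sub_eq_zero, comp_apply, comp_apply]
      have h3 := hΦ _ _ hv
      have hlast : ∀ m, ℓ = m + 1 → Φ (t (m + 1) v) = t' (m + 1) (Φ v) := by
        rintro m rfl
        obtain ⟨w, hw, rfl⟩ := h.t_last hv
        have hw' := hΦ _ _ hw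
        have e1 := app_eq (ph_eq h.ak (k := m) ✓) w
        have e2 := app_eq (ph_eq h'.ak (k := m) ✓) (Φ w)
        simp only [mul_apply, sub_apply, add_apply, smul_apply] at e1 e2
        have eX : Φ (X P t (m + 1) w) = X P t' (m + 1) (Φ w) := by
          rw [X_eq_yop (cnt ω (m + 1)), X_eq_yop (cnt ω (m + 1)), map_add, map_smul,
            lift_yop h h' hf hΦ hw]
        rw [e1, map_add, map_smul, eX, lift_last h h' hf hΦ hw, ← e2]
        congr 1
        rw [map_sub, eX, hw m ✓, hw'.1 m ✓, map_smul]
      rcases j with _ | j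
      · rcases Nat.eq_zero_or_pos ℓ with rfl | hl
        · have := lift_yop h h' hf hΦ hv
          simp only [yop, sub_apply, algebraMap_end_apply, map_sub, map_smul, X] at this
          exact sub_left_injective this
        · have e1 := hv 0 hl
          have e2 := h3.1 0 hl
          rw [X] at e1 e2
          rw [e1, e2, map_smul]
      · by_cases hjl : j + 1 = ℓ
        · rw [hlast j hjl.symm]
        · have hv2 : v ∈ Wt P ℓ t (j + 2) ω := Wt_mono ✓ hv
          have hv2' : Φ v ∈ Wt P ℓ t' (j + 2) ω := Wt_mono ✓ h3.1
          by_cases hωj : ω j = ω (j + 1)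
          · cases h5 : ω j
            · rw [h.t_RR ✓ (h.quad j ✓) h5 (hωj ▸ h5) hv2,
                h'.t_RR ✓ (h'.quad j ✓) h5 (hωj ▸ h5) hv2', map_smul]
            · rw [h.t_LL ✓ (h.quad j ✓) h5 (hωj ▸ h5) hv2,
                h'.t_LL ✓ (h'.quad j ✓) h5 (hωj ▸ h5) hv2', map_smul]
          · have e1 := t_apply h.ak ✓ (hv j ✓) (hv (j + 1) ✓)
            have e2 := t_apply h'.ak ✓ (h3.1 j ✓) (h3.1 (j + 1) ✓)
            refine smul_right_injective V' (h.xw_ne ✓ hωj) ?_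
            simp only
            rw [← map_smul, e1, e2, map_add, map_smul, lift_ph h h' hΦ ✓ hωj hv]
    rw [h.iSup_Wt ℓ le_rfl] at hle
    have := hle (mem_top (x := v))
    rwa [mem_ker, sub_apply, sub_eq_zero] at this
  · have := (hΦ _ v hv).2
    rwa [sg_st, sg_st, cnt_st, min_eq_left hs] at this

theorem IsHom.X_comm {Φ : V →ₗ[F] V'} (hΦ : IsHom n t t' Φ) : ∀ k < n, ∀ v,
    Φ (X P t k v) = X P t' k (Φ v)
  | 0, h, v => hΦ 0 h v
  | k + 1, h, v => by
    simp only [X, smul_apply, mul_apply, map_smul]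
    rw [hΦ _ h, hΦ.X_comm k ✓, hΦ _ h]

theorem IsHom.ph_comm {Φ : V →ₗ[F] V'} (hΦ : IsHom n t t' Φ) (hk : k + 1 < n)
    (v : V) : Φ (ph P t k v) = ph P t' k (Φ v) := by
  simp only [ph, sub_apply, mul_apply, map_sub]
  rw [hΦ.X_comm k ✓, hΦ _ hk, hΦ _ hk, hΦ.X_comm k ✓]

theorem IsHom.sg_comm {Φ : V →ₗ[F] V'} (hΦ : IsHom n t t' Φ) (ω : ℕ → Bool) :
    ∀ k ≤ n, ∀ v, Φ (sg P t ω k v) = sg P t' ω k (Φ v) := by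
  have hasc : ∀ s k, k < n → ∀ v, Φ (asc P t s k v) = asc P t' s k (Φ v) := by
    intro s k
    induction k with
    | zero => intro _ v; rfl
    | succ k ih =>
      intro hk v
      rw [asc, asc]
      split_ifs
      · simp only [mul_apply]
        rw [ih ✓, hΦ.ph_comm hk]
      · rfl
  intro k
  induction k with
  | zero => intro _ v; rfl
  | succ k ih =>
    intro hk v
    rw [sg, sg]
    split_ifs
    · simp only [mul_apply]
      rw [hasc _ _ ✓, ih ✓]
    · exact ih ✓ v

theorem IsHom.Wt_mem {Φ : V →ₗ[F] V'} (hΦ : IsHom n t t' Φ) (hk : k ≤ n)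
    (hv : v ∈ Wt P ℓ t k ω) : Φ v ∈ Wt P ℓ t' k ω := fun j hj => by
  rw [← hΦ.X_comm j ✓, hv j hj, map_smul]

/-- A homomorphism of arc modules is determined by its restriction to the sorted weight
spaces. -/
theorem arc_unique (h : ArcM P ℓ e t) (h' : ArcM P ℓ e t') {Φ Ψ : V →ₗ[F] V'}
    (hΦ : IsHom (ℓ + 1) t t' Φ) (hΨ : IsHom (ℓ + 1) t t' Ψ)
    (he : ∀ s ≤ ℓ, ∀ v ∈ Wt P ℓ t ℓ (st s), Φ v = Ψ v) : Φ = Ψ := by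
  refine ext fun v => ?_
  have hle : ⨆ ω, Wt P ℓ t ℓ ω ≤ ker (Φ - Ψ) := by
    refine iSup_le fun ω v hv => ?_
    rw [mem_ker, sub_apply, sub_eq_zero]
    refine h'.sg_inj (hΦ.Wt_mem ✓ hv) (hΨ.Wt_mem ✓ hv) ?_
    rw [← hΦ.sg_comm ω ℓ ✓, ← hΨ.sg_comm ω ℓ ✓]
    exact he _ (cnt_le _ _) _ (h.sg_mem hv)
  rw [h.iSup_Wt ℓ le_rfl] at hle
  have := hle (mem_top (x := v))
  rwa [mem_ker, sub_apply, sub_eq_zero] at this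
end
end

/-! ### Finiteness of the set of arc modules, and the finite direction -/

section
set_option linter.unusedSectionVars false

section
variable [Infinite F]

theorem ArcM.indec [FiniteDimensional F V]
    (h : ArcM P ℓ e t) (hi : Indec (ℓ + 1) t) : ZIndec h.zig := by
  intro f hf hid
  obtain ⟨Φ, h1, h2⟩ := arc_lift h h hf
  have hmem : ∀ s ≤ ℓ, ∀ v ∈ Wt P ℓ t ℓ (st s), f s v ∈ Wt P ℓ t ℓ (st s) := fun s hs v hv => by
    have := hf.mem s v (show v ∈ zV P ℓ t s by rwa [zV_of_le hs])
    have h2 : f s v ∈ zV P ℓ t s := this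
    rwa [zV_of_le hs] at h2
  have hΦ : Φ * Φ = Φ := arc_unique h h (h1.mul h1) h1 fun s hs v hv => by
    rw [mul_apply, h2 s hs v hv, h2 s hs _ (hmem s hs v hv)]
    exact hid s v (show v ∈ zV P ℓ t s by rwa [zV_of_le hs])
  have key : ∀ s, ∀ v ∈ h.zig.V s, Φ v = f s v := fun s v hv => by
    by_cases hs : s ≤ ℓ
    · refine h2 s hs v ?_
      have : v ∈ zV P ℓ t s := hv
      rwa [zV_of_le hs] at this
    · have : v = 0 := by
        rw [h.zig.top s ✓] at hv
        simpa using hv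
      rw [this, map_zero, map_zero]
  rcases hi.2 Φ h1 hΦ with h3 | h3
  · exact Or.inl fun s v hv => by rw [← key s v hv, h3, LinearMap.zero_apply]
  · exact Or.inr fun s v hv => by rw [← key s v hv, h3, one_apply]

theorem ArcM.iso {V V' : Type} [AddCommGroup V] [Module F V] [FiniteDimensional F V]
    [AddCommGroup V'] [Module F V'] [FiniteDimensional F V']
    {t : ℕ → End F V} {t' : ℕ → End F V'} (h : ArcM P ℓ e t) (h' : ArcM P ℓ e t')
    (hz : ZIso h.zig h'.zig) : Iso (ℓ + 1) t t' := by
  obtain ⟨f, k, hf, hk, hkf, hfk⟩ := hz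
  obtain ⟨Φ, a1, a2⟩ := arc_lift h h' hf
  obtain ⟨Ψ, b1, b2⟩ := arc_lift h' h hk
  have e1 : Ψ ∘ₗ Φ = LinearMap.id := arc_unique h h (b1.comp a1) IsHom.id fun s hs v hv => by
    have hv' : v ∈ zV P ℓ t s := by rwa [zV_of_le hs]
    have := hf.mem s v hv'
    have h2 : f s v ∈ zV P ℓ t' s := this
    rw [zV_of_le hs] at h2
    rw [comp_apply, a2 s hs v hv, b2 s hs _ h2]
    exact hkf s v hv'
  have e2 : Φ ∘ₗ Ψ = LinearMap.id := arc_unique h' h' (a1.comp b1) IsHom.id fun s hs v hv => by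
    have hv' : v ∈ zV P ℓ t' s := by rwa [zV_of_le hs]
    have := hk.mem s v hv'
    have h2 : k s v ∈ zV P ℓ t s := this
    rw [zV_of_le hs] at h2
    rw [comp_apply, b2 s hs v hv, a2 s hs _ h2]
    exact hfk s v hv'
  exact ⟨LinearEquiv.ofLinearMap Φ Ψ e2 e1, a1⟩

/-- The data on which a zigzag representation without idempotents depends. -/
def inv {M : Type} [AddCommGroup M] [Module F M] {u w : ℕ → F} (Z : Zig F M ℓ u w)
    (s : Fin (ℓ + 1)) : Prop × Prop × Prop × Prop :=
  (∀ v ∈ Z.V s, v = 0, ∀ v ∈ Z.V s, Z.a s v = 0, ∀ v ∈ Z.V (s + 1), Z.b s v = 0,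
    ∀ v ∈ Z.V s, Z.y s v = 0)

theorem sameInv_of_inv {M M' : Type} [AddCommGroup M] [Module F M] [AddCommGroup M'] [Module F M']
    {u w : ℕ → F} {Z : Zig F M ℓ u w} {Z' : Zig F M' ℓ u w} (h : inv Z = inv Z') :
    SameInv Z Z' := by
  have h1 : ∀ (s : ℕ) (hs : s ≤ ℓ), inv Z ⟨s, by omega⟩ = inv Z' ⟨s, by omega⟩ :=
    fun s hs => congrFun h (⟨s, by omega⟩ : Fin (ℓ + 1))
  simp only [inv, Prod.mk.injEq, eq_iff_iff] at h1
  have triv : ∀ {M : Type} [AddCommGroup M] [Module F M] (Z : Zig F M ℓ u w) (s : ℕ), ℓ < s →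
      ∀ v ∈ Z.V s, v = 0 := fun Z s hs v hv => by
    rw [Z.top s hs] at hv
    simpa using hv
  refine ⟨fun s => ?_, fun s => ?_, fun s => ?_, fun s => ?_⟩ <;> by_cases hs : s ≤ ℓ
  · exact (h1 s hs).1
  · exact ⟨fun _ => triv Z' s ✓, fun _ => triv Z s ✓⟩
  · exact (h1 s hs).2.1
  · exact ⟨fun _ v hv => by rw [triv Z' s ✓ v hv, map_zero],
      fun _ v hv => by rw [triv Z s ✓ v hv, map_zero]⟩
  · exact (h1 s hs).2.2.1
  · exact ⟨fun _ v hv => by rw [triv Z' (s + 1) ✓ v hv, map_zero],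
      fun _ v hv => by rw [triv Z (s + 1) ✓ v hv, map_zero]⟩
  · exact (h1 s hs).2.2.2
  · exact ⟨fun _ v hv => by rw [triv Z' s ✓ v hv, map_zero],
      fun _ v hv => by rw [triv Z s ✓ v hv, map_zero]⟩

theorem arc_finite (P : Par F) (ℓ e : ℕ) : ∃ (I : Type) (_ : Fintype I) (Y : I → Rep P (ℓ + 1)),
    ∀ M : Rep P (ℓ + 1), Indec (ℓ + 1) M.t → ArcM P ℓ e M.t → ∃ i, Iso (ℓ + 1) M.t (Y i).t := by
  classical
  let I : Type := {κ : Fin (ℓ + 1) → Prop × Prop × Prop × Prop //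
    ∃ M : Rep P (ℓ + 1), Indec (ℓ + 1) M.t ∧ ∃ h : ArcM P ℓ e M.t, inv h.zig = κ}
  have : Finite I := Subtype.finite
  refine ⟨I, Fintype.ofFinite I, fun κ => κ.2.choose, fun M hM hA => ?_⟩
  let κ : I := ⟨inv hA.zig, M, hM, hA, rfl⟩
  refine ⟨κ, ?_⟩
  obtain ⟨h1, h2, h3⟩ := κ.2.choose_spec
  exact hA.iso h2 (zig_iso (hA.indec hM) (h2.indec h1) (sameInv_of_inv h3.symm))
end

section

/-- The same parameters with `a` and `b` interchanged. -/
def Par.swap (P : Par F) : Par F where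
  q := P.q
  a := P.b
  b := P.a
  qi := P.qi
  ci := P.ci
  hq := P.hq
  hc := by rw [mul_comm P.b]; exact P.hc

variable {E : Type} [Ring E] [Algebra F E] {t : ℕ → E}

theorem AK.swap (h : AK P n t) : AK P.swap n t where
  cyc h0 := by rw [h.cyc h0, add_comm P.a, mul_comm P.a]; rfl
  br0 := h.br0
  quad := h.quad
  braid := h.braid
  comm := h.comm

theorem X_swap : ∀ k, X P.swap t k = X P t k
  | 0 => rfl
  | k + 1 => by rw [X, X, X_swap k]; rfl

/-- A representation, regarded as one for the interchanged parameters. -/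
def Rep.swap (M : Rep P n) : Rep P.swap n where
  V := M.V
  t := M.t
  ak := M.ak.swap

theorem FT.swap (h : FT P n) : FT P.swap n := by
  obtain ⟨I, hI, Y, hY⟩ := h
  exact ⟨I, hI, fun i => (Y i).swap, fun M hM => hY M.swap hM⟩
end

section
variable {P : Par R} {t : ℕ → E}

theorem commute_S (h : AK P n t) : ∀ m ≤ n, j < m → Commute (t j) (S P t m)
  | 0, _, hj => by omega
  | m + 1, hm, hj => by
    rcases lt_or_ge j m with hjm | hjm
    · exact (commute_S h m ✓ hjm).add_right (commute_X_low h m ✓ hjm)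
    · obtain rfl : j = m := ✓
      rcases j with _ | j
      · simp [S, X]
      · have h1 : Commute (t (j + 1)) (S P t j) :=
          commute_S_of _ j fun i hi => (commute_X_high h ✓ i ✓).symm
        have h2 : Commute (t (j + 1)) (X P t j + X P t (j + 1)) := by
          show t (j + 1) * (X P t j + X P t (j + 1)) = (X P t j + X P t (j + 1)) * t (j + 1)
          rw [mul_add, add_mul, X_mul_t h ✓, t_mul_X h ✓]
          abel
        rw [S, S, add_assoc]
        exact h1.add_right h2
end

section
variable [IsAlgClosed F]
  [FiniteDimensional F V]

/-- Commuting operators have joint eigenvectors in every nonzero stable subspace. -/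
theorem exists_joint {Y : ℕ → End F V}
    (hc : ∀ i < n, ∀ j < n, Commute (Y i) (Y j)) {U : Submodule F V} (hU : U ≠ ⊥)
    (hs : ∀ j < n, ∀ v ∈ U, Y j v ∈ U) : ∀ m ≤ n, ∃ U' : Submodule F V, U' ≤ U ∧ U' ≠ ⊥ ∧
      (∀ j < n, ∀ v ∈ U', Y j v ∈ U') ∧ ∃ x : ℕ → F, ∀ j < m, ∀ v ∈ U', Y j v = x j • v
  | 0, _ => ⟨U, le_rfl, hU, hs, fun _ => 0, by simp⟩
  | m + 1, hm => by
    obtain ⟨U', h1, h2, h3, x, hx⟩ := exists_joint hc hU hs m ✓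
    have : Nontrivial U' := (Submodule.nontrivial_iff_ne_bot).2 h2
    obtain ⟨μ, hμ⟩ := End.exists_eigenvalue ((Y m).restrict (h3 m ✓))
    obtain ⟨v, hv⟩ := hμ.exists_hasEigenvector
    have hv1 : Y m v = μ • (v : V) := congrArg Subtype.val hv.apply_eq_smul
    have hv2 : (v : V) ≠ 0 := fun h => hv.2 (Subtype.ext h)
    refine ⟨U' ⊓ ker (Y m - algebraMap F _ μ), inf_le_left.trans h1, ?_, ?_,
      Function.update x m μ, ?_⟩
    · intro hb
      exact hv2 ((mem_bot F).1 (hb ▸ ⟨v.2, by simp [hv1]⟩))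
    · intro j hj w hw
      refine ⟨h3 j hj w hw.1, ?_⟩
      have hw2 := hw.2
      have hcc := (hc m ✓ j hj).app w
      simp only [SetLike.mem_coe, mem_ker, sub_apply, algebraMap_end_apply, sub_eq_zero] at hw2 ⊢
      rw [hcc, hw2, map_smul]
    · intro j hj w hw
      rcases Nat.lt_succ_iff_lt_or_eq.1 hj with hj | rfl
      · rw [Function.update_of_ne ✓, hx j hj w hw.1]
      · have hw2 := hw.2
        simp only [SetLike.mem_coe, mem_ker, sub_apply, algebraMap_end_apply, sub_eq_zero] at hw2
        rw [Function.update_self, hw2]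

theorem exists_joint_X (h : AK P n t) {U : Submodule F V} (hU : U ≠ ⊥)
    (hs : ∀ j < n, ∀ v ∈ U, X P t j v ∈ U) : ∃ v ∈ U, v ≠ 0 ∧ ∃ x : ℕ → F, ∀ j < n,
      X P t j v = x j • v := by
  obtain ⟨U', h1, h2, -, x, hx⟩ :=
    exists_joint (fun i hi j hj => commute_XX h hi hj) hU hs n le_rfl
  obtain ⟨v, hv, hv0⟩ := Submodule.exists_mem_ne_zero_of_ne_bot h2
  exact ⟨v, h1 hv, hv0, x, fun j hj => hx j hj v hv⟩

/-- Every eigenvalue of a Jucys–Murphy element occurs on a joint eigenvector. -/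
theorem exists_joint_eig (h : AK P n t) (hk : k < n) {c : F} (hv : v ≠ 0)
    (hc : X P t k v = c • v) : ∃ w : V, w ≠ 0 ∧ ∃ x : ℕ → F, (∀ j < n, X P t j w = x j • w) ∧
      x k = c := by
  have hmem : ∀ w, w ∈ ker (X P t k - algebraMap F _ c) ↔ X P t k w = c • w := fun w => by
    rw [mem_ker, sub_apply, algebraMap_end_apply, sub_eq_zero]
  obtain ⟨w, h1, h2, x, h3⟩ := exists_joint_X h (U := ker (X P t k - algebraMap F _ c))
    (fun hb => hv ((mem_bot F).1 (hb ▸ (hmem v).2 hc)))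
    (fun j hj w hw => by
      rw [hmem] at hw ⊢
      have hcc := (commute_XX h hk hj).app w
      rw [hcc, hw, map_smul])
  refine ⟨w, h2, x, h3, ?_⟩
  have := (hmem w).1 h1
  rw [h3 k hk] at this
  exact smul_left_injective F h2 this

theorem joint_ne_zero (h : AK P n t) (hv : v ≠ 0) {x : ℕ → F}
    (hx : ∀ j < n, X P t j v = x j • v) : ∀ j < n, x j ≠ 0 := fun j hj h0 => by
  have h1 := hx j hj
  rw [h0, zero_smul] at h1
  obtain ⟨u, hu⟩ := isUnit_X h j hj
  have : (↑u⁻¹ * ↑u : End F V) v = v := by rw [Units.inv_mul]; rfl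
  rw [mul_apply, hu, h1, map_zero] at this
  exact hv this.symm

theorem ArcM.of_isArc (h : AK P (ℓ + 1) t) (hq : IsPrimitiveRoot P.q e)
    (he : ℓ + 2 ≤ e) (hb : P.b = P.a * P.q ^ ℓ)
    (harc : ∀ v : V, v ≠ 0 → ∀ x : ℕ → F, (∀ j < ℓ + 1, X P t j v = x j • v) →
      IsArc P.q P.a P.b ℓ x) : ArcM P ℓ e t := by
  have key : ∀ i, (i = 0 ∨ i = ℓ + 2) → ∀ k ≤ ℓ, ∀ v, X P t k v = P.g i • v → v = 0 := by
    intro i hi k hk v hv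
    by_contra hv0
    obtain ⟨w, hw, x, hx, hxk⟩ := exists_joint_eig h (by omega : k < ℓ + 1) hv0 hv
    have h3 := (harc w hw x hx).2.2 (P.g i) fun j hj hgj => by
      have e1 : P.q ^ i = P.q ^ (j + 1) := by
        have e2 : P.a * P.qi * P.q ^ i = P.a * P.qi * P.q ^ (j + 1) := by
          rw [show P.a * P.qi * P.q ^ i = P.g i from rfl, hgj, pow_succ]
          linear_combination (-P.a * P.q ^ j) * P.hq
        exact mul_left_cancel₀ (mul_ne_zero P.a_ne P.qi_ne) e2
      rcases hi with rfl | rfl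
      · rw [pow_zero] at e1
        exact hq.pow_ne_one_of_pos_of_lt ✓ ✓ e1.symm
      · have e3 : P.q ^ (ℓ + 1 - j) = 1 := by
          have : P.q ^ (ℓ + 2) = P.q ^ (ℓ + 1 - j) * P.q ^ (j + 1) := by
            rw [← pow_add]; congr 1; omega
          rw [this] at e1
          exact mul_right_cancel₀ (pow_ne_zero (j + 1) P.q_ne) (e1.trans (one_mul _).symm)
        exact hq.pow_ne_one_of_pos_of_lt ✓ ✓ e3
    have h4 := mult_self_pos x (ℓ + 1) k ✓
    rw [hxk] at h4
    omega
  exact ⟨h, hb, hq, he, key 0 (Or.inl rfl), key _ (Or.inr rfl)⟩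

theorem S_apply {x : ℕ → F} : ∀ m, (∀ j < m, X P t j v = x j • v) →
    S P t m v = (∑ j ∈ range m, x j) • v
  | 0, _ => by simp [S]
  | m + 1, h => by
    rw [S, add_apply, S_apply m fun j hj => h j ✓, h m ✓, Finset.sum_range_succ, add_smul]

theorem sum_mult_smul (x : ℕ → F) (T : Finset F) : ∀ n, (∀ j < n, x j ∈ T) →
    ∑ c ∈ T, mult x n c • c = ∑ j ∈ range n, x j
  | 0, _ => by simp [mult]
  | n + 1, h => by
    classical
    rw [Finset.sum_range_succ, ← sum_mult_smul x T n fun j hj => h j ✓]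
    simp only [mult, add_smul, Finset.sum_add_distrib]
    congr 1
    rw [Finset.sum_eq_single (x n)]
    · simp
    · intro c _ hc
      simp [hc.symm]
    · intro hn
      exact absurd (h n ✓) hn

theorem IsArc.sum {q a b : F} {x : ℕ → F} (hq : IsPrimitiveRoot q e) (he : ℓ < e)
    (ha : a ≠ 0) (h : IsArc q a b ℓ x) :
    ∑ j ∈ range (ℓ + 1), x j = a * ∑ i ∈ range (ℓ + 1), q ^ i := by
  classical
  have hinj : Set.InjOn (fun i => a * q ^ i) (range (ℓ + 1)) := fun i hi j hj hij => by
    simp only [Finset.coe_range, Set.mem_Iio] at hi hj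
    exact hq.pow_inj ✓ ✓ (mul_left_cancel₀ ha hij)
  rw [← sum_mult_smul x ((range (ℓ + 1)).image fun i => a * q ^ i) (ℓ + 1) fun j hj => ?_,
    Finset.sum_image hinj, Finset.mul_sum]
  · refine Finset.sum_congr rfl fun i hi => ?_
    rw [h.2.1 i (by simpa [Nat.lt_succ_iff] using hi), one_smul]
  · by_contra hc
    have h3 := mult_self_pos x (ℓ + 1) j hj
    rw [h.2.2 (x j) fun i hi hij => hc (Finset.mem_image.2
      ⟨i, Finset.mem_range.2 ✓, hij.symm⟩)] at h3
    omega

/-- On an indecomposable module all joint eigenvectors belong to the same arc. -/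
theorem arc_uniform (h : AK P (ℓ + 1) t) (hi : Indec (ℓ + 1) t)
    (hq : IsPrimitiveRoot P.q e) (he : ℓ + 1 < e)
    (harc : ∀ v : V, v ≠ 0 → ∀ x : ℕ → F, (∀ j < ℓ + 1, X P t j v = x j • v) →
      IsArc P.q P.a P.b ℓ x ∨ IsArc P.q P.b P.a ℓ x) :
    (∀ v : V, v ≠ 0 → ∀ x : ℕ → F, (∀ j < ℓ + 1, X P t j v = x j • v) → IsArc P.q P.a P.b ℓ x) ∨
    (∀ v : V, v ≠ 0 → ∀ x : ℕ → F, (∀ j < ℓ + 1, X P t j v = x j • v) → IsArc P.q P.b P.a ℓ x) := by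
  by_contra hcon
  rw [not_or] at hcon
  obtain ⟨hc1, hc2⟩ := hcon
  push Not at hc1 hc2
  obtain ⟨v, hv, x, hx, hnx⟩ := hc1
  obtain ⟨w, hw, y, hy, hny⟩ := hc2
  have ax := (harc v hv x hx).resolve_left hnx
  have ay := (harc w hw y hy).resolve_right hny
  have hpow : P.q ^ ℓ * P.q ^ ℓ = 1 := by
    have : P.a * (P.q ^ ℓ * P.q ^ ℓ) = P.a * 1 := by
      conv_rhs => rw [mul_one, ax.1, ay.1]
      ring
    exact mul_left_cancel₀ P.a_ne this
  have hne1 : ℓ = 0 ∨ P.q ^ ℓ ≠ 1 := by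
    rcases Nat.eq_zero_or_pos ℓ with h0 | h0
    · exact Or.inl h0
    · exact Or.inr (hq.pow_ne_one_of_pos_of_lt ✓ ✓)
  rcases hne1 with rfl | hne1
  · have hab : P.a = P.b := by rw [ay.1, pow_zero, mul_one]
    rw [hab] at hnx ax
    exact hnx ax
  have hm1 : P.q ^ ℓ = -1 := by
    have : (P.q ^ ℓ - 1) * (P.q ^ ℓ + 1) = 0 := by linear_combination hpow
    rcases mul_eq_zero.1 this with h0 | h0
    · exact absurd (sub_eq_zero.1 h0) hne1
    · exact eq_neg_of_add_eq_zero_left h0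
  have hℓ : 1 ≤ ℓ := by
    by_contra h0
    obtain rfl : ℓ = 0 := ✓
    simp at hne1
  set σ := ∑ i ∈ range (ℓ + 1), P.q ^ i with hσ
  have hq1 : P.q - 1 ≠ 0 := sub_ne_zero.2 (hq.ne_one ✓)
  have hgeom : σ * (P.q - 1) = P.q ^ (ℓ + 1) - 1 := geom_sum_mul _ _
  have hσ0 : σ ≠ 0 := by
    intro h0
    rw [h0, zero_mul] at hgeom
    exact hq.pow_ne_one_of_pos_of_lt ✓ he (sub_eq_zero.1 hgeom.symm)
  have h2 : (2 : F) ≠ 0 := by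
    intro h2
    exact hne1 (by rw [hm1]; linear_combination -h2)
  have e1 := S_apply (ℓ + 1) hx
  have e2 := S_apply (ℓ + 1) hy
  rw [ax.sum hq ✓ P.b_ne, ← hσ] at e1
  rw [ay.sum hq ✓ P.a_ne, ← hσ] at e2
  have hab : P.b = -P.a := by rw [ay.1, hm1]; ring
  have hS : IsHom (ℓ + 1) t t (S P t (ℓ + 1) - algebraMap F _ (P.a * σ)) :=
    IsHom.of_commute fun j hj =>
      (commute_S h (ℓ + 1) le_rfl hj).sub_right (Algebra.commutes _ _).symm
  rcases hi.nilp_or_bij hS with hn | hn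
  · obtain ⟨k, hk⟩ := hn
    have hv' : (S P t (ℓ + 1) - algebraMap F _ (P.a * σ)) v = (-(2 * P.a * σ)) • v := by
      rw [sub_apply, e1, algebraMap_end_apply, ← sub_smul, hab]
      congr 1
      ring
    have hvk : ∀ k : ℕ, ((S P t (ℓ + 1) - algebraMap F _ (P.a * σ)) ^ k) v
        = (-(2 * P.a * σ)) ^ k • v := by
      intro k
      induction k with
      | zero => simp
      | succ k ih => rw [pow_succ', mul_apply, ih, map_smul, hv', smul_smul, pow_succ]
    have := hvk k
    rw [hk, LinearMap.zero_apply, eq_comm, smul_eq_zero] at this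
    rcases this with h0 | h0
    · exact mul_ne_zero (mul_ne_zero h2 P.a_ne) hσ0 (neg_eq_zero.1 (eq_zero_of_pow_eq_zero h0))
    · exact hv h0
  · apply hw
    apply hn.1
    rw [map_zero, sub_apply, e2, algebraMap_end_apply, sub_self]
end

theorem FT.zero (P : Par F) : FT P 0 := by
  have hak : AK P 0 (fun _ => (0 : End F F)) :=
    ⟨fun h => by omega, fun h => by omega, fun i _ h => by omega, fun i _ h => by omega,
      fun i j _ h => by omega⟩
  refine FT.of_summand (I := Unit) (fun _ => ⟨F, _, hak⟩) fun M hM => ⟨(), ?_⟩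
  have := hM.1
  obtain ⟨v, hv⟩ := exists_ne (0 : M.V)
  obtain ⟨ξ, h1, -⟩ := exists_functional_one (⊥ : Submodule F M.V) (x := v) (by simpa using hv)
  have hπ : ξ.smulRight v * ξ.smulRight v = ξ.smulRight v := ext fun w => by simp [h1]
  rcases hM.2 (ξ.smulRight v) (fun j hj => by omega) hπ with h2 | h2
  · have := app_eq h2 v
    simp [h1, hv] at this
  · exact ⟨ξ, LinearMap.toSpanSingleton F M.V v, fun j hj => by omega, fun j hj => by omega,
      ext fun w => app_eq h2 w⟩

/-- The algebra has finite representation type below the bound. -/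
theorem FT.of_lt [IsAlgClosed F] {δ : ℕ} (hq : IsPrimitiveRoot P.q e) (hδ : δ < e)
    (hb : P.b = P.a * P.q ^ δ) : ∀ n, n < e → n < 2 * min δ (e - δ) + 4 → FT P n
  | 0, _, _ => FT.zero P
  | n + 1, hn, hn2 => by
    have : Infinite F := IsAlgClosed.instInfinite
    obtain ⟨I, _, Y, hY⟩ := FT.of_lt hq hδ hb n ✓ ✓
    obtain ⟨I1, _, Y1, hY1⟩ := arc_finite P n e
    obtain ⟨I2, _, Y2, hY2⟩ := arc_finite P.swap n e
    refine FT.of_summand (I := I ⊕ I1 ⊕ I2) (Sum.elim (fun i => (Y i).ind)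
      (Sum.elim Y1 fun i => (Y2 i).swap)) fun M hM => ?_
    by_cases hex : ∃ φ : End F M.V, IsHom n M.t M.t φ ∧ Bijective (D P M.t n φ)
    · obtain ⟨φ, h1, h2⟩ := hex
      obtain ⟨i, hi⟩ := relative_trace Y hY M hM h1 h2
      exact ⟨Sum.inl i, hi⟩
    · have hnil : ∀ φ : End F M.V, IsHom n M.t M.t φ → IsNilpotent (D P M.t n φ) := by
        intro φ hφ
        refine (hM.nilp_or_bij (IsHom.of_commute fun j hj => ?_)).resolve_right
          fun hbij => hex ⟨φ, hφ, hbij⟩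
        exact commute_D M.ak n ✓ φ (fun i hi => hφ.commute hi) j ✓
      have harc : ∀ v : M.V, v ≠ 0 → ∀ x : ℕ → F, (∀ j < n + 1, X P M.t j v = x j • v) →
          IsArc P.q P.a P.b n x ∨ IsArc P.q P.b P.a n x := fun v hv x hx =>
        arc_of_dvd hq hn hδ hb hn2 x (joint_ne_zero M.ak hv hx)
          (den_dvd_num M.ak (hq.ne_one ✓) hnil v hv x fun k hk => hx k ✓)
      have := hM.1
      obtain ⟨v, hv⟩ := exists_ne (0 : M.V)
      have htop : (⊤ : Submodule F M.V) ≠ ⊥ := fun h0 =>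
        hv ((mem_bot F).1 (h0 ▸ mem_top))
      obtain ⟨w, -, hw, x, hx⟩ := exists_joint_X M.ak htop fun _ _ _ _ => mem_top
      rcases arc_uniform M.ak hM hq hn harc with h1 | h1
      · obtain ⟨i, hi⟩ := hY1 M hM (ArcM.of_isArc M.ak hq ✓ (h1 w hw x hx).1 h1)
        exact ⟨Sum.inr (Sum.inl i), hi.summand⟩
      · obtain ⟨i, hi⟩ := hY2 M.swap hM (ArcM.of_isArc (P := P.swap) M.ak.swap hq ✓
          (h1 w hw x hx).1 fun v hv x hx => h1 v hv x fun j hj => by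
            rw [← X_swap]; exact hx j hj)
        exact ⟨Sum.inr (Sum.inr i), hi.summand⟩
end

/-! ### Eigenvectors in induced modules -/

section
open Polynomial

section
variable {N : Type} [AddCommGroup N] [Module R N]
variable {Y : Type} [AddCommGroup Y] [Module R Y]

theorem commute_aeval {g y : E} (h : Commute g y) (p : R[X]) : Commute g (aeval y p) := by
  induction p using Polynomial.induction_on' with
  | add p q hp hq => rw [map_add]; exact hp.add_right hq
  | monomial k a => rw [Polynomial.aeval_monomial]
                    exact (Algebra.commute_algebraMap_right a _).mul_right (h.pow_right k)

theorem aeval_mem (U : Submodule R Y) {g : End R Y} (hU : ∀ v ∈ U, g v ∈ U) (p : R[X])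
    {v : Y} (hv : v ∈ U) : aeval g p v ∈ U := by
  have hk : ∀ k : ℕ, (g ^ k) v ∈ U := fun k => by
    induction k with
    | zero => exact hv
    | succ k ih => rw [pow_succ']; exact hU _ ih
  induction p using Polynomial.induction_on' with
  | add p q hp hq => rw [map_add]; exact U.add_mem hp hq
  | monomial k a => rw [Polynomial.aeval_monomial, ← Algebra.smul_def]
                    exact U.smul_mem _ (hk k)

/-- A map intertwining two operators intertwines polynomials in them. -/
theorem aeval_intertwine {Γ : N →ₗ[R] Y} {f : End R N} {g : End R Y}
    (h : ∀ n, Γ (f n) = g (Γ n)) (p : R[X]) (n : N) : Γ (aeval f p n) = aeval g p (Γ n) := by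
  have hk : ∀ k : ℕ, Γ ((f ^ k) n) = (g ^ k) (Γ n) := fun k => by
    induction k with
    | zero => rfl
    | succ k ih => rw [pow_succ', pow_succ', mul_apply, mul_apply, h, ih]
  induction p using Polynomial.induction_on' with
  | add p q hp hq => simp only [map_add, add_apply, hp, hq]
  | monomial k a => simp only [Polynomial.aeval_monomial, ← Algebra.smul_def, smul_apply,
      map_smul, hk]

variable {P : Par R} {t : ℕ → End R N} {s : ℕ → End R Y}

theorem X_intertwine {Γ : N →ₗ[R] Y} : ∀ j, (∀ i ≤ j, ∀ v, Γ (t i v) = s i (Γ v)) → ∀ v,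
    Γ (X P t j v) = X P s j (Γ v)
  | 0, h, v => h 0 le_rfl v
  | j + 1, h, v => by
    simp only [X, smul_apply, mul_apply, map_smul]
    rw [h _ le_rfl, X_intertwine j (fun i hi => h i ✓), h _ le_rfl]

/-- The construction of eigenvectors of `X_{k+1}` in the induced module: if the obstruction
vanishes on a generator `κ` of `N`, then `N` embeds into the eigenspace of `X_{k+1}` for `u`. -/
theorem exists_eigenmap [Infinite F] [Algebra F R] [Module.Finite F R]
    [Module.Finite R N] (h : AK P (k + 1) t) {κ : N}
    (gen : ∀ U : Submodule R N, κ ∈ U → (∀ j < k + 1, ∀ v ∈ U, t j v ∈ U) → U = ⊤)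
    {x : ℕ → R} (hx : ∀ j < k + 1, X P t j κ = x j • κ)
    (hx0 : ∀ j, ∃ c0 : F, IsNilpotent (x j - algebraMap F R c0))
    {χ : R[X]} (hχ : aeval (X P t k) χ = 0) {u : R} (hu : IsUnit u) (hχu : IsUnit (χ.eval u))
    {L M : R[X]} (hLM : L * num P x (k + 1) = M * den x (k + 1)) (hL : IsUnit (L.eval u))
    (hM : M.eval u = 0) :
    ∃ Γ : N →ₗ[R] IndM N (k + 1), Function.Injective Γ ∧
      (∀ j < k + 1, ∀ v, Γ (t j v) = indT P t (k + 1) j (Γ v)) ∧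
      ∀ v, X P (indT P t (k + 1)) (k + 1) (Γ v) = u • Γ v := by
  let _ : Module F (IndM N (k + 1)) := Module.compHom _ (algebraMap F R)
  have : IsScalarTower F R (IndM N (k + 1)) := ⟨fun a r y => by
    rw [Algebra.smul_def, mul_smul]; rfl⟩
  have : FiniteDimensional F (IndM N (k + 1)) := Module.Finite.trans R _
  have hs : AK P (k + 1 + 1) (indT P t (k + 1)) := AK_ind h
  obtain ⟨s, hs_def⟩ : ∃ s, s = indT P t (k + 1) := ⟨_, rfl⟩
  rw [← hs_def] at hs ⊢
  obtain ⟨U, hU⟩ : ∃ U, U = LinearMap.range (incl R (k + 1) (N := N)) := ⟨_, rfl⟩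
  have hinc : ∀ j < k + 1, ∀ v, incl R (k + 1) (t j v) = s j (incl R (k + 1) v) := fun j hj v => by
    rw [hs_def]; exact incl_t hj v
  have hUs : ∀ j ≤ k, ∀ v ∈ U, s j v ∈ U := by
    rw [hU]; rintro j hj _ ⟨n, rfl⟩
    exact ⟨t j n, hinc j ✓ n⟩
  have hmem : ∀ n, incl R (k + 1) n ∈ U := fun n => hU ▸ ⟨n, rfl⟩
  have hXi : ∀ j < k + 1, ∀ n, incl R (k + 1) (X P t j n) = X P s j (incl R (k + 1) n) :=
    fun j hj n => X_intertwine j (fun i hi => hinc i ✓) n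
  have hχU : ∀ v ∈ U, aeval (X P s k) χ v = 0 := by
    rw [hU]; rintro _ ⟨n, rfl⟩
    rw [← aeval_intertwine (hXi k ✓), hχ]; simp
  obtain ⟨C, hCpf, hC, hCp⟩ := exists_chat_poly (X P s k) χ
  obtain ⟨p, hp⟩ := hCp u
  have hCu : ∀ v ∈ U, C u v ∈ U := fun v hv => by
    rw [hp]; exact aeval_mem U (X_mem U k hUs) p hv
  have hcC : ∀ j < k, Commute (s j) (C u) := fun j hj => by
    rw [hp]; exact commute_aeval (commute_X_low hs k ✓ hj) p
  obtain ⟨G, hG⟩ : ∃ G, G = χ.eval u • (u • X P s (k+1) - (P.a * P.b) • (1 : End R _))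
      - ((P.q - 1) * (P.a * P.b) * P.qi * u) • D P s k (s (k+1) * C u) := ⟨_, rfl⟩
  have hid := G_identity hs (m := k) ✓ u (χ.eval u) (C u) _ (hC u) G hG
  have hPk : ∀ n, PChi P s k χ C u (incl R (k + 1) n) = 0 := by
    have hcomm : ∀ j < k + 1, Commute (s j) (PChi P s k χ C u) := fun j hj => by
      rw [PChi]
      refine Commute.add_right (Commute.smul_right (Commute.sub_right
        ((Commute.one_right _).smul_right _) (Commute.smul_right ?_ _)) _) (Commute.smul_right ?_ _)
      · exact commute_S hs (k + 1) ✓ hj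
      · exact commute_D hs k ✓ _ hcC j ✓
    have htop := gen (ker (PChi P s k χ C u ∘ₗ incl R (k + 1))) ?_ ?_
    · intro n
      have : n ∈ ker (PChi P s k χ C u ∘ₗ incl R (k + 1)) := htop ▸ mem_top
      exact this
    · have := PChi_eval F hs (m := k) ✓ U hUs χ hχU C hCpf hC (incl R (k + 1) κ) (hmem κ) x
        (fun j hj => by rw [← hXi j ✓, hx j ✓, map_smul]) (fun j _ => hx0 j)
        L M hLM u
      rw [hM, mul_zero, zero_smul] at this
      exact (hL.smul_eq_zero).1 this
    · intro j hj v hv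
      change PChi P s k χ C u (incl R (k + 1) (t j v)) = 0
      rw [hinc j hj]
      refine (app_eq (hcomm j hj) _).symm.trans ?_
      change s j (PChi P s k χ C u (incl R (k + 1) v)) = 0
      rw [show PChi P s k χ C u (incl R (k + 1) v) = 0 from hv, map_zero]
  refine ⟨G ∘ₗ incl R (k + 1), ?_, ?_, ?_⟩
  · -- the coordinate `X_{k+1} ⊗ n` of `Γ n` is a unit multiple of `n`
    rw [← LinearMap.ker_eq_bot, LinearMap.ker_eq_bot']
    intro n hn
    have h1 := congrArg (vm R (k + 1) (k + 1)) hn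
    have hD : D P s k (s (k+1) * C u) (incl R (k + 1) n) ∈ ker (vm R (k + 1) (k + 1) (N := N)) := by
      refine D_maps U _ k hUs ?_ _ ?_ _ (hmem n)
      · intro j hj v hv
        rw [mem_ker, hs_def, m_gt le_rfl ✓, LinearMap.mem_ker.1 hv, map_zero]
      · intro v hv
        have := hCu v hv
        rw [hU] at this
        obtain ⟨n', hn'⟩ := this
        rw [mem_ker, mul_apply, ← hn', hs_def, m_eq le_rfl, vm_incl, vm_incl]
        simp
    have hX : vm R (k + 1) (k + 1) (X P s (k + 1) (incl R (k + 1) n)) = P.qi ^ (k + 1) • n := by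
      rw [hs_def]; exact vm_X_incl n
    rw [mem_ker] at hD
    simp only [hG, comp_apply, sub_apply, smul_apply, map_sub,
      map_smul, hD, hX, one_apply, vm_incl, smul_zero, sub_zero, map_zero] at h1
    have hqi : IsUnit (P.qi ^ (k + 1)) := (IsUnit.of_mul_eq_one P.q (by rw [mul_comm, P.hq])).pow _
    rwa [hχu.smul_eq_zero, hu.smul_eq_zero, hqi.smul_eq_zero] at h1
  · intro j hj v
    have hcomm : Commute (s j) G := by
      rw [hG]
      refine Commute.sub_right (Commute.smul_right (Commute.sub_right (Commute.smul_right ?_ _)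
        ((Commute.one_right _).smul_right _)) _) (Commute.smul_right ?_ _)
      · exact commute_X_low hs (k + 1) ✓ hj
      · refine commute_D hs k ✓ _ (fun i hi => ?_) j ✓
        exact (commute_t_t hs ✓ ✓).mul_right (hcC i hi)
    change G (incl R (k + 1) (t j v)) = _
    rw [hinc j hj]
    exact (app_eq hcomm _).symm
  · intro v
    have h1 := app_eq hid (incl R (k + 1) v)
    have h2 : D P s k (s (k+1) * -(aeval (X P s k) χ)) (incl R (k + 1) v) ∈
        (⊥ : Submodule R (IndM N (k + 1))) := by
      refine D_maps U _ k hUs ?_ _ ?_ _ (hmem v)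
      · intro j hj v hv
        rw [mem_bot] at hv ⊢
        rw [hv, map_zero]
      · intro v hv
        rw [mem_bot, mul_apply, LinearMap.neg_apply, hχU v hv]
        simp
    rw [mem_bot] at h2
    have h3 := hPk v
    rw [PChi] at h3
    rw [mul_apply, h3, map_zero, add_apply, smul_apply, h2, smul_zero,
      add_zero, sub_apply, mul_apply, smul_apply, eq_comm,
      sub_eq_zero] at h1
    exact h1.symm

theorem Wm_eq_X : ∀ p ≤ m, Wm s m p = P.q ^ p • (X P s p * Wp s m p)
  | 0, _ => by simp [Wm, X]
  | p + 1, hp => by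
    rw [Wm, Wm_eq_X p ✓, Wp_succ ✓, mul_smul_comm, pow_succ, mul_smul,
      ← smul_mul_assoc P.q, q_X_succ]
    simp only [mul_assoc]

/-- In the module generated by the eigenspace embedding `Γ`, the operator `χ (X_{k+1})` takes
values in the image of `Γ`. -/
theorem aeval_range_mem (hs : AK P (k + 2) s) {Γ : N →ₗ[R] Y}
    (hΓ : ∀ j < k + 1, ∀ v, Γ (t j v) = s j (Γ v)) {u : R}
    (hΓu : ∀ v, X P s (k + 1) (Γ v) = u • Γ v) {χ : R[X]} (hχ : aeval (X P t k) χ = 0)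
    (w : IndM N (k + 1)) :
    aeval (X P s (k + 1)) χ (indLift s (k + 1) Γ w) ∈ LinearMap.range Γ := by
  obtain ⟨A, hA⟩ : ∃ A, A = X P s (k + 1) := ⟨_, rfl⟩
  rw [← hA] at hΓu ⊢
  have hA' : ∀ j < k + 1, ∀ p : R[X], Commute (s j) (aeval A p) := fun j hj p =>
    commute_aeval (hA ▸ commute_X_low hs (k + 1) ✓ hj) p
  have hst : ∀ j < k + 1, ∀ v ∈ LinearMap.range Γ, s j v ∈ LinearMap.range Γ := by
    rintro j hj _ ⟨n, rfl⟩
    exact ⟨_, hΓ j hj n⟩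
  have hAst : ∀ v ∈ LinearMap.range Γ, A v ∈ LinearMap.range Γ := by
    rintro _ ⟨n, rfl⟩
    exact ⟨u • n, by rw [hΓu, map_smul]⟩
  have hXΓ : ∀ n, Γ (X P t k n) = X P s k (Γ n) :=
    X_intertwine k fun i hi => hΓ i ✓
  -- `p (X_{k+1}) t_{k+1} Γ n ≡ t_{k+1} Γ (p (X_k) n)`
  have key : ∀ p : R[X], ∀ n, aeval A p (s (k + 1) (Γ n)) - s (k + 1) (Γ (aeval (X P t k) p n)) ∈
      LinearMap.range Γ := by
    have hk : ∀ i : ℕ, ∀ n, (A ^ i) (s (k + 1) (Γ n)) - s (k + 1) (Γ ((X P t k ^ i) n)) ∈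
      LinearMap.range Γ := by
      intro i
      induction i with
      | zero => intro n; simp
      | succ i ih =>
        intro n
        have h1 := app_eq (X_mul_t hs (k := k) ✓) (Γ ((X P t k ^ i) n))
        rw [← hA] at h1
        simp only [add_apply, mul_apply, smul_apply, ← hXΓ] at h1
        have h2 := Submodule.add_mem _ (hAst _ (ih n))
          (smul_mem _ (P.q - 1) (hAst _ ⟨(X P t k ^ i) n, rfl⟩))
        rw [map_sub, h1] at h2
        rw [pow_succ', pow_succ', mul_apply, mul_apply]
        convert h2 using 1
        abel
    intro p n
    induction p using Polynomial.induction_on' with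
    | add p q hp hq =>
      have := Submodule.add_mem _ hp hq
      simp only [map_add, add_apply] at this ⊢
      convert this using 1
      abel
    | monomial i a =>
      have := smul_mem _ a (hk i n)
      simpa only [Polynomial.aeval_monomial, ← Algebra.smul_def, smul_apply, map_smul,
        smul_sub] using this
  have h0 : ∀ p ≤ k + 1, ∀ n, aeval A χ (Wp s (k + 1) p (Γ n)) ∈ LinearMap.range Γ := by
    intro p hp n
    obtain ⟨i, hi⟩ : ∃ i, p + i = k + 1 := ⟨k + 1 - p, by omega⟩
    rcases i with _ | i
    · obtain rfl : p = k + 1 := ✓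
      rw [Wp_self]
      exact aeval_mem _ hAst χ ⟨n, rfl⟩
    · induction i generalizing p with
      | zero =>
        obtain rfl : p = k := ✓
        rw [Wp_succ ✓, Wp_self, mul_one]
        have := key χ n
        rwa [hχ, LinearMap.zero_apply, map_zero, map_zero, sub_zero] at this
      | succ i ih =>
        rw [Wp_succ ✓, mul_apply]
        have := (app_eq (hA' (p + 1) ✓ χ) (Wp s (k + 1) (p + 1) (Γ n)))
        rw [mul_apply, mul_apply] at this
        rw [← this]
        exact hst _ ✓ _ (ih (p + 1) ✓ ✓)
  have h1 : ∀ p ≤ k + 1, ∀ n, aeval A χ (Wm s (k + 1) p (Γ n)) ∈ LinearMap.range Γ := by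
    intro p hp n
    rw [Wm_eq_X (P := P) p hp, smul_apply, map_smul, mul_apply]
    refine smul_mem _ _ ?_
    have hc : Commute (X P s p) (aeval A χ) :=
      commute_aeval (hA ▸ commute_XX hs ✓ ✓) χ
    have := app_eq hc (Wp s (k + 1) p (Γ n))
    rw [mul_apply, mul_apply] at this
    rw [← this]
    rcases lt_or_ge p (k + 1) with hp' | hp'
    · exact X_mem _ p (fun j hj => hst j ✓) _ (h0 p hp n)
    · obtain rfl : p = k + 1 := ✓
      rw [← hA]
      exact hAst _ (h0 _ hp n)
  rw [indLift_apply, map_sum]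
  refine Submodule.sum_mem _ fun p hp => ?_
  rw [mem_range] at hp
  rw [map_add]
  exact Submodule.add_mem _ (h0 p ✓ _) (h1 p ✓ _)
end
end

section
open Polynomial TrivSqZeroExt

open scoped DualNumber

local notation "ι" => algebraMap F F[ε]

/-! ### Cyclic modules over the dual numbers -/

section

/-- A representation over the dual numbers generated by a joint eigenvector `κ` of the
Jucys–Murphy elements with eigenvalues `x`, such that `F[ε] κ` is free and is the full generalized
weight space of `κ`. -/
structure Dat (P : Par F[ε]) (m : ℕ) (x : ℕ → F[ε]) where
  V : Type
  [grp : AddCommGroup V]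
  [modF : Module F V]
  [mod : Module F[ε] V]
  [tow : IsScalarTower F F[ε] V]
  [fin : Module.Finite F[ε] V]
  t : ℕ → End F[ε] V
  ak : AK P m t
  κ : V
  hx : ∀ j < m, X P t j κ = x j • κ
  gen : ∀ U : Submodule F[ε] V, κ ∈ U → (∀ j < m, ∀ v ∈ U, t j v ∈ U) → U = ⊤
  inj : ∀ r : F[ε], r • κ = 0 → r = 0
  wt : ∀ v, (∀ j < m, ∃ k, aeval (X P t j) ((𝐗 - C (x j)) ^ k) v = 0) →
    ∃ r : F[ε], v = r • κ

attribute [instance] Dat.grp Dat.modF Dat.mod Dat.tow Dat.fin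

theorem coprime_of_eval {χ : R[X]} {u : R} (h : IsUnit (χ.eval u)) :
    IsCoprime χ (𝐗 - C u) := by
  obtain ⟨c, hc⟩ := h.exists_right_inv
  obtain ⟨g, hg⟩ := Polynomial.X_sub_C_dvd_sub_C_eval (p := χ) (a := u)
  refine ⟨C c, - C c * g, ?_⟩
  have h2 : C (χ.eval u) * C c = 1 := by rw [← C_mul, hc, C_1]
  linear_combination C c * hg + h2

instance : Module.Finite F F[ε] := inferInstanceAs (Module.Finite F (F × F))

theorem isUnit_dual {u : F[ε]} : IsUnit u ↔ u.fst ≠ 0 := by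
  rw [isUnit_iff_isUnit_fst, isUnit_iff_ne_zero]

variable {P : Par F[ε]} {x : ℕ → F[ε]}

theorem Dat.step [Infinite F] (D : Dat P (k + 1) x) (hu : IsUnit (x (k + 1))) {χ : F[ε][X]}
    (hχ : aeval (X P D.t k) χ = 0) (hχu : IsUnit (χ.eval (x (k + 1)))) {L M : F[ε][X]}
    (hLM : L * num P x (k + 1) = M * den x (k + 1)) (hL : IsUnit (L.eval (x (k + 1))))
    (hM : M.eval (x (k + 1)) = 0) : Nonempty (Dat P (k + 2) x) := by
  obtain ⟨Γ, hinj, hΓ, hΓu⟩ := exists_eigenmap (F := F) D.ak D.gen D.hx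
    (fun j => ⟨(x j).fst, isNilpotent_iff_isNilpotent_fst.2 ⟨1, by
      simp [algebraMap_eq_inl]⟩⟩)
    hχ hu hχu hLM hL hM
  obtain ⟨s, hs_def⟩ : ∃ s, s = indT P D.t (k + 1) := ⟨_, rfl⟩
  have hs : AK P (k + 2) s := hs_def ▸ AK_ind D.ak
  rw [← hs_def] at hΓ hΓu
  obtain ⟨U, hU_def⟩ : ∃ U, U = LinearMap.range (indLift s (k + 1) Γ) := ⟨_, rfl⟩
  have hU : ∀ j < k + 2, ∀ v ∈ U, s j v ∈ U := by
    rw [hU_def]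
    rintro j hj _ ⟨w, rfl⟩
    exact ⟨indT P D.t (k + 1) j w, indLift_t hs hΓ ✓ w⟩
  have hΓU : ∀ n, Γ n ∈ U := fun n => hU_def ▸ ⟨incl _ _ n, indLift_incl Γ n⟩
  have hXΓ : ∀ j < k + 1, ∀ n, Γ (X P D.t j n) = X P s j (Γ n) := fun j hj n =>
    X_intertwine j (fun i hi => hΓ i ✓) n
  have hXU : ∀ j < k + 2, ∀ v : U, (X P (resT s (k + 2) U hU) j v : IndM D.V (k + 1))
      = X P s j v := fun j hj v =>
    X_intertwine (Γ := U.subtype) j (fun i hi v => resT_coe hU ✓ v) v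
  have hfin : Module.Finite F[ε] U := by
    rw [hU_def]; infer_instance
  refine ⟨{ V := U, t := resT s (k + 2) U hU, ak := hs.res hU, κ := ⟨Γ D.κ, hΓU _⟩, hx := ?_,
            gen := ?_, inj := ?_, wt := ?_ }⟩
  · intro j hj
    refine Subtype.ext ((hXU j hj _).trans ?_)
    change X P s j (Γ D.κ) = x j • Γ D.κ
    obtain hj' | rfl : j < k + 1 ∨ j = k + 1 := ✓
    · rw [← hXΓ j hj', D.hx j hj', map_smul]
    · exact hΓu _
  · intro W hκ hW
    have hW' : ∀ j < k + 2, ∀ v ∈ W.map U.subtype, s j v ∈ W.map U.subtype := by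
      rintro j hj _ ⟨v, hv, rfl⟩
      exact ⟨_, hW j hj v hv, resT_coe hU hj v⟩
    have h1 := D.gen ((W.map U.subtype).comap Γ) ⟨_, hκ, rfl⟩ fun j hj v hv => by
      rw [Submodule.mem_comap, hΓ j hj]
      exact hW' j ✓ _ hv
    have h2 : ∀ n, Γ n ∈ W.map U.subtype := fun n => by
      have : n ∈ (W.map U.subtype).comap Γ := h1 ▸ mem_top
      exact this
    rw [eq_top_iff]
    rintro ⟨v, hv⟩ -
    obtain ⟨w, hw⟩ : v ∈ LinearMap.range (indLift s (k + 1) Γ) := hU_def ▸ hv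
    have h3 := indLift_mem (W.map U.subtype) (fun j hj => hW' j ✓) h2 w
    rw [hw] at h3
    obtain ⟨v', hv', he⟩ := h3
    have : v' = ⟨v, hv⟩ := Subtype.ext he
    exact this ▸ hv'
  · intro r hr
    have h1 : Γ (r • D.κ) = 0 := by
      rw [map_smul]; exact congrArg Subtype.val hr
    exact D.inj r (hinj (by rw [h1, map_zero]))
  · rintro ⟨v, hv⟩ h
    have h' : ∀ j < k + 2, ∃ K, aeval (X P s j) ((𝐗 - C (x j)) ^ K) v = 0 := by
      intro j hj
      obtain ⟨K, hK⟩ := h j hj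
      refine ⟨K, ?_⟩
      have := aeval_intertwine (Γ := U.subtype) (hXU j hj) ((𝐗 - C (x j)) ^ K) ⟨v, hv⟩
      rw [hK, map_zero] at this
      exact this.symm
    obtain ⟨K, hK⟩ := h' (k + 1) ✓
    obtain ⟨A, B, hAB⟩ := (coprime_of_eval hχu).pow_right (n := K)
    obtain ⟨w, hw⟩ : v ∈ LinearMap.range (indLift s (k + 1) Γ) := hU_def ▸ hv
    have h1 : v ∈ LinearMap.range Γ := by
      have h2 := congrArg (fun p => aeval (X P s (k + 1)) p v) hAB
      simp only [map_add, map_mul, map_one, add_apply, mul_apply, hK,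
        map_zero, add_zero, one_apply] at h2
      rw [← h2]
      refine aeval_mem _ ?_ A ?_
      · rintro _ ⟨n, rfl⟩
        exact ⟨x (k + 1) • n, by rw [hΓu, map_smul]⟩
      · rw [← hw]
        exact aeval_range_mem hs hΓ hΓu hχ w
    obtain ⟨n, hn⟩ := h1
    obtain ⟨r, hr⟩ := D.wt n fun j hj => by
      obtain ⟨K, hK⟩ := h' j ✓
      refine ⟨K, hinj ?_⟩
      rw [aeval_intertwine (hXΓ j hj), hn, hK, map_zero]
    refine ⟨r, Subtype.ext ?_⟩
    change v = r • Γ D.κ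
    rw [← hn, hr, map_smul]

/-- The first letter of the word: the character of the algebra generated by `T_0`. -/
theorem Dat.start (x : ℕ → F[ε]) (h : (x 0 - P.a) * (x 0 - P.b) = 0) : Nonempty (Dat P 1 x) := by
  refine ⟨{ V := F[ε]
            t := fun _ => x 0 • 1
            κ := 1
            ak := ⟨?_, ?_, ?_, ?_, ?_⟩
            hx := ?_
            gen := ?_
            inj := ?_
            wt := ?_ }⟩
  · intro _
    refine ext fun v => ?_
    simp only [mul_apply, smul_apply, one_apply,
      sub_apply, smul_eq_mul]
    linear_combination v * h
  any_goals intros; omega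
  · intro j hj
    obtain rfl : j = 0 := ✓
    simp [AKT.X]
  · intro U h1 _
    rw [eq_top_iff]
    intro v _
    simpa using U.smul_mem v h1
  · intro r hr; simpa using hr
  · intro v _; exact ⟨v, by simp⟩

theorem aeval_map_restrict [Module F[ε] V]
    [IsScalarTower F F[ε] V] (y : End F[ε] V) (p : F[X]) (v : V) :
    aeval y (p.map (ι)) v = aeval (y.restrictScalars F : End F V) p v := by
  have hk : ∀ (i : ℕ) w, (y ^ i) w = ((y.restrictScalars F : End F V) ^ i) w := by
    intro i
    induction i with
    | zero => intro w; rfl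
    | succ i ih => intro w; rw [pow_succ', pow_succ', mul_apply, mul_apply, ih]
                   rfl
  induction p using Polynomial.induction_on' with
  | add p q hp hq => simp only [Polynomial.map_add, map_add, add_apply, hp, hq]
  | monomial i a =>
    simp only [Polynomial.map_monomial, Polynomial.aeval_monomial, ← Algebra.smul_def,
      smul_apply, hk]
    rw [algebraMap_smul]

/-- If `c` is not an eigenvalue of `X_k`, the minimal polynomial of `X_k` can be used in the
induction step. -/
theorem Dat.exists_chi (D : Dat P (k + 1) x) {u : F[ε]}
    (h : ∀ v : D.V, X P D.t k v = u.fst • v → v = 0) :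
    ∃ χ : F[ε][X], aeval (X P D.t k) χ = 0 ∧ IsUnit (χ.eval u) := by
  have : FiniteDimensional F D.V := Module.Finite.trans F[ε] _
  obtain ⟨y, hy⟩ : ∃ y : End F D.V, y = (X P D.t k).restrictScalars F := ⟨_, rfl⟩
  refine ⟨(minpoly F y).map (ι), ?_, ?_⟩
  · refine ext fun v => ?_
    rw [aeval_map_restrict, ← hy, minpoly.aeval]
    rfl
  · rw [isUnit_dual]
    have h1 : (((minpoly F y).map (ι)).eval u).fst = (minpoly F y).eval u.fst := by
      have h2 := Polynomial.hom_eval₂ (minpoly F y) (ι)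
        (fstHom F F F : F[ε] →ₐ[F] F).toRingHom u
      rw [Polynomial.eval_map]
      refine h2.trans ?_
      have h3 : (fstHom F F F : F[ε] →ₐ[F] F).toRingHom.comp (ι) = RingHom.id F := by
        ext a; simp
      rw [h3]; rfl
    rw [h1]
    intro h0
    obtain ⟨v, hv⟩ := (End.hasEigenvalue_of_isRoot (f := y) h0).exists_hasEigenvector
    refine hv.2 (h v ?_)
    have := hv.apply_eq_smul
    rwa [hy] at this
end

/-! ### One-parameter families -/

section

/-- Extension of scalars of the parameters to the dual numbers. -/
def Par.dual (P : Par F) : Par F[ε] where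
  q := ι P.q
  a := ι P.a
  b := ι P.b
  qi := ι P.qi
  ci := ι P.ci
  hq := by rw [← map_mul, P.hq, map_one]
  hc := by rw [← map_mul, ← map_mul, P.hc, map_one]

section
variable [Module F[ε] V] [IsScalarTower F F[ε] V]

theorem AK.restrict {t : ℕ → End F[ε] V} (h : AK P.dual n t) :
    AK P n fun j => ((t j).restrictScalars F : End F V) where
  cyc h0 := ext fun v => by
    have := h.cyc' h0 v
    simp only [Par.dual, ← map_mul, ← map_add, algebraMap_smul] at this
    exact this
  br0 h0 := ext fun v => h.br0' h0 v
  quad i h1 h2 := ext fun v => by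
    have := h.quad' h1 h2 v
    rw [show P.dual.q = ι P.q from rfl, ← map_one (ι), ← map_sub,
      algebraMap_smul, algebraMap_smul] at this
    exact this
  braid i h1 h2 := ext fun v => h.braid' h1 h2 v
  comm i j h1 h2 := ext fun v => h.comm' h1 h2 v

theorem X_restrict (t : ℕ → End F[ε] V) : ∀ (j : ℕ) (v : V),
    X P (fun j => ((t j).restrictScalars F : End F V)) j v = X P.dual t j v
  | 0, _ => rfl
  | j + 1, v => by
    simp only [AKT.X, smul_apply, mul_apply, LinearMap.restrictScalars_apply,
      X_restrict t j]
    rw [show P.dual.qi = ι P.qi from rfl, algebraMap_smul]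
end

/-- The underlying representation over `F`. -/
def Dat.rep {x : ℕ → F[ε]} (D : Dat P.dual m x) : Rep P m :=
  have : FiniteDimensional F D.V := Module.Finite.trans F[ε] _
  { V := D.V, t := fun j => (D.t j).restrictScalars F, ak := D.ak.restrict }

variable {x x' : ℕ → F[ε]}

/-- Homomorphisms map generators to multiples of generators. -/
theorem Dat.hom_gen (D : Dat P.dual n x) (D' : Dat P.dual n x')
    (hxx : ∀ j < n, (x j).fst = (x' j).fst) {φ : D.V →ₗ[F] D'.V}
    (hφ : ∀ j < n, ∀ v, φ (D.t j v) = D'.t j (φ v)) : ∃ r : F[ε], φ D.κ = r • D'.κ := by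
  refine D'.wt _ fun j hj => ⟨3, ?_⟩
  have hX : ∀ v, φ (X P.dual D.t j v) = X P.dual D'.t j (φ v) := fun v => by
    rw [← X_restrict, ← X_restrict]
    exact X_intertwine j (fun i hi v => hφ i ✓ v) v
  obtain ⟨c, hc⟩ : ∃ c, c = (x j).fst := ⟨_, rfl⟩
  have hnil : ∀ y : F[ε], y.fst = c → (y - ι c) ^ 2 = 0 := fun y hy => by
    rw [pow_two]; ext <;> simp [hy, algebraMap_eq_inl]
  have h2 : aeval (X P.dual D'.t j) ((𝐗 - C (ι c)) ^ 2) (φ D.κ) = 0 := by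
    have h3 : ∀ w, φ (X P.dual D.t j w - ι c • w)
        = X P.dual D'.t j (φ w) - ι c • φ w := fun w => by
      rw [map_sub, hX, algebraMap_smul, algebraMap_smul, map_smul]
    have h0 : X P.dual D.t j (X P.dual D.t j D.κ - ι c • D.κ)
        - ι c • (X P.dual D.t j D.κ - ι c • D.κ) = 0 := by
      rw [D.hx j hj, ← sub_smul, map_smul, D.hx j hj, smul_smul, smul_smul, ← sub_smul,
        show (x j - ι c) * x j - ι c * (x j - ι c)
          = 0 by linear_combination hnil (x j) hc.symm, zero_smul]
    have h4 := h3 (X P.dual D.t j D.κ - ι c • D.κ)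
    rw [h0, map_zero, h3] at h4
    rw [pow_two, map_mul, mul_apply]
    simpa using h4.symm
  have h5 : (𝐗 - C (x' j)) ^ 3 = (𝐗 - C (ι c) - 3 *
      (C (x' j) - C (ι c))) * (𝐗 - C (ι c)) ^ 2 := by
    have h6 : (C (x' j) - C (ι c) : F[ε][X]) ^ 2 = 0 := by
      rw [← C_sub, ← C_pow, hnil _ (by rw [← hxx j hj, hc]), C_0]
    linear_combination (3 * (𝐗 - C (ι c)) -
      (C (x' j) - C (ι c))) * h6
  rw [h5, map_mul, mul_apply, h2, map_zero]

/-- If the words share a letter `γ (1 + ε)`, then homomorphisms are `F[ε]`-linear on the span of the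
generator. -/
theorem Dat.hom_smul (D : Dat P.dual n x) (D' : Dat P.dual n x') {φ : D.V →ₗ[F] D'.V}
    (hφ : ∀ j < n, ∀ v, φ (D.t j v) = D'.t j (φ v)) {r : F[ε]} (hr : φ D.κ = r • D'.κ)
    (hi : i < n) {γ : F} (hγ : γ ≠ 0) (hxi : x i = ι γ * (1 + DualNumber.eps))
    (hxi' : x' i = ι γ * (1 + DualNumber.eps)) (s : F[ε]) :
    φ (s • D.κ) = (s * r) • D'.κ := by
  have hX : φ (X P.dual D.t i D.κ) = X P.dual D'.t i (φ D.κ) := by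
    rw [← X_restrict, ← X_restrict]
    exact X_intertwine i (fun j hj v => hφ j ✓ v) D.κ
  have h1 : φ ((DualNumber.eps : F[ε]) • D.κ) = (DualNumber.eps * r : F[ε]) • D'.κ := by
    rw [hr, map_smul, D.hx i hi, D'.hx i hi, hxi, hxi', mul_smul, algebraMap_smul, map_smul,
      add_smul, one_smul, map_add, hr, mul_smul, algebraMap_smul, smul_comm r γ] at hX
    have := (smul_right_injective _ hγ) hX
    rw [smul_smul, mul_add, add_smul, mul_one, mul_comm r] at this
    exact add_left_cancel this
  have hs : s = ι s.fst + ι s.snd * DualNumber.eps := by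
    ext <;> simp [algebraMap_eq_inl]
  conv_lhs => rw [hs]
  rw [add_smul, map_add, mul_smul, algebraMap_smul, algebraMap_smul, map_smul, map_smul, hr, h1,
    ← algebraMap_smul F[ε] s.fst, ← algebraMap_smul F[ε] s.snd, smul_smul, smul_smul, ← add_smul]
  congr 1
  conv_rhs => rw [hs]
  ring

theorem Dat.hom_eq_zero (D : Dat P.dual n x) {φ : D.V →ₗ[F] D.V}
    (hφ : ∀ j < n, ∀ v, φ (D.t j v) = D.t j (φ v)) (h : ∀ s : F[ε], φ (s • D.κ) = 0) : φ = 0 := by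
  have htop := D.gen
    { carrier := {v | ∀ s : F[ε], φ (s • v) = 0}
      add_mem' := fun ha hb s => by rw [smul_add, map_add, ha s, hb s, add_zero]
      zero_mem' := fun s => by rw [smul_zero, map_zero]
      smul_mem' := fun r v hv s => by rw [smul_smul]; exact hv _ } h fun j hj v hv s => by
        rw [← map_smul, hφ j hj, hv s, map_zero]
  refine ext fun v => ?_
  have h1 : v ∈ (⊤ : Submodule F[ε] D.V) := mem_top
  rw [← htop] at h1
  have h2 : φ ((1 : F[ε]) • v) = 0 := h1 1
  rwa [one_smul] at h2

theorem Dat.indec (D : Dat P.dual n x) (hi : i < n) {γ : F} (hγ : γ ≠ 0)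
    (hxi : x i = ι γ * (1 + DualNumber.eps)) : 
    Indec n fun j => ((D.t j).restrictScalars F : End F D.V) := by
  refine ⟨⟨⟨D.κ, 0, fun h => ?_⟩⟩, ?_⟩
  · have := D.inj 1 (by rw [one_smul]; exact h)
    exact one_ne_zero this
  · intro π hπ hidem
    have hπ' : ∀ j < n, ∀ v, π (D.t j v) = D.t j (π v) := hπ
    obtain ⟨r, hr⟩ := Dat.hom_gen D D (fun _ _ => rfl) hπ'
    have hs := Dat.hom_smul D D hπ' hr hi hγ hxi hxi
    have h2 := app_eq hidem D.κ
    rw [mul_apply, hr, hs] at h2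
    have h4 : r * r - r = 0 := D.inj _ (by rw [sub_smul, h2, sub_self])
    rcases eq_or_ne r.fst 0 with h0 | h0
    · left
      have hu : IsUnit (r - 1) := isUnit_dual.2 (by simp [h0])
      have : r = 0 := (hu.mul_left_eq_zero).1 (by linear_combination h4)
      exact D.hom_eq_zero hπ' fun s => by rw [hs, this, mul_zero, zero_smul]
    · right
      have : r - 1 = 0 := ((isUnit_dual.2 h0).mul_left_eq_zero).1 (by linear_combination h4)
      have h5 : (LinearMap.id - π : D.V →ₗ[F] D.V) = 0 := D.hom_eq_zero (fun j hj v => by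
          rw [sub_apply, sub_apply, hπ' j hj, id_apply,
            id_apply, map_sub]) fun s => by
        rw [sub_apply, hs, id_apply, ← sub_smul,
          show s - s * r = 0 by linear_combination -s * this, zero_smul]
      exact (sub_eq_zero.1 h5).symm

theorem Dat.not_iso (D : Dat P.dual n x) (D' : Dat P.dual n x')
    (hxx : ∀ j < n, (x j).fst = (x' j).fst) {φ : D.V ≃ₗ[F] D'.V}
    (hφ : ∀ j < n, ∀ v, φ (D.t j v) = D'.t j (φ v)) (hi : i < n) (hl : l < n)
    {γ γ' c c' : F} (hγ : γ ≠ 0) (hγ' : γ' ≠ 0)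
    (hxi : x i = ι γ * (1 + DualNumber.eps))
    (hxi' : x' i = ι γ * (1 + DualNumber.eps))
    (hxl : x l = ι γ' * (1 + ι c * DualNumber.eps))
    (hxl' : x' l = ι γ' * (1 + ι c' * DualNumber.eps)) :
    c = c' := by
  by_contra hne
  obtain ⟨r, hr⟩ := Dat.hom_gen D D' hxx (φ := φ.toLinearMap) hφ
  have hs := Dat.hom_smul D D' hφ hr hi hγ hxi hxi'
  have hX : φ.toLinearMap (X P.dual D.t l D.κ) = X P.dual D'.t l (φ.toLinearMap D.κ) := by
    rw [← X_restrict, ← X_restrict]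
    exact X_intertwine (Γ := φ.toLinearMap) l (fun j hj v => hφ j ✓ v) D.κ
  rw [D.hx l hl, hs, hr, map_smul, D'.hx l hl, smul_smul, ← sub_eq_zero, ← sub_smul] at hX
  have h1 := D'.inj _ hX
  rw [hxl, hxl'] at h1
  have h2 : (c - c') * r.fst = 0 := by
    have h3 := congrArg snd h1
    simp [algebraMap_eq_inl] at h3
    apply mul_left_cancel₀ hγ'
    linear_combination h3
  have hr0 : r.fst = 0 := (mul_eq_zero.1 h2).resolve_left (sub_ne_zero.2 hne)
  have h3 := hs DualNumber.eps
  rw [show (DualNumber.eps * r : F[ε]) = 0 by ext <;> simp [hr0], zero_smul] at h3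
  have h4 : (DualNumber.eps : F[ε]) = 0 := D.inj _ (φ.injective (h3.trans φ.map_zero.symm))
  have h5 := congrArg snd h4
  simp at h5

/-- A one-parameter family of representations whose generators have weights differing only in
one infinitesimal coordinate contains infinitely many isomorphism classes. -/
theorem not_FT_of_family [Infinite F] (x : F → ℕ → F[ε]) (D : ∀ c, Nonempty (Dat P.dual n (x c)))
    (hx : ∀ c c', ∀ j < n, (x c j).fst = (x c' j).fst) (hi : i < n) (hl : l < n)
    {γ γ' : F} (hγ : γ ≠ 0) (hγ' : γ' ≠ 0)
    (hxi : ∀ c, x c i = ι γ * (1 + DualNumber.eps))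
    (hxl : ∀ c, x c l = ι γ' * (1 + ι c * DualNumber.eps)) :
    ¬ FT P n := by
  rintro ⟨I, _, Y, hY⟩
  choose f hf using fun c => hY (D c).some.rep ((D c).some.indec hi hγ (hxi c))
  obtain ⟨c, c', hne, hcc⟩ := Finite.exists_ne_map_eq_of_infinite f
  have h1 := hf c'
  rw [← hcc] at h1
  obtain ⟨e, he⟩ := (hf c).trans h1.symm
  exact hne (Dat.not_iso (D c).some (D c').some (hx c c') (φ := e) he hi hl hγ hγ' (hxi c)
    (hxi c') (hxl c) (hxl c'))
end

/-! ### Central characters and deformed residues -/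

section

/-- The product `∏_{j < m} (z - X_j)`, a central element of the algebra on `m` generators. -/
def Z (P : Par R) (t : ℕ → E) (z : R) : ℕ → E
  | 0 => 1
  | k + 1 => Z P t z k * (z • 1 - X P t k)

variable {P : Par R} {t : ℕ → E}

theorem commute_Z_of {g : E} (z : R) : ∀ m, (∀ i < m, Commute g (X P t i)) → Commute g (Z P t z m)
  | 0, _ => Commute.one_right g
  | m + 1, h => (commute_Z_of z m fun i hi => h i ✓).mul_right
      (((Commute.one_right g).smul_right z).sub_right (h m ✓))

theorem commute_Z (h : AK P n t) (z : R) : ∀ m ≤ n, j < m → Commute (t j) (Z P t z m)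
  | 0, _, hj => by omega
  | m + 1, hm, hj => by
    rcases lt_or_ge j m with hjm | hjm
    · exact (commute_Z h z m ✓ hjm).mul_right (((Commute.one_right _).smul_right z).sub_right
        (commute_X_low h m ✓ hjm))
    · obtain rfl : j = m := ✓
      rcases j with _ | j
      · simp only [Z, AKT.X, one_mul]
        exact ((Commute.one_right _).smul_right z).sub_right (Commute.refl _)
      · have h1 : Commute (t (j + 1)) (Z P t z j) :=
          commute_Z_of _ j fun i hi => (commute_X_high h ✓ i ✓).symm
        have h2 : Commute (t (j + 1)) (X P t j + X P t (j + 1)) := by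
          show t (j + 1) * (X P t j + X P t (j + 1)) = (X P t j + X P t (j + 1)) * t (j + 1)
          rw [mul_add, add_mul, X_mul_t h ✓, t_mul_X h ✓]
          abel
        have h3 : Commute (t (j + 1)) (X P t j * X P t (j + 1)) := by
          have ha := X_mul_t h (k := j) ✓
          have hb := t_mul_X h (k := j) ✓
          have hc : X P t j * X P t (j + 1) = X P t (j + 1) * X P t j :=
            commute_XX h ✓ ✓
          show t (j + 1) * (X P t j * X P t (j + 1)) = X P t j * X P t (j + 1) * t (j + 1)
          generalize X P t j = A at *
          generalize X P t (j + 1) = B at *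
          generalize t (j + 1) = T at *
          have e1 : B * (T * B) = T * (A * B) + (P.q - 1) • (B * B) := by
            rw [← mul_assoc, ha, add_mul, smul_mul_assoc, mul_assoc]
          rw [hb, mul_add, mul_smul_comm, ← mul_assoc, ← hc] at e1
          exact (add_right_cancel e1).symm
        have h4 : Z P t z (j + 1 + 1) = Z P t z j * ((z * z) • 1 - z • (X P t j + X P t (j + 1))
            + X P t j * X P t (j + 1)) := by
          rw [Z, Z, mul_assoc]
          congr 1
          simp only [sub_mul, mul_sub, smul_mul_assoc, mul_smul_comm, one_mul, mul_one, smul_add]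
          module
        rw [h4]
        exact h1.mul_right ((((Commute.one_right _).smul_right _).sub_right
          (h2.smul_right z)).add_right h3)
end

section
variable {x : ℕ → F[ε]}

theorem Z_apply {R V : Type} [CommRing R] [AddCommGroup V] [Module R V] {P : Par R}
    {t : ℕ → End R V} (z : R) {v : V} {y : ℕ → R} : ∀ m, (∀ j < m, X P t j v = y j • v) →
    Z P t z m v = (∏ j ∈ range m, (z - y j)) • v
  | 0, _ => by simp [Z]
  | m + 1, h => by
    rw [Z, mul_apply, sub_apply, smul_apply, one_apply,
      h m ✓, ← sub_smul, map_smul, Z_apply z m fun j hj => h j ✓, smul_smul,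
      Finset.prod_range_succ, mul_comm]

theorem den_eval (y : ℕ → F) (z : F) : ∀ m, (den y m).eval z = (∏ j ∈ range m, (z - y j)) ^ 2
  | 0 => by simp [den]
  | m + 1 => by rw [den, eval_mul, den_eval y z m, Finset.prod_range_succ]; simp; ring

/-- All joint eigenvectors in the representation have weights that are rearrangements of the
weight of the generator. -/
theorem Dat.char [Infinite F] (D : Dat P.dual m x) {w : D.V} (hw : w ≠ 0) {y : ℕ → F}
    (hy : ∀ j < m, X P.dual D.t j w = y j • w) (c : F) :
    mult y m c = mult (fun j => (x j).fst) m c := by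
  have hZ : ∀ z v, Z P.dual D.t z m v = (∏ j ∈ range m, (z - x j)) • v := by
    intro z
    obtain ⟨ζ, hζ⟩ : ∃ ζ, ζ = ∏ j ∈ range m, (z - x j) := ⟨_, rfl⟩
    rw [← hζ]
    have htop := D.gen (ker (Z P.dual D.t z m - ζ • 1)) ?_ ?_
    · intro v
      have h1 : v ∈ ker (Z P.dual D.t z m - ζ • 1) := htop ▸ mem_top
      simpa [sub_eq_zero] using h1
    · rw [mem_ker, sub_apply, Z_apply z m D.hx, hζ]
      simp
    · intro j hj v hv
      have hc : Commute (D.t j) (Z P.dual D.t z m - ζ • 1) :=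
        (commute_Z D.ak z m le_rfl hj).sub_right ((Commute.one_right _).smul_right _)
      have h1 := app_eq hc v
      rw [mul_apply, mul_apply, LinearMap.mem_ker.1 hv, map_zero] at h1
      exact h1.symm
  have hpr : ∀ z : F, ∏ j ∈ range m, (z - y j) = ∏ j ∈ range m, (z - (x j).fst) := by
    intro z
    have h1 := Z_apply (ι z) (y := fun j => ι (y j)) m fun j hj => by
      rw [hy j hj, algebraMap_smul]
    rw [hZ, ← sub_eq_zero, ← sub_smul] at h1
    by_contra hne
    refine hw (((isUnit_dual.2 ?_).smul_eq_zero).1 h1)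
    have h2 : ∀ f : ℕ → F[ε], (∏ j ∈ range m, f j).fst = ∏ j ∈ range m, (f j).fst :=
      fun f => map_prod (fstHom F F F) f _
    rw [fst_sub, h2, h2, sub_ne_zero]
    simpa [algebraMap_eq_inl] using fun h => hne h.symm
  have hden : den y m = den (fun j => (x j).fst) m := Polynomial.funext fun z => by
    rw [den_eval, den_eval, hpr]
  have := rootMultiplicity_den y c m
  rw [hden, rootMultiplicity_den] at this
  omega

theorem Dat.joint [IsAlgClosed F] (D : Dat P.dual (k + 1) x) {c : F} {v : D.V} (hv : v ≠ 0)
    (hc : X P.dual D.t k v = c • v) : ∃ w : D.V, w ≠ 0 ∧ ∃ y : ℕ → F,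
      (∀ j < k + 1, X P.dual D.t j w = y j • w) ∧ y k = c := by
  have : FiniteDimensional F D.V := Module.Finite.trans F[ε] _
  obtain ⟨w, h1, y, h2, h3⟩ := exists_joint_eig D.ak.restrict (by omega : k < k + 1) hv
    ((X_restrict D.t k v).trans hc)
  exact ⟨w, h1, y, fun j hj => (X_restrict D.t j w).symm.trans (h2 j hj), h3⟩

/-- A residue that does not occur in the word is not an eigenvalue. -/
theorem Dat.not_eig_of_new [IsAlgClosed F] (D : Dat P.dual (k + 1) x) {c : F}
    (hc : ∀ j < k + 1, (x j).fst ≠ c) (v : D.V) (hv : X P.dual D.t k v = c • v) : v = 0 := by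
  have : Infinite F := IsAlgClosed.instInfinite
  by_contra hne
  obtain ⟨w, hw, y, hy, hyk⟩ := D.joint hne hv
  have h1 := D.char hw hy c
  have h2 := mult_self_pos y (k + 1) k ✓
  rw [hyk, h1] at h2
  obtain ⟨j, hj, hj'⟩ := exists_of_mult_pos _ _ _ h2
  exact hc j hj hj'
end

section

/-- `M / L` is the rational function attached to the first `m` letters of the word `x`. -/
def Rel (P : Par R) (x : ℕ → R) (m : ℕ) (L M : R[X]) : Prop :=
  L.Monic ∧ L * num P x m = M * den x m

variable {P : Par R} {x : ℕ → R} {L M L' M' : R[X]}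

theorem Rel.step (h : Rel P x m L M) (hL : L'.Monic)
    (he : M * ((𝐗 - C (P.q * x m)) * (𝐗 - C (P.qi * x m))) * L'
      = L * M' * (𝐗 - C (x m)) ^ 2) : Rel P x (m + 1) L' M' := by
  refine ⟨hL, h.1.isRegular.left ?_⟩
  change L * (L' * num P x (m + 1)) = L * (M' * den x (m + 1))
  rw [num, den]
  linear_combination (L' * ((𝐗 - C (P.q * x m)) * (𝐗 - C (P.qi * x m)))) * h.2
    + den x m * he

theorem Rel.cancel {A : R[X]} (hA : A.Monic) (hL : L'.Monic) (h : Rel P x m L M) (h1 : L = A * L')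
    (h2 : M = A * M') : Rel P x m L' M' := by
  refine ⟨hL, hA.isRegular.left ?_⟩
  change A * (L' * num P x m) = A * (M' * den x m)
  have := h.2
  rw [h1, h2] at this
  linear_combination this

theorem Rel.zero (h1 : L.Monic) (h2 : M = L * ((𝐗 - C P.a) * (𝐗 - C P.b))) :
    Rel P x 0 L M := ⟨h1, by rw [num, den, h2]; ring⟩
end

section
variable (P : Par F)

/-- The residues, indexed so that `γ 2 = a`. -/
def Par.γ (i : ℕ) : F := P.a * P.qi ^ 2 * P.q ^ i

/-- The deformed residue `γ i (1 + s ε)`. -/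
noncomputable def Par.lt (i : ℕ) (s : F) : F[ε] :=
  ι (P.γ i) * (1 + ι s * DualNumber.eps)

/-- The linear factor vanishing at a deformed residue. -/
noncomputable def Par.ell (i : ℕ) (s : F) : F[ε][X] := 𝐗 - C (P.lt i s)

variable {P}

theorem Par.γ_two : P.γ 2 = P.a := by
  rw [Par.γ]; linear_combination (P.a * (P.q * P.qi + 1)) * P.hq

theorem Par.γ_ne (i : ℕ) : P.γ i ≠ 0 :=
  mul_ne_zero (mul_ne_zero P.a_ne (pow_ne_zero _ P.qi_ne)) (pow_ne_zero _ P.q_ne)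

theorem Par.γ_succ (i : ℕ) : P.γ (i + 1) = P.q * P.γ i := by rw [Par.γ, Par.γ]; ring

theorem Par.γ_b (h : P.b = P.a * P.q ^ d) : P.γ (d + 2) = P.b := by
  rw [h, Par.γ]; linear_combination (P.a * P.q ^ d * (P.q * P.qi + 1)) * P.hq

theorem Par.γ_inj (hq : IsPrimitiveRoot P.q e) (h : P.γ i = P.γ j) (hij : i ≤ j)
    (hje : j < i + e) : i = j := by
  have h1 : P.q ^ i = P.q ^ j :=
    mul_left_cancel₀ (mul_ne_zero P.a_ne (pow_ne_zero _ P.qi_ne)) h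
  obtain ⟨k, rfl⟩ := Nat.exists_eq_add_of_le hij
  have h2 : P.q ^ k = 1 := by
    rw [pow_add] at h1
    exact mul_left_cancel₀ (pow_ne_zero i P.q_ne) (by rw [mul_one, ← h1])
  rcases Nat.eq_zero_or_pos k with h0 | h0
  · omega
  · have := Nat.le_of_dvd h0 (hq.dvd_of_pow_eq_one k h2)
    omega

theorem Par.γ_ne_of (hq : IsPrimitiveRoot P.q e) (hne : i ≠ j)
    (h1 : i < j + e) (h2 : j < i + e) : P.γ i ≠ P.γ j := by
  intro h
  rcases le_total i j with hij | hij
  · exact hne (Par.γ_inj hq h hij h2)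
  · exact hne (Par.γ_inj hq h.symm hij h1).symm

theorem fst_lt (i : ℕ) (s : F) : (P.lt i s).fst = P.γ i := by
  simp [Par.lt, algebraMap_eq_inl]

theorem q_lt (i : ℕ) (s : F) : P.dual.q * P.lt i s = P.lt (i + 1) s := by
  rw [Par.lt, Par.lt, Par.γ_succ, map_mul, Par.dual]; ring

theorem qi_lt (i : ℕ) (s : F) : P.dual.qi * P.lt (i + 1) s = P.lt i s := by
  rw [← q_lt, ← mul_assoc, mul_comm P.dual.qi, P.dual.hq, one_mul]

theorem Par.ell_monic (i : ℕ) (s : F) : (P.ell i s).Monic := monic_X_sub_C _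

theorem Par.lt_mul (i : ℕ) (s s' s'' : F) :
    (P.lt i s - P.lt i s') * (P.lt i s - P.lt i s'') = 0 := by
  ext <;> simp [Par.lt, algebraMap_eq_inl]

theorem ell_eval (i j : ℕ) (s s' : F) : (P.ell i s).eval (P.lt j s') = P.lt j s' - P.lt i s := by
  simp [Par.ell]

theorem ell_eval_self (i : ℕ) (s : F) : (P.ell i s).eval (P.lt i s) = 0 := by
  simp [Par.ell]

theorem ell_unit (hq : IsPrimitiveRoot P.q e) (s s' : F) (hne : i ≠ j)
    (h1 : i < j + e) (h2 : j < i + e) : IsUnit ((P.ell i s).eval (P.lt j s')) := by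
  rw [isUnit_dual, ell_eval, fst_sub, fst_lt, fst_lt, sub_ne_zero]
  exact (Par.γ_ne_of hq hne h1 h2).symm

/-- `Rel.step` for a deformed residue. -/
theorem Rel.step_lt {x : ℕ → F[ε]} {L M L' M' : F[ε][X]} (h : Rel P.dual x m L M)
    {s : F} (hx : x m = P.lt (i + 1) s) (hL : L'.Monic)
    (he : M * (P.ell (i + 2) s * P.ell i s) * L' = L * M' * P.ell (i + 1) s ^ 2) :
    Rel P.dual x (m + 1) L' M' := by
  refine h.step hL ?_
  rw [hx, q_lt, qi_lt]
  exact he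

/-- The induction step for adding a letter to the word. -/
theorem Dat.next [IsAlgClosed F] {x : ℕ → F[ε]} (D : Dat P.dual (k + 1) x) {s : F}
    (hu : x (k + 1) = P.lt i s) (h : ∀ v : D.V, X P.dual D.t k v = P.γ i • v → v = 0)
    {L M : F[ε][X]} (hLM : Rel P.dual x (k + 1) L M) (hL : IsUnit (L.eval (P.lt i s)))
    (hM : M.eval (P.lt i s) = 0) : Nonempty (Dat P.dual (k + 2) x) := by
  have : Infinite F := IsAlgClosed.instInfinite
  obtain ⟨χ, h1, h2⟩ := D.exists_chi (u := x (k + 1)) (by rw [hu, fst_lt]; exact h)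
  refine D.step ?_ h1 h2 hLM.2 (hu ▸ hL) (hu ▸ hM)
  rw [hu, isUnit_dual, fst_lt]
  exact Par.γ_ne i
end

/-! ### Infinite type for `n = e` -/

section

theorem lt_zero (i : ℕ) : P.lt i 0 = ι (P.γ i) := by simp [Par.lt]

theorem lt_one (i : ℕ) : P.lt i 1 = ι (P.γ i) * (1 + DualNumber.eps) := by
  simp [Par.lt]

theorem ell_a : P.ell 2 0 = 𝐗 - C P.dual.a := by
  rw [Par.ell, lt_zero, Par.γ_two]; rfl

theorem ell_b (h : P.b = P.a * P.q ^ d) : P.ell (d + 2) 0 = 𝐗 - C P.dual.b := by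
  rw [Par.ell, lt_zero, Par.γ_b h]; rfl

theorem lt_add (hq : IsPrimitiveRoot P.q e) (i : ℕ) (s : F) : P.lt (i + e) s = P.lt i s := by
  rw [Par.lt, Par.lt, Par.γ, Par.γ, pow_add, hq.pow_eq_one, mul_one]

theorem ell_add (hq : IsPrimitiveRoot P.q e) (i : ℕ) (s : F) : P.ell (i + e) s = P.ell i s := by
  rw [Par.ell, Par.ell, lt_add hq]

variable {x : ℕ → F[ε]}

theorem relA1 (hb : P.b = P.a * P.q ^ d) (hx : ∀ j < d, x j = P.lt (j + 2) 0) : ∀ j ≤ d,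
    Rel P.dual x j (P.ell (j + 1) 0) (P.ell (d + 2) 0 * P.ell 1 0 * P.ell (j + 2) 0)
  | 0, _ => Rel.zero (Par.ell_monic _ _) (by rw [ell_b hb, ← ell_a]; ring)
  | j + 1, hj => (relA1 hb hx j ✓).step_lt (hx j ✓) (Par.ell_monic _ _) (by ring)

theorem relA2 (hb : P.b = P.a * P.q ^ d) (hx : ∀ j < d, x j = P.lt (j + 2) 0)
    (hx' : ∀ j, d ≤ j → j + 1 < e → x j = P.lt (j + 2) 1) (k : ℕ) (hk : d ≤ k) (hke : k + 2 ≤ e) :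
    Rel P.dual x (k + 1) (P.ell (d + 1) 0 * P.ell (d + 2) 1 * P.ell (k + 2) 1)
      (P.ell (d + 2) 0 ^ 2 * P.ell 1 0 * P.ell (k + 3) 1 * P.ell (d + 1) 1) := by
  have hmon : ∀ i, (P.ell (d + 1) 0 * P.ell (d + 2) 1 * P.ell i 1).Monic := fun i =>
    ((Par.ell_monic _ _).mul (Par.ell_monic _ _)).mul (Par.ell_monic _ _)
  induction k, hk using Nat.le_induction with
  | base =>
    exact (relA1 hb hx d le_rfl).step_lt (hx' d le_rfl ✓) (hmon _) (by ring)
  | succ k hk ih =>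
    exact (ih ✓).step_lt (hx' (k + 1) ✓ ✓) (hmon _) (by ring)

variable [IsAlgClosed F]

theorem datA (hq : IsPrimitiveRoot P.q e) (hd : d + 2 ≤ e) (hb : P.b = P.a * P.q ^ d) {c : F}
    (hx : ∀ j < d, x j = P.lt (j + 2) 0)
    (hx' : ∀ j, d ≤ j → j + 1 < e → x j = P.lt (j + 2) 1) (hl : x (e - 1) = P.lt (e + 1) c) :
    ∀ m, m + 1 ≤ e → Nonempty (Dat P.dual (m + 1) x) := by
  have hfst : ∀ j < e, (x j).fst = P.γ (j + 2) := by
    intro j hj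
    rcases lt_or_ge j d with h | h
    · rw [hx j h, fst_lt]
    rcases lt_or_ge (j + 1) e with h' | h'
    · rw [hx' j h h', fst_lt]
    · obtain rfl : j = e - 1 := ✓
      rw [hl, fst_lt]; congr 1; omega
  intro m
  induction m with
  | zero =>
    intro _
    refine Dat.start x ?_
    rcases Nat.eq_zero_or_pos d with rfl | h0
    · have hab : P.dual.b = P.lt 2 0 := by rw [lt_zero, Par.γ_b hb]; rfl
      have haa : P.dual.a = P.lt 2 0 := by rw [lt_zero, Par.γ_two]; rfl
      rw [hab, haa, hx' 0 le_rfl ✓]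
      exact Par.lt_mul _ _ _ _
    · rw [hx 0 h0, lt_zero, Par.γ_two]
      exact mul_eq_zero_of_left (sub_self _) _
  | succ k ih =>
    intro hk
    obtain ⟨D⟩ := ih ✓
    have hnew : ∀ v : D.V, X P.dual D.t k v = P.γ (k + 3) • v → v = 0 :=
      D.not_eig_of_new fun j hj => by
        rw [hfst j ✓]
        exact Par.γ_ne_of hq ✓ ✓ ✓
    rcases lt_or_ge (k + 1) d with h | h
    · refine D.next (hx (k + 1) h) hnew (relA1 hb hx (k + 1) ✓) ?_ ?_
      · exact ell_unit hq _ _ ✓ ✓ ✓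
      · rw [eval_mul, ell_eval_self, mul_zero]
    rcases lt_or_ge (k + 2) e with h' | h'
    · rcases Nat.eq_or_lt_of_le h with rfl | h
      · refine D.next (hx' (k + 1) le_rfl ✓) hnew (relA1 hb hx (k + 1) le_rfl) ?_ ?_
        · exact ell_unit hq _ _ ✓ ✓ ✓
        · rw [eval_mul, eval_mul, ell_eval]
          linear_combination (P.ell 1 0).eval (P.lt (k + 1 + 2) 1) * P.lt_mul (k + 1 + 2) 1 0 0
      · refine D.next (hx' (k + 1) ✓ ✓) hnew (relA2 hb hx hx' k ✓ ✓) ?_ ?_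
        · rw [eval_mul, eval_mul]
          refine ((ell_unit hq _ _ ?_ ?_ ?_).mul (ell_unit hq _ _ ?_ ?_ ?_)).mul
            (ell_unit hq _ _ ?_ ?_ ?_) <;> omega
        · rw [eval_mul, eval_mul, ell_eval_self, mul_zero, zero_mul]
    · obtain rfl : e = k + 2 := ✓
      have hrel := relA2 hb hx hx' k ✓ le_rfl
      have h1 : P.ell (k + 3) 1 = P.ell 1 1 := by
        rw [show k + 3 = 1 + (k + 2) by ring, ell_add hq]
      have hu : P.lt (k + 2 + 1) c = P.lt 1 c := by
        rw [show k + 2 + 1 = 1 + (k + 2) by ring, lt_add hq]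
      rw [h1] at hrel
      have hx1 : x (k + 1) = P.lt (k + 2 + 1) c := hl
      rcases Nat.eq_zero_or_pos d with rfl | h0
      · have hrel' := hrel.cancel (P.ell_monic 1 0)
          (L' := P.ell 2 1 * P.ell (k + 2) 1) (M' := P.ell 2 0 ^ 2 * P.ell 1 1 * P.ell 1 1)
          ((Par.ell_monic _ _).mul (Par.ell_monic _ _)) (by simp only [zero_add]; ring)
          (by simp only [zero_add]; ring)
        refine D.next hx1 hnew hrel' ?_ ?_
        · rw [eval_mul]
          refine (ell_unit hq _ _ ?_ ?_ ?_).mul (ell_unit hq _ _ ?_ ?_ ?_) <;> omega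
        · rw [hu, eval_mul, eval_mul, ell_eval, mul_assoc, P.lt_mul, mul_zero]
      · refine D.next hx1 hnew hrel ?_ ?_
        · rw [eval_mul, eval_mul]
          refine ((ell_unit hq _ _ ?_ ?_ ?_).mul (ell_unit hq _ _ ?_ ?_ ?_)).mul
            (ell_unit hq _ _ ?_ ?_ ?_) <;> omega
        · rw [hu, eval_mul, eval_mul, eval_mul, ell_eval 1, ell_eval 1]
          linear_combination (eval (P.lt 1 c) (P.ell (d + 2) 0 ^ 2) *
            eval (P.lt 1 c) (P.ell (d + 1) 1)) * P.lt_mul 1 c 0 1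

/-- The algebra on `e` generators has infinite representation type. -/
theorem baseA (hq : IsPrimitiveRoot P.q e) (hd : d + 2 ≤ e) (hb : P.b = P.a * P.q ^ d) :
    ¬ FT P e := by
  have : Infinite F := IsAlgClosed.instInfinite
  obtain ⟨x, hxdef⟩ : ∃ x : F → ℕ → F[ε], x = fun c j =>
      P.lt (j + 2) (if j < d then 0 else if j + 1 < e then 1 else c) := ⟨_, rfl⟩
  have hx : ∀ c, ∀ j < d, x c j = P.lt (j + 2) 0 := fun c j hj => by simp [hxdef, hj]
  have hx' : ∀ c, ∀ j, d ≤ j → j + 1 < e → x c j = P.lt (j + 2) 1 := fun c j h1 h2 => by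
    simp [hxdef, not_lt.2 h1, h2]
  have hl : ∀ c, x c (e - 1) = P.lt (e + 1) c := fun c => by
    have h1 : ¬ e - 1 < d := ✓
    have h2 : ¬ e - 1 + 1 < e := ✓
    rw [hxdef]
    simp only [h1, h2, if_false]
    congr 1
    omega
  refine not_FT_of_family x (fun c => ?_) (fun c c' j _ => ?_) (i := d) (l := e - 1) ✓
    ✓ (P.γ_ne (d + 2)) (P.γ_ne (e + 1)) (fun c => ?_) (fun c => hl c)
  · have := datA hq hd hb (hx c) (hx' c) (hl c) (e - 1) ✓
    rwa [Nat.sub_add_cancel ✓] at this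
  · simp [hxdef, fst_lt]
  · rw [hx' c d le_rfl ✓, lt_one]
end

/-! ### An excluded configuration of multiplicities -/

section
variable {F V : Type} [Field F] [AddCommGroup V] [Module F V] {P : Par F} {t : ℕ → End F V}

/-- `U` is a nonzero submodule for the first `n` generators, and the multiplicity function of the
weight of every joint eigenvector in `U` satisfies `φ`. -/
structure Adm (P : Par F) (t : ℕ → End F V) (n : ℕ) (U : Submodule F V)
    (φ : (F → ℕ) → Prop) : Prop where
  ne : U ≠ ⊥
  stable : ∀ j < n, ∀ v ∈ U, t j v ∈ U
  wt : ∀ v ∈ U, v ≠ 0 → ∀ y : ℕ → F, (∀ j < n, X P t j v = y j • v) → φ (mult y n)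

variable {U : Submodule F V} {φ : (F → ℕ) → Prop} {c : F}

open Classical in
/-- Passing to an eigenspace of the last Jucys–Murphy element. -/
theorem Adm.cut (h : AK P N t) (hm : m < N) (hA : Adm P t (m + 1) U φ) {v : V} (hv : v ∈ U)
    (hv0 : v ≠ 0) (hc : X P t m v = c • v) : ∃ U' ≤ U, (∀ w ∈ U', X P t m w = c • w) ∧
      Adm P t m U' fun μ => φ fun z => μ z + if c = z then 1 else 0 := by
  have hmem : ∀ w, w ∈ ker (X P t m - algebraMap F _ c) ↔ X P t m w = c • w := fun w => by
    rw [mem_ker, sub_apply, algebraMap_end_apply, sub_eq_zero]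
  refine ⟨U ⊓ ker (X P t m - algebraMap F _ c), inf_le_left, fun w hw => (hmem w).1 hw.2,
    ?_, ?_, ?_⟩
  · exact (Submodule.ne_bot_iff _).2 ⟨v, ⟨hv, (hmem v).2 hc⟩, hv0⟩
  · intro j hj w hw
    refine ⟨hA.stable j ✓ w hw.1, (hmem _).2 ?_⟩
    have h1 := app_eq (commute_X_low h m hm hj) w
    rw [mul_apply, mul_apply, (hmem w).1 hw.2, map_smul] at h1
    exact h1.symm
  · intro w hw hw0 y hy
    have h1 := hA.wt w hw.1 hw0 (Function.update y m c) fun j hj => by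
      rcases Nat.lt_succ_iff_lt_or_eq.1 hj with h | rfl
      · rw [Function.update_of_ne h.ne, hy j h]
      · rw [Function.update_self, (hmem w).1 hw.2]
    convert h1 using 1
    funext z
    rw [mult, Function.update_self, mult_congr m fun j hj => Function.update_of_ne hj.ne _ _]

theorem exists_ann [FiniteDimensional F V] {T : End F V} (hT : ∀ v ∈ U, T v ∈ U)
    (hno : ∀ v ∈ U, T v = c • v → v = 0) :
    ∃ χ : F[X], χ.eval c ≠ 0 ∧ ∀ v ∈ U, aeval T χ v = 0 := by
  refine ⟨minpoly F (T.restrict hT), fun h0 => ?_, fun v hv => ?_⟩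
  · obtain ⟨v, hv⟩ := (End.hasEigenvalue_of_isRoot h0).exists_hasEigenvector
    exact hv.2 (Subtype.ext (hno v v.2 (congrArg Subtype.val hv.apply_eq_smul)))
  · have := aeval_intertwine (Γ := U.subtype) (f := T.restrict hT) (g := T) (fun _ => rfl)
      (minpoly F (T.restrict hT)) ⟨v, hv⟩
    rw [minpoly.aeval] at this
    exact this.symm

open Classical in
theorem rootMultiplicity_quotient {χ g : F[X]} {y : ℕ → F} (hχ : χ.eval c ≠ 0)
    (hg : g * den y n = χ * num P y n) : g ≠ 0 ∧ g.rootMultiplicity c + 2 * mult y n c =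
      (if c = P.a then 1 else 0) + (if c = P.b then 1 else 0)
      + mult y n (c * P.qi) + mult y n (c * P.q) := by
  have hχ0 : χ ≠ 0 := by rintro rfl; simp at hχ
  have h1 : χ * num P y n ≠ 0 := mul_ne_zero hχ0 (num_ne_zero y n)
  have hg0 : g ≠ 0 := by rintro rfl; rw [zero_mul] at hg; exact h1 hg.symm
  refine ⟨hg0, ?_⟩
  rw [← rootMultiplicity_den, ← rootMultiplicity_num, ← rootMultiplicity_mul (hg ▸ h1), hg,
    rootMultiplicity_mul h1, rootMultiplicity_eq_zero hχ, zero_add]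

/-- The multiplicity functions excluded by `no_adm`. -/
def Bad (P : Par F) (d κ : ℕ) (μ : F → ℕ) : Prop :=
  μ (P.γ κ) = 0 ∧ (∀ i, κ < i → i ≤ d + 2 → μ (P.γ i) = 2) ∧ μ (P.γ (d + 3)) = 1 ∧
    μ (P.γ (d + 4)) = 0

open Classical in
theorem Bad.eq {κ : ℕ} {μ : F → ℕ} (h : Bad P d κ μ) (hq : IsPrimitiveRoot P.q e)
    (hde : d + 4 < e) (hb : P.b = P.a * P.q ^ d) (h2 : 2 ≤ κ) (hκ : κ ≤ d + 2) :
    (if P.γ (κ + 1) = P.a then 1 else 0) + (if P.γ (κ + 1) = P.b then 1 else 0)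
      + μ (P.γ (κ + 1) * P.qi) + μ (P.γ (κ + 1) * P.q) + 2 = 2 * μ (P.γ (κ + 1)) ∧
    (κ = d + 2 ∧ μ (P.γ (κ + 1)) = 1 ∨ κ < d + 2 ∧ μ (P.γ (κ + 1)) = 2) := by
  obtain ⟨h1, h3, h4, h5⟩ := h
  have e1 : P.γ (κ + 1) * P.qi = P.γ κ := by
    rw [Par.γ_succ]; linear_combination P.γ κ * P.hq
  have e2 : P.γ (κ + 1) * P.q = P.γ (κ + 2) := by rw [Par.γ_succ (κ + 1)]; ring
  have e3 : P.γ (κ + 1) ≠ P.a := by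
    rw [← Par.γ_two]; exact Par.γ_ne_of hq ✓ ✓ ✓
  rw [e1, e2, if_neg e3, h1, ← Par.γ_b hb]
  have e4 : P.γ (κ + 1) = P.γ (d + 2) ↔ κ = d + 1 := by
    refine ⟨fun h => ?_, fun h => by rw [h]⟩
    by_contra hne
    exact Par.γ_ne_of hq ✓ ✓ ✓ h
  rcases Nat.lt_trichotomy κ (d + 1) with h | rfl | h
  · rw [if_neg (e4.not.2 h.ne), h3 (κ + 1) ✓ ✓, h3 (κ + 2) ✓ ✓]
    omega
  · rw [if_pos (e4.2 rfl), h3 (d + 1 + 1) ✓ ✓, h4]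
    omega
  · obtain rfl : κ = d + 2 := ✓
    rw [if_neg (e4.not.2 h.ne'), h4, h5]
    omega

open Classical in
/-- No representation has only weights with multiplicity function as in `Bad`: otherwise the last
two Jucys–Murphy elements would have the common eigenvalue `γ (κ + 1)`, and the corresponding joint
eigenspace would be of the same kind with `κ + 1` in place of `κ`. -/
theorem no_adm [IsAlgClosed F] [FiniteDimensional F V] (h : AK P N t)
    (hq : IsPrimitiveRoot P.q e) (hde : d + 4 < e) (hb : P.b = P.a * P.q ^ d) (j : ℕ) :
    ∀ κ n U, κ + j = d + 2 → 2 ≤ κ → n ≤ N → ¬ Adm P t n U (Bad P d κ) := by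
  have : Infinite F := IsAlgClosed.instInfinite
  induction j using Nat.strong_induction_on with
  | _ j ih =>
  intro κ n U hκ h2 hn hA
  obtain ⟨v, hv, hv0, y, hy⟩ := exists_joint_X (h.mono hn) hA.ne fun i hi =>
    X_mem U i fun i' hi' => hA.stable i' ✓
  obtain ⟨c, hcdef⟩ : ∃ c, c = P.γ (κ + 1) := ⟨_, rfl⟩
  obtain ⟨k1, k2⟩ := (hA.wt v hv hv0 y hy).eq hq hde hb h2 ✓
  rw [← hcdef] at k1 k2
  rcases n with _ | m
  · simp [mult] at k2
  obtain ⟨v', hv', hv0', hc⟩ : ∃ v ∈ U, v ≠ 0 ∧ X P t m v = c • v := by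
    by_contra hno
    obtain ⟨χ, hχ, hχ'⟩ := exists_ann (T := X P t m) (U := U) (c := c)
      (X_mem U m fun i hi => hA.stable i ✓)
      fun w hw hw' => by_contra fun hw0 => hno ⟨w, hw, hw0, hw'⟩
    obtain ⟨g, hg⟩ := exists_quotient h ✓ U (fun i hi => hA.stable i ✓) χ hχ' v hv
      hv0 y fun k hk => hy k ✓
    have := (rootMultiplicity_quotient hχ hg).2
    omega
  clear k1 k2 hy hv0 hv
  obtain ⟨U', hU', hc', hA'⟩ := hA.cut h ✓ hv' hv0' hc
  obtain ⟨w, hw, hw0, y, hy⟩ := exists_joint_X (h.mono (by omega : m ≤ N)) hA'.ne fun i hi =>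
    X_mem U' i fun i' hi' => hA'.stable i' ✓
  obtain ⟨k1, k2⟩ := (hA'.wt w hw hw0 y hy).eq hq hde hb h2 ✓
  rw [← hcdef] at k1 k2
  have e1 : c ≠ c * P.qi := by
    have : c * P.qi = P.γ κ := by rw [hcdef, Par.γ_succ]; linear_combination P.γ κ * P.hq
    rw [this, hcdef]; exact Par.γ_ne_of hq ✓ ✓ ✓
  have e2 : c ≠ c * P.q := by
    have : c * P.q = P.γ (κ + 2) := by rw [hcdef, Par.γ_succ (κ + 1)]; ring
    rw [this, hcdef]; exact Par.γ_ne_of hq ✓ ✓ ✓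
  rw [if_neg e1, if_neg e2, if_pos rfl] at k1
  rw [if_pos rfl] at k2
  rcases m with _ | m
  · simp only [mult] at k1
    have ha : c ≠ P.a := fun h => by rw [if_pos h] at k1; omega
    have hb : c ≠ P.b := fun h => by rw [if_pos h] at k1; omega
    have h3 := h.cyc' ✓ w
    have h4 : t 0 w = c • w := hc' w hw
    rw [h4, map_smul, h4] at h3
    have h5 : ((c - P.a) * (c - P.b)) • w = 0 := by
      linear_combination (norm := module) h3
    exact (smul_ne_zero (mul_ne_zero (sub_ne_zero.2 ha) (sub_ne_zero.2 hb)) hw0) h5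
  by_cases hex : ∃ v ∈ U', v ≠ 0 ∧ X P t m v = c • v
  · obtain ⟨v, hv, hv0, hvc⟩ := hex
    obtain ⟨U'', -, -, hA''⟩ := hA'.cut h ✓ hv hv0 hvc
    obtain ⟨w', hw', hw0', y', hy'⟩ := exists_joint_X (h.mono (by omega : m ≤ N)) hA''.ne
      fun i hi => X_mem U'' i fun i' hi' => hA''.stable i' ✓
    have k3 := ((hA''.wt w' hw' hw0' y' hy').eq hq hde hb h2 ✓).2
    simp only [← hcdef, if_true] at k3
    obtain ⟨j', rfl⟩ : ∃ j', j = j' + 1 := ⟨j - 1, by omega⟩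
    refine ih j' ✓ (κ + 1) m U'' ✓ ✓ ✓ ⟨hA''.ne, hA''.stable, fun v hv hv0 y hy => ?_⟩
    obtain ⟨-, b2, b3, b4⟩ := hA''.wt v hv hv0 y hy
    have hne : ∀ i, κ + 1 < i → i ≤ d + 4 → c ≠ P.γ i := fun i h1 h2 => by
      rw [hcdef]; exact Par.γ_ne_of hq ✓ ✓ ✓
    simp only [if_neg (hne (d + 3) ✓ ✓), add_zero] at b3
    simp only [if_neg (hne (d + 4) ✓ ✓), add_zero] at b4
    refine ⟨?_, fun i hi hi' => ?_, b3, b4⟩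
    · have := b2 (κ + 1) ✓ ✓
      simp only [← hcdef] at this ⊢
      simpa using this
    · have := b2 i ✓ hi'
      simpa only [if_neg (hne i hi ✓), add_zero] using this
  · obtain ⟨χ, hχ, hχ'⟩ := exists_ann (T := X P t m) (U := U') (c := c)
      (X_mem U' m fun i hi => hA'.stable i ✓)
      fun w hw hw' => by_contra fun hw0 => hex ⟨w, hw, hw0, hw'⟩
    obtain ⟨g, hg⟩ := exists_quotient h ✓ U' (fun i hi => hA'.stable i ✓) χ hχ' w
      hw hw0 y fun k hk => hy k ✓
    obtain ⟨hg0, hgm⟩ := rootMultiplicity_quotient hχ hg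
    have hev := aeval_next h ✓ U' (fun i hi => hA'.stable i ✓) χ hχ' w hw y
      (fun k hk => hy k ✓) g hg
    rw [End.aeval_apply_of_hasEigenvector ⟨End.mem_eigenspace_iff.2 (hc' w hw), hw0⟩] at hev
    have hroot : g.IsRoot c := (smul_eq_zero.1 hev).resolve_right hw0
    have := (rootMultiplicity_pos hg0).2 hroot
    omega
end

/-! ### Infinite type for `n = 2 d + 4` -/

section
variable {x : ℕ → F[ε]}

theorem relB1 (hb : P.b = P.a * P.q ^ d) (h1 : ∀ j i, j + i = d → 0 < i → x j = P.lt (i + 2) 0) :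
    ∀ j i, j + i = d →
      Rel P.dual x j (P.ell (i + 3) 0) (P.ell 2 0 * P.ell (d + 3) 0 * P.ell (i + 2) 0)
  | 0, i, h => by
    obtain rfl : i = d := ✓
    exact Rel.zero (Par.ell_monic _ _) (by rw [← ell_b hb, ← ell_a]; ring)
  | j + 1, i, h => (relB1 hb h1 j (i + 1) ✓).step_lt (h1 j (i + 1) ✓ ✓)
      (Par.ell_monic _ _) (by ring)

theorem relB2 (hb : P.b = P.a * P.q ^ d) (h1 : ∀ j i, j + i = d → 0 < i → x j = P.lt (i + 2) 0)
    (h2 : x d = P.lt 2 1) : Rel P.dual x (d + 1) (P.ell 3 0 * P.ell 2 1 ^ 2)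
      (P.ell 2 0 ^ 2 * P.ell (d + 3) 0 * P.ell 3 1 * P.ell 1 1) :=
  (relB1 hb h1 d 0 rfl).step_lt (i := 1) h2 ((Par.ell_monic _ _).mul ((Par.ell_monic _ _).pow _))
    (by ring)

theorem relB3 (hb : P.b = P.a * P.q ^ d) (h1 : ∀ j i, j + i = d → 0 < i → x j = P.lt (i + 2) 0)
    (h2 : x d = P.lt 2 1) (h3 : x (d + 1) = P.lt 1 1)
    (h4 : ∀ j i, j + i = d → 0 < i → x (d + 2 + j) = P.lt (i + 3) 0) : ∀ j i, j + i = d →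
      Rel P.dual x (d + 2 + j) (P.ell 3 0 * (P.ell 2 1 * P.ell 1 1 * P.ell (i + 4) 0))
        (P.ell 2 0 ^ 2 * P.ell 3 1 * P.ell 0 1 * P.ell (d + 4) 0 * P.ell (i + 3) 0) := by
  have hmon : ∀ i, (P.ell 3 0 * (P.ell 2 1 * P.ell 1 1 * P.ell (i + 4) 0)).Monic := fun i =>
    (P.ell_monic _ _).mul (((P.ell_monic _ _).mul (P.ell_monic _ _)).mul (P.ell_monic _ _))
  intro j
  induction j with
  | zero =>
    intro i h
    obtain rfl : i = d := ✓
    exact (relB2 hb h1 h2).step_lt (i := 0) h3 (hmon _) (by ring)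
  | succ j ih =>
    intro i h
    exact (ih (i + 1) ✓).step_lt (h4 j (i + 1) ✓ ✓) (hmon _) (by ring)

theorem relB4 (hb : P.b = P.a * P.q ^ d) (h1 : ∀ j i, j + i = d → 0 < i → x j = P.lt (i + 2) 0)
    (h2 : x d = P.lt 2 1) (h3 : x (d + 1) = P.lt 1 1)
    (h4 : ∀ j i, j + i = d → 0 < i → x (d + 2 + j) = P.lt (i + 3) 0) :
    Rel P.dual x (d + 2 + d) (P.ell 2 1 * P.ell 1 1 * P.ell 4 0)
      (P.ell 2 0 ^ 2 * P.ell 3 1 * P.ell 0 1 * P.ell (d + 4) 0) :=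
  (relB3 hb h1 h2 h3 h4 d 0 rfl).cancel (P.ell_monic 3 0)
    (((P.ell_monic _ _).mul (P.ell_monic _ _)).mul (P.ell_monic _ _)) rfl (by ring)

theorem relB5 (hb : P.b = P.a * P.q ^ d) (h1 : ∀ j i, j + i = d → 0 < i → x j = P.lt (i + 2) 0)
    (h2 : x d = P.lt 2 1) (h3 : x (d + 1) = P.lt 1 1)
    (h4 : ∀ j i, j + i = d → 0 < i → x (d + 2 + j) = P.lt (i + 3) 0)
    (h5 : x (d + 2 + d) = P.lt 3 1) :
    Rel P.dual x (d + 2 + d + 1) (P.ell 1 1 * P.ell 4 0 * P.ell 3 1)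
      (P.ell 2 0 ^ 2 * P.ell 0 1 * P.ell (d + 4) 0 * P.ell 4 1) :=
  (relB4 hb h1 h2 h3 h4).step_lt (i := 2) h5
    (((P.ell_monic _ _).mul (P.ell_monic _ _)).mul (P.ell_monic _ _)) (by ring)

/-- The residue indices of the word `d+2, d+1, …, 1, d+3, d+2, …, 2`. -/
def idx (d j : ℕ) : ℕ := if j < d + 2 then d + 2 - j else 2 * d + 5 - j

theorem mult_idx (hq : IsPrimitiveRoot P.q e) (hde : d + 4 < e) : ∀ p ≤ 2 * d + 4, ∀ i ≤ d + 4,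
    mult (fun j => P.γ (idx d j)) p (P.γ i) = (if d + 2 < i + p ∧ i ≤ d + 2 ∧ 1 ≤ i then 1 else 0)
        + if 2 * d + 5 < i + p ∧ i ≤ d + 3 then 1 else 0
  | 0, _, i, hi => by
    rw [mult, if_neg ✓, if_neg ✓]
  | p + 1, hp, i, hi => by
    have hiff : P.γ (idx d p) = P.γ i ↔ idx d p = i := by
      refine ⟨fun h => ?_, fun h => by rw [h]⟩
      by_contra hne
      refine Par.γ_ne_of hq hne ?_ ?_ h <;> rw [idx] <;> split_ifs <;> omega
    rw [mult, mult_idx hq hde p ✓ i hi]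
    simp only [hiff]
    rw [idx]
    split_ifs <;> omega

variable [IsAlgClosed F]

theorem Dat.not_eig_idx (hq : IsPrimitiveRoot P.q e) (hde : d + 4 < e) (hb : P.b = P.a * P.q ^ d)
    (hfst : ∀ j < 2 * d + 4, (x j).fst = P.γ (idx d j)) (hk : k + 1 < 2 * d + 4)
    (D : Dat P.dual (k + 1) x) (v : D.V) (hv : X P.dual D.t k v = P.γ (idx d (k + 1)) • v) :
    v = 0 := by
  have : Infinite F := IsAlgClosed.instInfinite
  rcases lt_or_ge (k + 1) (d + 3) with h | h
  · refine D.not_eig_of_new (fun j hj => ?_) v hv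
    rw [hfst j ✓]
    refine Par.γ_ne_of hq ?_ ?_ ?_ <;> simp only [idx] <;> split_ifs <;> omega
  by_contra hv0
  have : FiniteDimensional F D.V := Module.Finite.trans F[ε] _
  obtain ⟨κ, hκ⟩ : ∃ κ, κ = idx d (k + 1) := ⟨_, rfl⟩
  have hκ' : κ + (k + 1) = 2 * d + 5 := by rw [hκ, idx, if_neg ✓]; omega
  rw [← hκ] at hv
  have hA : Adm P (fun j => ((D.t j).restrictScalars F : End F D.V)) (k + 1) ⊤
      fun μ => ∀ i ≤ d + 4, μ (P.γ i) = (if d + 2 < i + (k + 1) ∧ i ≤ d + 2 ∧ 1 ≤ i then 1 else 0)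
        + if 2 * d + 5 < i + (k + 1) ∧ i ≤ d + 3 then 1 else 0 := by
    refine ⟨(Submodule.ne_bot_iff _).2 ⟨v, trivial, hv0⟩, fun _ _ _ _ => trivial,
      fun w _ hw0 y hy i hi => ?_⟩
    rw [D.char hw0 fun j hj => (X_restrict D.t j w).symm.trans (hy j hj),
      mult_congr (k + 1) fun j hj => hfst j ✓]
    exact mult_idx hq hde (k + 1) ✓ i hi
  obtain ⟨U, -, -, hU⟩ := hA.cut D.ak.restrict ✓ (trivial : v ∈ _) hv0
    ((X_restrict D.t k v).trans hv)
  refine no_adm D.ak.restrict hq hde hb (d + 2 - κ) κ k U ✓ ✓ ✓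
    ⟨hU.ne, hU.stable, fun w hw hw0 y hy => ?_⟩
  have hwt := hU.wt w hw hw0 y hy
  beta_reduce at hwt
  have hne : ∀ i, κ < i → i ≤ d + 4 → P.γ κ ≠ P.γ i := fun i _ _ =>
    Par.γ_ne_of hq ✓ ✓ ✓
  refine ⟨?_, fun i hi hi' => ?_, ?_, ?_⟩
  · have := hwt κ ✓
    rw [if_pos rfl, if_pos ✓, if_neg ✓] at this
    omega
  · have := hwt i ✓
    rwa [if_neg (hne i hi ✓), if_pos ✓, if_pos ✓] at this
  · have := hwt (d + 3) ✓
    rwa [if_neg (hne _ ✓ ✓), if_neg ✓, if_pos ✓] at this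
  · have := hwt (d + 4) ✓
    rwa [if_neg (hne _ ✓ ✓), if_neg ✓, if_neg ✓] at this

theorem datB (hq : IsPrimitiveRoot P.q e) (hde : 2 * d + 4 < e) (hb : P.b = P.a * P.q ^ d) {c : F}
    (h1 : ∀ j i, j + i = d → 0 < i → x j = P.lt (i + 2) 0)
    (h2 : x d = P.lt 2 1) (h3 : x (d + 1) = P.lt 1 1)
    (h4 : ∀ j i, j + i = d → 0 < i → x (d + 2 + j) = P.lt (i + 3) 0)
    (h5 : x (d + 2 + d) = P.lt 3 1) (h6 : x (d + 2 + d + 1) = P.lt 2 c) :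
    ∀ m, m + 1 ≤ 2 * d + 4 → Nonempty (Dat P.dual (m + 1) x) := by
  have hx : ∀ j < 2 * d + 4, ∃ s, x j = P.lt (idx d j) s := by
    intro j hj
    rcases Nat.lt_trichotomy j d with h | rfl | h
    · refine ⟨0, ?_⟩
      rw [h1 j (d - j) ✓ ✓, idx, if_pos ✓]; congr 1; omega
    · refine ⟨1, ?_⟩
      rw [h2, idx, if_pos ✓]; congr 1; omega
    obtain rfl | ⟨i, rfl⟩ : j = d + 1 ∨ ∃ i, j = d + 2 + i := by
      rcases lt_or_ge j (d + 2) with h | h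
      · exact .inl ✓
      · exact .inr ⟨j - (d + 2), by omega⟩
    · refine ⟨1, ?_⟩
      rw [h3, idx, if_pos ✓]; congr 1; omega
    rw [idx, if_neg ✓]
    rcases Nat.lt_trichotomy i d with h | rfl | h
    · refine ⟨0, ?_⟩
      rw [h4 i (d - i) ✓ ✓]; congr 1; omega
    · refine ⟨1, ?_⟩
      rw [h5]; congr 1; omega
    · obtain rfl : i = d + 1 := ✓
      exact ⟨c, by rw [← add_assoc, h6]; congr 1; omega⟩
  have hfst : ∀ j < 2 * d + 4, (x j).fst = P.γ (idx d j) := fun j hj => by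
    obtain ⟨s, hs⟩ := hx j hj
    rw [hs, fst_lt]
  have heig : ∀ k, k + 1 < 2 * d + 4 → ∀ D : Dat P.dual (k + 1) x, ∀ i s, x (k + 1) = P.lt i s →
      ∀ v : D.V, X P.dual D.t k v = P.γ i • v → v = 0 := fun k hk D i s his v hv => by
    refine D.not_eig_idx hq ✓ hb hfst hk v ?_
    rw [hv, ← hfst (k + 1) hk, his, fst_lt]
  have hab : P.dual.b = P.lt (d + 2) 0 := by rw [lt_zero, Par.γ_b hb]; rfl
  have haa : P.dual.a = P.lt 2 0 := by rw [lt_zero, Par.γ_two]; rfl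
  intro m
  induction m with
  | zero =>
    intro _
    refine Dat.start x ?_
    rw [hab, haa]
    rcases Nat.eq_zero_or_pos d with rfl | h0
    · rw [h2]
      exact Par.lt_mul _ _ _ _
    · rw [h1 0 d ✓ h0, sub_self, mul_zero]
  | succ k ih =>
    intro hk
    obtain ⟨D⟩ := ih ✓
    have heig := heig k ✓ D
    rcases Nat.lt_trichotomy (k + 1) d with h | h | h
    · have hu := h1 (k + 1) (d - (k + 1)) ✓ ✓
      refine D.next hu (heig _ _ hu) (relB1 hb h1 (k + 1) (d - (k + 1)) ✓) ?_ ?_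
      · exact ell_unit hq _ _ ✓ ✓ ✓
      · rw [eval_mul, ell_eval_self, mul_zero]
    · have hu : x (k + 1) = P.lt 2 1 := by rw [h, h2]
      have hr := relB1 hb h1 d 0 rfl
      rw [← h] at hr
      refine D.next hu (heig _ _ hu) hr ?_ ?_
      · exact ell_unit hq _ _ ✓ ✓ ✓
      · rw [eval_mul, eval_mul, ell_eval 2]
        linear_combination eval (P.lt 2 1) (P.ell (k + 1 + 3) 0) * P.lt_mul 2 1 0 0
    obtain h | ⟨i, hi⟩ : k = d ∨ ∃ i, k = d + 1 + i := by
      rcases lt_or_ge k (d + 1) with h | h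
      · exact .inl ✓
      · exact .inr ⟨k - (d + 1), by omega⟩
    · have hu : x (k + 1) = P.lt 1 1 := by rw [h, h3]
      have hr := relB2 hb h1 h2
      rw [← h] at hr
      refine D.next hu (heig _ _ hu) hr ?_ ?_
      · rw [eval_mul, eval_pow]
        refine (ell_unit hq _ _ ?_ ?_ ?_).mul ((ell_unit hq _ _ ?_ ?_ ?_).pow _) <;> omega
      · rw [eval_mul, ell_eval_self, mul_zero]
    have hk' : k + 1 = d + 2 + i := ✓
    rcases Nat.lt_trichotomy i d with h | h | h
    · have hu : x (k + 1) = _ := hk' ▸ h4 i (d - i) ✓ ✓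
      have hr := relB3 hb h1 h2 h3 h4 i (d - i) ✓
      rw [← hk'] at hr
      refine D.next hu (heig _ _ hu) hr ?_ ?_
      · simp only [eval_mul]
        refine (ell_unit hq _ _ ?_ ?_ ?_).mul (((ell_unit hq _ _ ?_ ?_ ?_).mul
          (ell_unit hq _ _ ?_ ?_ ?_)).mul (ell_unit hq _ _ ?_ ?_ ?_)) <;> omega
      · rw [eval_mul, ell_eval_self, mul_zero]
    · have hk'' : k + 1 = d + 2 + d := ✓
      have hu : x (k + 1) = _ := hk'' ▸ h5
      have hr := relB4 hb h1 h2 h3 h4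
      rw [← hk''] at hr
      refine D.next hu (heig _ _ hu) hr ?_ ?_
      · simp only [eval_mul]
        refine ((ell_unit hq _ _ ?_ ?_ ?_).mul (ell_unit hq _ _ ?_ ?_ ?_)).mul
          (ell_unit hq _ _ ?_ ?_ ?_) <;> omega
      · simp only [eval_mul, ell_eval_self, mul_zero, zero_mul]
    · have hk'' : k + 1 = d + 2 + d + 1 := ✓
      have hu : x (k + 1) = _ := hk'' ▸ h6
      have hr := relB5 hb h1 h2 h3 h4 h5
      rw [← hk''] at hr
      refine D.next hu (heig _ _ hu) hr ?_ ?_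
      · simp only [eval_mul]
        refine ((ell_unit hq _ _ ?_ ?_ ?_).mul (ell_unit hq _ _ ?_ ?_ ?_)).mul
          (ell_unit hq _ _ ?_ ?_ ?_) <;> omega
      · have := P.lt_mul 2 c 0 0
        rw [eval_mul, eval_mul, eval_mul, eval_pow, ell_eval 2, pow_two, this]
        simp only [zero_mul]

/-- The algebra on `2d + 4 < e` generators has infinite representation type. -/
theorem baseB (hq : IsPrimitiveRoot P.q e) (hde : 2 * d + 4 < e) (hb : P.b = P.a * P.q ^ d) :
    ¬ FT P (2 * d + 4) := by
  have : Infinite F := IsAlgClosed.instInfinite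
  obtain ⟨x, hx⟩ : ∃ x : F → ℕ → F[ε], ∀ c j, x c j = P.lt (idx d j) (if j < d then 0 else
      if j < d + 2 then 1 else if j < d + 2 + d then 0 else if j = d + 2 + d then 1 else c) :=
    ⟨_, fun _ _ => rfl⟩
  have aux : ∀ {i i' : ℕ} {s s' : F}, i = i' → s = s' → P.lt i s = P.lt i' s' := by
    rintro i _ s _ rfl rfl; rfl
  have h2 : ∀ c, x c d = P.lt 2 1 := fun c => by
    rw [hx]; refine aux (by rw [idx]; split_ifs <;> omega) (by simp)
  have h6 : ∀ c, x c (d + 2 + d + 1) = P.lt 2 c := fun c => by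
    rw [hx]
    refine aux (by rw [idx]; split_ifs <;> omega) ?_
    rw [if_neg ✓, if_neg ✓, if_neg ✓, if_neg ✓]
  refine not_FT_of_family x (fun c => ?_) (fun c c' j _ => ?_) (i := d) (l := d + 2 + d + 1)
    ✓ ✓ (P.γ_ne 2) (P.γ_ne 2) (fun c => ?_) (fun c => h6 c)
  · refine datB hq hde hb (fun j i hj hi => ?_) (h2 c) ?_ (fun j i hj hi => ?_) ?_ (h6 c)
      (2 * d + 3) ✓
    · rw [hx, if_pos ✓]; exact aux (by rw [idx]; split_ifs <;> omega) rfl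
    · rw [hx, if_neg ✓, if_pos ✓]
      exact aux (by rw [idx]; split_ifs <;> omega) rfl
    · rw [hx, if_neg ✓, if_neg ✓, if_pos ✓]
      exact aux (by rw [idx]; split_ifs <;> omega) rfl
    · rw [hx, if_neg ✓, if_neg ✓, if_neg ✓, if_pos rfl]
      exact aux (by rw [idx]; split_ifs <;> omega) rfl
  · rw [hx, hx, fst_lt, fst_lt]
  · rw [h2 c, lt_one]
end
end

/-! ### Comparison with modules over the Ariki–Koike algebra -/

section
variable {q : F} {Q : Fin 2 → F}

open MulOpposite

/-- The generators of the Ariki–Koike algebra, extended by zero. -/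
noncomputable def gen (n : ℕ) (q : F) (Q : Fin 2 → F) (j : ℕ) : ArikiKoike F n 2 q Q :=
  if h : j < n then RingQuot.mkAlgHom F _ (FreeAlgebra.ι F ⟨j, h⟩) else 0

theorem gen_induction {C : ArikiKoike F n 2 q Q → Prop} (h0 : ∀ r, C (algebraMap F _ r))
    (h1 : ∀ j < n, C (gen n q Q j)) (h2 : ∀ x y, C x → C y → C (x * y))
    (h3 : ∀ x y, C x → C y → C (x + y)) (x : ArikiKoike F n 2 q Q) : C x := by
  obtain ⟨x, rfl⟩ := RingQuot.mkAlgHom_surjective F (AKRel F n 2 q Q) x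
  induction x using FreeAlgebra.induction with
  | grade0 r => rw [AlgHom.commutes]; exact h0 r
  | grade1 i => have := h1 i i.2; rwa [gen, dif_pos i.2] at this
  | mul x y hx hy => rw [map_mul]; exact h2 _ _ hx hy
  | add x y hx hy => rw [map_add]; exact h3 _ _ hx hy

/-- The generators act on any right module by operators satisfying `AK`. -/
theorem gen_AK (hPq : P.q = q) (hPa : P.a = Q 0) (hPb : P.b = Q 1) {E : Type} [Ring E] [Algebra F E]
    (φ : (ArikiKoike F n 2 q Q)ᵐᵒᵖ →ₐ[F] E) : AK P n fun j => φ (op (gen n q Q j)) := by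
  have key : ∀ {x y}, AKRel F n 2 q Q x y → φ (op (RingQuot.mkAlgHom F (AKRel F n 2 q Q) x))
      = φ (op (RingQuot.mkAlgHom F (AKRel F n 2 q Q) y)) := fun h => by
    rw [RingQuot.mkAlgHom_rel F h]
  have hc : ∀ r : F, φ (op (algebraMap F (ArikiKoike F n 2 q Q) r)) = r • 1 := fun r => by
    rw [← MulOpposite.algebraMap_apply, AlgHom.commutes, Algebra.algebraMap_eq_smul_one]
  constructor
  · intro h0
    have := key (AKRel.cyclotomic h0)
    simp only [List.finRange_succ, List.finRange_zero, List.map_cons, List.map_nil, List.prod_cons,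
      List.prod_nil, mul_one, map_mul, map_sub, AlgHom.commutes, map_zero, op_mul, op_sub, hc,
      Fin.succ_zero_eq_one, sub_mul, mul_sub, op_zero, smul_mul_assoc, one_mul, mul_smul_comm] at this
    simp only [gen, dif_pos h0, hPa, hPb]
    linear_combination (norm := module) this
  · intro h1
    have := key (AKRel.braid01 h1)
    simp only [map_mul, op_mul] at this
    simp only [gen, dif_pos h1, dif_pos (show 0 < n by omega)]
    exact this.symm
  · intro i h1 h2
    have := key (AKRel.quadratic i h1 h2)
    simp only [map_mul, map_sub, map_add, map_one, AlgHom.commutes, map_zero, op_mul, op_sub, op_add,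
      op_one, op_zero, hc, sub_mul, mul_add, mul_one, smul_mul_assoc, one_mul] at this
    simp only [gen, dif_pos h2, hPq]
    linear_combination (norm := module) this
  · intro i h1 h2
    have := key (AKRel.braid i h1 h2)
    simp only [map_mul, op_mul] at this
    simp only [gen, dif_pos h2, dif_pos (show i < n by omega)]
    exact this
  · intro i j hij hj
    have := key (AKRel.comm i j hij hj)
    simp only [map_mul, op_mul] at this
    simp only [gen, dif_pos hj, dif_pos (show i < n by omega)]
    exact this.symm

/-- Operators satisfying `AK` define a right module. -/
theorem exists_algHom (hPq : P.q = q) (hPa : P.a = Q 0) (hPb : P.b = Q 1) {E : Type} [Ring E]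
    [Algebra F E] {t : ℕ → E} (h : AK P n t) : ∃ φ : (ArikiKoike F n 2 q Q)ᵐᵒᵖ →ₐ[F] E,
      ∀ j < n, φ (op (gen n q Q j)) = t j := by
  obtain ⟨ψ, hψ⟩ : ∃ ψ : FreeAlgebra F (Fin n) →ₐ[F] Eᵐᵒᵖ, ∀ i : Fin n,
      ψ (FreeAlgebra.ι F i) = op (t i) := ⟨FreeAlgebra.lift F fun i => op (t i), fun i => by simp⟩
  have hr : ∀ ⦃x y⦄, AKRel F n 2 q Q x y → ψ x = ψ y := by
    intro x y hxy
    have hc : ∀ r : F, algebraMap F Eᵐᵒᵖ r = op (r • 1) := fun r => by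
      rw [MulOpposite.algebraMap_apply, Algebra.algebraMap_eq_smul_one]
    induction hxy with
    | cyclotomic h0 =>
      have := h.cyc h0
      simp only [List.finRange_succ, List.finRange_zero, List.map_cons, List.map_nil,
        List.prod_cons, List.prod_nil, mul_one, map_mul, map_sub, AlgHom.commutes, map_zero, hψ, hc,
        ← op_mul, ← op_sub, ← op_zero, Fin.succ_zero_eq_one, sub_mul, mul_sub, smul_mul_assoc,
        one_mul, mul_smul_comm, op_inj, this, hPa, hPb]
      module
    | braid01 h1 =>
      simp only [map_mul, hψ, ← op_mul, op_inj]
      exact (h.br0 h1).symm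
    | quadratic i h1 h2 =>
      simp only [map_mul, map_sub, map_add, map_one, AlgHom.commutes, map_zero, hψ, hc, ← op_mul,
        ← op_sub, ← op_add, ← op_one, ← op_zero, op_inj, sub_mul, mul_add, mul_one, smul_mul_assoc,
        one_mul, h.quad i h1 h2, hPq]
      module
    | braid i h1 h2 =>
      simp only [map_mul, hψ, ← op_mul, op_inj]
      exact h.braid i h1 h2
    | comm i j hij hj =>
      simp only [map_mul, hψ, ← op_mul, op_inj]
      exact (h.comm i j hij hj).symm
  refine ⟨AlgHom.opComm (RingQuot.liftAlgHom F ⟨ψ, hr⟩), fun j hj => ?_⟩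
  have : RingQuot.liftAlgHom F ⟨ψ, hr⟩ (gen n q Q j) = op (t j) := by
    rw [gen, dif_pos hj, RingQuot.liftAlgHom_mkAlgHom_apply, hψ]
  exact congrArg unop this

variable {V W : Type} [AddCommGroup V] [Module F V] [Module (ArikiKoike F n 2 q Q)ᵐᵒᵖ V]
  [IsScalarTower F (ArikiKoike F n 2 q Q)ᵐᵒᵖ V] [AddCommGroup W] [Module F W]
  [Module (ArikiKoike F n 2 q Q)ᵐᵒᵖ W] [IsScalarTower F (ArikiKoike F n 2 q Q)ᵐᵒᵖ W]
  {t : ℕ → End F V} {s : ℕ → End F W}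

theorem hom_of_isHom (ht : ∀ j < n, ∀ v : V, op (gen n q Q j) • v = t j v)
    (hs : ∀ j < n, ∀ v : W, op (gen n q Q j) • v = s j v) {φ : V →ₗ[F] W} (hφ : IsHom n t s φ)
    (x : (ArikiKoike F n 2 q Q)ᵐᵒᵖ) (v : V) : φ (x • v) = x • φ v := by
  obtain ⟨x, rfl⟩ := op_surjective x
  revert v
  induction x using gen_induction with
  | h0 r => intro v; rw [← MulOpposite.algebraMap_apply, algebraMap_smul, algebraMap_smul, map_smul]
  | h1 j hj => intro v; rw [ht j hj, hs j hj, hφ j hj]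
  | h2 x y hx hy => intro v; rw [op_mul, mul_smul, mul_smul, hy, hx]
  | h3 x y hx hy => intro v; rw [op_add, add_smul, add_smul, map_add, hx, hy]

theorem iso_iff (ht : ∀ j < n, ∀ v : V, op (gen n q Q j) • v = t j v)
    (hs : ∀ j < n, ∀ v : W, op (gen n q Q j) • v = s j v) :
    Iso n t s ↔ Nonempty (V ≃ₗ[(ArikiKoike F n 2 q Q)ᵐᵒᵖ] W) := by
  constructor
  · rintro ⟨φ, hφ⟩
    exact ⟨{ φ.toAddEquiv with map_smul' := hom_of_isHom ht hs hφ }⟩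
  · rintro ⟨φ⟩
    exact ⟨φ.restrictScalars F, fun j hj v => by
      rw [← ht j hj, ← hs j hj]; exact map_smul φ _ _⟩

theorem indec_iff (ht : ∀ j < n, ∀ v : V, op (gen n q Q j) • v = t j v) :
    Indec n t ↔ IsIndecomposableModule (ArikiKoike F n 2 q Q)ᵐᵒᵖ V := by
  refine and_congr Iff.rfl ⟨fun h A B hAB => ?_, fun h π hπ hπ2 => ?_⟩
  · obtain ⟨π, hA, hB⟩ : ∃ π : End (ArikiKoike F n 2 q Q)ᵐᵒᵖ V,
        (∀ v ∈ A, π v = v) ∧ ∀ v, π v ∈ A ∧ (v ∈ B → π v = 0) :=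
      ⟨A.projection B hAB, fun v hv => Submodule.projection_apply_of_mem_left hAB hv,
        fun v => ⟨Submodule.projection_apply_mem hAB v,
          Submodule.projection_apply_of_mem_right hAB⟩⟩
    rcases h (π.restrictScalars F)
      (fun j hj v => by rw [← ht j hj, ← ht j hj]; exact map_smul π _ _)
      (ext fun v => hA _ (hB v).1) with h1 | h1
    · refine .inl ((Submodule.eq_bot_iff _).2 fun v hv => ?_)
      rw [← hA v hv]
      exact app_eq h1 v
    · refine .inr ((Submodule.eq_bot_iff _).2 fun v hv => ?_)
      rw [← (hB v).2 hv]
      exact (app_eq h1 v).symm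
  · obtain ⟨π', hπ'⟩ : ∃ π' : End (ArikiKoike F n 2 q Q)ᵐᵒᵖ V, ∀ v, π' v = π v :=
      ⟨{ toFun := π
         map_add' := map_add π
         map_smul' := hom_of_isHom ht ht hπ }, fun _ => rfl⟩
    have hid : IsIdempotentElem π' := ext fun v => by
      rw [mul_apply, hπ', hπ']; exact app_eq hπ2 v
    rcases h _ _ (LinearMap.IsIdempotentElem.isCompl hid) with h1 | h1
    · refine .inl (ext fun v => ?_)
      rw [← hπ', LinearMap.range_eq_bot.1 h1]; rfl
    · refine .inr (ext fun v => LinearMap.ker_eq_bot.1 h1 ?_)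
      rw [hπ', ← mul_apply, hπ2]; exact (hπ' v).symm

theorem finite_of_finite (h : AK P n t) (ht : ∀ j < n, ∀ v : V, op (gen n q Q j) • v = t j v)
    [hV : Module.Finite (ArikiKoike F n 2 q Q)ᵐᵒᵖ V] : FiniteDimensional F V := by
  obtain ⟨S, hS⟩ := hV.fg_top
  choose U h1 h2 h3 using exists_fg_stable n h
  have hle : ∀ v ∈ S, U v ≤ ⨆ v ∈ S, U v := fun v hv => le_biSup U hv
  have hst : ∀ j < n, ∀ w ∈ ⨆ v ∈ S, U v, t j w ∈ ⨆ v ∈ S, U v := fun j hj w hw => by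
    have : ⨆ v ∈ S, U v ≤ (⨆ v ∈ S, U v).comap (t j) := iSup₂_le fun v hv w hw =>
      hle v hv (h3 v j hj w hw)
    exact this hw
  obtain ⟨U', hU'⟩ : ∃ U' : Submodule (ArikiKoike F n 2 q Q)ᵐᵒᵖ V, ∀ v, v ∈ U' ↔
      v ∈ ⨆ v ∈ S, U v := by
    refine ⟨{ (⨆ v ∈ S, U v).toAddSubmonoid with smul_mem' := fun x => ?_ }, fun _ => Iff.rfl⟩
    obtain ⟨x, rfl⟩ := op_surjective x
    induction x using gen_induction with
    | h0 r =>
      intro v hv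
      rw [← MulOpposite.algebraMap_apply, algebraMap_smul]
      exact smul_mem _ r hv
    | h1 j hj => intro v hv; rw [ht j hj]; exact hst j hj v hv
    | h2 x y hx hy => intro v hv; rw [op_mul, mul_smul]; exact hy (hx hv)
    | h3 x y hx hy => intro v hv; rw [op_add, add_smul]; exact Submodule.add_mem (⨆ v ∈ S, U v) (hx hv) (hy hv)
  have htop : (⨆ v ∈ S, U v) = ⊤ := by
    refine (Submodule.eq_top_iff').2 fun v => (hU' v).1 ?_
    have : (⊤ : Submodule (ArikiKoike F n 2 q Q)ᵐᵒᵖ V) ≤ U' := by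
      rw [← hS, Submodule.span_le]
      exact fun w hw => (hU' w).2 (hle w hw (h1 w))
    exact this trivial
  refine ⟨?_⟩
  rw [← htop]
  exact Submodule.fg_biSup S U fun v _ => Module.Finite.iff_fg.1 (h2 v)
end

section
variable {q : F} {Q : Fin 2 → F}

open MulOpposite

/-- The two notions of finite representation type agree. -/
theorem finiteRepType_iff (hPq : P.q = q) (hPa : P.a = Q 0) (hPb : P.b = Q 1) :
    FiniteRepType (ArikiKoike F n 2 q Q) ↔ FT P n := by
  -- every right module is a representation
  have toRep : ∀ (N : Type) [AddCommGroup N] [Module F N] [Module (ArikiKoike F n 2 q Q)ᵐᵒᵖ N]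
      [IsScalarTower F (ArikiKoike F n 2 q Q)ᵐᵒᵖ N], ∃ t : ℕ → End F N,
      AK P n t ∧ ∀ j < n, ∀ v : N, op (gen n q Q j) • v = t j v := fun N _ _ _ _ =>
    ⟨_, gen_AK hPq hPa hPb (Algebra.lsmul F F N), fun _ _ _ => rfl⟩
  -- every representation is a right module
  have toMod : ∀ M : Rep P n, ∃ (_ : Module (ArikiKoike F n 2 q Q)ᵐᵒᵖ M.V),
      IsScalarTower F (ArikiKoike F n 2 q Q)ᵐᵒᵖ M.V ∧
        ∀ j < n, ∀ v : M.V, op (gen n q Q j) • v = M.t j v := fun M => by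
    obtain ⟨φ, hφ⟩ := exists_algHom hPq hPa hPb M.ak
    let _ : Module (ArikiKoike F n 2 q Q)ᵐᵒᵖ M.V := Module.compHom M.V φ.toRingHom
    exact ⟨inferInstance, ⟨fun r x v => app_eq (map_smul φ r x) v⟩,
      fun j hj v => app_eq (hφ j hj) v⟩
  constructor
  · rintro ⟨k, M, hM⟩
    let _ : ∀ i, Module F (M i) := fun i =>
      Module.compHom (M i) (algebraMap F (ArikiKoike F n 2 q Q)ᵐᵒᵖ)
    have htow : ∀ i, IsScalarTower F (ArikiKoike F n 2 q Q)ᵐᵒᵖ (M i) := fun i =>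
      ⟨fun r x v => by rw [Algebra.smul_def, mul_smul]; rfl⟩
    choose t ht1 ht2 using fun i => toRep (M i)
    classical
    refine ⟨{i // FiniteDimensional F (M i)}, inferInstance, fun i =>
      { V := M i
        fin := i.2
        t := t i
        ak := ht1 i }, fun N hN => ?_⟩
    obtain ⟨i1, i2, hs⟩ := toMod N
    have hfin : Module.Finite (ArikiKoike F n 2 q Q)ᵐᵒᵖ N.V := Module.Finite.of_restrictScalars_finite F _ _
    obtain ⟨i, hi⟩ := hM N.V hfin ((indec_iff hs).1 hN)
    have hiso := (iso_iff hs (ht2 i)).2 hi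
    have := hiso
    obtain ⟨ψ, -⟩ := this
    exact ⟨⟨i, ψ.finiteDimensional⟩, hiso⟩
  · rintro ⟨I, _, Y, hY⟩
    choose m1 m2 m3 using fun i => toMod (Y i)
    refine ⟨Fintype.card I, fun i => ModuleCat.of _ (Y ((Fintype.equivFin I).symm i)).V, ?_⟩
    intro N _ _ hfin hind
    let _ : Module F N := Module.compHom N (algebraMap F (ArikiKoike F n 2 q Q)ᵐᵒᵖ)
    have htow : IsScalarTower F (ArikiKoike F n 2 q Q)ᵐᵒᵖ N :=
      ⟨fun r x v => by rw [Algebra.smul_def, mul_smul]; rfl⟩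
    obtain ⟨t, ht1, ht2⟩ := toRep N
    have := finite_of_finite ht1 ht2
    obtain ⟨i, hi⟩ := hY { V := N, t := t, ak := ht1 } ((indec_iff ht2).2 hind)
    obtain ⟨j, rfl⟩ := (Fintype.equivFin I).symm.surjective i
    exact ⟨j, (iso_iff ht2 (m3 _)).1 hi⟩
end

/-! ### The case `e = n = 2` and the final theorem -/

/-- A family of modules in the case `e = 2`, `Q 1 = - Q 0`: the operator `t 0 / a` is a diagonal
involution and `t 1 + 1` is nilpotent and depends on the parameter `c`. -/
def twoT (a c : F) : ℕ → End F (F × F × F × F)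
  | 0 =>
    { toFun := fun v => (a * v.1, -(a * v.2.1), a * v.2.2.1, -(a * v.2.2.2))
      map_add' := fun v w => by ext <;> simp <;> ring
      map_smul' := fun r v => by ext <;> simp <;> ring }
  | _ + 1 =>
    { toFun := fun v => (-v.1, -v.2.1, -v.2.2.1 + (v.1 + v.2.1), -v.2.2.2 + (v.1 + c * v.2.1))
      map_add' := fun v w => by ext <;> simp <;> ring
      map_smul' := fun r v => by ext <;> simp <;> ring }

theorem twoT_zero (a c : F) (v) :
    twoT a c 0 v = (a * v.1, -(a * v.2.1), a * v.2.2.1, -(a * v.2.2.2)) := rfl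

theorem twoT_one (a c : F) (v) : twoT a c 1 v =
    (-v.1, -v.2.1, -v.2.2.1 + (v.1 + v.2.1), -v.2.2.2 + (v.1 + c * v.2.1)) := rfl

theorem twoT_AK (hq : P.q = -1) (hb : P.b = -P.a) (c : F) : AK P 2 (twoT P.a c) where
  cyc _ := ext fun v => by ext <;> simp [twoT_zero, hb] <;> ring
  br0 _ := ext fun v => by ext <;> simp [twoT_zero, twoT_one] <;> ring
  quad i h1 h2 := by
    obtain rfl : i = 1 := ✓
    exact ext fun v => by ext <;> simp [twoT_one, hq] <;> ring
  braid i h1 h2 := ✓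
  comm i j h1 h2 := ✓

theorem twoT_hom {a c c' : F} (ha : a ≠ 0) (h2 : (2 : F) ≠ 0)
    {φ : (F × F × F × F) →ₗ[F] F × F × F × F} (hφ : IsHom 2 (twoT a c) (twoT a c') φ) :
    ∃ p x y : F, p * c = p * c' ∧
      ∀ v, φ v = (p * v.1, p * v.2.1, p * v.2.2.1 + x * v.1, p * v.2.2.2 + y * v.2.1) := by
  have hz : ∀ z : F, -(a * z) = a * z → z = 0 := fun z hz => by
    have : 2 * a * z = 0 := by linear_combination -hz
    simpa [ha, h2] using this
  have hz' : ∀ z : F, a * z = -(a * z) → z = 0 := fun z h => hz z h.symm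
  -- `φ` preserves the two eigenspaces of `t 0`
  have hp : ∀ u s : F, (φ (u, 0, s, 0)).2.1 = 0 ∧ (φ (u, 0, s, 0)).2.2.2 = 0 := fun u s => by
    have h := hφ 0 ✓ (u, 0, s, 0)
    have : twoT a c 0 (u, 0, s, 0) = a • (u, 0, s, 0) := by simp [twoT_zero]
    rw [this, map_smul, twoT_zero] at h
    simp only [Prod.ext_iff, Prod.smul_fst, Prod.smul_snd, smul_eq_mul] at h
    exact ⟨hz' _ h.2.1, hz' _ h.2.2.2⟩
  have hm : ∀ u s : F, (φ (0, u, 0, s)).1 = 0 ∧ (φ (0, u, 0, s)).2.2.1 = 0 := fun u s => by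
    have h := hφ 0 ✓ (0, u, 0, s)
    have : twoT a c 0 (0, u, 0, s) = -a • (0, u, 0, s) := by simp [twoT_zero]
    rw [this, map_smul, twoT_zero] at h
    simp only [Prod.ext_iff, Prod.smul_fst, Prod.smul_snd, smul_eq_mul, neg_mul] at h
    exact ⟨hz _ h.1, hz _ h.2.2.1⟩
  obtain ⟨A, hA⟩ : ∃ A, A = φ (1, 0, 0, 0) := ⟨_, rfl⟩
  obtain ⟨B, hB⟩ : ∃ B, B = φ (0, 1, 0, 0) := ⟨_, rfl⟩
  obtain ⟨C, hC⟩ : ∃ C, C = φ (0, 0, 1, 0) := ⟨_, rfl⟩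
  obtain ⟨D, hD⟩ : ∃ D, D = φ (0, 0, 0, 1) := ⟨_, rfl⟩
  have hv : ∀ v, φ v = v.1 • A + v.2.1 • B + v.2.2.1 • C + v.2.2.2 • D := fun v => by
    rw [hA, hB, hC, hD, ← map_smul, ← map_smul, ← map_smul, ← map_smul, ← map_add, ← map_add,
      ← map_add]
    congr 1
    ext <;> simp
  have eA := hp 1 0
  have eC := hp 0 1
  have eB := hm 1 0
  have eD := hm 0 1
  rw [← hA] at eA
  rw [← hB] at eB
  rw [← hC] at eC
  rw [← hD] at eD
  have h1 := hφ 1 ✓ (1, 0, 0, 0)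
  have h3 := hφ 1 ✓ (0, 1, 0, 0)
  rw [hv, ← hA, twoT_one, twoT_one] at h1
  rw [hv, ← hB, twoT_one, twoT_one] at h3
  simp only [Prod.ext_iff, Prod.fst_add, Prod.snd_add, Prod.smul_fst, Prod.smul_snd, smul_eq_mul,
    eA, eB, eC, eD] at h1 h3
  obtain ⟨h11, h12, h13, h14⟩ := h1
  obtain ⟨-, -, h33, h34⟩ := h3
  have k1 : C.1 = 0 := by linear_combination h11
  have k2 : D.2.1 = 0 := by linear_combination h12
  have k3 : C.2.2.1 = A.1 := by linear_combination h13
  have k4 : D.2.2.2 = A.1 := by linear_combination h14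
  have k5 : B.2.1 = A.1 := by linear_combination k3 - h33
  refine ⟨A.1, A.2.2.1, B.2.2.2, ?_, fun v => ?_⟩
  · rw [k4, k5] at h34
    linear_combination h34
  · rw [hv]
    ext <;> simp [eA, eB, eC, eD, k1, k2, k3, k4, k5] <;> ring

/-- Infinite representation type for `e = n = 2` and `Q 1 = - Q 0`. -/
theorem baseTwo [Infinite F] (hq : P.q = -1) (h2 : (2 : F) ≠ 0) (hb : P.b = -P.a) : ¬ FT P 2 := by
  rintro ⟨I, _, Y, hY⟩
  have ha : P.a ≠ 0 := fun h => by have := P.hc; simp [h] at this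
  have hind : ∀ c, Indec 2 (twoT P.a c) := fun c => by
    refine ⟨inferInstance, fun π hπ hid => ?_⟩
    obtain ⟨p, x, y, -, hv⟩ := twoT_hom ha h2 hπ
    have hid' := app_eq hid (1, 1, 0, 0)
    rw [mul_apply, hv (1, 1, 0, 0), hv] at hid'
    simp only [Prod.mk.injEq] at hid'
    obtain ⟨e1, -, e3, e4⟩ := hid'
    have hp : p = 0 ∨ p = 1 := by
      rcases mul_eq_zero.1 (show p * (p - 1) = 0 by linear_combination e1) with h | h
      · exact .inl h
      · exact .inr (by linear_combination h)
    rcases hp with rfl | rfl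
    · have hx : x = 0 := by linear_combination -e3
      have hy : y = 0 := by linear_combination -e4
      exact .inl (ext fun v => by rw [hv]; simp [hx, hy])
    · have hx : x = 0 := by linear_combination e3
      have hy : y = 0 := by linear_combination e4
      exact .inr (ext fun v => by rw [hv]; simp [hx, hy])
  choose i hi using fun c => hY
    { V := F × F × F × F
      t := twoT P.a c
      ak := twoT_AK hq hb c } (hind c)
  refine not_injective_infinite_finite i fun c c' hcc => ?_
  obtain ⟨φ, hφ⟩ : Iso 2 (twoT P.a c) (twoT P.a c') := (hi c).trans (by rw [hcc]; exact (hi c').symm)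
  obtain ⟨p, x, y, hp, hv⟩ := twoT_hom ha h2 hφ
  have hp0 : p ≠ 0 := by
    rintro rfl
    have : φ (0, 0, 1, 0) = 0 := (hv _).trans (by simp)
    simp at this
  exact mul_left_cancel₀ hp0 hp

theorem FT.iff_of_le [IsAlgClosed F] (he : 2 ≤ e)
    (hq : IsPrimitiveRoot P.q e) (hd : 2 * d ≤ e) (hb : P.b = P.a * P.q ^ d) (n : ℕ) :
    FT P n ↔ n < min e (2 * d + 4) := by
  have : Infinite F := IsAlgClosed.instInfinite
  constructor
  · intro h
    by_contra hn
    rcases lt_or_ge (2 * d + 4) e with hde | hde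
    · exact baseB hq hde hb (h.mono ✓)
    · by_cases hd2 : d + 2 ≤ e
      · exact baseA hq hd2 hb (h.mono ✓)
      · obtain rfl : e = 2 := ✓
        obtain rfl : d = 1 := ✓
        have hq1 : P.q = -1 := hq.eq_neg_one_of_two_right
        refine baseTwo hq1 (fun h2 => hq.ne_one ✓ ?_) (by rw [hb, hq1]; ring)
          (h.mono ✓)
        rw [hq1]
        linear_combination -h2
  · intro h
    exact FT.of_lt hq ✓ hb n ✓ ✓

theorem fPlusOne_two {f' : Fin 2 → ℕ} :
    fPlusOne e 2 f' = min (f' 1 - f' 0) (e + f' 0 - f' 1) := by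
  have : {d | ∃ i < 2, d = extSeq e 2 f' (i + 1) - extSeq e 2 f' i} =
      {f' 1 - f' 0, e + f' 0 - f' 1} := by
    have h0 : extSeq e 2 f' 0 = f' 0 := by simp [extSeq]
    have h1 : extSeq e 2 f' 1 = f' 1 := by simp [extSeq]
    have h2 : extSeq e 2 f' 2 = e + f' 0 := by simp [extSeq]
    ext d
    simp only [Set.mem_ofPred_eq, Set.mem_insert_iff, Set.mem_singleton_iff]
    constructor
    · rintro ⟨i, hi, rfl⟩
      interval_cases i
      · rw [zero_add, h1, h0]; exact .inl rfl
      · rw [one_add_one_eq_two, h1, h2]; exact .inr rfl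
    · rintro (rfl | rfl)
      · exact ⟨0, by omega, by rw [zero_add, h1, h0]⟩
      · exact ⟨1, by omega, by rw [one_add_one_eq_two, h1, h2]⟩
  rw [fPlusOne, this, csInf_pair]

theorem FT.iff_of_pow [IsAlgClosed F] (he : 2 ≤ e)
    (hq : IsPrimitiveRoot P.q e) (ha : P.a = P.q ^ k) (hb : P.b = P.q ^ l) (hkl : k ≤ l)
    (hl : l < e) (n : ℕ) : FT P n ↔ n < min e (2 * min (l - k) (e + k - l) + 4) := by
  rcases Nat.le_total (2 * (l - k)) e with h | h
  · rw [FT.iff_of_le he hq h (by rw [ha, hb, ← pow_add]; congr 1; omega),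
      min_eq_left (show l - k ≤ e + k - l by omega)]
  · rw [min_eq_right (show e + k - l ≤ l - k by omega)]
    have := FT.iff_of_le (P := P.swap) (d := e + k - l) he hq ✓ (by
      change P.a = P.b * P.q ^ _
      rw [ha, hb, ← pow_add, show l + (e + k - l) = e + k by omega, pow_add, hq.pow_eq_one,
        one_mul]) n
    rw [← this]
    exact ⟨FT.swap, FT.swap⟩

end AKT

/-- Under condition (CP) with `r = 2`, the Ariki-Koike algebra
`H_{n,2}(q, Q₁, Q₂)` is of finite representation type iff
`n < min { e, 2 f⁺¹(Q₁,Q₂) + 4 }`. -/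
theorem arikiKoike_finiteRepType_iff_two_params
    (F : Type) [Field F] [IsAlgClosed F] (n : ℕ) (hn : 1 ≤ n)
    (e : ℕ) (he : 2 ≤ e) (q : F) (hq : IsPrimitiveRoot q e)
    (f : Fin 2 → ℕ) (hf : ∀ i, f i ≤ e - 1)
    (Q : Fin 2 → F) (hQ : ∀ i, Q i = q ^ f i)
    (f' : Fin 2 → ℕ) (σ : Equiv.Perm (Fin 2)) (hσ : ∀ i, f' i = f (σ i))
    (hmono : Monotone f') :
    FiniteRepType (ArikiKoike F n 2 q Q) ↔ n < min e (2 * fPlusOne e 2 f' + 4) := by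
  have hq0 : q ≠ 0 := hq.ne_zero ✓
  obtain ⟨P, hPq, hPa, hPb⟩ : ∃ P : AKT.Par F, P.q = q ∧ P.a = Q 0 ∧ P.b = Q 1 :=
    ⟨{ q := q
       a := Q 0
       b := Q 1
       qi := q⁻¹
       ci := (Q 0 * Q 1)⁻¹
       hq := mul_inv_cancel₀ hq0
       hc := mul_inv_cancel₀ (by rw [hQ, hQ]; positivity) }, rfl, rfl, rfl⟩
  rw [AKT.finiteRepType_iff hPq hPa hPb, AKT.fPlusOne_two]
  have hm : f' 0 ≤ f' 1 := hmono (by decide)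
  have hlt : f' 1 < e := by have := hf (σ 1); rw [hσ]; omega
  have hne : σ 0 ≠ σ 1 := σ.injective.ne (by decide)
  rw [hQ] at hPa hPb
  rw [← hPq] at hPa hPb hq
  have h0 := hσ 0
  have h1 := hσ 1
  rcases Fin.exists_fin_two.1 ⟨σ 0, rfl⟩ with hs | hs
  · rw [← hs, ← h0] at hPa
    rw [show (1 : Fin 2) = σ 1 by omega, ← h1] at hPb
    exact AKT.FT.iff_of_pow he hq hPa hPb hm hlt n
  · rw [← hs, ← h0] at hPb
    rw [show (0 : Fin 2) = σ 1 by omega, ← h1] at hPa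
    exact Iff.trans ⟨AKT.FT.swap, AKT.FT.swap⟩
      (AKT.FT.iff_of_pow (P := P.swap) he hq hPb hPa hm hlt n)
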